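/- There exist absolute constants C > 0 and C' > 0 such that for every integer g ≥ 2, every integer k ≥ C'·g, and every H as above satisfying the root condition, the integer r = ⌈g·k + C·(g^{3/2}·k^{1/2} + g² + g·log(g·k))⌉ is admissible: there exist c > 0 and x₀ such that for all x ≥ x₀, the number of primes p with x < p ≤ 2x and Ω(|H(p)|) ≤ r is at least c·x/(log x)^{g+1}. -/

import Mathlib

/-!
Fix `g`, `k`, `H = h₁ ⋯ h_g` and put `ε = √(g/k)`, `2^J ≍ g/ε`. The proof sieves the primes
`n ∈ (x, 2x]` by the primes `p ≤ z`, where `z` is a power of `x` with exponent of order `2^(-J)`, and then shows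
that most survivors `n` satisfy `Ω(H(n)) ≤ r`.

*Lower bound for the survivors* (`prime_sieve`). A Brun-Hooley sieve (`sieve_lower`, `block_sieve`), built from
Bonferroni truncations of the inclusion-exclusion formula on dyadic blocks of primes, is applied to the weights
`Λ(n) W(n)` with `W` smooth and supported on `(x, 2x)`. The total weight has order `x` by Chebyshev's method
(`Xt_ge`), and the root condition makes every local factor of the singular product `Vp` positive, so that about
`x · Vp / log x` survivors remain. The remainder terms need primes in arithmetic progressions on average over
moduli up to a small fixed power of `x`, i.e. a weak Bombieri-Vinogradov theorem (`bv_core`). Large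
conductors are treated by Vaughan's identity and the duality form of the large sieve (`mean_value`). For small conductors
the Mertens inequality `3 + 4 cos θ + cos 2θ ≥ 0` bounds `L(s, χ)` from below near the line `Re s = 1`
(`L_lower`), hence bounds the derivatives of its logarithmic derivative (`D_bound`), and Fourier inversion
transfers this to smooth sums (`lam_W_bound`). Neither contour integrals nor Siegel's theorem occur: exceptional
conductors repel each other, and the sieve merely ignores one prime `q₁` dividing the possible exceptional
conductor (`exc_prime`).

*Upper bounds for bad survivors.* A survivor can only be bad if `q₁` divides `H(n)`, if some `h_i(n)` is divisible
by the square of a prime `q > z`, or if `H(n)` has too many prime factors in `(z, x^(1-ε)]`: since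
`|H(n)| ≪ x^(gk)`, it has at most about `gk / (1-ε)` prime factors above `x^(1-ε)` (`G_bound`). Squares are
counted directly (`sq_count`). For a prime `q`, an upper-bound sieve over the integers
in the residue classes of the roots of `h_i` modulo `q` (`int_sieve`, `T_count`) bounds the survivors with
`q ∣ h_i(n)` by about `ν_i(q)/q` times the expected number of survivors, with a loss of order `2^J` when `q > √x`.
Here `ν_i(q)` is the number of roots of `h_i` modulo `q`. The sums of `ν_i(q)/q` are bounded by `5` over
`(√y, y]` (`C1`) and by `log log y + O(1)` over `q ≤ y` (`C2`), because the Dedekind zeta function of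
`ℚ[X]/(h_i)` has a simple pole at `1` and roots modulo `q` give prime ideals of norm `q` (`nf_primes`). On
average a survivor thus has `O(g 2^J)` prime factors in `(z, x^(1-ε)]`, so outside a small proportion
`Ω(H(n)) ≤ gk (1 + 2ε) + O(g 2^J)`. Finally `Vp ≫ (log z)^(-g)` (`Vp_lower`), and with the choice of `ε` and `J`
this exponent is `gk + O(g^(3/2) k^(1/2))` (`params`).
-/

/-- `Ω`, the number of prime factors counted with multiplicity. -/
noncomputable def bigOmega (n : ℕ) : ℕ := ArithmeticFunction.cardFactors n

namespace APV
open Finset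

open Real (add_one_le_exp exp exp_add exp_le_exp exp_nat_mul exp_neg exp_one_lt_d9 exp_pos exp_sum le_log_iff_exp_le log log_div log_le_log log_mul log_natCast_nonneg log_nonneg log_nonpos log_pos log_pow log_rpow log_two_gt_d9 log_two_lt_d9 norm_eq_abs norm_of_nonneg one_le_rpow rpow_add rpow_def_of_pos rpow_le_rpow_of_exponent_le rpow_mul rpow_natCast rpow_neg rpow_neg_one rpow_one sqrt sqrt_eq_rpow sqrt_pos tendsto_log_atTop zero_rpow)
open Complex (I cpow_neg mul_conj normSq_eq_norm_sq norm_I norm_conj norm_cpow_eq_rpow_re_of_pos norm_real ofRealCLM ofReal_cpow ofReal_log ofReal_mul ofReal_one ofReal_sub ofReal_sum ofReal_zero re)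
open ArithmeticFunction (cardFactors cardFactors_mul log_apply moebius natCoe_apply vonMangoldt vonMangoldt_le_log vonMangoldt_nonneg vonMangoldt_sum zeta_apply_ne)
open Ideal (absNorm span)
open Filter (Eventually Tendsto atTop eventually_atTop eventually_ge_atTop)
open DirichletCharacter (LFunction LSeries_eulerProduct_hasProd apply_ne_zero_iff changeLevel changeLevel_eq_cast_of_dvd' changeLevel_primitiveCharacter conductor_changeLevel conductor_one isPrimitive_def norm_le_one)
open Fintype (mem_piFinset ofFinite piFinset)
open Nat (card_eq_fintype_card cast_nonneg ceil_le floor_le floor_lt le_ceil le_floor le_floor_iff le_of_dvd lt_ceil mem_divisorsAntidiagonal mod_eq_of_lt)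
open scoped Polynomial
local notation "𝒟" => DirichletCharacter ℂ
local notation "𝒳" => Σ n : ℕ, DirichletCharacter ℂ n


/-! ### Dirichlet series with bounded partial sums -/

lemma abel_bound (f g : ℕ → ℂ) (B:ℝ) (hB : ∀ N, ‖∑ i ∈ range N, f i‖ ≤ B) {M N : ℕ} (h : M ≤ N) :
    ‖∑ i ∈ Ico M N, f i * g i‖ ≤ 2 * B * (‖g M‖ + ∑ i ∈ Ico M N, ‖g (i + 1) - g i‖) := by
  have hB0 : 0 ≤ B := by simpa using hB 0
  set F : ℕ → ℂ := fun N => ∑ i ∈ range N, f i with hF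
  have id : ∑ i ∈ Ico M N, f i * g i =
      F N * g N - F M * g M - ∑ i ∈ Ico M N, F (i + 1) * (g (i + 1) - g i) := by
    induction N, h using Nat.le_induction with
    | base => simp
    | succ n hn ih =>
      rw [sum_Ico_succ_top hn, sum_Ico_succ_top hn, ih]
      have : F (n + 1) = F n + f n := by simp [hF, sum_range_succ]
      rw [this]; ring
  have gN : ‖g N‖ ≤ ‖g M‖ + ∑ i ∈ Ico M N, ‖g (i + 1) - g i‖ := by
    have : g N = g M + ∑ i ∈ Ico M N, (g (i + 1) - g i) := by
      rw [sum_Ico_sub _ h]; ring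
    rw [this]
    exact (norm_add_le _ _).trans (by gcongr; exact norm_sum_le _ _)
  have h3 : ‖∑ i ∈ Ico M N, F (i + 1) * (g (i + 1) - g i)‖ ≤ B * ∑ i ∈ Ico M N, ‖g (i + 1) - g i‖ := by
    rw [mul_sum]
    refine (norm_sum_le _ _).trans (sum_le_sum fun i _ => ?_)
    rw [norm_mul]; gcongr; exact hB _
  rw [id]
  have h1 : ‖F N * g N‖ ≤ B * (‖g M‖ + ∑ i ∈ Ico M N, ‖g (i + 1) - g i‖) := by
    rw [norm_mul]; gcongr; exact hB _
  have h2 : ‖F M * g M‖ ≤ B * ‖g M‖ := by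
    rw [norm_mul]; gcongr; exact hB _
  calc _ ≤ ‖F N * g N‖ + ‖F M * g M‖ + ‖∑ i ∈ Ico M N, F (i + 1) * (g (i + 1) - g i)‖ :=
        (norm_sub_le _ _).trans (by gcongr; exact norm_sub_le _ _)
    _ ≤ _ := by nlinarith

/-- The function `x ↦ (log x)^k x^(-s)`, whose values at integers are the coefficients' twists in the
`k`-th derivative of a Dirichlet series. -/
noncomputable def lg (k : ℕ) (s:ℂ) (x:ℝ) : ℂ := ((log x:ℝ):ℂ) ^ k * (x:ℂ) ^ (-s)

lemma norm_lg (k : ℕ) (s:ℂ) {x : ℝ} (hx : 0 < x) :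
    ‖lg k s x‖ = |log x| ^ k * x ^ (-s.re) := by
  rw [lg, norm_mul, norm_pow, norm_real, norm_cpow_eq_rpow_re_of_pos hx]
  simp

lemma lg_diff (k : ℕ) {s : ℂ} (hs : 1 ≤ s.re) {a : ℝ} (ha : 1 ≤ a) :
    ‖lg k s (a + 1) - lg k s a‖ ≤ (k + ‖s‖) * ((1 + log (a + 1)) ^ k * a ^ (-2:ℝ)) := by
  have hs0 : s ≠ 0 := by rintro rfl; simp at hs; linarith
  set f' : ℝ → ℂ := fun x => (k:ℂ) * ((log x:ℝ):ℂ) ^ (k - 1) * ((x⁻¹:ℝ):ℂ) * (x:ℂ) ^ (-s) +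
    ((log x:ℝ):ℂ) ^ k * ((-s) * (x:ℂ) ^ (-s - 1))
  have hd : ∀ x ∈ Set.Icc a (a + 1), HasDerivWithinAt (lg k s) (f' x) (Set.Icc a (a + 1)) x := by
    intro x hx
    have hx0 : 0 < x := by linarith [hx.1]
    have h1 : HasDerivAt (fun x : ℝ => ((log x:ℝ):ℂ)) (((x⁻¹:ℝ):ℂ)) x :=
      (Real.hasDerivAt_log hx0.ne').ofReal_comp
    have h2 := hasDerivAt_ofReal_cpow_const hx0.ne' (neg_ne_zero.mpr hs0)
    exact ((h1.pow k).mul h2).hasDerivWithinAt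
  have := norm_image_sub_le_of_norm_deriv_le_segment' hd
    (C := (k + ‖s‖) * ((1 + log (a + 1)) ^ k * a ^ (-2:ℝ))) ?_ (a + 1)
      (Set.right_mem_Icc.mpr (by linarith))
  · simpa using this
  · intro x hx
    have hx0 : 0 < x := by linarith [hx.1]
    have hx1 : 1 ≤ x := by linarith [hx.1]
    have hl0 : 0 ≤ log x := log_nonneg hx1
    have hl : log x ≤ 1 + log (a + 1) := by
      have := log_le_log hx0 hx.2.le; linarith
    have hL1 : 1 ≤ 1 + log (a + 1) := by
      have := log_nonneg (show 1 ≤ a + 1 by linarith); linarith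
    have e1 : x ^ (-s.re) ≤ x ^ (-1:ℝ) := rpow_le_rpow_of_exponent_le hx1 (by linarith)
    have e2 : x ^ (-s.re - 1) ≤ a ^ (-2:ℝ) :=
      (rpow_le_rpow_of_exponent_le hx1 (by linarith : -s.re - 1 ≤ -2)).trans
        (Real.rpow_le_rpow_of_nonpos (by linarith) hx.1 (by norm_num))
    have e3 : x⁻¹ * x ^ (-s.re) ≤ a ^ (-2:ℝ) := by
      refine le_trans (le_of_eq ?_) e2
      rw [Real.rpow_sub_one hx0.ne', div_eq_inv_mul]
    have n1 : ‖(x:ℂ) ^ (-s)‖ = x ^ (-s.re) := by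
      rw [norm_cpow_eq_rpow_re_of_pos hx0]; simp
    have n2 : ‖(x:ℂ) ^ (-s - 1)‖ = x ^ (-s.re - 1) := by
      rw [norm_cpow_eq_rpow_re_of_pos hx0]; simp
    refine (norm_add_le _ _).trans ?_
    simp only [norm_mul, norm_pow, norm_real, n1, n2, norm_neg, Complex.norm_natCast,
      norm_eq_abs, abs_of_nonneg hl0, abs_of_pos (inv_pos.mpr hx0)]
    rw [add_mul]
    have p1 : log x ^ (k - 1) ≤ (1 + log (a + 1)) ^ k :=
      (pow_le_pow_left₀ hl0 hl _).trans (pow_le_pow_right₀ hL1 (Nat.sub_le _ _))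
    have p2 : log x ^ k ≤ (1 + log (a + 1)) ^ k := pow_le_pow_left₀ hl0 hl _
    have q0 : 0 ≤ a ^ (-2:ℝ) := by positivity
    apply add_le_add
    · calc k * log x ^ (k - 1) * x⁻¹ * x ^ (-s.re)
          = k * (log x ^ (k - 1) * (x⁻¹ * x ^ (-s.re))) := by ring
        _ ≤ _ := by gcongr
    · calc log x ^ k * (‖s‖ * x ^ (-s.re - 1))
          = ‖s‖ * (log x ^ k * x ^ (-s.re - 1)) := by ring
        _ ≤ _ := by gcongr

lemma log_pow_le (k : ℕ) : ∃ C : ℝ, 0 < C ∧ ∀ a : ℝ, 1 ≤ a → (1 + log (a + 1)) ^ k ≤ C * a ^ (1/2:ℝ) := by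
  refine ⟨(2 + 2 * (k + 1:ℝ)) ^ k * 2, by positivity, fun a ha => ?_⟩
  have h1 : log (a + 1) ≤ (a + 1) ^ (1 / (2 * (k + 1)):ℝ) / (1 / (2 * (k + 1)):ℝ) :=
    Real.log_le_rpow_div (by linarith) (by positivity)
  have hone : 1 ≤ (a + 1) ^ (1 / (2 * (k + 1)):ℝ) := one_le_rpow (by linarith) (by positivity)
  have h2 : 1 + log (a + 1) ≤ (2 + 2 * (k + 1:ℝ)) * (a + 1) ^ (1 / (2 * (k + 1)):ℝ) := by
    have : (a + 1) ^ (1 / (2 * (k + 1)):ℝ) / (1 / (2 * (k + 1)):ℝ) = 2 * (k + 1) * (a + 1) ^ (1 / (2 * (k + 1)):ℝ) := by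
      field_simp
    rw [this] at h1; nlinarith
  have hl : 0 ≤ log (a + 1) := log_nonneg (by linarith)
  calc (1 + log (a + 1)) ^ k ≤ ((2 + 2 * (k + 1:ℝ)) * (a + 1) ^ (1 / (2 * (k + 1)):ℝ)) ^ k := by gcongr
    _ = (2 + 2 * (k + 1:ℝ)) ^ k * ((a + 1) ^ (1 / (2 * (k + 1)) * k:ℝ)) := by
        rw [mul_pow, ← Real.rpow_mul_natCast (by linarith)]
    _ ≤ (2 + 2 * (k + 1:ℝ)) ^ k * ((a + 1) ^ (1 / 2:ℝ)) := by
        gcongr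
        · linarith
        · rw [div_mul_eq_mul_div, div_le_div_iff₀ (by positivity) (by positivity)]; nlinarith
    _ ≤ (2 + 2 * (k + 1:ℝ)) ^ k * ((4 * a) ^ (1 / 2:ℝ)) := by gcongr; linarith
    _ = _ := by
        rw [Real.mul_rpow (by norm_num) (by linarith)]
        have : (4:ℝ) ^ (1/2:ℝ) = 2 := by
          rw [show (4:ℝ) = 2 ^ (2:ℝ) by norm_num, ← rpow_mul (by norm_num)]; norm_num
        rw [this]; ring

/-- The coefficients `f(n) (log n)^k`. -/
noncomputable def mlog (f : ℕ → ℂ) (k : ℕ) : ℕ → ℂ := fun n => f n * ((log n:ℝ):ℂ) ^ k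

lemma term_mlog (f : ℕ → ℂ) (k : ℕ) (s:ℂ) {n : ℕ} (hn : n ≠ 0) :
    LSeries.term (mlog f k) s n = f n * lg k s n := by
  rw [LSeries.term_of_ne_zero hn, mlog, lg, cpow_neg]
  simp; ring

lemma summable_mlog {f : ℕ → ℂ} {A : ℝ} (hf : ∀ n, ‖f n‖ ≤ A) (k : ℕ) {s : ℂ} (hs : 1 < s.re) :
    LSeriesSummable (mlog f k) s := by
  have hA : 0 ≤ A := (norm_nonneg _).trans (hf 0)
  have hs0 : s ≠ 0 := by rintro rfl; simp at hs; linarith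
  obtain ⟨C, hC0, hC⟩ : ∃ C : ℝ, 0 < C ∧ ∀ n : ℕ, 1 ≤ n → (log n) ^ k ≤ C * (n:ℝ) ^ ((s.re - 1)/2) := by
    set e := (s.re - 1)/2 with he
    have he0 : 0 < e := by rw [he]; linarith
    refine ⟨((k + 1) / e) ^ k, by positivity, fun n hn => ?_⟩
    have hn1 : (1:ℝ) ≤ n := mod_cast hn
    have h1 := Real.log_le_rpow_div (x := (n:ℝ)) (by linarith) (show 0 < e / (k+1) by positivity)
    have h2 : (log n)^k ≤ ((n:ℝ) ^ (e / (k+1)) / (e / (k+1))) ^ k :=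
      pow_le_pow_left₀ (log_nonneg hn1) h1 _
    refine h2.trans ?_
    rw [div_pow, ← Real.rpow_mul_natCast (by linarith)]
    have h3 : (n:ℝ) ^ (e / (k+1) * k) ≤ (n:ℝ)^e := by
      apply rpow_le_rpow_of_exponent_le hn1
      rw [div_mul_eq_mul_div, div_le_iff₀ (by positivity)]; nlinarith
    calc _ ≤ (n:ℝ)^e / (e / (k+1)) ^ k := by gcongr
      _ = _ := by rw [div_eq_mul_inv, ← inv_pow, inv_div, mul_comm]
  refine LSeriesSummable_of_le_const_mul_rpow (x := 1 + (s.re - 1)/2) (by linarith)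
    ⟨A * C, fun n hn => ?_⟩
  have hn1 : 1 ≤ n := Nat.one_le_iff_ne_zero.mpr hn
  rw [mlog, norm_mul, norm_pow, norm_real, norm_eq_abs,
    abs_of_nonneg (log_nonneg (mod_cast hn1)), mul_assoc]
  gcongr
  · exact hf n
  · simpa using hC n hn1

/-- Bound for derivatives of Dirichlet series to the right of `1`, for coefficients whose partial
sums are bounded by `q`. Only the terms `n < q³` are estimated trivially. -/
lemma LS_bound (k : ℕ) : ∃ C : ℝ, 0 < C ∧ ∀ (f : ℕ → ℂ) (q : ℕ) (Z:ℝ), 1 ≤ q → 1 ≤ Z → log q ≤ Z →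
    (∀ n, ‖f n‖ ≤ 1) → (∀ N, ‖∑ i ∈ range N, f i‖ ≤ q) → ∀ s : ℂ, 1 < s.re →
    ‖LSeries (mlog f k) s‖ ≤ C * (1 + ‖s‖) * Z ^ (k + 1) := by
  obtain ⟨C1, hC1, hlog⟩ := log_pow_le k
  have hsum : Summable (fun n : ℕ => (n:ℝ) ^ (-(7/6):ℝ)) := Real.summable_nat_rpow.mpr (by norm_num)
  set S := ∑' n : ℕ, (n:ℝ) ^ (-(7/6):ℝ) with hS
  have hS0 : 0 ≤ S := tsum_nonneg fun n => by positivity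
  refine ⟨4 ^ (k+1) + 2 * (C1 + (k + 1) * C1 * S), by positivity, ?_⟩
  intro f q Z hq hZ hqZ hf hF s hs
  have hsm := summable_mlog hf k hs
  have ht := hsm.hasSum.tendsto_sum_nat
  set M := q ^ 3 with hM
  have hM1 : 1 ≤ M := Nat.one_le_pow _ _ hq
  refine le_of_tendsto ht.norm ?_
  filter_upwards [eventually_ge_atTop M] with N hN
  have hsplit : ∑ i ∈ range N, LSeries.term (mlog f k) s i =
      ∑ i ∈ Ico 1 M, f i * lg k s i + ∑ i ∈ Ico M N, f i * lg k s i := by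
    rw [sum_Ico_consecutive _ hM1 hN, range_eq_Ico, sum_eq_sum_Ico_succ_bot (by omega)]
    simp only [LSeries.term_zero, zero_add]
    refine sum_congr rfl fun i hi => ?_
    rw [term_mlog _ _ _ (by simp at hi; omega)]
  rw [hsplit]
  have hlM : log M ≤ 3 * Z := by
    rw [hM]; push_cast; rw [log_pow]; push_cast; linarith
  have hlM0 : 0 ≤ log M := log_nonneg (mod_cast hM1)
  have b1 : ‖∑ i ∈ Ico 1 M, f i * lg k s i‖ ≤ 4 ^ (k+1) * Z ^ (k+1) := by
    calc _ ≤ ∑ i ∈ Ico 1 M, (3 * Z) ^ k * ((i:ℝ))⁻¹ := by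
          refine (norm_sum_le _ _).trans (sum_le_sum fun i hi => ?_)
          simp only [mem_Ico] at hi
          have hi1 : (1:ℝ) ≤ i := mod_cast hi.1
          rw [norm_mul, norm_lg _ _ (by linarith), abs_of_nonneg (log_nonneg hi1)]
          have : (i:ℝ) ^ (-s.re) ≤ (i:ℝ)⁻¹ := by
            rw [← rpow_neg_one]; exact rpow_le_rpow_of_exponent_le hi1 (by linarith)
          have hl : log i ≤ 3 * Z := le_trans
            (log_le_log (by linarith) (mod_cast hi.2.le)) hlM
          calc _ ≤ 1 * ((3 * Z) ^ k * (i:ℝ)⁻¹) := by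
                gcongr
                exact hf i
            _ = _ := one_mul _
      _ ≤ (3 * Z) ^ k * (1 + log M) := by
          rw [← mul_sum]
          gcongr
          have := harmonic_le_one_add_log M
          refine le_trans ?_ this
          rw [harmonic_eq_sum_Icc]; push_cast
          refine sum_le_sum_of_subset_of_nonneg ?_ (fun _ _ _ => by positivity)
          intro i; simp; omega
      _ ≤ (4 * Z) ^ k * (4 * Z) := by gcongr <;> linarith
      _ = _ := by rw [← pow_succ, mul_pow]
  have b2 : ‖∑ i ∈ Ico M N, f i * lg k s i‖ ≤ 2 * (C1 + (k + 1) * C1 * S) * (1 + ‖s‖) := by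
    have hqM : (q:ℝ) = (M:ℝ) ^ (1/3:ℝ) := by
      rw [hM]; push_cast
      rw [← rpow_natCast, ← rpow_mul (by positivity)]; norm_num
    have hM1' : (1:ℝ) ≤ M := mod_cast hM1
    have hM0 : (0:ℝ) < M := by linarith
    refine (abel_bound f (fun i => lg k s i) q hF hN).trans ?_
    have t1 : q * ‖lg k s M‖ ≤ C1 := by
      rw [norm_lg _ _ hM0, abs_of_nonneg hlM0]
      have h1 : log M ^ k ≤ C1 * (M:ℝ) ^ (1/2:ℝ) := by
        refine le_trans ?_ (hlog M hM1')
        gcongr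
        have := log_le_log hM0 (show (M:ℝ) ≤ M + 1 by linarith)
        linarith
      have h2 : (M:ℝ) ^ (-s.re) ≤ (M:ℝ) ^ (-1:ℝ) := rpow_le_rpow_of_exponent_le hM1' (by linarith)
      rw [hqM]
      calc _ ≤ (M:ℝ) ^ (1/3:ℝ) * (C1 * (M:ℝ) ^ (1/2:ℝ) * (M:ℝ) ^ (-1:ℝ)) := by gcongr
        _ = C1 * (M:ℝ) ^ (-1/6:ℝ) := by
            rw [show (-1/6:ℝ) = 1/3 + (1/2 + -1) by norm_num, rpow_add hM0, rpow_add hM0]; ring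
        _ ≤ C1 * 1 := by
            gcongr; exact Real.rpow_le_one_of_one_le_of_nonpos hM1' (by norm_num)
        _ = C1 := mul_one _
    have t2 : q * ∑ i ∈ Ico M N, ‖lg k s ((i + 1 : ℕ):ℝ) - lg k s i‖ ≤ (k + ‖s‖) * C1 * S := by
      rw [mul_sum, hS, ← tsum_mul_left]
      refine le_trans (sum_le_sum fun i hi => ?_) ((hsum.mul_left _).sum_le_tsum (Ico M N) (fun i _ => by positivity))
      simp only [mem_Ico] at hi
      have hMi : (M:ℝ) ≤ i := mod_cast hi.1
      have hi1 : (1:ℝ) ≤ i := by linarith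
      push_cast
      calc (q:ℝ) * ‖lg k s (i + 1) - lg k s i‖
          ≤ (i:ℝ) ^ (1/3:ℝ) * ((k + ‖s‖) * ((C1 * (i:ℝ) ^ (1/2:ℝ)) * (i:ℝ) ^ (-2:ℝ))) := by
            rw [hqM]
            gcongr
            exact (lg_diff k hs.le hi1).trans (by gcongr; exact hlog _ hi1)
        _ = _ := by
            rw [show (-(7/6):ℝ) = 1/3 + (1/2 + -2) by norm_num, rpow_add (by linarith), rpow_add (by linarith)]; ring
    have ns := norm_nonneg s
    have kk : (0:ℝ) ≤ k := by positivity
    have : (k + ‖s‖) * C1 * S ≤ (k + 1) * C1 * S * (1 + ‖s‖) := by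
      have h0 : 0 ≤ C1 * S := by positivity
      nlinarith [mul_nonneg h0 (mul_nonneg kk ns)]
    calc 2 * (q:ℝ) * (‖lg k s M‖ + ∑ i ∈ Ico M N, ‖lg k s ((i + 1 : ℕ):ℝ) - lg k s i‖)
        = 2 * (q * ‖lg k s M‖ + q * ∑ i ∈ Ico M N, ‖lg k s ((i + 1 : ℕ):ℝ) - lg k s i‖) := by ring
      _ ≤ 2 * (C1 + (k + 1) * C1 * S * (1 + ‖s‖)) := by linarith
      _ ≤ _ := by nlinarith
  refine (norm_add_le _ _).trans ((add_le_add b1 b2).trans ?_)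
  have hZk : 1 ≤ Z ^ (k+1) := one_le_pow₀ hZ
  have ns := norm_nonneg s
  have hX : 0 ≤ 2 * (C1 + (k + 1) * C1 * S) := by positivity
  have hY : (0:ℝ) ≤ 4 ^ (k+1) := by positivity
  have e1 : 4 ^ (k+1) * Z ^ (k+1) ≤ 4 ^ (k+1) * (1 + ‖s‖) * Z ^ (k+1) := by
    gcongr; nlinarith
  have e2 : 2 * (C1 + (k + 1) * C1 * S) * (1 + ‖s‖) ≤ 2 * (C1 + (k + 1) * C1 * S) * (1 + ‖s‖) * Z ^ (k+1) :=
    le_mul_of_one_le_right (by positivity) hZk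
  linarith


lemma periodic_bound {f : ℕ → ℂ} {q : ℕ} (hq : 0 < q) (hp : ∀ n, f (q + n) = f n) (h0 : ∑ i ∈ range q, f i = 0)
    (h1 : ∀ n, ‖f n‖ ≤ 1) (N : ℕ) : ‖∑ i ∈ range N, f i‖ ≤ q := by
  induction N using Nat.strong_induction_on with
  | _ N ih =>
    by_cases hN : N ≤ q
    · calc _ ≤ ∑ i ∈ range N, (1:ℝ) := (norm_sum_le _ _).trans (sum_le_sum fun i _ => h1 i)
        _ = N := by simp
        _ ≤ q := mod_cast hN
    · obtain ⟨m, rfl⟩ : ∃ m, N = q + m := ⟨N - q, by omega⟩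
      rw [sum_range_add, h0, zero_add, sum_congr rfl fun i _ => hp i]
      exact ih m (by omega)

lemma mlog_one (f : ℕ → ℂ) : mlog f 1 = LSeries.logMul f := by
  funext n; simp [mlog, LSeries.logMul, mul_comm]

lemma mlog_zero (f : ℕ → ℂ) : mlog f 0 = f := by
  funext n; simp [mlog]

/-- Coefficients admissible for `LS_bound`. -/
structure Adm (f : ℕ → ℂ) (q : ℕ) (Z:ℝ) : Prop where
  hq : 1 ≤ q
  hZ : 1 ≤ Z
  hqZ : log q ≤ Z
  h1 : ∀ n, ‖f n‖ ≤ 1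
  hs : ∀ N, ‖∑ i ∈ range N, f i‖ ≤ q

lemma LS_lip : ∃ C : ℝ, 1 ≤ C ∧ ∀ (f : ℕ → ℂ) (q : ℕ) (Z:ℝ), Adm f q Z → ∀ (R:ℝ) (s s':ℂ),
    1 < s.re → 1 < s'.re → ‖s‖ ≤ R → ‖s'‖ ≤ R →
    ‖LSeries f s - LSeries f s'‖ ≤ C * (1 + R) * Z ^ 2 * ‖s - s'‖ := by
  obtain ⟨C, hC, hb⟩ := LS_bound 1
  refine ⟨max C 1, le_max_right _ _, fun f q Z hA R s s' h1 h2 h3 h4 => ?_⟩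
  have habs : LSeries.abscissaOfAbsConv f ≤ 1 := by
    apply LSeries.abscissaOfAbsConv_le_one_of_isBigO_one
    exact Asymptotics.isBigO_of_le _ (fun n => by simpa using hA.h1 n)
  refine Convex.norm_image_sub_le_of_norm_hasDerivWithin_le (𝕜 := ℂ) (f' := fun s => - LSeries (LSeries.logMul f) s)
    (s := {z : ℂ | 1 < z.re} ∩ Metric.closedBall 0 R) (x := s') (y := s) ?_ ?_ ?_ ?_ ?_
  · intro z hz
    exact (LSeries_hasDerivAt (lt_of_le_of_lt habs (mod_cast hz.1))).hasDerivWithinAt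
  · intro z hz
    rw [norm_neg, ← mlog_one]
    have hz2 : ‖z‖ ≤ R := by simpa using hz.2
    have := hb f q Z hA.hq hA.hZ hA.hqZ hA.h1 hA.hs z hz.1
    refine this.trans ?_
    have : (0:ℝ) ≤ ‖z‖ := norm_nonneg z
    have hZ := hA.hZ
    norm_num
    gcongr
    exact le_max_left _ _
  · exact (convex_halfSpace_re_gt 1).inter (convex_closedBall 0 R)
  · exact ⟨h2, by simpa using h4⟩
  · exact ⟨h1, by simpa using h3⟩

lemma chi_adm {q : ℕ} [NeZero q] (χ : 𝒟 q) (hχ : χ ≠ 1) {Z : ℝ} (hZ : 1 ≤ Z)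
    (hqZ : log q ≤ Z) : Adm (fun n => χ n) q Z := by
  refine ⟨Nat.one_le_iff_ne_zero.mpr (NeZero.ne q), hZ, hqZ, fun n => χ.norm_le_one _, ?_⟩
  refine periodic_bound (pos_of_ne_zero (NeZero.ne q)) (fun n => by simp) ?_ (fun n => χ.norm_le_one _)
  have := MulChar.sum_eq_zero_of_ne_one hχ
  rw [← this]
  exact (sum_nbij' (fun n => (n : ZMod q)) (fun a => a.val) (by simp)
    (by intro a _; simpa using ZMod.val_lt a) (by intro n hn; simp at hn; exact ZMod.val_cast_of_lt hn)
    (by intro a _; simp) (by simp))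

lemma triv_adm {q : ℕ} [NeZero q] {Z : ℝ} (hZ : 1 ≤ Z) (hqZ : log q ≤ Z) : 
    Adm (fun n => (1 : 𝒟 q) n - (q.totient / q:ℝ)) q Z := by
  have hq0 : (0:ℝ) < q := mod_cast pos_of_ne_zero (NeZero.ne q)
  have ht : (q.totient / q:ℝ) ≤ 1 := by
    rw [div_le_one hq0]; exact_mod_cast Nat.totient_le q
  have ht0 : 0 ≤ (q.totient / q:ℝ) := by positivity
  have hn : ∀ n : ℕ, ‖(1 : 𝒟 q) n - ((q.totient / q:ℝ):ℂ)‖ ≤ 1 := by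
    intro n
    by_cases h : IsUnit (n : ZMod q)
    · rw [MulChar.one_apply h, ← ofReal_one, ← ofReal_sub, norm_real, norm_eq_abs, abs_le]
      constructor <;> linarith
    · rw [MulChar.map_nonunit _ h, zero_sub, norm_neg, norm_real, norm_eq_abs, abs_le]
      constructor <;> linarith
  refine ⟨Nat.one_le_iff_ne_zero.mpr (NeZero.ne q), hZ, hqZ, hn, ?_⟩
  refine periodic_bound (pos_of_ne_zero (NeZero.ne q)) (fun n => by simp) ?_ hn
  rw [sum_sub_distrib]
  have : ∑ i ∈ range q, (1 : 𝒟 q) i = ∑ a : ZMod q, (1 : 𝒟 q) a :=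
    (sum_nbij' (fun n => (n : ZMod q)) (fun a => a.val) (by simp)
    (by intro a _; simpa using ZMod.val_lt a) (by intro n hn; simp at hn; exact ZMod.val_cast_of_lt hn)
    (by intro a _; simp) (by simp))
  rw [this, MulChar.sum_one_eq_card_units, ZMod.card_units_eq_totient]
  simp
  rw [mul_div_cancel₀]
  · simp
  · exact_mod_cast NeZero.ne q

/-! ### The Riemann zeta function near `1` -/

lemma zeta_step {s : ℂ} (hs : 1 < s.re) {a : ℝ} (ha : 1 ≤ a) :
    ‖((a + 1:ℝ):ℂ) ^ (1 - s) / (1 - s) - (a:ℂ) ^ (1 - s) / (1 - s) - (a:ℂ) ^ (-s)‖ ≤ ‖s‖ * a ^ (-2:ℝ) := by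
  have hs0 : s ≠ 0 := by rintro rfl; simp at hs; linarith
  have hs1 : 1 - s ≠ 0 := by
    intro h; have := congrArg re h; simp at this; linarith
  have hstep : ∀ x ∈ Set.Icc a (a + 1), ‖(x:ℂ) ^ (-s) - (a:ℂ) ^ (-s)‖ ≤ ‖s‖ * a ^ (-2:ℝ) := by
    intro x hx
    have hd : ∀ y ∈ Set.Icc a x, HasDerivWithinAt (fun y : ℝ => (y:ℂ) ^ (-s)) ((-s) * (y:ℂ) ^ (-s - 1)) (Set.Icc a x) y := by
      intro y hy
      exact (hasDerivAt_ofReal_cpow_const (by linarith [hy.1]) (neg_ne_zero.mpr hs0)).hasDerivWithinAt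
    have := norm_image_sub_le_of_norm_deriv_le_segment' hd (C := ‖s‖ * a ^ (-2:ℝ)) ?_ x (Set.right_mem_Icc.mpr hx.1)
    · refine this.trans ?_
      have : x - a ≤ 1 := by linarith [hx.2]
      exact mul_le_of_le_one_right (by positivity) this
    · intro y hy
      have hy0 : 0 < y := by linarith [hy.1]
      rw [norm_mul, norm_neg, norm_cpow_eq_rpow_re_of_pos hy0]
      gcongr
      simp only [Complex.sub_re, Complex.neg_re, Complex.one_re]
      exact (rpow_le_rpow_of_exponent_le (by linarith [hy.1]) (by linarith : -s.re - 1 ≤ -2)).trans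
        (Real.rpow_le_rpow_of_nonpos (by linarith) hy.1 (by norm_num))
  have hd : ∀ y ∈ Set.Icc a (a + 1), HasDerivWithinAt (fun y : ℝ => (y:ℂ) ^ (1 - s) / (1 - s) - (y:ℂ) * (a:ℂ) ^ (-s))
      ((y:ℂ) ^ (-s) - (a:ℂ) ^ (-s)) (Set.Icc a (a + 1)) y := by
    intro y hy
    have h1 := hasDerivAt_ofReal_cpow_const (x := y) (by linarith [hy.1]) hs1
    have h2 := (h1.div_const (1 - s)).sub ((ofRealCLM.hasDerivAt (x := y)).mul_const ((a:ℂ) ^ (-s)))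
    refine (h2.congr_deriv ?_).hasDerivWithinAt
    rw [mul_div_cancel_left₀ _ hs1]; simp
  have := norm_image_sub_le_of_norm_deriv_le_segment' hd (C := ‖s‖ * a ^ (-2:ℝ))
    (fun y hy => hstep y ⟨hy.1, hy.2.le⟩) (a + 1) (Set.right_mem_Icc.mpr (by linarith))
  refine le_trans (le_of_eq ?_) (this.trans (by simp))
  congr 1; push_cast; ring

lemma zeta_bound : ∃ C : ℝ, 0 < C ∧ ∀ s : ℂ, 1 < s.re → ‖LSeries 1 s - 1 / (s - 1)‖ ≤ C * ‖s‖ := by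
  have hsum : Summable (fun n : ℕ => (n:ℝ) ^ (-2:ℝ)) := Real.summable_nat_rpow.mpr (by norm_num)
  refine ⟨1 + ∑' n : ℕ, (n:ℝ) ^ (-2:ℝ), by have : 0 ≤ ∑' n : ℕ, (n:ℝ) ^ (-2:ℝ) := tsum_nonneg (fun n => by positivity)
                                           linarith, fun s hs => ?_⟩
  have hs1 : 1 - s ≠ 0 := by
    intro h; have := congrArg re h; simp at this; linarith
  have hL : LSeriesSummable 1 s := LSeriesSummable_one_iff.mpr hs
  have ht := hL.hasSum.tendsto_sum_nat
  have hlim : Tendsto (fun N : ℕ => ((N:ℝ):ℂ) ^ (1 - s) / (1 - s)) atTop (nhds 0) := by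
    rw [tendsto_zero_iff_norm_tendsto_zero]
    have : Tendsto (fun N : ℕ => (N:ℝ) ^ (-(s.re - 1)) / ‖1 - s‖) atTop (nhds (0 / ‖1 - s‖)) :=
      ((tendsto_rpow_neg_atTop (by linarith)).comp tendsto_natCast_atTop_atTop).div_const _
    rw [zero_div] at this
    refine this.congr' ?_
    filter_upwards [Filter.eventually_gt_atTop 0] with N hN
    rw [norm_div, norm_cpow_eq_rpow_re_of_pos (mod_cast hN)]
    simp
  have h3 := ((ht.sub hlim).sub_const (1 / (s - 1))).norm
  rw [sub_zero] at h3
  refine le_of_tendsto h3 ?_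
  filter_upwards [eventually_ge_atTop 1] with N hN
  have key : ∑ i ∈ range N, LSeries.term 1 s i - ((N:ℝ):ℂ) ^ (1 - s) / (1 - s) - 1 / (s - 1) =
      - ∑ i ∈ Ico 1 N, (((i + 1:ℝ):ℂ) ^ (1 - s) / (1 - s) - ((i:ℝ):ℂ) ^ (1 - s) / (1 - s) - ((i:ℝ):ℂ) ^ (-s)) := by
    rw [sum_sub_distrib]
    have e1 : ∑ i ∈ Ico 1 N, (((i + 1:ℝ):ℂ) ^ (1 - s) / (1 - s) - ((i:ℝ):ℂ) ^ (1 - s) / (1 - s)) =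
        ((N:ℝ):ℂ) ^ (1 - s) / (1 - s) - 1 / (1 - s) := by
      have := sum_Ico_sub (fun i : ℕ => ((i:ℝ):ℂ) ^ (1 - s) / (1 - s)) hN
      simp only [Nat.cast_add, Nat.cast_one, ofReal_one, Complex.one_cpow] at this
      exact this
    rw [e1, range_eq_Ico, sum_eq_sum_Ico_succ_bot (by omega)]
    have e2 : ∑ i ∈ Ico (0+1) N, LSeries.term 1 s i = ∑ i ∈ Ico 1 N, ((i:ℝ):ℂ) ^ (-s) := by
      refine sum_congr rfl fun i hi => ?_
      rw [LSeries.term_of_ne_zero (by simp at hi; omega), cpow_neg]; simp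
    rw [e2, LSeries.term_zero, show s - 1 = -(1 - s) by ring, div_neg]
    ring
  rw [key, norm_neg]
  calc _ ≤ ∑ i ∈ Ico 1 N, ‖s‖ * (i:ℝ) ^ (-2:ℝ) := by
        refine (norm_sum_le _ _).trans (sum_le_sum fun i hi => ?_)
        simp only [mem_Ico] at hi
        have hi1 : (1:ℝ) ≤ i := mod_cast hi.1
        have := zeta_step hs hi1
        exact_mod_cast this
    _ ≤ ‖s‖ * ∑' n : ℕ, (n:ℝ) ^ (-2:ℝ) := by
        rw [← mul_sum]; gcongr
        exact hsum.sum_le_tsum _ (fun i _ => by positivity)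
    _ ≤ _ := by nlinarith [norm_nonneg s]

/-- Bound for the `L`-function of the principal character to the right of `1`. -/
lemma triv_bound : ∃ C : ℝ, 1 ≤ C ∧ ∀ (q : ℕ) [NeZero q] (Z:ℝ), 1 ≤ Z → log q ≤ Z → ∀ s : ℂ, 1 < s.re →
    ‖LSeries (fun n => (1 : 𝒟 q) n) s‖ ≤ C * (1 + ‖s‖) * Z + 1 / ‖s - 1‖ := by
  obtain ⟨C, hC, hb⟩ := LS_bound 0
  obtain ⟨C', hC', hz⟩ := zeta_bound
  refine ⟨C + C' + 1, by linarith, fun q _ Z hZ hqZ s hs => ?_⟩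
  have hA := triv_adm (q := q) hZ hqZ
  have hq0 : (0:ℝ) < q := mod_cast pos_of_ne_zero (NeZero.ne q)
  set c : ℝ := q.totient / q with hc
  have hc1 : c ≤ 1 := by
    rw [hc, div_le_one hq0]; exact_mod_cast Nat.totient_le q
  have hc0 : 0 ≤ c := by positivity
  have h1 := hb _ q Z hA.hq hA.hZ hA.hqZ hA.h1 hA.hs s hs
  rw [mlog_zero] at h1
  have e : (fun n : ℕ => (1 : 𝒟 q) n) =
      (fun n : ℕ => (1 : 𝒟 q) n - (c:ℂ)) + (c:ℂ) • (1 : ℕ → ℂ) := by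
    funext n; simp
  have s1 : LSeriesSummable (fun n : ℕ => (1 : 𝒟 q) n - (c:ℂ)) s := by
    have := summable_mlog hA.h1 0 hs
    rwa [mlog_zero] at this
  have s2 : LSeriesSummable 1 s := LSeriesSummable_one_iff.mpr hs
  rw [e, LSeries_add s1 (s2.smul _), LSeries_smul]
  have h2 : ‖LSeries 1 s‖ ≤ C' * ‖s‖ + 1 / ‖s - 1‖ := by
    have h := hz s hs
    have e2 : LSeries 1 s = (LSeries 1 s - 1 / (s - 1)) + 1 / (s - 1) := by ring
    rw [e2]
    refine (norm_add_le _ _).trans ?_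
    rw [norm_div 1 (s - 1), norm_one]
    linarith
  refine (norm_add_le _ _).trans ?_
  rw [norm_mul, norm_real, norm_eq_abs, abs_of_nonneg hc0]
  have h3 : c * ‖LSeries 1 s‖ ≤ 1 * ‖LSeries 1 s‖ := by gcongr
  have ns := norm_nonneg s
  norm_num at h1
  have : C' * ‖s‖ ≤ C' * (1 + ‖s‖) * Z := by nlinarith [mul_nonneg hC'.le ns, mul_nonneg (mul_nonneg hC'.le ns) (sub_nonneg.mpr hZ)]
  have : 0 ≤ (1 + ‖s‖) * Z := by positivity
  nlinarith

/-! ### Lower bounds for `L(s, χ)` -/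

/-- The comparison step in the classical lower bound for `L`-functions near the line `Re s = 1`:
a lower bound degenerating as `σ → 1` is propagated by the Lipschitz property. -/
lemma lower_core (D Y:ℝ) (a : ℕ) (hD : 1 ≤ D) (hY : 1 ≤ Y) (F : ℝ → ℝ) (hF : ∀ σ, 0 ≤ F σ)
    (h1 : ∀ σ, 1 < σ → σ ≤ 2 → (σ - 1) ^ 3 ≤ F σ ^ 4 * (D ^ 4 * Y ^ (4 * a)))
    (h2 : ∀ σ σ', 1 < σ → σ ≤ σ' → σ' ≤ 2 → F σ' ≤ F σ + D ^ 4 * Y ^ 3 * (σ' - σ))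
    {σ : ℝ} (hσ : 1 < σ) (hσ2 : σ ≤ 2) :
    (1 / (2 * D ^ 5)) ^ 3 / (2 * D) / Y ^ (4 * a + 9) ≤ F σ := by
  set η : ℝ := 1 / (2 * D ^ 5) with hη
  have hD0 : 0 < D := by linarith
  have hY0 : 0 < Y := by linarith
  have hη0 : 0 < η := by positivity
  set x0 : ℝ := η ^ 4 / Y ^ (4 * (a + 3)) with hx0
  have hx00 : 0 < x0 := by positivity
  have hD5 : 1 ≤ D ^ 5 := one_le_pow₀ hD
  have hη1 : η ≤ 1 := by rw [hη, div_le_one (by positivity)]; linarith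
  have hx01 : x0 ≤ 1 := by
    rw [hx0, div_le_one (by positivity)]
    exact (pow_le_one₀ hη0.le hη1).trans (one_le_pow₀ hY)
  have big : ∀ σ, 1 + x0 ≤ σ → σ ≤ 2 → η ^ 3 / D / Y ^ (4 * a + 9) ≤ F σ := by
    intro σ hs hs2
    by_contra hlt
    push Not at hlt
    have h4 : F σ ^ 4 < (η ^ 3 / D / Y ^ (4 * a + 9)) ^ 4 := pow_lt_pow_left₀ hlt (hF σ) (by norm_num)
    have h5 := h1 σ (by linarith) hs2
    have h6 : x0 ^ 3 ≤ (σ - 1) ^ 3 := pow_le_pow_left₀ hx00.le (by linarith) 3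
    have h7 : F σ ^ 4 * (D ^ 4 * Y ^ (4 * a)) < (η ^ 3 / D / Y ^ (4 * a + 9)) ^ 4 * (D ^ 4 * Y ^ (4 * a)) := by
      gcongr
    have h8 : (η ^ 3 / D / Y ^ (4 * a + 9)) ^ 4 * (D ^ 4 * Y ^ (4 * a)) = x0 ^ 3 := by
      rw [hx0]
      field_simp
      ring
    linarith
  have hpos : 0 < η ^ 3 / D / Y ^ (4 * a + 9) := by positivity
  have hhalf : η ^ 3 / (2 * D) / Y ^ (4 * a + 9) = (η ^ 3 / D / Y ^ (4 * a + 9)) / 2 := by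
    field_simp
  rw [hhalf]
  by_cases hc : 1 + x0 ≤ σ
  · linarith [big σ hc hσ2]
  · push Not at hc
    have h3 := big (1 + x0) le_rfl (by linarith)
    have h4 := h2 σ (1 + x0) hσ hc.le (by linarith)
    have h5 : D ^ 4 * Y ^ 3 * (1 + x0 - σ) ≤ D ^ 4 * Y ^ 3 * x0 := by
      gcongr; linarith
    have h6 : D ^ 4 * Y ^ 3 * x0 = (η ^ 3 / D / Y ^ (4 * a + 9)) / 2 := by
      rw [hx0, show η ^ 4 = η ^ 3 * η by ring]
      nth_rewrite 2 [hη]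
      field_simp
      ring
    linarith

/-- A nonprincipal character which is complex, or real without an exceptionally small value on the
real axis (relative to the parameter `Z`). -/
def Reg {q : ℕ} (χ : 𝒟 q) (Z:ℝ) : Prop :=
  χ ^ 2 ≠ 1 ∨ ∀ σ : ℝ, 1 < σ → σ ≤ 2 → Z ^ (-8:ℤ) ≤ ‖LSeries (fun n => χ n) (σ:ℂ)‖

/-- For large `|t|`, or `χ² ≠ 1`, the inequality `3 + 4 cos θ + cos 2θ ≥ 0` gives the bound; otherwise `Reg` gives
a bound near the real axis. -/
lemma L_lower : ∃ c : ℝ, 0 < c ∧ ∀ (q : ℕ) [NeZero q] (χ : 𝒟 q) (Z:ℝ), χ ≠ 1 → 1 ≤ Z →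
    log q ≤ Z → Reg χ Z → ∀ σ t : ℝ, 1 < σ → σ ≤ 2 →
    c / (Z * (3 + |t|)) ^ 25 ≤ ‖LSeries (fun n => χ n) (σ + I * t)‖ := by
  obtain ⟨C1, hC1, hlip⟩ := LS_lip
  obtain ⟨C2, hC2, htriv⟩ := triv_bound
  obtain ⟨C3, hC3, hbd⟩ := LS_bound 0
  set C := max C1 (max C2 C3) with hC
  have hC1' : C1 ≤ C := le_max_left _ _
  have hC2' : C2 ≤ C := (le_max_left _ _).trans (le_max_right _ _)
  have hC3' : C3 ≤ C := (le_max_right _ _).trans (le_max_right _ _)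
  have hC1 : 1 ≤ C := by linarith
  set D := 6 * C with hD
  have hD1 : 1 ≤ D := by linarith
  set c1 := (1 / (2 * D ^ 5)) ^ 3 / (2 * D) with hc1
  have hc10 : 0 < c1 := by positivity
  refine ⟨min c1 (1/2), by positivity, fun q _ χ Z hχ hZ hqZ hreg σ t hσ hσ2 => ?_⟩
  set Y := Z * (3 + |t|) with hY
  have ht0 : 0 ≤ |t| := abs_nonneg t
  have hZY : Z ≤ Y := by rw [hY]; nlinarith
  have hY1 : 1 ≤ Y := by linarith
  have hY0 : 0 < Y := by linarith
  have hA := chi_adm χ hχ hZ hqZ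
  set L : ℂ → ℂ := LSeries (fun n => χ n) with hL
  have nrm : ∀ σ u : ℝ, 1 < σ → σ ≤ 2 → ‖(σ:ℂ) + I * u‖ ≤ 2 + |u| := by
    intro σ u h1 h2
    refine (norm_add_le _ _).trans ?_
    simp only [norm_real, norm_mul, norm_I, one_mul, norm_eq_abs]
    rw [abs_of_pos (by linarith : (0:ℝ) < σ)]; linarith
  -- the main case, given a bound for the square
  have main : (∀ σ : ℝ, 1 < σ → σ ≤ 2 → ‖LSeries (fun n => (χ ^ 2) n) (σ + I * (2 * t:ℝ))‖ ≤ 6 * C * Y ^ 10) →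
      c1 / Y ^ 25 ≤ ‖L (σ + I * t)‖ := by
    intro hsq
    have := lower_core D Y 4 hD1 hY1 (fun σ => ‖L (σ + I * t)‖) (fun σ => norm_nonneg _) ?_ ?_ hσ hσ2
    · exact this
    · intro σ h1 h2
      have h341 := DirichletCharacter.norm_LSeries_product_ge_one χ (x := σ - 1) (by linarith) t
      have hz := htriv q Z hZ hqZ (σ:ℂ) (by simpa using h1)
      have e0 : (1:ℂ) + ((σ - 1:ℝ):ℂ) = σ := by push_cast; ring
      have e1 : (σ:ℂ) + 2 * I * t = σ + I * ((2 * t:ℝ):ℂ) := by push_cast; ring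
      rw [e0, e1, norm_mul, norm_mul, norm_pow, norm_pow] at h341
      have hx0 : 0 < σ - 1 := by linarith
      have nz : ‖LSeries (fun n => (1 : 𝒟 q) n) σ‖ ≤ 5 * C * Y / (σ - 1) := by
        refine hz.trans ?_
        have e2 : ‖(σ:ℂ) - 1‖ = σ - 1 := by
          rw [← ofReal_one, ← ofReal_sub, norm_real, norm_eq_abs, abs_of_pos hx0]
        have e3 : ‖(σ:ℂ)‖ ≤ 2 := by rw [norm_real, norm_eq_abs, abs_of_pos (by linarith)]; exact h2
        rw [e2, le_div_iff₀ hx0, add_mul, one_div, inv_mul_cancel₀ hx0.ne']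
        have : C2 * (1 + ‖(σ:ℂ)‖) * Z * (σ - 1) ≤ C * (1 + 2) * Y * 1 := by
          gcongr
          linarith
        nlinarith
      have hs := hsq σ h1 h2
      have : 1 ≤ (5 * C * Y / (σ - 1)) ^ 3 * ‖L (σ + I * t)‖ ^ 4 * (6 * C * Y ^ 10) := by
        refine h341.le.trans ?_
        gcongr
      rw [div_pow, div_mul_eq_mul_div, div_mul_eq_mul_div, le_div_iff₀ (by positivity), one_mul] at this
      refine this.trans ?_
      have h0 : 0 ≤ ‖L (σ + I * t)‖ ^ 4 := by positivity
      calc (5 * C * Y) ^ 3 * ‖L (σ + I * t)‖ ^ 4 * (6 * C * Y ^ 10)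
          = ‖L (σ + I * t)‖ ^ 4 * (750 * C ^ 4 * Y ^ 13) := by ring
        _ ≤ ‖L (σ + I * t)‖ ^ 4 * (1296 * C ^ 4 * Y ^ 16) := by
            gcongr
            · norm_num
            · norm_num
        _ = _ := by rw [hD]; ring
    · intro σ σ' h1 h2 h3
      have := hlip _ q Z hA (2 + |t|) (σ' + I * t) (σ + I * t) (by simp; linarith) (by simp; linarith)
        (nrm _ _ (by linarith) h3) (nrm _ _ h1 (by linarith))
      have e : ((σ':ℂ) + I * t) - (σ + I * t) = ((σ' - σ:ℝ):ℂ) := by push_cast; ring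
      rw [e, norm_real, norm_eq_abs, abs_of_nonneg (show 0 ≤ σ' - σ by linarith)] at this
      change ‖L (σ' + I * t) - L (σ + I * t)‖ ≤ _ at this
      have h4 := norm_sub_norm_le (L (σ' + I * t)) (L (σ + I * t))
      have h5 : C1 * (1 + (2 + |t|)) * Z ^ 2 * (σ' - σ) ≤ D ^ 4 * Y ^ 3 * (σ' - σ) := by
        apply mul_le_mul_of_nonneg_right _ (by linarith)
        calc C1 * (1 + (2 + |t|)) * Z ^ 2 = C1 * (Y * Z) := by rw [hY]; ring
          _ ≤ D ^ 4 * (Y * Y * Y) := by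
            have : C1 ≤ D ^ 4 := by
              calc C1 ≤ D := by linarith
                _ ≤ D ^ 4 := le_self_pow₀ hD1 (by norm_num)
            have : Y * Z ≤ Y * Y * Y := by nlinarith
            gcongr
          _ = _ := by ring
      show ‖L (σ' + I * t)‖ ≤ ‖L (σ + I * t)‖ + D ^ 4 * Y ^ 3 * (σ' - σ)
      linarith
  have hmin : min c1 (1/2) / Y ^ 25 ≤ c1 / Y ^ 25 := by gcongr; exact min_le_left _ _
  have hZ10 : Z ≤ Z ^ 10 := le_self_pow₀ hZ (by norm_num)
  have hY10 : Y ≤ Y ^ 10 := le_self_pow₀ hY1 (by norm_num)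
  by_cases h2 : χ ^ 2 = 1
  · rcases hreg with h | hex
    · exact absurd h2 h
    · set τ : ℝ := 1 / (8 * C * Z ^ 10) with hτ
      have hτ0 : 0 < τ := by positivity
      by_cases htau : τ ≤ |t|
      · refine hmin.trans (main fun σ h1 h2' => ?_)
        have hb := htriv q Z hZ hqZ (σ + I * (2 * t:ℝ)) (by simpa using h1)
        rw [h2]
        refine hb.trans ?_
        have n1 := nrm σ (2 * t) h1 h2'
        rw [abs_mul, abs_of_pos (by norm_num : (0:ℝ) < 2)] at n1
        have n2 : 2 * τ ≤ ‖(σ:ℂ) + I * (2 * t:ℝ) - 1‖ := by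
          refine le_trans ?_ (Complex.abs_im_le_norm _)
          simp [abs_mul]; linarith
        have n3 : 1 / ‖(σ:ℂ) + I * (2 * t:ℝ) - 1‖ ≤ 4 * C * Y ^ 10 := by
          refine (one_div_le_one_div_of_le (by positivity) n2).trans ?_
          rw [hτ]
          have : Z ^ 10 ≤ Y ^ 10 := pow_le_pow_left₀ (by linarith) hZY 10
          calc 1 / (2 * (1 / (8 * C * Z ^ 10))) = 4 * C * Z ^ 10 := by field_simp; norm_num
            _ ≤ _ := by gcongr
        have n4 : C2 * (1 + ‖(σ:ℂ) + I * (2 * t:ℝ)‖) * Z ≤ 2 * C * Y ^ 10 := by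
          calc _ ≤ C * (1 + (2 + 2 * |t|)) * Z := by gcongr
            _ ≤ 2 * C * Y := by rw [hY]; nlinarith [mul_pos (by linarith : 0 < C) (by linarith : 0 < Z)]
            _ ≤ _ := by gcongr
        linarith
      · push Not at htau
        have hex' := hex σ hσ hσ2
        have ht1 : |t| ≤ 1 := by
          refine htau.le.trans ?_
          rw [hτ, div_le_one (by positivity)]
          nlinarith [one_le_pow₀ hZ (n := 10)]
        have nσ : ‖(σ:ℂ)‖ ≤ 3 := by rw [norm_real, norm_eq_abs, abs_of_pos (by linarith)]; linarith
        have := hlip _ q Z hA 3 σ (σ + I * t) (by simpa using hσ) (by simpa using hσ)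
          nσ ((nrm _ _ hσ hσ2).trans (by linarith))
        have h4 := norm_sub_norm_le (L σ) (L (σ + I * t))
        have e : (σ:ℂ) - (σ + I * t) = -(I * t) := by ring
        rw [e, norm_neg, norm_mul, norm_I, one_mul, norm_real, norm_eq_abs] at this
        have h5 : C1 * (1 + 3) * Z ^ 2 * |t| ≤ Z ^ (-8:ℤ) / 2 := by
          calc _ ≤ C * (1 + 3) * Z ^ 2 * τ := by gcongr
            _ = _ := by
              rw [hτ, zpow_neg]
              have : Z ≠ 0 := by linarith
              norm_cast
              field_simp
              norm_num
        have h6 : 1 / 2 / Y ^ 25 ≤ Z ^ (-8:ℤ) / 2 := by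
          rw [zpow_neg, div_div, ← one_div, div_div]
          norm_cast
          apply one_div_le_one_div_of_le (by positivity)
          rw [mul_comm]
          have : Z ^ 8 ≤ Y ^ 25 := by
            calc Z ^ 8 ≤ Y ^ 8 := by gcongr
              _ ≤ Y ^ 25 := pow_le_pow_right₀ hY1 (by norm_num)
          linarith
        have h7 : min c1 (1/2) / Y ^ 25 ≤ 1/2 / Y ^ 25 := by gcongr; exact min_le_right _ _
        have h8 : ‖L σ‖ ≥ Z ^ (-8:ℤ) := hex'
        have h9 : ‖L σ - L (σ + I * t)‖ ≤ C1 * (1 + 3) * Z ^ 2 * |t| := this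
        linarith
  · refine hmin.trans (main fun σ h1 h2' => ?_)
    have hA2 := chi_adm (χ ^ 2) h2 hZ hqZ
    have hb := hbd _ q Z hA2.hq hA2.hZ hA2.hqZ hA2.h1 hA2.hs (σ + I * (2 * t:ℝ)) (by simpa using h1)
    rw [mlog_zero] at hb
    refine hb.trans ?_
    have n1 := nrm σ (2 * t) h1 h2'
    rw [abs_mul, abs_of_pos (by norm_num : (0:ℝ) < 2)] at n1
    rw [zero_add, pow_one]
    calc _ ≤ C * (1 + (2 + 2 * |t|)) * Z := by gcongr
      _ ≤ 2 * C * Y := by rw [hY]; nlinarith [mul_pos (by linarith : 0 < C) (by linarith : 0 < Z)]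
      _ ≤ 6 * C * Y ^ 10 := by gcongr <;> linarith

/-! ### Derivatives of `L'/L` -/

/-- The coefficients `Λ(n) χ(n)`. -/
noncomputable def lam {q : ℕ} (χ : 𝒟 q) : ℕ → ℂ :=
  fun n => (vonMangoldt n:ℂ) * χ n

lemma norm_lam_le {q : ℕ} (χ : 𝒟 q) (n : ℕ) : ‖lam χ n‖ ≤ log n := by
  rw [lam, norm_mul, norm_real, norm_eq_abs, abs_of_nonneg vonMangoldt_nonneg]
  calc _ ≤ vonMangoldt n * 1 := by
        gcongr
        exact χ.norm_le_one _
    _ ≤ _ := by rw [mul_one]; exact vonMangoldt_le_log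

lemma summable_lam {q : ℕ} (χ : 𝒟 q) (k : ℕ) {s : ℂ} (hs : 1 < s.re) :
    LSeriesSummable (mlog (lam χ) k) s := by
  have h := (summable_mlog (f := fun _ => (1:ℂ)) (A := 1) (by simp) (k + 1) hs).norm
  refine Summable.of_norm_bounded h fun n => ?_
  apply LSeries.norm_term_le
  have hl : 0 ≤ log n := log_natCast_nonneg n
  rw [mlog, mlog, norm_mul, norm_mul, norm_pow, norm_pow, norm_real, norm_eq_abs, abs_of_nonneg hl,
    norm_one, one_mul, pow_succ, mul_comm]
  gcongr
  exact norm_lam_le χ n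

/-- `log^{k+1} = ∑ C(k,j) (Λ log^j) * log^{k-j}`, twisted by a character. -/
lemma mlog_conv {q : ℕ} (χ : 𝒟 q) (k : ℕ) {n : ℕ} (hn : n ≠ 0) :
    mlog (fun n => χ n) (k + 1) n = (∑ j ∈ range (k + 1), ((k.choose j:ℂ) •
      LSeries.convolution (mlog (lam χ) j) (mlog (fun n => χ n) (k - j)))) n := by
  simp only [Finset.sum_apply, Pi.smul_apply, LSeries.convolution_def, smul_eq_mul, mul_sum]
  rw [sum_comm]
  have key : ∀ p ∈ n.divisorsAntidiagonal, ∑ j ∈ range (k + 1), ((k.choose j:ℂ) *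
      (mlog (lam χ) j p.1 * mlog (fun n => χ n) (k - j) p.2)) =
      (vonMangoldt p.1:ℂ) * (χ n * ((log n:ℝ):ℂ) ^ k) := by
    intro p hp
    obtain ⟨h1, h2⟩ := mem_divisorsAntidiagonal.mp hp
    have hp1 : p.1 ≠ 0 := by rintro h; simp [h] at h1; exact hn h1.symm
    have hp2 : p.2 ≠ 0 := by rintro h; simp [h] at h1; exact hn h1.symm
    have e1 : log n = log p.1 + log p.2 := by
      rw [← h1, Nat.cast_mul, log_mul (mod_cast hp1) (mod_cast hp2)]
    have e2 : χ (n : ZMod q) = χ p.1 * χ p.2 := by rw [← h1, Nat.cast_mul, map_mul]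
    rw [e1, e2, Complex.ofReal_add, add_pow, mul_sum, mul_sum]
    refine sum_congr rfl fun j _ => ?_
    simp only [mlog, lam]; ring
  rw [sum_congr rfl key, ← sum_mul]
  have e3 : ∑ p ∈ n.divisorsAntidiagonal, (vonMangoldt p.1:ℂ) = ((log n:ℝ):ℂ) := by
    rw [Nat.sum_divisorsAntidiagonal (f := fun a _ => (vonMangoldt a:ℂ)),
      ← vonMangoldt_sum]
    push_cast; rfl
  rw [e3, mlog]; ring

lemma L_rec {q : ℕ} (χ : 𝒟 q) (k : ℕ) {s : ℂ} (hs : 1 < s.re) :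
    LSeries (mlog (fun n => χ n) (k + 1)) s = ∑ j ∈ range (k + 1), (k.choose j:ℂ) *
      (LSeries (mlog (lam χ) j) s * LSeries (mlog (fun n => χ n) (k - j)) s) := by
  have hχ : ∀ n : ℕ, ‖χ (n : ZMod q)‖ ≤ 1 := fun n => χ.norm_le_one _
  rw [LSeries_congr (fun {n} hn => mlog_conv χ k hn) s, LSeries_sum]
  · refine sum_congr rfl fun j _ => ?_
    rw [LSeries_smul, LSeries_convolution' (summable_lam χ j hs) (summable_mlog hχ _ hs)]
  · intro j _
    exact LSeriesSummable.smul _ ((summable_lam χ j hs).convolution (summable_mlog hχ _ hs))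

/-- Bounds for the derivatives of `L'/L`, by induction from those of `L` and the lower bound `L_lower`. -/
lemma D_bound (k : ℕ) : ∃ C : ℝ, 1 ≤ C ∧ ∃ E : ℕ, ∀ j < k, ∀ (q : ℕ) [NeZero q] (χ : 𝒟 q) (Z:ℝ),
    χ ≠ 1 → 1 ≤ Z → log q ≤ Z → Reg χ Z → ∀ σ t : ℝ, 1 < σ → σ ≤ 2 →
    ‖LSeries (mlog (lam χ) j) (σ + I * t)‖ ≤ C * (Z * (3 + |t|)) ^ E := by
  obtain ⟨c, hc, hlow⟩ := L_lower
  choose B hB0 hB using LS_bound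
  induction k with
  | zero => exact ⟨1, le_rfl, 0, by simp⟩
  | succ k ih =>
    obtain ⟨C, hC, E, ih⟩ := ih
    set C' : ℝ := B (k + 1) + ∑ j ∈ range k, (k.choose j:ℝ) * C * B (k - j) with hC'
    have hC'0 : 0 ≤ C' := by
      have := hB0 (k + 1)
      have : 0 ≤ ∑ j ∈ range k, (k.choose j:ℝ) * C * B (k - j) :=
        sum_nonneg fun j _ => by have := hB0 (k - j); positivity
      linarith
    refine ⟨C + C' / c, by have : 0 ≤ C' / c := by positivity
                           linarith, E + k + 2 + 25, fun j hj q _ χ Z hχ hZ hqZ hreg σ t hσ hσ2 => ?_⟩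
    set s : ℂ := σ + I * t with hs
    have hsre : 1 < s.re := by simp [hs]; exact hσ
    set Y := Z * (3 + |t|) with hY
    have ht0 : 0 ≤ |t| := abs_nonneg t
    have hZY : Z ≤ Y := by rw [hY]; nlinarith
    have hY1 : 1 ≤ Y := by linarith
    have hY0 : 0 < Y := by linarith
    have hns : 1 + ‖s‖ ≤ 3 + |t| := by
      have : ‖s‖ ≤ 2 + |t| := by
        refine (norm_add_le _ _).trans ?_
        simp only [norm_real, norm_mul, norm_I, one_mul, norm_eq_abs]
        rw [abs_of_pos (by linarith : (0:ℝ) < σ)]; linarith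
      linarith
    have hCc : 0 ≤ C' / c := by positivity
    rcases Nat.lt_succ_iff_lt_or_eq.mp hj with hj | rfl
    · refine (ih j hj q χ Z hχ hZ hqZ hreg σ t hσ hσ2).trans ?_
      have : Y ^ E ≤ Y ^ (E + k + 2 + 25) := pow_le_pow_right₀ hY1 (by omega)
      have h2 : 0 ≤ Y ^ E := by positivity
      calc C * Y ^ E ≤ (C + C' / c) * Y ^ E := by gcongr; linarith
        _ ≤ _ := by gcongr
    · have hA := chi_adm χ hχ hZ hqZ
      have hLb : ∀ i, ‖LSeries (mlog (fun n => χ n) i) s‖ ≤ B i * Y ^ (i + 1) := by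
        intro i
        refine (hB i _ q Z hA.hq hA.hZ hA.hqZ hA.h1 hA.hs s hsre).trans ?_
        have := hB0 i
        have hZi : Z ^ (i + 1) * (3 + |t|) ≤ Y ^ (i + 1) := by
          rw [hY, mul_pow]
          gcongr
          exact le_self_pow₀ (by linarith) (by omega)
        calc B i * (1 + ‖s‖) * Z ^ (i + 1) ≤ B i * (3 + |t|) * Z ^ (i + 1) := by gcongr
          _ = B i * (Z ^ (i + 1) * (3 + |t|)) := by ring
          _ ≤ _ := by gcongr
      have hrec := L_rec χ j hsre
      rw [sum_range_succ, Nat.choose_self, Nat.cast_one, one_mul, Nat.sub_self, mlog_zero] at hrec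
      have hl := hlow q χ Z hχ hZ hqZ hreg σ t hσ hσ2
      set D := LSeries (mlog (lam χ) j) s
      set L := LSeries (fun n => χ n) s
      have hDL : ‖D‖ * ‖L‖ ≤ C' * Y ^ (E + j + 2) := by
        rw [← norm_mul, show D * L = LSeries (mlog (fun n => χ n) (j + 1)) s - ∑ i ∈ range j, (j.choose i:ℂ) *
          (LSeries (mlog (lam χ) i) s * LSeries (mlog (fun n => χ n) (j - i)) s) by rw [hrec]; ring]
        refine (norm_sub_le _ _).trans ?_
        rw [hC', add_mul]
        apply add_le_add
        · refine (hLb _).trans ?_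
          have := hB0 (j + 1)
          have : Y ^ (j + 1 + 1) ≤ Y ^ (E + j + 2) := pow_le_pow_right₀ hY1 (by omega)
          gcongr
        · refine (norm_sum_le _ _).trans ?_
          rw [sum_mul]
          refine sum_le_sum fun i hi => ?_
          have hi := mem_range.mp hi
          rw [norm_mul, norm_mul, Complex.norm_natCast]
          have h1 := ih i hi q χ Z hχ hZ hqZ hreg σ t hσ hσ2
          have h2 := hLb (j - i)
          have := hB0 (j - i)
          calc _ ≤ (j.choose i:ℝ) * ((C * Y ^ E) * (B (j - i) * Y ^ (j - i + 1))) := by gcongr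
            _ = (j.choose i:ℝ) * C * B (j - i) * Y ^ (E + (j - i + 1)) := by rw [pow_add]; ring
            _ ≤ _ := by
              have : Y ^ (E + (j - i + 1)) ≤ Y ^ (E + j + 2) := pow_le_pow_right₀ hY1 (by omega)
              gcongr
      have : ‖D‖ * (c / Y ^ 25) ≤ C' * Y ^ (E + j + 2) :=
        (mul_le_mul_of_nonneg_left hl (norm_nonneg _)).trans hDL
      rw [mul_div_assoc', div_le_iff₀ (by positivity)] at this
      calc ‖D‖ ≤ C' * Y ^ (E + j + 2) * Y ^ 25 / c := by rw [le_div_iff₀ hc]; exact this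
        _ = C' / c * Y ^ (E + j + 2 + 25) := by rw [pow_add _ (E + j + 2)]; ring
        _ ≤ _ := by gcongr; linarith

/-! ### Exceptional characters -/

lemma hasProd_ge_one {F : Nat.Primes → ℂ} {a : ℂ} (h : HasProd F a) (hF : ∀ p, 1 ≤ ‖F p‖) : 1 ≤ ‖a‖ := by
  refine ge_of_tendsto' (Tendsto.norm h) fun s => ?_
  rw [norm_prod]
  exact prod_induction _ (fun x => 1 ≤ x) (fun a b ha hb => one_le_mul_of_one_le_of_one_le ha hb) le_rfl
    (fun p _ => hF p)

lemma quad_val {q : ℕ} (χ : 𝒟 q) (h : χ ^ 2 = 1) (n : ZMod q) :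
    χ n = 0 ∨ χ n = 1 ∨ χ n = -1 := by
  by_cases hn : IsUnit n
  · right
    have : (χ n) ^ 2 = 1 := by
      rw [← MulChar.pow_apply' χ two_ne_zero, h, MulChar.one_apply hn]
    exact mul_self_eq_one_iff.mp (by rw [← sq]; exact this)
  · left; exact χ.map_nonunit hn

lemma zeta_le : ∃ C : ℝ, 1 ≤ C ∧ ∀ σ : ℝ, 1 < σ → σ ≤ 2 → ‖riemannZeta σ‖ ≤ C / (σ - 1) := by
  obtain ⟨C, hC, h⟩ := zeta_bound
  refine ⟨2 * C + 1, by linarith, fun σ h1 h2 => ?_⟩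
  have hs : 1 < (σ:ℂ).re := by simpa using h1
  have := h σ hs
  rw [LSeries_one_eq_riemannZeta hs] at this
  have h0 : 0 < σ - 1 := by linarith
  have e1 : ‖(σ:ℂ)‖ ≤ 2 := by rw [norm_real, norm_eq_abs, abs_of_pos (by linarith)]; exact h2
  have e2 : ‖(1:ℂ) / (σ - 1)‖ = 1 / (σ - 1) := by
    rw [← ofReal_one, ← ofReal_sub, ← Complex.ofReal_div, norm_real, norm_eq_abs,
      abs_of_pos (by positivity)]
  have h3 := norm_le_norm_add_norm_sub' (riemannZeta σ) (1 / (σ - 1))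
  rw [e2] at h3
  have h5 : ‖riemannZeta σ - 1 / (σ - 1)‖ ≤ C * 2 := this.trans (by gcongr)
  have h4 : C * 2 ≤ C * 2 / (σ - 1) := by
    rw [le_div_iff₀ h0]
    nlinarith
  calc _ ≤ 1 / (σ - 1) + C * 2 / (σ - 1) := by linarith
    _ = _ := by ring

lemma local_u {p : Nat.Primes} {σ : ℝ} (hσ : 1 < σ) : ∃ u : ℝ, 0 ≤ u ∧ u < 1 ∧ (p:ℂ) ^ (-(σ:ℂ)) = u := by
  have hp : (1:ℝ) < (p : ℕ) := mod_cast p.2.one_lt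
  refine ⟨((p : ℕ):ℝ) ^ (-σ), by positivity, Real.rpow_lt_one_of_one_lt_of_neg hp (by linarith), ?_⟩
  rw [ofReal_cpow (by positivity)]
  push_cast; rfl

lemma norm_inv_real_ge {w : ℂ} {x : ℝ} (h : w = x) (h0 : 0 < x) (h1 : x ≤ 1) : 1 ≤ ‖w⁻¹‖ := by
  rw [h, norm_inv, norm_real, norm_eq_abs, abs_of_pos h0]
  exact (one_le_inv₀ h0).mpr h1

lemma euler_two {q : ℕ} (χ : 𝒟 q) (hχ : χ ^ 2 = 1) {σ : ℝ} (hσ : 1 < σ) :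
    1 ≤ ‖riemannZeta σ * LSeries (fun n => χ n) σ‖ := by
  have hs : 1 < (σ:ℂ).re := by simpa using hσ
  refine hasProd_ge_one ((riemannZeta_eulerProduct_hasProd hs).mul (LSeries_eulerProduct_hasProd χ hs))
    fun p => ?_
  obtain ⟨u, h0, h1, hu⟩ := local_u (p := p) hσ
  rw [hu, ← mul_inv]
  rcases quad_val χ hχ p with h | h | h <;> rw [h]
  · exact norm_inv_real_ge (x := 1 - u) (by push_cast; ring) (by linarith) (by linarith)
  · exact norm_inv_real_ge (x := (1 - u) * (1 - u)) (by push_cast; ring) (by nlinarith) (by nlinarith)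
  · exact norm_inv_real_ge (x := (1 - u) * (1 + u)) (by push_cast; ring) (by nlinarith) (by nlinarith)

lemma euler_four {q1 q2 q : ℕ} (χ1 : 𝒟 q1) (χ2 : 𝒟 q2) (ψ : 𝒟 q)
    (h1 : χ1 ^ 2 = 1) (h2 : χ2 ^ 2 = 1) (hψ : ∀ n : ℕ, ψ n = χ1 n * χ2 n) {σ : ℝ} (hσ : 1 < σ) :
    1 ≤ ‖riemannZeta σ * LSeries (fun n => χ1 n) σ * (LSeries (fun n => χ2 n) σ * LSeries (fun n => ψ n) σ)‖ := by
  have hs : 1 < (σ:ℂ).re := by simpa using hσ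
  refine hasProd_ge_one (((riemannZeta_eulerProduct_hasProd hs).mul
    (LSeries_eulerProduct_hasProd χ1 hs)).mul
    ((LSeries_eulerProduct_hasProd χ2 hs).mul
    (LSeries_eulerProduct_hasProd ψ hs)))
    fun p => ?_
  obtain ⟨u, h0, h1', hu⟩ := local_u (p := p) hσ
  have e := hψ p
  have hA : 0 < 1 - u := by linarith
  have hA1 : 1 - u ≤ 1 := by linarith
  have hB : 0 < (1 - u) * (1 + u) := by nlinarith
  have hB1 : (1 - u) * (1 + u) ≤ 1 := by nlinarith
  have hC : 0 < (1 - u) * (1 - u) := by nlinarith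
  have hC1 : (1 - u) * (1 - u) ≤ 1 := by nlinarith
  rw [hu, ← mul_inv, ← mul_inv, ← mul_inv, e]
  rcases quad_val χ1 h1 p with h | h | h <;> rcases quad_val χ2 h2 p with h' | h' | h' <;> rw [h, h']
  · exact norm_inv_real_ge (x := 1 - u) (by push_cast; ring) hA hA1
  · exact norm_inv_real_ge (x := (1 - u) * (1 - u)) (by push_cast; ring) hC hC1
  · exact norm_inv_real_ge (x := (1 - u) * (1 + u)) (by push_cast; ring) hB hB1
  · exact norm_inv_real_ge (x := (1 - u) * (1 - u)) (by push_cast; ring) hC hC1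
  · exact norm_inv_real_ge (x := ((1 - u) * (1 - u)) * ((1 - u) * (1 - u))) (by push_cast; ring) (by positivity) (mul_le_one₀ hC1 hC.le hC1)
  · exact norm_inv_real_ge (x := ((1 - u) * (1 + u)) * ((1 - u) * (1 + u))) (by push_cast; ring) (by positivity) (mul_le_one₀ hB1 hB.le hB1)
  · exact norm_inv_real_ge (x := (1 - u) * (1 + u)) (by push_cast; ring) hB hB1
  · exact norm_inv_real_ge (x := ((1 - u) * (1 + u)) * ((1 - u) * (1 + u))) (by push_cast; ring) (by positivity) (mul_le_one₀ hB1 hB.le hB1)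
  · exact norm_inv_real_ge (x := ((1 - u) * (1 + u)) * ((1 - u) * (1 + u))) (by push_cast; ring) (by positivity) (mul_le_one₀ hB1 hB.le hB1)

/-- Upper bound near `1` for an exceptional quadratic character. -/
lemma exc_small : ∃ C : ℝ, 1 ≤ C ∧ ∀ (q : ℕ) [NeZero q] (χ : 𝒟 q) (Z:ℝ), χ ≠ 1 → 1 ≤ Z →
    log q ≤ Z → ¬ Reg χ Z → χ ^ 2 = 1 ∧ ‖LSeries (fun n => χ n) ((1 + (Z ^ 8)⁻¹:ℝ):ℂ)‖ ≤ C / Z ^ 6 := by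
  obtain ⟨C1, hC1, hlip⟩ := LS_lip
  obtain ⟨C2, hC2, hz⟩ := zeta_le
  refine ⟨1 + C1 * 3 * (C2 + 1), by nlinarith, fun q _ χ Z hχ hZ hqZ hreg => ?_⟩
  unfold Reg at hreg
  push Not at hreg
  obtain ⟨h2, σ, hσ, hσ2, hL⟩ := hreg
  refine ⟨h2, ?_⟩
  have hZ0 : 0 < Z := by linarith
  set w := (Z ^ 8)⁻¹ with hw
  have hw0 : 0 < w := by positivity
  have hw1 : w ≤ 1 := inv_le_one_of_one_le₀ (one_le_pow₀ hZ)
  have hL' : ‖LSeries (fun n => χ n) (σ:ℂ)‖ < w := by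
    rw [zpow_neg] at hL; exact_mod_cast hL
  have hA := chi_adm χ hχ hZ hqZ
  have e2 := euler_two χ h2 hσ
  rw [norm_mul] at e2
  have h3 : 1 ≤ C2 / (σ - 1) * w := e2.trans (by gcongr; exact hz σ hσ hσ2)
  rw [div_mul_eq_mul_div, le_div_iff₀ (by linarith), one_mul] at h3
  have := hlip _ q Z hA 2 ((1 + w:ℝ):ℂ) σ (by simp; exact hw0) (by simpa using hσ)
    (by rw [norm_real, norm_eq_abs, abs_of_pos (by linarith)]; linarith)
    (by rw [norm_real, norm_eq_abs, abs_of_pos (by linarith)]; linarith)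
  rw [← ofReal_sub, norm_real, norm_eq_abs] at this
  have h4 : |1 + w - σ| ≤ (C2 + 1) * w := by rw [abs_le]; constructor <;> nlinarith
  have h5 := norm_le_norm_add_norm_sub' (LSeries (fun n => χ n) ((1 + w:ℝ):ℂ)) (LSeries (fun n => χ n) (σ:ℂ))
  have h6 : C1 * (1 + 2) * Z ^ 2 * |1 + w - σ| ≤ C1 * (1 + 2) * Z ^ 2 * ((C2 + 1) * w) := by gcongr
  have h7 : Z ^ 2 * w = 1 / Z ^ 6 := by rw [hw]; field_simp
  have h8 : w ≤ 1 / Z ^ 6 := by rw [← h7]; exact le_mul_of_one_le_left hw0.le (one_le_pow₀ hZ)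
  calc _ ≤ w + C1 * (1 + 2) * Z ^ 2 * ((C2 + 1) * w) := by linarith
    _ = w + C1 * 3 * (C2 + 1) * (Z ^ 2 * w) := by ring
    _ ≤ 1 / Z ^ 6 + C1 * 3 * (C2 + 1) * (1 / Z ^ 6) := by rw [h7]; gcongr
    _ = _ := by ring

/-- Two exceptional characters with different conductors repel each other. -/
lemma exc_unique : ∃ Z0 : ℝ, 1 ≤ Z0 ∧ ∀ Z, Z0 ≤ Z → ∀ (q1 q2 : ℕ) [NeZero q1] [NeZero q2] (χ1 : 𝒟 q1)
    (χ2 : 𝒟 q2), χ1 ≠ 1 → χ2 ≠ 1 → log q1 ≤ Z → log q2 ≤ Z → χ1.IsPrimitive → χ2.IsPrimitive →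
    ¬ Reg χ1 Z → ¬ Reg χ2 Z → q1 = q2 := by
  obtain ⟨C1, hC1, hsm⟩ := exc_small
  obtain ⟨C2, hC2, hz⟩ := zeta_le
  obtain ⟨C3, hC3, hbd⟩ := LS_bound 0
  refine ⟨max 1 (C2 * C1 * C1 * (C3 * 6) + 1), le_max_left _ _, fun Z hZ q1 q2 _ _ χ1 χ2 n1 n2 l1 l2 p1 p2 r1 r2 => ?_⟩
  have hZ1 : 1 ≤ Z := (le_max_left _ _).trans hZ
  have hZ2 : C2 * C1 * C1 * (C3 * 6) + 1 ≤ Z := (le_max_right _ _).trans hZ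
  have hZ0 : 0 < Z := by linarith
  obtain ⟨s1, b1⟩ := hsm q1 χ1 Z n1 hZ1 l1 r1
  obtain ⟨s2, b2⟩ := hsm q2 χ2 Z n2 hZ1 l2 r2
  have d1 : q1 ∣ q1 * q2 := Dvd.intro _ rfl
  have d2 : q2 ∣ q1 * q2 := Dvd.intro_left _ rfl
  have : NeZero (q1 * q2) := ⟨mul_ne_zero (NeZero.ne q1) (NeZero.ne q2)⟩
  set χ1' := changeLevel d1 χ1 with hχ1'
  set χ2' := changeLevel d2 χ2 with hχ2'
  by_cases hψ : χ1' * χ2' = 1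
  · have : χ1' = χ2' := by
      have e : χ2' * χ2' = 1 := by rw [hχ2', ← map_mul, ← sq, s2, map_one]
      exact mul_right_cancel (hψ.trans e.symm)
    have c := congrArg DirichletCharacter.conductor this
    rw [hχ1', hχ2', conductor_changeLevel, conductor_changeLevel] at c
    rw [isPrimitive_def] at p1 p2
    omega
  · exfalso
    have hval : ∀ n : ℕ, (χ1' * χ2') n = χ1 n * χ2 n := by
      intro n
      rw [MulChar.mul_apply]
      by_cases hn : IsCoprime (n:ℤ) ((q1 * q2 : ℕ):ℤ)
      · have a1 := changeLevel_eq_cast_of_dvd' χ1 d1 hn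
        have a2 := changeLevel_eq_cast_of_dvd' χ2 d2 hn
        push_cast at a1 a2
        rw [a1, a2]
      · have z1 : χ1' ((n:ℤ) : ZMod (q1 * q2)) = 0 := (DirichletCharacter.apply_eq_zero_iff _ _).mpr hn
        rw [Int.cast_natCast] at z1
        rw [z1, zero_mul]
        by_contra hne
        have hh := (mul_ne_zero_iff.mp (Ne.symm hne))
        have a1 := (apply_ne_zero_iff χ1 (n:ℤ)).mp (by simpa using hh.1)
        have a2 := (apply_ne_zero_iff χ2 (n:ℤ)).mp (by simpa using hh.2)
        apply hn
        rw [Nat.cast_mul]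
        exact a1.mul_right a2
    set w := (Z ^ 8)⁻¹ with hw
    have hw0 : 0 < w := by positivity
    have hw1 : w ≤ 1 := inv_le_one_of_one_le₀ (one_le_pow₀ hZ1)
    have e4 := euler_four χ1 χ2 (χ1' * χ2') s1 s2 hval (σ := 1 + w) (by linarith)
    have hzz := hz (1 + w) (by linarith) (by linarith)
    rw [add_sub_cancel_left] at hzz
    have hC20 : 0 < C2 := by linarith
    have hC10 : 0 < C1 := by linarith
    have hA := chi_adm (χ1' * χ2') hψ (Z := 2 * Z) (by linarith) (by
      rw [Nat.cast_mul, log_mul (mod_cast NeZero.ne q1) (mod_cast NeZero.ne q2)]; linarith)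
    have hb := hbd _ _ _ hA.hq hA.hZ hA.hqZ hA.h1 hA.hs ((1 + w:ℝ):ℂ) (by simp; exact hw0)
    rw [mlog_zero, zero_add, pow_one] at hb
    have hn : ‖((1 + w:ℝ):ℂ)‖ ≤ 2 := by
      rw [norm_real, norm_eq_abs, abs_of_pos (by linarith)]; linarith
    have hb' : C3 * (1 + ‖((1 + w:ℝ):ℂ)‖) * (2 * Z) ≤ C3 * (1 + 2) * (2 * Z) := by gcongr
    rw [norm_mul, norm_mul, norm_mul] at e4
    have e5 : 1 ≤ (C2 / w * (C1 / Z ^ 6)) * ((C1 / Z ^ 6) * (C3 * (1 + 2) * (2 * Z))) := by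
      refine e4.trans ?_
      gcongr
      exact hb.trans hb'
    have e6 : (C2 / w * (C1 / Z ^ 6)) * ((C1 / Z ^ 6) * (C3 * (1 + 2) * (2 * Z))) =
        C2 * C1 * C1 * (C3 * 6) / Z ^ 3 := by
      rw [hw]; field_simp; ring
    rw [e6, le_div_iff₀ (by positivity), one_mul] at e5
    have : Z ≤ Z ^ 3 := le_self_pow₀ hZ1 (by norm_num)
    linarith

/-- For a fixed modulus no character is exceptional once `Z` is large. -/
lemma reg_fixed {q : ℕ} [NeZero q] (χ : 𝒟 q) (hχ : χ ≠ 1) : ∃ Z0 : ℝ, ∀ Z, Z0 ≤ Z → Reg χ Z := by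
  have hcont : ContinuousOn (fun σ : ℝ => ‖LFunction χ σ‖) (Set.Icc 1 2) :=
    ((DirichletCharacter.differentiable_LFunction hχ).continuous.comp Complex.continuous_ofReal).norm.continuousOn
  obtain ⟨σ0, hσ0, hmin⟩ := isCompact_Icc.exists_isMinOn ⟨1, by norm_num⟩ hcont
  have hpos : 0 < ‖LFunction χ σ0‖ := norm_pos_iff.mpr
    (DirichletCharacter.LFunction_ne_zero_of_one_le_re χ (.inl hχ) (by simpa using hσ0.1))
  set m := ‖LFunction χ σ0‖
  refine ⟨max 1 m⁻¹, fun Z hZ => Or.inr fun σ h1 h2 => ?_⟩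
  have hZ1 : 1 ≤ Z := (le_max_left _ _).trans hZ
  have hZm : m⁻¹ ≤ Z := (le_max_right _ _).trans hZ
  rw [← DirichletCharacter.LFunction_eq_LSeries χ (by simpa using h1)]
  refine le_trans ?_ (hmin ⟨h1.le, h2⟩)
  rw [zpow_neg]
  refine inv_le_of_inv_le₀ hpos (hZm.trans ?_)
  exact_mod_cast le_self_pow₀ hZ1 (by norm_num)

/-- For every large `Z` there is one prime `q₁ > N` such that all primitive characters of squarefree conductor
`1 < f ≤ e^Z` not divisible by `q₁` are non-exceptional. -/
lemma exc_prime (N : ℕ) : ∃ Z0 : ℝ, 1 ≤ Z0 ∧ ∀ Z, Z0 ≤ Z → ∃ q1 : ℕ, q1.Prime ∧ N < q1 ∧ log q1 ≤ Z ∧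
    ∀ (f : ℕ) [NeZero f] (χ : 𝒟 f), Squarefree f → 1 < f → ¬ q1 ∣ f → log f ≤ Z →
    χ.IsPrimitive → Reg χ Z := by
  obtain ⟨Z1, hZ1, huniq⟩ := exc_unique
  set M := ∏ p ∈ (range (N + 1)).filter Nat.Prime, p with hM
  have hM0 : M ≠ 0 := prod_ne_zero_iff.mpr fun p hp => (mem_filter.mp hp).2.ne_zero
  have hsmall : ∃ Z2 : ℝ, ∀ Z, Z2 ≤ Z → ∀ f ∈ M.divisors, ∀ [NeZero f] (χ : 𝒟 f), χ ≠ 1 → Reg χ Z := by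
    have h1 : ∀ f ∈ M.divisors, ∃ Z2 : ℝ, ∀ Z, Z2 ≤ Z → ∀ [NeZero f] (χ : 𝒟 f), χ ≠ 1 → Reg χ Z := by
      intro f hf
      have : NeZero f := ⟨(Nat.pos_of_mem_divisors hf).ne'⟩
      have : ∀ χ : 𝒟 f, ∃ Z2 : ℝ, χ ≠ 1 → ∀ Z, Z2 ≤ Z → Reg χ Z := by
        intro χ
        by_cases h : χ = 1
        · exact ⟨0, fun h' => absurd h h'⟩
        · obtain ⟨Z0, h0⟩ := reg_fixed χ h
          exact ⟨Z0, fun _ => h0⟩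
      choose Zf hZf using this
      obtain ⟨B, hB⟩ := (Set.finite_range Zf).bddAbove
      exact ⟨B, fun Z hZ _ χ hχ => hZf χ hχ Z ((hB ⟨χ, rfl⟩).trans hZ)⟩
    choose! Z2 hZ2 using h1
    obtain ⟨B, hB⟩ := (M.divisors.image Z2).bddAbove
    exact ⟨B, fun Z hZ f hf _ χ hχ => hZ2 f hf Z ((hB (by simpa using ⟨f, by simpa using hf, rfl⟩)).trans hZ) χ hχ⟩
  obtain ⟨Z2, hZ2⟩ := hsmall
  obtain ⟨p0, hp0N, hp0⟩ := Nat.exists_infinite_primes (N + 1)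
  refine ⟨max Z1 (max Z2 (log p0)), hZ1.trans (le_max_left _ _), fun Z hZ => ?_⟩
  have hZa : Z1 ≤ Z := (le_max_left _ _).trans hZ
  have hZb : Z2 ≤ Z := ((le_max_left _ _).trans (le_max_right _ _)).trans hZ
  have hZc : log p0 ≤ Z := ((le_max_right _ _).trans (le_max_right _ _)).trans hZ
  have hne1 : ∀ (f : ℕ) [NeZero f] (χ : 𝒟 f), 1 < f → χ.IsPrimitive → χ ≠ 1 := by
    intro f _ χ hf hp h
    rw [isPrimitive_def, h, conductor_one] at hp
    omega
  by_cases hex : ∃ (f : ℕ) (_ : NeZero f) (χ : 𝒟 f), Squarefree f ∧ 1 < f ∧ log f ≤ Z ∧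
    χ.IsPrimitive ∧ ¬ Reg χ Z
  · obtain ⟨f1, _, χ1, hsq, hf1, hfl, hpr, hnr⟩ := hex
    have hnM : ¬ f1 ∣ M := fun h => hnr (hZ2 Z hZb f1 (Nat.mem_divisors.mpr ⟨h, hM0⟩) χ1 (hne1 f1 χ1 hf1 hpr))
    obtain ⟨q1, hq1, hd, hN⟩ : ∃ q1, q1.Prime ∧ q1 ∣ f1 ∧ N < q1 := by
      by_contra hcon
      push Not at hcon
      apply hnM
      rw [← Nat.prod_primeFactors_of_squarefree hsq]
      apply prod_dvd_prod_of_subset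
      intro p hp
      have := Nat.prime_of_mem_primeFactors hp
      simp only [mem_filter, mem_range]
      exact ⟨Nat.lt_succ_of_le (hcon p this (Nat.dvd_of_mem_primeFactors hp)), this⟩
    refine ⟨q1, hq1, hN, ?_, ?_⟩
    · refine le_trans (log_le_log (mod_cast hq1.pos) ?_) hfl
      exact_mod_cast le_of_dvd (by omega) hd
    · intro f _ χ hsqf hf hq1f hfl' hprf
      by_contra hnr'
      have := huniq Z hZa f1 f χ1 χ (hne1 f1 χ1 hf1 hpr) (hne1 f χ hf hprf) hfl hfl' hpr hprf hnr hnr'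
      exact hq1f (this ▸ hd)
  · push Not at hex
    exact ⟨p0, hp0, by omega, hZc, fun f _ χ hsq hf _ hfl hpr => hex f ‹_› χ hsq hf hfl hpr⟩


/-! ### Smooth weights and Fourier separation -/

open MeasureTheory FourierTransform in
/-- Fourier inversion turns bounds for a Dirichlet series on a vertical line into bounds for smooth sums. -/
lemma fourier_bound (φ : SchwartzMap ℝ ℂ) (E : ℕ) : ∃ C : ℝ, 0 ≤ C ∧ ∀ (x σ:ℝ) (c : ℕ → ℂ) (B:ℝ),
    0 < x → 0 < σ → LSeriesSummable c σ → 0 ≤ B →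
    (∀ t : ℝ, ‖LSeries c (σ + I * t)‖ ≤ B * (3 + |t|) ^ E) →
    ‖∑' n : ℕ, c n * (((x / n) ^ σ:ℝ):ℂ) * φ (log (n / x))‖ ≤ C * x ^ σ * B := by
  set ψ : SchwartzMap ℝ ℂ := 𝓕 φ with hψ
  have hint0 : Integrable (fun t : ℝ => ψ t) := ψ.integrable
  have hInt : Integrable (fun t : ℝ => ‖ψ t‖ * (3 + |2 * Real.pi * t|) ^ E) := by
    have h1 : ∀ t : ℝ, ‖ψ t‖ * (3 + |2 * Real.pi * t|) ^ E =
        ∑ m ∈ range (E + 1), (E.choose m * 3 ^ m * (2 * Real.pi) ^ (E - m)) * (‖t‖ ^ (E - m) * ‖ψ t‖) := by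
      intro t
      rw [add_pow, mul_sum]
      refine sum_congr rfl fun m _ => ?_
      rw [abs_mul, abs_of_pos Real.two_pi_pos, mul_pow, norm_eq_abs]; ring
    simp_rw [h1]
    exact integrable_finsetSum _ fun m _ => (ψ.integrable_pow_mul volume (E - m)).const_mul _
  refine ⟨∫ t : ℝ, ‖ψ t‖ * (3 + |2 * Real.pi * t|) ^ E, integral_nonneg fun t => by positivity, ?_⟩
  intro x σ c B hx hσ hc hB hbd
  have hinv : ∀ u : ℝ, φ u = ∫ t : ℝ, Complex.exp (2 * Real.pi * t * u * I) * ψ t := by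
    intro u
    have h1 : φ = 𝓕⁻ ψ := by rw [hψ, FourierTransform.fourierInv_fourier_eq]
    rw [h1, SchwartzMap.fourierInv_coe, Real.fourierInv_eq']
    refine integral_congr_ae (Eventually.of_forall fun t => ?_)
    simp only [smul_eq_mul]
    congr 2
    simp; ring
  -- the integrand attached to `n`
  set F : ℕ → ℝ → ℂ := fun n t => c n * (((x / n) ^ σ:ℝ):ℂ) *
    (Complex.exp (2 * Real.pi * t * (log (n / x):ℝ) * I) * ψ t) with hF
  have hFn : ∀ n t, ‖F n t‖ = x ^ σ * ‖LSeries.term c σ n‖ * ‖ψ t‖ := by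
    intro n t
    rw [hF]
    simp only [norm_mul]
    have he : ‖Complex.exp (2 * Real.pi * t * (log (n / x):ℝ) * I)‖ = 1 := by
      have := Complex.norm_exp_ofReal_mul_I (2 * Real.pi * t * log (n / x))
      push_cast at this ⊢
      exact this
    rw [he, one_mul]
    congr 1
    rcases eq_zero_or_pos n with rfl | hn
    · simp [zero_rpow hσ.ne']
    · have hn' : (0:ℝ) < n := mod_cast hn
      rw [LSeries.norm_term_eq, if_neg hn.ne', norm_real, norm_of_nonneg (by positivity),
        Real.div_rpow hx.le hn'.le, Complex.ofReal_re]
      ring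
  have hFi : ∀ n, Integrable (F n) := by
    intro n
    refine Integrable.mono' (hint0.norm.const_mul (x ^ σ * ‖LSeries.term c σ n‖)) ?_ ?_
    · refine Continuous.aestronglyMeasurable ?_
      have := ψ.continuous
      rw [hF]; fun_prop
    · exact Eventually.of_forall fun t => (hFn n t).le
  have hsum : Summable fun n => ∫ t, ‖F n t‖ := by
    simp_rw [hFn]
    simp_rw [integral_const_mul]
    exact (hc.norm.mul_left _).mul_right _
  have key := hasSum_integral_of_summable_integral_norm hFi hsum
  have hterm : ∀ n, ∫ t, F n t = c n * (((x / n) ^ σ:ℝ):ℂ) * φ (log (n / x)) := by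
    intro n
    rw [hinv, ← integral_const_mul]
  simp_rw [hterm] at key
  rw [key.tsum_eq]
  have hpt : ∀ t : ℝ, ‖∑' n, F n t‖ ≤ x ^ σ * B * (‖ψ t‖ * (3 + |2 * Real.pi * t|) ^ E) := by
    intro t
    have h1 : ∀ n, F n t = (x:ℂ) ^ ((σ:ℂ) - 2 * Real.pi * t * I) * ψ t *
        LSeries.term c (σ + I * ((-(2 * Real.pi * t):ℝ):ℂ)) n := by
      intro n
      rcases eq_zero_or_pos n with rfl | hn
      · simp [hF, zero_rpow hσ.ne']
      · have hn' : (0:ℝ) < n := mod_cast hn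
        rw [LSeries.term_of_ne_zero hn.ne', hF]
        simp only
        have hxC : (x:ℂ) ≠ 0 := mod_cast hx.ne'
        have hnC : (n:ℂ) ≠ 0 := mod_cast hn.ne'
        rw [Complex.cpow_def_of_ne_zero hxC, Complex.cpow_def_of_ne_zero hnC,
          rpow_def_of_pos (by positivity), log_div hx.ne' hn'.ne', log_div hn'.ne' hx.ne',
          Complex.ofReal_exp, div_eq_mul_inv, ← Complex.exp_neg, ← ofReal_log hx.le]
        have h3 : Complex.log n = ((log n:ℝ):ℂ) := by
          rw [ofReal_log hn'.le]; simp
        rw [h3]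
        have e : ∀ a b d e f g : ℂ, a + b = d + e → c n * Complex.exp a * (Complex.exp b * f) =
            Complex.exp d * f * (c n * Complex.exp e) := by
          intro a b d e f g h
          have : Complex.exp a * Complex.exp b = Complex.exp d * Complex.exp e := by
            rw [← Complex.exp_add, h, Complex.exp_add]
          linear_combination (c n * f) * this
        apply e _ _ _ _ _ 0
        push_cast; ring
    simp_rw [h1]
    rw [tsum_mul_left, norm_mul, norm_mul, norm_cpow_eq_rpow_re_of_pos hx]
    have h2 := hbd (-(2 * Real.pi * t))
    rw [LSeries, abs_neg] at h2
    have h3 : ((σ:ℂ) - 2 * Real.pi * t * I).re = σ := by simp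
    rw [h3]
    calc _ ≤ x ^ σ * ‖ψ t‖ * (B * (3 + |2 * Real.pi * t|) ^ E) := by gcongr
      _ = _ := by ring
  refine (norm_integral_le_of_norm_le (hInt.const_mul (x ^ σ * B)) (Eventually.of_forall hpt)).trans ?_
  rw [integral_const_mul]
  apply le_of_eq; ring

/-- A smooth bump supported on `(0, log 2)`. -/
noncomputable def Tb : ContDiffBump (log 2 / 2:ℝ) where
  rIn := log 2 / 2 - 1 / 100
  rOut := log 2 / 2
  rIn_pos := by have := log_two_gt_d9; linarith
  rIn_lt_rOut := by linarith

lemma Tb_nonneg (u:ℝ) : 0 ≤ Tb u := Tb.nonneg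
lemma Tb_le_one (u:ℝ) : Tb u ≤ 1 := Tb.le_one
lemma Tb_eq_zero {u : ℝ} (h : u ≤ 0 ∨ log 2 ≤ u) : Tb u = 0 := by
  apply Tb.zero_of_le_dist
  change log 2 / 2 ≤ _
  rw [Real.dist_eq]
  have := log_two_gt_d9
  rcases h with h | h
  · rw [abs_of_nonpos (by linarith)]; linarith
  · rw [abs_of_nonneg (by linarith)]; linarith
lemma Tb_eq_one {u : ℝ} (h1 : 1 / 100 ≤ u) (h2 : u ≤ log 2 - 1 / 100) : Tb u = 1 := by
  apply Tb.one_of_mem_closedBall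
  rw [Metric.mem_closedBall, Real.dist_eq]
  change _ ≤ log 2 / 2 - 1 / 100
  rw [abs_le]; constructor <;> linarith

/-- The smooth weight on `(x, 2x)`. -/
noncomputable def W (x:ℝ) (n : ℕ) : ℝ := (x / n) ^ (1 + 1 / log x) * Tb (log (n / x))

/-- The functions `u ↦ (-u)^i Tb(u)` as Schwartz functions. -/
noncomputable def phi (i : ℕ) : SchwartzMap ℝ ℂ :=
  HasCompactSupport.toSchwartzMap (f := fun u : ℝ => (((-u) ^ i * Tb u:ℝ):ℂ))
    (by
      have : HasCompactSupport (fun u : ℝ => (-u) ^ i * Tb u) := Tb.hasCompactSupport.mul_left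
      exact this.comp_left (g := fun y : ℝ => (y:ℂ)) (by simp))
    (by
      have h : ContDiff ℝ ((⊤ : ℕ∞) : WithTop ℕ∞) (fun u : ℝ => (-u) ^ i * Tb u) := by
        have := Tb.contDiff (n := (⊤ : ℕ∞))
        fun_prop
      exact ofRealCLM.contDiff.comp h)

lemma phi_apply (i : ℕ) (u:ℝ) : phi i u = (((-u) ^ i * Tb u:ℝ):ℂ) := rfl

lemma W_nonneg {x : ℝ} (hx : 0 < x) (n : ℕ) : 0 ≤ W x n := by
  unfold W; have := Tb_nonneg (log (n / x)); positivity

lemma W_eq_zero {x : ℝ} (hx : 0 < x) {n : ℕ} (h : (n:ℝ) ≤ x ∨ 2 * x ≤ n) : W x n = 0 := by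
  unfold W
  rw [Tb_eq_zero, mul_zero]
  rcases eq_zero_or_pos n with rfl | hn
  · left; simp
  have hn' : (0:ℝ) < n := mod_cast hn
  rcases h with h | h
  · left; exact log_nonpos (by positivity) (by rw [div_le_one hx]; exact h)
  · right; apply log_le_log (by norm_num); rw [le_div_iff₀ hx]; exact h

lemma W_le_one {x : ℝ} (hx : 1 ≤ x) (n : ℕ) : W x n ≤ 1 := by
  by_cases h : (n:ℝ) ≤ x
  · rw [W_eq_zero (by linarith) (Or.inl h)]; norm_num
  · push Not at h
    unfold W
    have h0 : 0 ≤ log x := log_nonneg hx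
    have h1 : (x / n) ^ (1 + 1 / log x) ≤ 1 := by
      apply Real.rpow_le_one (by positivity)
      · rw [div_le_one (by linarith)]; exact h.le
      · positivity
    have := Tb_nonneg (log (n / x))
    exact mul_le_one₀ h1 this (Tb_le_one _)

lemma rpow_sigma {x : ℝ} (hx : 1 < x) : x ^ (1 + 1 / log x) = exp 1 * x := by
  have h0 : 0 < log x := log_pos hx
  rw [rpow_def_of_pos (by linarith), mul_add, mul_one, exp_add, Real.exp_log (by linarith),
    mul_one_div_cancel h0.ne', mul_comm]

lemma W_support_finite {x : ℝ} (hx : 0 < x) : (Function.support (W x)).Finite := by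
  refine (Set.finite_Iio (⌈2 * x⌉₊)).subset fun n hn => ?_
  by_contra h
  simp only [Set.mem_Iio, not_lt] at h
  exact hn (W_eq_zero hx (Or.inr (ceil_le.mp h)))

/-- Sums of `Λ χ` against the smooth weight save any power of `log x`, provided that `L(s,χ)` is not
too small near `1` (measured by `Reg`). -/
lemma lam_W_bound (K : ℕ) : ∃ C : ℝ, 0 ≤ C ∧ ∃ E : ℕ, ∀ (q : ℕ) [NeZero q] (χ : 𝒟 q) (Z x:ℝ),
    1 ≤ log x → χ ≠ 1 → 1 ≤ Z → log q ≤ Z → Reg χ Z → 0 < x →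
    ‖∑' n : ℕ, lam χ n * (W x n:ℂ)‖ * (log x) ^ K ≤ C * x * Z ^ E := by
  obtain ⟨C, hC, E, hD⟩ := D_bound (K + 1)
  choose F hF0 hF using fun i => fourier_bound (phi i) E
  refine ⟨∑ j ∈ range (K + 1), (K.choose j:ℝ) * (F (K - j) * exp 1 * C),
    sum_nonneg fun j _ => by have := hF0 (K - j); positivity, E, ?_⟩
  intro q _ χ Z x hx hχ hZ hqZ hreg hx0
  have hlx : 0 < log x := by linarith
  have hx1 : 1 < x := by
    by_contra h; push Not at h
    have := log_nonpos hx0.le h; linarith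
  set σ := 1 + 1 / log x with hσ
  have hσ1 : 1 < σ := by rw [hσ]; have : 0 < 1 / log x := by positivity
                         linarith
  have hσ2 : σ ≤ 2 := by rw [hσ]; have : 1 / log x ≤ 1 := by rw [div_le_one hlx]; exact hx
                         linarith
  set G : ℕ → ℕ → ℂ := fun j n => mlog (lam χ) j n * (((x / n) ^ σ:ℝ):ℂ) * phi (K - j) (log (n / x))
  have hfin : ∀ n, W x n = 0 → ∀ j, G j n = 0 := by
    intro n h j
    simp only [G, phi_apply]
    rw [mul_assoc, ← ofReal_mul, show (x / n) ^ σ * ((-log (n / x)) ^ (K - j) * Tb (log (n / x))) =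
      (-log (n / x)) ^ (K - j) * W x n by rw [W]; ring, h]
    simp
  have hsG : ∀ j, Summable (G j) := fun j => summable_of_hasFiniteSupport
    ((W_support_finite hx0).subset fun n hn h => hn (hfin n (by simpa using h) j))
  have hb : ∀ j ∈ range (K + 1), ‖∑' n, G j n‖ ≤ F (K - j) * (exp 1 * x) * (C * Z ^ E) := by
    intro j hj
    rw [← rpow_sigma hx1]
    refine hF (K - j) x σ (mlog (lam χ) j) (C * Z ^ E) hx0 (by linarith)
      (summable_lam χ j (by simpa using hσ1)) (by positivity) fun t => ?_
    have := hD j (mem_range.mp hj) q χ Z hχ hZ hqZ hreg σ t hσ1 hσ2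
    rw [mul_pow, ← mul_assoc] at this
    exact this
  have hid : (∑' n : ℕ, lam χ n * (W x n:ℂ)) * ((log x:ℝ):ℂ) ^ K =
      ∑ j ∈ range (K + 1), (K.choose j:ℂ) * ∑' n, G j n := by
    rw [← tsum_mul_right]
    simp_rw [← tsum_mul_left]
    rw [← Summable.tsum_finsetSum fun j _ => (hsG j).mul_left _]
    refine tsum_congr fun n => ?_
    rcases eq_zero_or_pos n with rfl | hn
    · have h0 : W x 0 = 0 := W_eq_zero hx0 (Or.inl (by simpa using hx0.le))
      simp [h0, hfin 0 h0]
    · have hn' : (0:ℝ) < n := mod_cast hn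
      have hl : log x = log n + (-log (n / x)) := by
        rw [log_div hn'.ne' hx0.ne']; ring
      rw [← Complex.ofReal_pow]
      conv_lhs => rw [hl, add_pow]
      simp only [G, phi_apply, mlog, W]
      push_cast
      rw [mul_sum]
      refine sum_congr rfl fun j _ => ?_
      ring
  have : ‖∑' n : ℕ, lam χ n * (W x n:ℂ)‖ * (log x) ^ K =
      ‖(∑' n : ℕ, lam χ n * (W x n:ℂ)) * ((log x:ℝ):ℂ) ^ K‖ := by
    rw [norm_mul, norm_pow, norm_real, norm_of_nonneg hlx.le]
  rw [this, hid]
  refine (norm_sum_le _ _).trans ?_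
  rw [sum_mul, sum_mul]
  refine sum_le_sum fun j hj => ?_
  rw [norm_mul, Complex.norm_natCast]
  have := hb j hj
  calc _ ≤ (K.choose j:ℝ) * (F (K - j) * (exp 1 * x) * (C * Z ^ E)) := by gcongr
    _ = _ := by ring



/-! ### Characters of small conductor -/

lemma prim_ne_one {f : ℕ} [NeZero f] (hf : 1 < f) {χ : 𝒟 f} (h : χ.IsPrimitive) : χ ≠ 1 := by
  rintro rfl
  rw [isPrimitive_def, conductor_one] at h
  · omega

lemma log_pow_small (C:ℝ) (hC : 0 ≤ C) (E : ℕ) : ∀ᶠ y : ℝ in atTop, C * (log y) ^ E ≤ y := by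
  have h3 : (fun y : ℝ => log y ^ E) =o[atTop] fun y => y :=
    Real.isLittleO_pow_log_id_atTop (n := E)
  have h4 := h3.bound (c := 1 / (C + 1)) (by positivity)
  filter_upwards [h4, eventually_ge_atTop 1] with y hy hy1
  have hl : 0 ≤ log y := log_nonneg hy1
  rw [norm_of_nonneg (by positivity), norm_of_nonneg (by linarith), div_mul_eq_mul_div, one_mul,
    le_div_iff₀ (by positivity)] at hy
  have : 0 ≤ log y ^ E := by positivity
  nlinarith

/-- Siegel–Walfisz type bound for all primitive characters of small squarefree conductor, away from
multiples of one exceptional prime. -/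
lemma small_cond (A B N : ℕ) (hA : 1 ≤ A) : ∃ x0 : ℝ, ∀ x ≥ x0, ∃ q1 : ℕ, q1.Prime ∧ N < q1 ∧
    (q1:ℝ) ≤ (log x) ^ A ∧
    ∀ (f : ℕ) [NeZero f] (χ : 𝒟 f), Squarefree f → 1 < f → ¬ q1 ∣ f →
    (f:ℝ) ≤ (log x) ^ A → χ.IsPrimitive →
    ‖∑' n : ℕ, lam χ n * (W x n:ℂ)‖ ≤ x / (log x) ^ B := by
  obtain ⟨Z0, hZ0, hexc⟩ := exc_prime N
  obtain ⟨C, hC, E, hb⟩ := lam_W_bound (B + 1)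
  have h2 := log_pow_small (C * (A:ℝ) ^ E) (by positivity) E
  have h3 : ∀ᶠ y : ℝ in atTop, Z0 ≤ log y := tendsto_log_atTop.eventually_ge_atTop Z0
  have h4 := tendsto_log_atTop.eventually ((h2.and h3).and (eventually_ge_atTop 1))
  obtain ⟨x0, hx0⟩ := eventually_atTop.mp (h4.and (Filter.eventually_gt_atTop 0))
  refine ⟨x0, fun x hx => ?_⟩
  obtain ⟨⟨⟨hy1, hy2⟩, hy3⟩, hxp⟩ := hx0 x hx
  set y := log x
  have hA' : (1:ℝ) ≤ A := mod_cast hA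
  have hlog : ∀ f : ℕ, 0 < f → (f:ℝ) ≤ y ^ A → log f ≤ A * log y := by
    intro f hf h
    rw [← log_pow]
    exact log_le_log (mod_cast hf) h
  have hZ : Z0 ≤ A * log y := by nlinarith
  obtain ⟨q1, hq1, hN, hqZ, hreg⟩ := hexc _ hZ
  refine ⟨q1, hq1, hN, ?_, ?_⟩
  · rw [← log_pow] at hqZ
    exact (Real.log_le_log_iff (mod_cast hq1.pos) (by positivity)).mp hqZ
  · intro f _ χ hsq hf hq1f hfy hprim
    have hf' := hlog f (by omega) hfy
    have := hb f χ (A * log y) x hy3 (prim_ne_one hf hprim) (by linarith) hf'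
      (hreg f χ hsq hf hq1f hf' hprim) hxp
    rw [le_div_iff₀ (by positivity)]
    have h5 : C * x * (A * log y) ^ E ≤ x * y := by
      rw [mul_pow]; nlinarith
    rw [pow_succ, ← mul_assoc] at this
    have hy0 : 0 < y := by linarith
    exact le_of_mul_le_mul_right (this.trans h5) hy0


/-! ### The large sieve inequality -/

open ComplexConjugate in
/-- The large sieve for an almost orthogonal family, in its dual form. -/
lemma large_sieve {ι : Type*} [DecidableEq ι] (S : Finset ι) (χ : ι → ℕ → ℂ) (I : Finset ℕ) (L D:ℝ) (hL : 0 ≤ L) (hD : 0 ≤ D)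
    (hd : ∀ i ∈ S, ‖∑ m ∈ I, χ i m * conj (χ i m)‖ ≤ L)
    (ho : ∀ i ∈ S, ∀ j ∈ S, i ≠ j → ‖∑ m ∈ I, χ i m * conj (χ j m)‖ ≤ D) (a : ℕ → ℂ) :
    ∑ i ∈ S, ‖∑ m ∈ I, a m * χ i m‖ ^ 2 ≤ (L + #S * D) * ∑ m ∈ I, ‖a m‖ ^ 2 := by
  set T : ι → ℂ := fun i => ∑ m ∈ I, a m * χ i m with hT
  set V : ℝ := ∑ i ∈ S, ‖T i‖ ^ 2 with hV
  set b : ℕ → ℂ := fun m => ∑ i ∈ S, conj (T i) * χ i m with hb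
  have hV0 : 0 ≤ V := sum_nonneg fun _ _ => by positivity
  have h1 : (V:ℂ) = ∑ m ∈ I, a m * b m := by
    have : ∀ i, ((‖T i‖ ^ 2:ℝ):ℂ) = conj (T i) * ∑ m ∈ I, a m * χ i m := by
      intro i
      rw [show ∑ m ∈ I, a m * χ i m = T i from rfl, mul_comm, mul_conj, normSq_eq_norm_sq]
    rw [hV, ofReal_sum, sum_congr rfl fun i _ => this i]
    simp_rw [mul_sum, hb]
    rw [sum_comm]
    refine sum_congr rfl fun m _ => ?_
    rw [mul_sum]
    exact sum_congr rfl fun i _ => by ring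
  have h2 : V ^ 2 ≤ (∑ m ∈ I, ‖a m‖ ^ 2) * ∑ m ∈ I, ‖b m‖ ^ 2 := by
    have : V ≤ ∑ m ∈ I, ‖a m‖ * ‖b m‖ := by
      calc V = ‖(V:ℂ)‖ := by rw [norm_real, norm_of_nonneg hV0]
        _ ≤ _ := by rw [h1]; exact (norm_sum_le _ _).trans_eq (sum_congr rfl fun m _ => norm_mul _ _)
    exact (pow_le_pow_left₀ hV0 this 2).trans (sum_mul_sq_le_sq_mul_sq _ _ _)
  have h3 : ((∑ m ∈ I, ‖b m‖ ^ 2:ℝ):ℂ) = ∑ i ∈ S, ∑ j ∈ S, conj (T i) * T j * ∑ m ∈ I, χ i m * conj (χ j m) := by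
    have : ∀ m, ((‖b m‖ ^ 2:ℝ):ℂ) = ∑ i ∈ S, ∑ j ∈ S, conj (T i) * T j * (χ i m * conj (χ j m)) := by
      intro m
      have : ((‖b m‖ ^ 2:ℝ):ℂ) = b m * conj (b m) := by rw [mul_conj, normSq_eq_norm_sq]
      rw [this, hb]
      simp only [map_sum, map_mul, Complex.conj_conj]
      rw [sum_mul_sum]
      exact sum_congr rfl fun i _ => sum_congr rfl fun j _ => by ring
    rw [ofReal_sum, sum_congr rfl fun m _ => this m, sum_comm]
    refine sum_congr rfl fun i _ => ?_
    rw [sum_comm]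
    refine sum_congr rfl fun j _ => ?_
    exact (mul_sum _ _ _).symm
  have h4 : ∑ m ∈ I, ‖b m‖ ^ 2 ≤ (L + #S * D) * V := by
    calc ∑ m ∈ I, ‖b m‖ ^ 2 = ‖((∑ m ∈ I, ‖b m‖ ^ 2:ℝ):ℂ)‖ := by
          rw [norm_real, norm_of_nonneg (sum_nonneg fun _ _ => by positivity)]
      _ ≤ ∑ i ∈ S, ∑ j ∈ S, ‖T i‖ * ‖T j‖ * ((if i = j then L else 0) + D) := by
          rw [h3]
          refine (norm_sum_le _ _).trans (sum_le_sum fun i hi => (norm_sum_le _ _).trans (sum_le_sum fun j hj => ?_))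
          rw [norm_mul, norm_mul, norm_conj]
          gcongr
          split_ifs with h
          · subst h; linarith [hd i hi]
          · rw [zero_add]; exact ho i hi j hj h
      _ = L * V + D * (∑ i ∈ S, ‖T i‖) ^ 2 := by
          simp_rw [mul_add, sum_add_distrib]
          congr 1
          · rw [hV, mul_sum]
            refine sum_congr rfl fun i hi => ?_
            rw [sum_eq_single i]
            · simp; ring
            · intro j _ hj; rw [if_neg (Ne.symm hj)]; ring
            · exact fun h => absurd hi h
          · simp_rw [← sum_mul]
            rw [sq, sum_mul_sum, mul_comm]
      _ ≤ L * V + D * (#S * V) := by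
          gcongr
          exact sq_sum_le_card_mul_sum_sq
      _ = _ := by ring
  have hA0 : 0 ≤ ∑ m ∈ I, ‖a m‖ ^ 2 := sum_nonneg fun _ _ => by positivity
  rcases hV0.eq_or_lt with h | h
  · rw [← h]; positivity
  · have : V * V ≤ ((L + #S * D) * ∑ m ∈ I, ‖a m‖ ^ 2) * V := by
      calc V * V = V ^ 2 := by ring
        _ ≤ (∑ m ∈ I, ‖a m‖ ^ 2) * ((L + #S * D) * V) := h2.trans (by gcongr)
        _ = _ := by ring
    exact le_of_mul_le_mul_right this h

/-- A finite family of primitive characters with conductors in `[1, Q]`. -/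
structure Fam (S : Finset 𝒳) (Q : ℕ) : Prop where
  pos : ∀ s ∈ S, s.1 ≠ 0
  le : ∀ s ∈ S, s.1 ≤ Q
  prim : ∀ s ∈ S, s.2.IsPrimitive

/-- The function on `ℕ` attached to a character of varying modulus. -/
noncomputable def cv (s : 𝒳) (m : ℕ) : ℂ := s.2 (m : ZMod s.1)

lemma norm_cv_le (s) (m : ℕ) : ‖cv s m‖ ≤ 1 := s.2.norm_le_one _
lemma cv_mul (s) (m n : ℕ) : cv s (m * n) = cv s m * cv s n := by simp [cv]

lemma sum_range_char_zero {q : ℕ} [NeZero q] {χ : 𝒟 q} (hχ : χ ≠ 1) :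
    ∑ i ∈ range q, χ i = 0 := by
  have := MulChar.sum_eq_zero_of_ne_one hχ
  rw [← this]
  exact (sum_nbij' (fun n => (n : ZMod q)) (fun a => a.val) (by simp)
    (by intro a _; simpa using ZMod.val_lt a) (by intro n hn; simp at hn; exact ZMod.val_cast_of_lt hn)
    (by intro a _; simp) (by simp))

lemma cv_eq_changeLevel (s : 𝒳) {q : ℕ} (h : s.1 ∣ q) {m : ℕ} (hm : m.Coprime q) :
    changeLevel h s.2 m = cv s m := by
  have := changeLevel_eq_cast_of_dvd' s.2 h (a := (m:ℤ)) (mod_cast hm.isCoprime)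
  simpa [cv] using this

lemma cv_eq_zero (s : 𝒳) {m : ℕ} (hm : ¬ m.Coprime s.1) : cv s m = 0 := by
  apply MulChar.map_nonunit
  rwa [ZMod.isUnit_iff_coprime]

open ComplexConjugate in
lemma cv_orth {s t : 𝒳} (hs : s.1 ≠ 0) (ht : t.1 ≠ 0) (hsp : s.2.IsPrimitive)
    (htp : t.2.IsPrimitive) (hst : s ≠ t) (N : ℕ) :
    ‖∑ m ∈ range N, cv s m * conj (cv t m)‖ ≤ (s.1 * t.1 : ℕ) := by
  have hq : s.1 * t.1 ≠ 0 := mul_ne_zero hs ht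
  have : NeZero (s.1 * t.1) := ⟨hq⟩
  have hsd : s.1 ∣ s.1 * t.1 := dvd_mul_right _ _
  have htd : t.1 ∣ s.1 * t.1 := dvd_mul_left _ _
  set ψ : 𝒟 (s.1 * t.1) :=
    changeLevel hsd s.2 * (changeLevel htd t.2)⁻¹ with hψ
  have hne : ψ ≠ 1 := by
    intro h
    have h1 : changeLevel hsd s.2 = changeLevel htd t.2 := by
      rwa [hψ, mul_inv_eq_one] at h
    have h2 : s.1 = t.1 := by
      have e1 := conductor_changeLevel s.2 hsd
      have e2 := conductor_changeLevel t.2 htd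
      rw [h1, e2, (isPrimitive_def _).mp hsp, (isPrimitive_def _).mp htp] at e1
      exact e1.symm
    obtain ⟨n, χ⟩ := s
    obtain ⟨n', χ'⟩ := t
    simp only at h2
    subst h2
    exact hst (congrArg (Sigma.mk n) (DirichletCharacter.changeLevel_injective _ h1))
  have hval : ∀ m : ℕ, cv s m * conj (cv t m) = ψ m := by
    intro m
    by_cases hm : m.Coprime (s.1 * t.1)
    · rw [hψ, MulChar.mul_apply, MulChar.inv_apply_eq_inv', cv_eq_changeLevel s hsd hm, cv_eq_changeLevel t htd hm]
      congr 1
      have hu : IsUnit (m : ZMod t.1) := (ZMod.isUnit_iff_coprime _ _).mpr (Nat.Coprime.coprime_dvd_right htd hm)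
      have : NeZero t.1 := ⟨ht⟩
      have h1 : ‖cv t m‖ = 1 := by
        obtain ⟨u, hu⟩ := hu
        rw [cv, ← hu]; exact t.2.unit_norm_eq_one u
      rw [Complex.inv_def, normSq_eq_norm_sq, h1]; simp
    · rw [MulChar.map_nonunit ψ (by rwa [ZMod.isUnit_iff_coprime])]
      rw [Nat.coprime_mul_iff_right, not_and_or] at hm
      rcases hm with hm | hm
      · rw [cv_eq_zero s hm, zero_mul]
      · rw [cv_eq_zero t hm]; simp
  simp_rw [hval]
  exact periodic_bound (pos_of_ne_zero hq) (fun n => by simp) (sum_range_char_zero hne)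
    (fun n => ψ.norm_le_one _) N

/-- Distinct primitive characters are almost orthogonal on intervals. -/
lemma fam_large_sieve {S : Finset 𝒳} {Q : ℕ} (hS : Fam S Q) {M N : ℕ} (hMN : M ≤ N)
    (a : ℕ → ℂ) :
    ∑ s ∈ S, ‖∑ m ∈ Ico M N, a m * cv s m‖ ^ 2 ≤
      ((N - M:ℝ) + #S * (2 * (Q:ℝ) ^ 2)) * ∑ m ∈ Ico M N, ‖a m‖ ^ 2 := by
  classical
  refine large_sieve S cv (Ico M N) (N - M) (2 * (Q:ℝ) ^ 2) (by simpa using hMN) (by positivity) ?_ ?_ a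
  · intro s hs
    refine (norm_sum_le _ _).trans ?_
    calc _ ≤ ∑ m ∈ Ico M N, (1:ℝ) := sum_le_sum fun m _ => by
          rw [norm_mul, norm_conj]
          exact mul_le_one₀ (norm_cv_le _ _) (norm_nonneg _) (norm_cv_le _ _)
      _ = _ := by simp [Nat.cast_sub hMN]
  · intro s hs t ht hst
    rw [sum_Ico_eq_sub _ hMN]
    have h := cv_orth (hS.pos s hs) (hS.pos t ht) (hS.prim s hs) (hS.prim t ht) hst
    have hQ : ((s.1 * t.1 : ℕ):ℝ) ≤ (Q:ℝ) ^ 2 := by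
      rw [sq]; exact_mod_cast Nat.mul_le_mul (hS.le s hs) (hS.le t ht)
    refine (norm_sub_le _ _).trans ?_
    linarith [h N, h M]

lemma fam_bilinear {S : Finset 𝒳} {Q : ℕ} (hS : Fam S Q) {M N M' N' : ℕ} (hMN : M ≤ N)
    (hMN' : M' ≤ N') (a b : ℕ → ℂ) :
    (∑ s ∈ S, ‖∑ m ∈ Ico M N, a m * cv s m‖ * ‖∑ m ∈ Ico M' N', b m * cv s m‖) ^ 2 ≤
      (((N - M:ℝ) + #S * (2 * (Q:ℝ) ^ 2)) * ∑ m ∈ Ico M N, ‖a m‖ ^ 2) *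
      (((N' - M':ℝ) + #S * (2 * (Q:ℝ) ^ 2)) * ∑ m ∈ Ico M' N', ‖b m‖ ^ 2) := by
  have h2 : (0:ℝ) ≤ N - M := by simpa using hMN
  refine (sum_mul_sq_le_sq_mul_sq _ _ _).trans ?_
  exact mul_le_mul (fam_large_sieve hS hMN a) (fam_large_sieve hS hMN' b) (sum_nonneg fun _ _ => by positivity)
    (by positivity)



/-! ### Bilinear forms with smooth weights -/

lemma harm_le (N : ℕ) : ∑ a ∈ Ico 1 (N + 1), (1 / a:ℝ) ≤ 1 + log N := by
  have h := harmonic_le_one_add_log N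
  rw [harmonic_eq_sum_Icc] at h
  push_cast at h
  convert h using 1
  refine sum_congr (by ext; simp) fun i _ => by simp

lemma conv_le (F : ℕ → ℕ → ℝ) (hF : ∀ a b, 0 ≤ F a b) (N : ℕ) :
    ∑ n ∈ Ico 1 N, ∑ p ∈ n.divisorsAntidiagonal, F p.1 p.2 ≤ ∑ a ∈ Ico 1 N, ∑ b ∈ Ico 1 N, F a b := by
  rw [sum_sigma', ← sum_product']
  have hinj : Set.InjOn (fun s : Σ _ : ℕ, ℕ × ℕ => s.2) ↑((Ico 1 N).sigma fun n => n.divisorsAntidiagonal) := by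
    rintro ⟨n, p⟩ h1 ⟨n', p'⟩ h2 h
    simp only [coe_sigma, Set.mem_sigma_iff, mem_coe, mem_divisorsAntidiagonal] at h1 h2 h
    obtain rfl : n = n' := by rw [← h1.2.1, ← h2.2.1, h]
    rw [h]
  rw [← sum_image (f := fun p : ℕ × ℕ => F p.1 p.2) hinj]
  refine sum_le_sum_of_subset_of_nonneg ?_ fun _ _ _ => hF _ _
  intro p hp
  simp only [mem_image, mem_sigma, mem_divisorsAntidiagonal] at hp
  obtain ⟨⟨n, p'⟩, ⟨h1, h2, h3⟩, rfl⟩ := hp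
  simp only [mem_product, mem_Ico] at *
  have ha : p'.1 ≠ 0 := by rintro h; rw [h, zero_mul] at h2; omega
  have hb : p'.2 ≠ 0 := by rintro h; rw [h, mul_zero] at h2; omega
  have := Nat.le_mul_of_pos_right p'.1 (pos_of_ne_zero hb)
  have := Nat.le_mul_of_pos_left p'.2 (pos_of_ne_zero ha)
  omega

lemma tau_mul_le (a b : ℕ) : (a * b).divisors.card ≤ #a.divisors * #b.divisors := by
  rw [Nat.divisors_mul]; exact card_mul_le

lemma tau_sum (N : ℕ) : ∑ n ∈ Ico 1 N, (#n.divisors:ℝ) / n ≤ (∑ a ∈ Ico 1 N, (1 / a:ℝ)) ^ 2 := by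
  rw [sq, sum_mul_sum]
  refine le_trans (le_of_eq ?_) (conv_le (fun a b => (1 / a:ℝ) * (1 / b)) (fun _ _ => by positivity) N)
  refine sum_congr rfl fun n hn => ?_
  have hn0 : (0:ℝ) < n := by simp at hn; exact_mod_cast (by omega)
  rw [sum_congr rfl (g := fun _ => (1 / n:ℝ))]
  · rw [sum_const, nsmul_eq_mul, ← Nat.map_div_right_divisors, card_map]; ring
  · intro p hp
    have hp := mem_divisorsAntidiagonal.mp hp
    rw [div_mul_div_comm, ← Nat.cast_mul, hp.1, one_mul]

lemma tau_sq_sum (N : ℕ) : ∑ n ∈ Ico 1 N, (#n.divisors:ℝ) ^ 2 / n ≤ (∑ a ∈ Ico 1 N, (1 / a:ℝ)) ^ 4 := by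
  have h1 := tau_sum N
  have h0 : 0 ≤ ∑ n ∈ Ico 1 N, (#n.divisors:ℝ) / n := sum_nonneg fun _ _ => by positivity
  have h2 : ∑ n ∈ Ico 1 N, (#n.divisors:ℝ) ^ 2 / n ≤ (∑ n ∈ Ico 1 N, (#n.divisors:ℝ) / n) ^ 2 := by
    rw [sq (∑ n ∈ Ico 1 N, (#n.divisors:ℝ) / n), sum_mul_sum]
    refine le_trans ?_ (conv_le (fun a b => (#a.divisors:ℝ) / a * (#b.divisors / b)) (fun _ _ => by positivity) N)
    refine sum_le_sum fun n hn => ?_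
    have hn0 : (0:ℝ) < n := by simp at hn; exact_mod_cast (by omega)
    calc (#n.divisors:ℝ) ^ 2 / n = ∑ p ∈ n.divisorsAntidiagonal, (#n.divisors:ℝ) / n := by
          rw [sum_const, nsmul_eq_mul, ← Nat.map_div_right_divisors, card_map]; ring
      _ ≤ _ := by
          refine sum_le_sum fun p hp => ?_
          have hp := mem_divisorsAntidiagonal.mp hp
          have h3 := tau_mul_le p.1 p.2
          rw [hp.1] at h3
          rw [div_mul_div_comm, ← Nat.cast_mul, ← Nat.cast_mul, hp.1]
          gcongr
  calc _ ≤ _ := h2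
    _ ≤ ((∑ a ∈ Ico 1 N, (1 / a:ℝ)) ^ 2) ^ 2 := pow_le_pow_left₀ h0 h1 2
    _ = _ := by ring

/-- Sums over a finite family of points, viewed as series over `ℕ`. -/
lemma tsum_points {ι : Type*} (P : Finset ι) (e : ι → ℕ) (v : ι → ℂ) (f : ℕ → ℂ) :
    HasSum (fun n => (∑ p ∈ P, if n = e p then v p else 0) * f n) (∑ p ∈ P, v p * f (e p)) := by
  simp_rw [sum_mul]
  refine hasSum_sum fun p _ => ?_
  have := hasSum_ite_eq (e p) (v p * f (e p))
  convert this using 2 with n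
  split_ifs with h
  · rw [h]
  · simp

lemma points_LSeries {ι : Type*} (P : Finset ι) (e : ι → ℕ) (he : ∀ p ∈ P, e p ≠ 0) (v : ι → ℂ) (s:ℂ) :
    LSeriesHasSum (fun n => ∑ p ∈ P, if n = e p then v p else 0) s (∑ p ∈ P, v p * ((e p:ℂ) ^ (-s))) := by
  have h := tsum_points P e v (fun n : ℕ => if n = 0 then 0 else (n:ℂ) ^ (-s))
  rw [LSeriesHasSum]
  convert h using 1
  · ext n
    rw [LSeries.term_def]
    split_ifs with h
    · simp
    · rw [cpow_neg]; rfl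
  · exact sum_congr rfl fun p hp => by rw [if_neg (he p hp)]

/-- Fourier separation for the weight `W`, for finitely many points. -/
lemma fourier_points (E : ℕ) : ∃ C : ℝ, 0 ≤ C ∧ ∀ {ι : Type} (P : Finset ι) (e : ι → ℕ) (v : ι → ℂ) (x σ B:ℝ),
    0 < x → 1 ≤ σ → (∀ p ∈ P, e p ≠ 0) → 0 ≤ B →
    (∀ t : ℝ, ‖∑ p ∈ P, v p * ((e p:ℂ) ^ (-(σ + I * t)))‖ ≤ B * (3 + |t|) ^ E) →
    ‖∑ p ∈ P, v p * (((x / e p) ^ σ * Tb (log (e p / x)):ℝ):ℂ)‖ ≤ C * x ^ σ * B := by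
  obtain ⟨C, hC, h⟩ := fourier_bound (phi 0) E
  refine ⟨C, hC, ?_⟩
  intro ι P e v x σ B hx hσ he hB hb
  have h1 := h x σ (fun n => ∑ p ∈ P, if n = e p then v p else 0) B hx (by linarith)
    (points_LSeries P e he v σ).LSeriesSummable hB (fun t => by rw [(points_LSeries P e he v _).LSeries_eq]; exact hb t)
  have h2 := tsum_points P e v (fun n => (((x / n) ^ σ:ℝ):ℂ) * phi 0 (log (n / x)))
  simp_rw [← mul_assoc] at h2
  rw [h2.tsum_eq] at h1
  convert h1 using 3 with p
  rw [phi_apply]; push_cast; ring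



/-! ### Type I sums -/

lemma W_eq (x:ℝ) (n : ℕ) : W x n = (x / n) ^ (1 + 1 / log x) * Tb (log (n / x)) := rfl

lemma exists_phase (z:ℂ) : ∃ ω : ℂ, ‖ω‖ ≤ 1 ∧ ω * z = ‖z‖ := by
  by_cases h : z = 0
  · exact ⟨0, by simp, by simp [h]⟩
  · refine ⟨(‖z‖:ℂ) / z, ?_, ?_⟩
    · rw [norm_div, norm_real, norm_norm, div_self (norm_ne_zero_iff.mpr h)]
    · rw [div_mul_cancel₀ _ h]

lemma rpow_eps_le {x v : ℝ} (hx : 1 < x) (hv : 0 < v) (hvx : v ≤ x) : v ^ (1 + 1 / log x) ≤ exp 1 * v := by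
  rw [rpow_add hv, rpow_one, mul_comm]
  gcongr
  have h0 : 0 < log x := log_pos hx
  calc v ^ (1 / log x) ≤ x ^ (1 / log x) := Real.rpow_le_rpow hv.le hvx (by positivity)
    _ = exp 1 := by
      rw [rpow_def_of_pos (by linarith), mul_one_div_cancel h0.ne']

lemma sum_inv_sq {M N : ℕ} (hM : 1 ≤ M) : ∑ a ∈ Ico M N, (a:ℝ) ^ (-2:ℝ) ≤ 2 / M := by
  have hM' : (1:ℝ) ≤ M := mod_cast hM
  rcases le_total N M with h | h
  · rw [Ico_eq_empty (by omega)]; simp; positivity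
  have : ∀ N, M ≤ N → ∑ a ∈ Ico M N, (a:ℝ) ^ (-2:ℝ) ≤ 1 / (M - 1 / 2) - 1 / (N - 1 / 2) := by
    intro N hN
    induction N, hN using Nat.le_induction with
    | base => simp
    | succ n hn ih =>
      rw [sum_Ico_succ_top hn]
      have hn1 : (1:ℝ) ≤ n := mod_cast (by omega)
      have h2 : (n:ℝ) ^ (-2:ℝ) = 1 / n ^ 2 := by
        rw [rpow_neg (by linarith), one_div]; norm_num
      have h3 : (1:ℝ) / n ^ 2 ≤ 1 / (n - 1 / 2) - 1 / (n + 1 - 1 / 2) := by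
        rw [div_sub_div _ _ (by linarith) (by linarith), div_le_div_iff₀ (by positivity) (by nlinarith)]
        nlinarith
      rw [h2]; push_cast
      linarith
  have h3 := this N h
  have h4 : (1:ℝ) ≤ N := mod_cast (by omega)
  have : (0:ℝ) ≤ 1 / (N - 1 / 2) := by apply div_nonneg <;> linarith
  have : (1:ℝ) / (M - 1 / 2) ≤ 2 / M := by
    rw [div_le_div_iff₀ (by linarith) (by linarith)]; linarith
  linarith

/-- Sums of `(log l)^j χ(l)` over a smooth interval, from the periodicity of `χ`. -/
lemma typeI (j : ℕ) : ∃ C : ℝ, 0 ≤ C ∧ ∀ (s : 𝒳) (m J : ℕ) (x:ℝ),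
    s.1 ≠ 0 → s.2 ≠ 1 → 1 ≤ m → (m:ℝ) ≤ x → 1 ≤ log x → 2 * x ≤ 2 ^ J →
    ‖∑ l ∈ Ico (1:ℕ) (2 ^ J), (((log l) ^ j:ℝ):ℂ) * cv s l * (W x (m * l):ℂ)‖ ≤ C * s.1 * (2 + J) ^ j := by
  obtain ⟨C, hC, hF⟩ := fourier_points 1
  refine ⟨C * exp 1 * (20 * (1 + j)), by positivity, ?_⟩
  intro s m J x hs0 hs1 hm hmx hx hJ
  have hx1 : 1 < x := by
    by_contra h; push Not at h
    have := log_nonpos (by have : (1:ℝ) ≤ m := mod_cast hm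
                           linarith) h
    linarith
  have hlx : 0 < log x := by linarith
  have hm' : (1:ℝ) ≤ m := mod_cast hm
  have : NeZero s.1 := ⟨hs0⟩
  set σ := 1 + 1 / log x with hσ
  have hσ1 : 1 ≤ σ := by rw [hσ]; have : 0 < 1 / log x := by positivity
                         linarith
  have hσ2 : σ ≤ 2 := by rw [hσ]; have : 1 / log x ≤ 1 := by rw [div_le_one hlx]; exact hx
                         linarith
  set v := x / m with hv
  have hv1 : 1 ≤ v := by rw [hv, le_div_iff₀ (by linarith)]; linarith
  have hvx : v ≤ x := div_le_self (by linarith) hm'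
  set M := ⌊v⌋₊ with hM
  have hM1 : 1 ≤ M := le_floor (by simpa using hv1)
  have hMv : v / 2 ≤ M := by
    have := Nat.lt_floor_add_one v
    have h1 : (1:ℝ) ≤ M := mod_cast hM1
    linarith
  have hMN : M ≤ 2 ^ J := by
    have : (M:ℝ) ≤ v := floor_le (by linarith)
    have : (M:ℝ) ≤ (2 ^ J : ℕ) := by push_cast; linarith
    exact_mod_cast this
  have hWl : ∀ l : ℕ, W x (m * l) = (v / l) ^ σ * Tb (log (l / v)) := by
    intro l
    rw [W_eq, hv]
    push_cast
    rw [div_div, div_div_eq_mul_div, mul_comm (l:ℝ)]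
  have h1 : ∑ l ∈ Ico (1:ℕ) (2 ^ J), (((log l) ^ j:ℝ):ℂ) * cv s l * (W x (m * l):ℂ) =
      ∑ l ∈ Ico M (2 ^ J), (((log l) ^ j:ℝ):ℂ) * cv s l * (((v / l) ^ σ * Tb (log (l / v)):ℝ):ℂ) := by
    symm
    refine sum_subset_zero_on_sdiff (Ico_subset_Ico hM1 le_rfl) ?_ ?_
    · intro l hl
      simp only [mem_sdiff, mem_Ico, not_and, not_lt] at hl
      have hlM : l < M := by
        by_contra h; exact absurd hl.1.2 (by have := hl.2 (by omega); omega)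
      have : (l:ℝ) ≤ v := (le_floor_iff (by linarith)).mp hlM.le
      rw [W_eq_zero (by linarith), ofReal_zero, mul_zero]
      left
      rw [hv, le_div_iff₀ (by linarith)] at this
      push_cast; linarith
    · intro l _; rw [hWl]
  rw [h1]
  refine (hF (Ico M (2 ^ J)) (fun l => l) (fun l => (((log l) ^ j:ℝ):ℂ) * cv s l) v σ
    (20 * (1 + j) * (s.1 * (2 + J) ^ j / v)) (by linarith) hσ1 ?_ (by positivity) ?_).trans ?_
  · intro l hl; simp at hl; omega
  · intro t
    set z : ℂ := σ + I * t with hz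
    have hzre : z.re = σ := by simp [hz]
    have hzn : ‖z‖ ≤ 3 + |t| := by
      refine (norm_add_le _ _).trans ?_
      rw [norm_mul, norm_I, one_mul, norm_real, norm_real, norm_of_nonneg (by linarith),
        norm_eq_abs]
      linarith
    have h2 : ∑ l ∈ Ico M (2 ^ J), (((log l) ^ j:ℝ):ℂ) * cv s l * ((l:ℂ) ^ (-z)) =
        ∑ l ∈ Ico M (2 ^ J), cv s l * lg j z l := by
      refine sum_congr rfl fun l _ => ?_
      rw [lg]; push_cast; ring
    rw [h2]
    refine (abel_bound (cv s) (fun l => lg j z l) s.1 (fun N => ?_) hMN).trans ?_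
    · exact periodic_bound (pos_of_ne_zero hs0) (fun n => by simp) (sum_range_char_zero hs1)
        (fun n => norm_cv_le _ _) N
    have hlogb : ∀ a : ℕ, 1 ≤ a → a ≤ 2 ^ J → log a ≤ J := by
      intro a ha haJ
      have : log a ≤ log (2 ^ J) := log_le_log (mod_cast ha) (mod_cast haJ)
      rw [log_pow] at this
      have h2 := log_two_lt_d9
      nlinarith [cast_nonneg (α := ℝ) J]
    have h3 : ‖lg j z M‖ ≤ (2 + J) ^ j * (1 / M) := by
      have hM0 : (1:ℝ) ≤ M := mod_cast hM1
      rw [norm_lg _ _ (by linarith), abs_of_nonneg (log_nonneg hM0), hzre]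
      have := hlogb M hM1 hMN
      have hl0 := log_nonneg hM0
      have : (M:ℝ) ^ (-σ) ≤ 1 / M := by
        rw [one_div, ← rpow_neg_one]
        exact rpow_le_rpow_of_exponent_le hM0 (by linarith)
      gcongr
      linarith
    have h4 : ∑ i ∈ Ico M (2 ^ J), ‖lg j z ((i + 1 : ℕ):ℝ) - lg j z i‖ ≤ (j + ‖z‖) * (2 + J) ^ j * (2 / M) := by
      calc _ ≤ ∑ i ∈ Ico M (2 ^ J), (j + ‖z‖) * (2 + J) ^ j * (i:ℝ) ^ (-2:ℝ) := by
            refine sum_le_sum fun i hi => ?_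
            have hi := mem_Ico.mp hi
            have hi1 : (1:ℝ) ≤ i := mod_cast (by omega)
            push_cast
            refine (lg_diff j (by rw [hzre]; exact hσ1) hi1).trans ?_
            have h5 := hlogb (i + 1) (by omega) (by omega)
            push_cast at h5
            have h6 : 0 ≤ log (i + 1) := log_nonneg (by linarith)
            rw [mul_assoc]
            gcongr
            linarith
        _ ≤ _ := by rw [← mul_sum]; gcongr; exact sum_inv_sq hM1
    have hM0 : (0:ℝ) < M := mod_cast hM1
    have hv0 : 0 < v := by linarith
    have h5 : (1:ℝ) / M ≤ 2 / v := by
      rw [div_le_div_iff₀ hM0 hv0]; linarith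
    calc 2 * (s.1:ℝ) * (‖lg j z M‖ + ∑ i ∈ Ico M (2 ^ J), ‖lg j z ((i + 1 : ℕ):ℝ) - lg j z i‖)
        ≤ 2 * (s.1:ℝ) * ((2 + J) ^ j * (1 / M) + (j + ‖z‖) * (2 + J) ^ j * (2 / M)) := by gcongr
      _ = 2 * (s.1:ℝ) * (2 + J) ^ j * (1 + 2 * (j + ‖z‖)) * (1 / M) := by ring
      _ ≤ 2 * (s.1:ℝ) * (2 + J) ^ j * (5 * (1 + j) * (3 + |t|)) * (2 / v) := by
          gcongr
          have : (0:ℝ) ≤ j := by positivity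
          nlinarith [abs_nonneg t, mul_nonneg this (abs_nonneg t)]
      _ = _ := by ring
  · have hv0 : 0 < v := by linarith
    calc C * v ^ σ * (20 * (1 + j) * (s.1 * (2 + J) ^ j / v))
        ≤ C * (exp 1 * v) * (20 * (1 + j) * (s.1 * (2 + J) ^ j / v)) := by
          gcongr; exact rpow_eps_le hx1 hv0 hvx
      _ = _ := by field_simp

lemma ico_dyadic {M : Type*} [AddCommMonoid M] (F : ℕ → M) (J : ℕ) :
    ∑ m ∈ Ico 1 (2 ^ J), F m = ∑ i ∈ range J, ∑ m ∈ Ico (2 ^ i) (2 ^ (i + 1)), F m := by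
  induction J with
  | zero => simp
  | succ n ih =>
    rw [sum_range_succ, ← ih, sum_Ico_consecutive _ (Nat.one_le_two_pow) (Nat.pow_le_pow_right (by norm_num) (by omega))]


/-! ### Type II sums -/

/-- A dyadic type II sum: the weight `W` is separated by Fourier inversion, then the large sieve applies. -/
lemma typeII_piece : ∃ C : ℝ, 0 ≤ C ∧ ∀ (S : Finset 𝒳) (Q i J : ℕ) (x U V:ℝ)
    (B R : ℕ → ℂ), Fam S Q → 1 ≤ log x → 0 < x → 2 * x ≤ 2 ^ J → i < J → 1 ≤ U →
    #S * (2 * (Q:ℝ) ^ 2) ≤ U → 2 * (#S * (2 * (Q:ℝ) ^ 2)) ≤ V →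
    (∀ m < 2 ^ J, ‖B m‖ ≤ J) → (∀ m : ℕ, (m:ℝ) ≤ V → B m = 0) →
    (∀ l, ‖R l‖ ≤ #l.divisors) → (∀ l : ℕ, (l:ℝ) ≤ U → R l = 0) →
    ∑ s ∈ S, ‖∑ m ∈ Ico (2 ^ i) (2 ^ (i + 1)), ∑ l ∈ Ico (1:ℕ) (2 ^ J), B m * R l * cv s (m * l) * (W x (m * l):ℂ)‖
      ≤ C * x * (J * (1 + J) ^ 2) := by
  obtain ⟨C, hC, hF⟩ := fourier_points 0
  refine ⟨C * exp 1 * 5, by positivity, ?_⟩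
  intro S Q i J x U V B R hS hx hx0 hJ hiJ hU hDU hDV hB hBV hR hRU
  have hx1 : 1 < x := by
    by_contra h; push Not at h
    have := log_nonpos hx0.le h
    linarith
  set D : ℝ := #S * (2 * (Q:ℝ) ^ 2) with hD
  have hD0 : 0 ≤ D := by positivity
  have hRHS : 0 ≤ C * exp 1 * 5 * x * (J * (1 + J) ^ 2) := by positivity
  by_cases hc1 : (2:ℝ) ^ (i + 1) ≤ V
  · have : ∀ s ∈ S, ‖∑ m ∈ Ico (2 ^ i) (2 ^ (i + 1)), ∑ l ∈ Ico (1:ℕ) (2 ^ J), B m * R l * cv s (m * l) * (W x (m * l):ℂ)‖ = 0 := by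
      intro s _
      rw [norm_eq_zero]
      refine sum_eq_zero fun m hm => sum_eq_zero fun l _ => ?_
      rw [hBV m]
      · ring
      · have := (mem_Ico.mp hm).2
        have : (m:ℝ) ≤ (2 ^ (i + 1) : ℕ) := mod_cast this.le
        push_cast at this
        linarith
    rw [sum_congr rfl this]; simpa using hRHS
  push Not at hc1
  have h2i : (0:ℝ) < 2 ^ i := by positivity
  set v := x / 2 ^ (i + 1) with hv
  have hv0 : 0 < v := by positivity
  have h4v : 4 * v = 2 * x / 2 ^ i := by rw [hv, pow_succ]; field_simp; ring
  set M := ⌊v⌋₊ + 1 with hM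
  set N := ⌈4 * v⌉₊ with hN
  have hMN : M ≤ N := by
    rw [hM, hN, Nat.succ_le_iff, lt_ceil]
    linarith [floor_le hv0.le]
  have hNJ : N ≤ 2 ^ J := by
    rw [hN, ceil_le, h4v]; push_cast
    refine le_trans ?_ hJ
    exact div_le_self (by linarith) (one_le_pow₀ (by norm_num))
  have hMv : v < M := by rw [hM]; push_cast; exact Nat.lt_floor_add_one v
  have hNv : (N:ℝ) < 4 * v + 1 := Nat.ceil_lt_add_one (by linarith)
  -- reduction of the range of `l`
  have hred : ∀ s ∈ S, ∑ m ∈ Ico (2 ^ i) (2 ^ (i + 1)), ∑ l ∈ Ico (1:ℕ) (2 ^ J), B m * R l * cv s (m * l) * (W x (m * l):ℂ)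
      = ∑ m ∈ Ico (2 ^ i) (2 ^ (i + 1)), ∑ l ∈ Ico M N, B m * R l * cv s (m * l) * (W x (m * l):ℂ) := by
    intro s _
    refine sum_congr rfl fun m hm => ?_
    have hm := mem_Ico.mp hm
    have hm1 : (2:ℝ) ^ i ≤ m := mod_cast hm.1
    have hm2 : (m:ℝ) < 2 ^ (i + 1) := mod_cast hm.2
    symm
    refine sum_subset (Ico_subset_Ico (by omega) hNJ) ?_
    intro l hl hl2
    rw [W_eq_zero hx0, ofReal_zero, mul_zero]
    simp only [mem_Ico, not_and, not_lt] at hl2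
    push_cast
    by_cases h : M ≤ l
    · right
      have h3 : (N:ℝ) ≤ l := mod_cast hl2 h
      have h4 : 4 * v ≤ l := (le_ceil _).trans h3
      rw [h4v, div_le_iff₀ h2i] at h4
      nlinarith [cast_nonneg (α := ℝ) l]
    · left
      have h3 : (l:ℝ) ≤ v := (le_floor_iff hv0.le).mp (by omega)
      rw [hv, le_div_iff₀ (by positivity)] at h3
      nlinarith [cast_nonneg (α := ℝ) l]
  rw [sum_congr rfl fun s hs => by rw [hred s hs]]
  by_cases hc2 : 4 * v ≤ U
  · have : ∀ s ∈ S, ‖∑ m ∈ Ico (2 ^ i) (2 ^ (i + 1)), ∑ l ∈ Ico M N, B m * R l * cv s (m * l) * (W x (m * l):ℂ)‖ = 0 := by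
      intro s _
      rw [norm_eq_zero]
      refine sum_eq_zero fun m _ => sum_eq_zero fun l hl => ?_
      rw [hRU l]
      · ring
      · have := lt_ceil.mp (mem_Ico.mp hl).2
        linarith
    rw [sum_congr rfl this]; simpa using hRHS
  push Not at hc2
  have hlen : (N - M:ℝ) + D ≤ 12 * v := by linarith
  choose ω hω1 hω using fun s => exists_phase (∑ m ∈ Ico (2 ^ i) (2 ^ (i + 1)), ∑ l ∈ Ico M N, B m * R l * cv s (m * l) * (W x (m * l):ℂ))
  set σ := 1 + 1 / log x with hσ
  have hσ1 : 1 ≤ σ := by rw [hσ]; have : 0 < 1 / log x := by positivity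
                         linarith
  have key := hF (Ico (2 ^ i) (2 ^ (i + 1)) ×ˢ Ico M N) (fun p => p.1 * p.2)
    (fun p => B p.1 * R p.2 * ∑ s ∈ S, ω s * cv s (p.1 * p.2)) x σ (5 * (J * (1 + J) ^ 2)) hx0 hσ1 ?_ (by positivity) ?_
  · have h1 : ((∑ s ∈ S, ‖∑ m ∈ Ico (2 ^ i) (2 ^ (i + 1)), ∑ l ∈ Ico M N, B m * R l * cv s (m * l) * (W x (m * l):ℂ)‖:ℝ):ℂ)
        = ∑ p ∈ Ico (2 ^ i) (2 ^ (i + 1)) ×ˢ Ico M N, (B p.1 * R p.2 * ∑ s ∈ S, ω s * cv s (p.1 * p.2)) *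
          (((x / (p.1 * p.2 : ℕ)) ^ σ * Tb (log ((p.1 * p.2 : ℕ) / x)):ℝ):ℂ) := by
      push_cast [← hω]
      rw [sum_product]
      simp_rw [mul_sum, sum_mul]
      rw [sum_comm]
      refine sum_congr rfl fun m _ => ?_
      rw [sum_comm]
      refine sum_congr rfl fun l _ => ?_
      refine sum_congr rfl fun s _ => ?_
      rw [W_eq]; push_cast; ring
    rw [← h1, norm_real, norm_of_nonneg (sum_nonneg fun _ _ => norm_nonneg _), hσ, rpow_sigma hx1] at key
    refine key.trans (le_of_eq ?_); ring
  · rintro ⟨m, l⟩ hp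
    simp only [mem_product, mem_Ico] at hp
    have : 0 < 2 ^ i := by positivity
    exact mul_ne_zero (by omega) (by omega)
  · intro t
    set z : ℂ := -(σ + I * t) with hz
    have hzre : z.re = -σ := by simp [hz]
    have hzn : ∀ n : ℕ, 1 ≤ n → ‖(n:ℂ) ^ z‖ ≤ 1 / n := by
      intro n hn
      have hn1 : (1:ℝ) ≤ n := mod_cast hn
      rw [Complex.norm_natCast_cpow_of_pos (by omega), hzre, one_div, ← rpow_neg_one]
      exact rpow_le_rpow_of_exponent_le hn1 (by linarith)
    have h1 : ∑ p ∈ Ico (2 ^ i) (2 ^ (i + 1)) ×ˢ Ico M N, (B p.1 * R p.2 * ∑ s ∈ S, ω s * cv s (p.1 * p.2)) *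
          (((p.1 * p.2 : ℕ):ℂ) ^ z) = ∑ s ∈ S, ω s * ((∑ m ∈ Ico (2 ^ i) (2 ^ (i + 1)), (B m * (m:ℂ) ^ z) * cv s m) *
            ∑ l ∈ Ico M N, (R l * (l:ℂ) ^ z) * cv s l) := by
      rw [sum_product]
      simp_rw [sum_mul_sum, mul_sum, sum_mul]
      conv_rhs => rw [sum_comm]
      refine sum_congr rfl fun m _ => ?_
      conv_rhs => rw [sum_comm]
      refine sum_congr rfl fun l _ => sum_congr rfl fun s _ => ?_
      rw [cv_mul, Nat.cast_mul, Complex.natCast_mul_natCast_cpow]; ring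
    rw [h1, pow_zero, mul_one]
    have h2 : ‖∑ s ∈ S, ω s * ((∑ m ∈ Ico (2 ^ i) (2 ^ (i + 1)), (B m * (m:ℂ) ^ z) * cv s m) *
            ∑ l ∈ Ico M N, (R l * (l:ℂ) ^ z) * cv s l)‖ ≤ 
        ∑ s ∈ S, ‖∑ m ∈ Ico (2 ^ i) (2 ^ (i + 1)), (B m * (m:ℂ) ^ z) * cv s m‖ * ‖∑ l ∈ Ico M N, (R l * (l:ℂ) ^ z) * cv s l‖ := by
      refine (norm_sum_le _ _).trans (sum_le_sum fun s _ => ?_)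
      rw [norm_mul, norm_mul]
      exact mul_le_of_le_one_left (by positivity) (hω1 s)
    refine h2.trans ?_
    refine (pow_le_pow_iff_left₀ (by positivity) (by positivity) two_ne_zero).mp ?_
    refine (fam_bilinear hS (Nat.pow_le_pow_right (by norm_num) (by omega)) hMN _ _).trans ?_
    have ha : ∑ m ∈ Ico (2 ^ i) (2 ^ (i + 1)), ‖B m * (m:ℂ) ^ z‖ ^ 2 ≤ (J:ℝ) ^ 2 / 2 ^ i := by
      calc _ ≤ ∑ m ∈ Ico (2 ^ i) (2 ^ (i + 1)), (J * (1 / (2:ℝ) ^ i)) ^ 2 := by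
            refine sum_le_sum fun m hm => ?_
            have hm := mem_Ico.mp hm
            have hm1 : (2:ℝ) ^ i ≤ m := mod_cast hm.1
            have h3 := hB m (hm.2.trans_le (Nat.pow_le_pow_right (by norm_num) (by omega)))
            have h4 := hzn m (Nat.one_le_two_pow.trans hm.1)
            have h5 : (1:ℝ) / m ≤ 1 / 2 ^ i := one_div_le_one_div_of_le h2i hm1
            rw [norm_mul]
            gcongr
            exact h4.trans h5
        _ = _ := by
            rw [sum_const, Nat.card_Ico, pow_succ, show 2 ^ i * 2 - 2 ^ i = 2 ^ i by omega, nsmul_eq_mul]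
            push_cast; field_simp
    have hb : ∑ l ∈ Ico M N, ‖R l * (l:ℂ) ^ z‖ ^ 2 ≤ (1 + J:ℝ) ^ 4 / v := by
      calc _ ≤ ∑ l ∈ Ico M N, (#l.divisors:ℝ) ^ 2 / l * (1 / v) := by
            refine sum_le_sum fun l hl => ?_
            have hl := mem_Ico.mp hl
            have hl1 : (M:ℝ) ≤ l := mod_cast hl.1
            have hl0 : v ≤ l := by linarith
            have h4 := hzn l (by omega)
            have h5 : (1:ℝ) / l ≤ 1 / v := one_div_le_one_div_of_le hv0 hl0
            have hR' := hR l
            have : (0:ℝ) < l := by linarith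
            rw [norm_mul, mul_pow, div_mul_eq_mul_div, mul_div_assoc]
            have h6 : ‖(l:ℂ) ^ z‖ ^ 2 ≤ 1 / v / l := by
              calc ‖(l:ℂ) ^ z‖ ^ 2 ≤ (1 / (l:ℝ)) ^ 2 := by gcongr
                _ = 1 / (l:ℝ) * (1 / (l:ℝ)) := by ring
                _ ≤ 1 / (l:ℝ) * (1 / v) := by gcongr
                _ = _ := by ring
            gcongr
        _ ≤ (∑ l ∈ Ico (1:ℕ) (2 ^ J), (#l.divisors:ℝ) ^ 2 / l) * (1 / v) := by
            rw [← sum_mul]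
            gcongr
            omega
        _ ≤ (1 + J:ℝ) ^ 4 * (1 / v) := by
            gcongr
            refine (tau_sq_sum _).trans ?_
            gcongr
            have h3 := harm_le (2 ^ J - 1)
            rw [Nat.sub_add_cancel Nat.one_le_two_pow] at h3
            refine h3.trans ?_
            gcongr
            rcases eq_zero_or_pos (2 ^ J - 1) with h | h
            · rw [h]; simp
            · have : log (2 ^ J - 1 : ℕ) ≤ log (2 ^ J) :=
                log_le_log (mod_cast h) (mod_cast Nat.sub_le _ _)
              rw [log_pow] at this
              have h2 := log_two_lt_d9
              nlinarith [cast_nonneg (α := ℝ) J]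
        _ = _ := by ring
    have hmlen : (((2 ^ (i + 1) : ℕ):ℝ) - ((2 ^ i : ℕ):ℝ)) + D ≤ 2 * 2 ^ i := by
      push_cast; rw [pow_succ] at hc1 ⊢; linarith
    have hnn : (0:ℝ) ≤ N - M := by have : (M:ℝ) ≤ N := mod_cast hMN
                                   linarith
    calc _ ≤ (2 * 2 ^ i * ((J:ℝ) ^ 2 / 2 ^ i)) * (12 * v * ((1 + J:ℝ) ^ 4 / v)) := by
          refine mul_le_mul (mul_le_mul hmlen ha (sum_nonneg fun _ _ => by positivity) (by positivity))
            (mul_le_mul hlen hb (sum_nonneg fun _ _ => by positivity) (by positivity)) ?_ (by positivity)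
          exact mul_nonneg (add_nonneg hnn hD0) (sum_nonneg fun _ _ => by positivity)
      _ = 24 * ((J:ℝ) ^ 2 * (1 + J) ^ 4) := by field_simp; ring
      _ ≤ 25 * ((J:ℝ) ^ 2 * (1 + J) ^ 4) := by gcongr; norm_num
      _ = _ := by ring


/-! ### Vaughan's identity and the mean value theorem -/

lemma box (F G : ArithmeticFunction ℝ) (s : 𝒳) {x : ℝ} (hx : 0 < x) {J : ℕ}
    (hJ : 2 * x ≤ 2 ^ J) :
    ∑ n ∈ Ico (1:ℕ) (2 ^ J), (((F * G) n:ℝ):ℂ) * cv s n * (W x n:ℂ) =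
      ∑ m ∈ Ico (1:ℕ) (2 ^ J), ∑ l ∈ Ico (1:ℕ) (2 ^ J), ((F m:ℝ):ℂ) * ((G l:ℝ):ℂ) * cv s (m * l) * (W x (m * l):ℂ) := by
  have h1 : ∑ n ∈ Ico (1:ℕ) (2 ^ J), (((F * G) n:ℝ):ℂ) * cv s n * (W x n:ℂ) =
      ∑ n ∈ Ico (1:ℕ) (2 ^ J), ∑ p ∈ n.divisorsAntidiagonal, ((F p.1:ℝ):ℂ) * ((G p.2:ℝ):ℂ) * cv s (p.1 * p.2) * (W x (p.1 * p.2):ℂ) := by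
    refine sum_congr rfl fun n _ => ?_
    rw [ArithmeticFunction.mul_apply]
    push_cast
    rw [sum_mul, sum_mul]
    refine sum_congr rfl fun p hp => ?_
    rw [(mem_divisorsAntidiagonal.mp hp).1]
  rw [h1, ← sum_product', sum_sigma']
  refine sum_of_injOn (fun s => s.2) ?_ ?_ ?_ ?_
  · rintro ⟨n, p⟩ h1 ⟨n', p'⟩ h2 h
    simp only [coe_sigma, Set.mem_sigma_iff, mem_coe, mem_divisorsAntidiagonal] at h1 h2 h
    subst h
    have : n = n' := by rw [← h1.2.1, ← h2.2.1]
    subst this; rfl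
  · rintro ⟨n, p⟩ h1
    simp only [coe_sigma, Set.mem_sigma_iff, mem_coe, mem_divisorsAntidiagonal, mem_Ico, mem_product] at h1 ⊢
    obtain ⟨⟨h1, h2⟩, h3, h4⟩ := h1
    have ha : p.1 ≠ 0 := by rintro h; simp [h] at h3; omega
    have hb : p.2 ≠ 0 := by rintro h; simp [h] at h3; omega
    have hc := Nat.le_mul_of_pos_right p.1 (pos_of_ne_zero hb)
    have hd := Nat.le_mul_of_pos_left p.2 (pos_of_ne_zero ha)
    omega
  · rintro ⟨a, b⟩ h1 h2
    simp only [mem_product, mem_Ico] at h1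
    have h3 : 2 ^ J ≤ a * b := by
      by_contra h; push Not at h
      apply h2
      refine ⟨⟨a * b, (a, b)⟩, ?_, rfl⟩
      simp only [coe_sigma, Set.mem_sigma_iff, mem_coe, mem_divisorsAntidiagonal, mem_Ico]
      have : 0 < a * b := Nat.mul_pos (by omega) (by omega)
      exact ⟨⟨by omega, h⟩, trivial, by omega⟩
    rw [W_eq_zero hx]
    · simp
    · right
      have : ((2 ^ J : ℕ):ℝ) ≤ (a * b : ℕ) := mod_cast h3
      push_cast at this ⊢
      linarith
  · rintro ⟨n, p⟩ _; rfl

/-- The truncated Möbius function. -/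
noncomputable def trM (U:ℝ) : ArithmeticFunction ℝ :=
  ⟨fun n => if (n:ℝ) ≤ U then (moebius n:ℝ) else 0, by simp⟩
/-- The truncated von Mangoldt function. -/
noncomputable def trA (V:ℝ) : ArithmeticFunction ℝ :=
  ⟨fun n => if (n:ℝ) ≤ V then vonMangoldt n else 0, by simp⟩

lemma trM_apply (U:ℝ) (n : ℕ) : trM U n = if (n:ℝ) ≤ U then (moebius n:ℝ) else 0 := rfl
lemma trA_apply (U:ℝ) (n : ℕ) : trA U n = if (n:ℝ) ≤ U then vonMangoldt n else 0 := rfl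

lemma abs_trM_le (U:ℝ) (n : ℕ) : |trM U n| ≤ 1 := by
  rw [trM_apply]; split_ifs
  · exact_mod_cast ArithmeticFunction.abs_moebius_le_one
  · simp

lemma abs_trA_le (U:ℝ) (n : ℕ) : |trA U n| ≤ vonMangoldt n := by
  rw [trA_apply]; split_ifs
  · exact le_of_eq (abs_of_nonneg vonMangoldt_nonneg)
  · rw [abs_zero]; exact vonMangoldt_nonneg

open ArithmeticFunction in
/-- Vaughan's identity as an identity in the ring of arithmetic functions. -/
lemma vaughan (U V:ℝ) : vonMangoldt = trA V + trM U * ArithmeticFunction.log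
    - (trA V * trM U) * (zeta : ArithmeticFunction ℝ)
    - (vonMangoldt - trA V) * ((zeta : ArithmeticFunction ℝ) * trM U - 1) := by
  rw [← vonMangoldt_mul_zeta]; ring

lemma af_sub_apply (F G : ArithmeticFunction ℝ) (n : ℕ) : (F - G) n = F n - G n := by
  rw [sub_eq_add_neg, sub_eq_add_neg]; rfl

open ArithmeticFunction in
lemma vaughan_R {U : ℝ} (hU : 1 ≤ U) (n : ℕ) : |((zeta : ArithmeticFunction ℝ) * trM U - 1 : ArithmeticFunction ℝ) n| ≤ #n.divisors
    ∧ ((n:ℝ) ≤ U → ((zeta : ArithmeticFunction ℝ) * trM U - 1 : ArithmeticFunction ℝ) n = 0) := by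
  have hz : ((n:ℝ) ≤ U → ((zeta : ArithmeticFunction ℝ) * trM U - 1 : ArithmeticFunction ℝ) n = 0) := by
    intro h
    rcases eq_zero_or_pos n with rfl | hn
    · simp
    have h1 := congrArg (fun f : ArithmeticFunction ℝ => f n) (coe_zeta_mul_coe_moebius (R := ℝ))
    rw [af_sub_apply, ← h1, coe_zeta_mul_apply, coe_zeta_mul_apply, sub_eq_zero]
    refine sum_congr rfl fun d hd => ?_
    rw [trM_apply, if_pos]
    · rw [intCoe_apply]
    · have := Nat.divisor_le hd
      have : (d:ℝ) ≤ n := mod_cast this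
      linarith
  refine ⟨?_, hz⟩
  rcases eq_or_ne n 1 with rfl | hn
  · rw [hz (by simpa using hU)]; simp
  · rw [af_sub_apply, one_apply_ne hn, sub_zero, coe_zeta_mul_apply]
    refine (abs_sum_le_sum_abs _ _).trans ?_
    refine (sum_le_sum fun d _ => abs_trM_le U d).trans ?_
    simp

open ArithmeticFunction in
lemma vaughan_AM {U V : ℝ} (n : ℕ) : |(trA V * trM U) n| ≤ Real.log n ∧ (U * V < n → 0 ≤ U → 0 ≤ V → (trA V * trM U) n = 0) := by
  constructor
  · rw [mul_apply]
    refine (abs_sum_le_sum_abs _ _).trans ?_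
    calc _ ≤ ∑ p ∈ n.divisorsAntidiagonal, vonMangoldt p.1 := by
          refine sum_le_sum fun p _ => ?_
          rw [abs_mul]
          have h1 := abs_trA_le V p.1
          have h2 := abs_trM_le U p.2
          have h3 : 0 ≤ vonMangoldt p.1 := vonMangoldt_nonneg
          nlinarith [abs_nonneg (trA V p.1), abs_nonneg (trM U p.2)]
      _ = ∑ d ∈ n.divisors, vonMangoldt d := by
          rw [Nat.sum_divisorsAntidiagonal (f := fun a _ => vonMangoldt a)]
      _ = _ := vonMangoldt_sum
  · intro h hU hV
    rw [mul_apply]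
    refine sum_eq_zero fun p hp => ?_
    rw [trA_apply, trM_apply]
    split_ifs with h1 h2
    · exfalso
      have h3 : (p.1:ℝ) * p.2 = n := mod_cast (mem_divisorsAntidiagonal.mp hp).1
      have : (p.1:ℝ) * p.2 ≤ V * U := by gcongr
      linarith
    · simp
    · simp
    · simp

/-- A type I sum: short coefficients against a smooth complete sum over `l`. -/
lemma typeI_sum (j : ℕ) : ∃ C : ℝ, 0 ≤ C ∧ ∀ (s : 𝒳) (Q J : ℕ) (x T:ℝ) (F : ℕ → ℝ),
    s.1 ≠ 0 → s.2 ≠ 1 → s.1 ≤ Q → 1 ≤ log x → 0 < x → 2 * x ≤ 2 ^ J → 0 ≤ T → T ≤ x → (∀ m < 2 ^ J, |F m| ≤ 1 + J) →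
    (∀ m : ℕ, T < m → F m = 0) →
    ‖∑ m ∈ Ico (1:ℕ) (2 ^ J), ∑ l ∈ Ico (1:ℕ) (2 ^ J), ((F m:ℝ):ℂ) * (((log l) ^ j:ℝ):ℂ) * cv s (m * l) * (W x (m * l):ℂ)‖
      ≤ C * (T * Q) * (2 + J) ^ (j + 1) := by
  obtain ⟨C, hC, hI⟩ := typeI j
  refine ⟨C, hC, ?_⟩
  intro s Q J x T F hs0 hs1 hsQ hx hx0 hJ hT hTx hF hF0
  have h1 : ∀ m ∈ Ico (1:ℕ) (2 ^ J), ‖∑ l ∈ Ico (1:ℕ) (2 ^ J), ((F m:ℝ):ℂ) * (((log l) ^ j:ℝ):ℂ) * cv s (m * l) * (W x (m * l):ℂ)‖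
      ≤ if m ∈ Ico 1 (⌊T⌋₊ + 1) then C * Q * (2 + J) ^ (j + 1) else 0 := by
    intro m hm
    have hm' := mem_Ico.mp hm
    split_ifs with h
    · have h2 : (m:ℝ) ≤ T := (le_floor_iff hT).mp (by have := (mem_Ico.mp h).2; omega)
      have h3 := hI s m J x hs0 hs1 hm'.1 (by linarith) hx hJ
      have h4 : ∑ l ∈ Ico (1:ℕ) (2 ^ J), ((F m:ℝ):ℂ) * (((log l) ^ j:ℝ):ℂ) * cv s (m * l) * (W x (m * l):ℂ)
          = ((F m:ℝ):ℂ) * cv s m * ∑ l ∈ Ico (1:ℕ) (2 ^ J), (((log l) ^ j:ℝ):ℂ) * cv s l * (W x (m * l):ℂ) := by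
        rw [mul_sum]; refine sum_congr rfl fun l _ => ?_
        rw [cv_mul]; ring
      rw [h4, norm_mul, norm_mul, norm_real, norm_eq_abs]
      have h5 := hF m hm'.2
      have h6 := norm_cv_le s m
      have h7 : (s.1:ℝ) ≤ Q := mod_cast hsQ
      calc _ ≤ (1 + J:ℝ) * 1 * (C * s.1 * (2 + J) ^ j) := by gcongr
        _ ≤ (2 + J:ℝ) * 1 * (C * Q * (2 + J) ^ j) := by gcongr; norm_num
        _ = _ := by ring
    · rw [hF0 m]
      · simp
      · by_contra h8; push Not at h8
        apply h
        have := (le_floor_iff hT).mpr h8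
        exact mem_Ico.mpr ⟨hm'.1, by omega⟩
  refine (norm_sum_le _ _).trans ((sum_le_sum h1).trans ?_)
  rw [← sum_filter, sum_const, nsmul_eq_mul]
  have h2 : ((filter (fun m => m ∈ Ico 1 (⌊T⌋₊ + 1)) (Ico (1:ℕ) (2 ^ J))).card:ℝ) ≤ T := by
    refine le_trans ?_ (floor_le hT)
    norm_cast
    refine (card_le_card (t := Ico 1 (⌊T⌋₊ + 1)) ?_).trans (by simp)
    intro m hm; exact (mem_filter.mp hm).2
  calc _ ≤ T * (C * Q * (2 + J) ^ (j + 1)) := by gcongr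
    _ = _ := by ring

/-- Mean value of `∑ Λ(n) χ(n) W(n)` over primitive non-trivial characters of conductor at most `Q`. -/
theorem mean_value : ∃ C : ℝ, 0 ≤ C ∧ ∀ (S : Finset 𝒳) (Q J : ℕ) (x:ℝ),
    Fam S Q → (∀ s ∈ S, s.2 ≠ 1) → #S ≤ Q ^ 2 → 1 ≤ Q → 1 ≤ log x → 0 < x → 2 * x ≤ 2 ^ J → 15 * (Q:ℝ) ^ 11 ≤ x →
    ∑ s ∈ S, ‖∑ n ∈ Ico (1:ℕ) (2 ^ J), (vonMangoldt n:ℂ) * cv s n * (W x n:ℂ)‖ ≤ C * x * (2 + J) ^ 4 := by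
  obtain ⟨C0, hC0, h0⟩ := typeI_sum 0
  obtain ⟨C1, hC1, h1⟩ := typeI_sum 1
  obtain ⟨C2, hC2, h2⟩ := typeII_piece
  refine ⟨C0 + C1 + C2, by positivity, ?_⟩
  intro S Q J x hS hS1 hcard hQ hx hx0 hJ hQx
  have hQ1 : (1:ℝ) ≤ Q := mod_cast hQ
  set U : ℝ := 3 * (Q:ℝ) ^ 4 with hU
  set V : ℝ := 5 * (Q:ℝ) ^ 4 with hV
  have hQ4 : (1:ℝ) ≤ (Q:ℝ) ^ 4 := one_le_pow₀ hQ1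
  have hcard' : (#S:ℝ) ≤ (Q:ℝ) ^ 2 := mod_cast hcard
  have hD : #S * (2 * (Q:ℝ) ^ 2) ≤ 2 * (Q:ℝ) ^ 4 := by
    calc _ ≤ (Q:ℝ) ^ 2 * (2 * (Q:ℝ) ^ 2) := by gcongr
      _ = _ := by ring
  have hUV : U * V = 15 * (Q:ℝ) ^ 8 := by rw [hU, hV]; ring
  have hUVx : U * V ≤ x := by
    rw [hUV]; refine le_trans ?_ hQx
    have := pow_le_pow_right₀ hQ1 (show 8 ≤ 11 by norm_num)
    linarith
  have hVUV : V ≤ U * V := by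
    have : (1:ℝ) ≤ U := by linarith
    nlinarith
  have hlogJ : ∀ m : ℕ, m < 2 ^ J → log m ≤ J := by
    intro m hm
    rcases eq_zero_or_pos m with rfl | h
    · simp
    · have : log m ≤ log (2 ^ J) :=
        log_le_log (mod_cast h) (mod_cast hm.le)
      rw [log_pow] at this
      have h2 := log_two_lt_d9
      nlinarith [cast_nonneg (α := ℝ) J]
  set Rf : ArithmeticFunction ℝ := ((ArithmeticFunction.zeta : ArithmeticFunction ℝ) * trM U - 1) with hRf
  have hU1 : 1 ≤ U := by linarith
  -- contribution of a single character
  have hone : ∀ s ∈ S, ‖∑ n ∈ Ico (1:ℕ) (2 ^ J), (vonMangoldt n:ℂ) * cv s n * (W x n:ℂ)‖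
      ≤ C1 * (U * Q) * (2 + J) ^ 2 + C0 * ((U * V) * Q) * (2 + J) ^ 1 + ∑ i ∈ range J,
        ‖∑ m ∈ Ico (2 ^ i) (2 ^ (i + 1)), ∑ l ∈ Ico (1:ℕ) (2 ^ J),
          (((vonMangoldt - trA V) m:ℝ):ℂ) * ((Rf l:ℝ):ℂ) * cv s (m * l) * (W x (m * l):ℂ)‖ := by
    intro s hs
    have e0 : ∑ n ∈ Ico (1:ℕ) (2 ^ J), (vonMangoldt n:ℂ) * cv s n * (W x n:ℂ) =
        ∑ n ∈ Ico (1:ℕ) (2 ^ J), (((trM U * ArithmeticFunction.log) n:ℝ):ℂ) * cv s n * (W x n:ℂ)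
        - ∑ n ∈ Ico (1:ℕ) (2 ^ J), ((((trA V * trM U) * (ArithmeticFunction.zeta : ArithmeticFunction ℝ)) n:ℝ):ℂ) * cv s n * (W x n:ℂ)
        - ∑ n ∈ Ico (1:ℕ) (2 ^ J), ((((vonMangoldt - trA V) * Rf) n:ℝ):ℂ) * cv s n * (W x n:ℂ) := by
      rw [← sum_sub_distrib, ← sum_sub_distrib]
      refine sum_congr rfl fun n _ => ?_
      have hv := congrArg (fun f : ArithmeticFunction ℝ => f n) (vaughan U V)
      simp only [af_sub_apply, ArithmeticFunction.add_apply] at hv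
      have hA : ((trA V n:ℝ):ℂ) * (W x n:ℂ) = 0 := by
        rw [trA_apply]
        split_ifs with h
        · rw [W_eq_zero hx0 (Or.inl (by linarith))]; simp
        · simp
      rw [hv]
      push_cast
      linear_combination cv s n * hA
    rw [e0, box _ _ s hx0 hJ, box _ _ s hx0 hJ, box _ _ s hx0 hJ]
    refine (norm_sub_le _ _).trans (add_le_add ((norm_sub_le _ _).trans (add_le_add ?_ ?_)) ?_)
    · have := h1 s Q J x U (trM U) (hS.pos s hs) (hS1 s hs) (hS.le s hs) hx hx0 hJ (by linarith) (by nlinarith) ?_ ?_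
      · simpa [log_apply] using this
      · intro m _; have := abs_trM_le U m; have : (0:ℝ) ≤ J := by positivity
        linarith
      · intro m hm; rw [trM_apply, if_neg (by linarith)]
    · have := h0 s Q J x (U * V) (fun m => (trA V * trM U : ArithmeticFunction ℝ) m) (hS.pos s hs) (hS1 s hs) (hS.le s hs) hx hx0 hJ (by nlinarith) hUVx ?_ ?_
      · refine le_trans (le_of_eq ?_) this
        congr 1
        refine sum_congr rfl fun m _ => sum_congr rfl fun l hl => ?_
        rw [natCoe_apply, zeta_apply_ne (by have := (mem_Ico.mp hl).1; omega)]
        simp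
      · intro m hm; have := (vaughan_AM (U := U) (V := V) m).1; have := hlogJ m hm
        linarith
      · intro m hm; exact (vaughan_AM m).2 hm (by linarith) (by linarith)
    · rw [ico_dyadic]
      exact norm_sum_le _ _
  have hfin : ∀ i ∈ range J, ∑ s ∈ S, ‖∑ m ∈ Ico (2 ^ i) (2 ^ (i + 1)), ∑ l ∈ Ico (1:ℕ) (2 ^ J),
          (((vonMangoldt - trA V) m:ℝ):ℂ) * ((Rf l:ℝ):ℂ) * cv s (m * l) * (W x (m * l):ℂ)‖ ≤ C2 * x * (J * (1 + J) ^ 2) := by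
    intro i hi
    refine h2 S Q i J x U V _ _ hS hx hx0 hJ (mem_range.mp hi) hU1 (by linarith) (by linarith) ?_ ?_ ?_ ?_
    · intro m hm
      rw [norm_real, norm_eq_abs, af_sub_apply, trA_apply]
      have := hlogJ m hm
      have h5 := vonMangoldt_le_log (n := m)
      have h6 : 0 ≤ vonMangoldt m := vonMangoldt_nonneg
      split_ifs
      · simp
      · rw [sub_zero, abs_of_nonneg h6]; linarith
    · intro m hm
      rw [af_sub_apply, trA_apply, if_pos hm, sub_self, ofReal_zero]
    · intro l
      rw [norm_real, norm_eq_abs]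
      exact (vaughan_R hU1 l).1
    · intro l hl
      rw [(vaughan_R hU1 l).2 hl, ofReal_zero]
  refine (sum_le_sum hone).trans ?_
  rw [sum_add_distrib, sum_const, nsmul_eq_mul, sum_comm]
  have hA : ∑ i ∈ range J, ∑ s ∈ S, ‖∑ m ∈ Ico (2 ^ i) (2 ^ (i + 1)), ∑ l ∈ Ico (1:ℕ) (2 ^ J),
          (((vonMangoldt - trA V) m:ℝ):ℂ) * ((Rf l:ℝ):ℂ) * cv s (m * l) * (W x (m * l):ℂ)‖ ≤ C2 * x * (2 + J) ^ 4 := by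
    refine (sum_le_sum hfin).trans ?_
    rw [sum_const, card_range, nsmul_eq_mul]
    have : (0:ℝ) ≤ J := by positivity
    calc (J:ℝ) * (C2 * x * (J * (1 + J) ^ 2)) = C2 * x * (J * J * (1 + J) ^ 2) := by ring
      _ ≤ C2 * x * ((2 + J) * (2 + J) * (2 + J) ^ 2) := by gcongr <;> linarith
      _ = _ := by ring
  have hJ1 : (1:ℝ) ≤ 2 + J := by have : (0:ℝ) ≤ J := by positivity
                                 linarith
  have hsm : ∀ Y : ℝ, 0 ≤ Y → Y ≤ U * V → (#S:ℝ) * (Y * Q) ≤ x := by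
    intro Y hY0 hY
    calc (#S:ℝ) * (Y * Q) ≤ (Q:ℝ) ^ 2 * ((U * V) * Q) := by gcongr
      _ = 15 * (Q:ℝ) ^ 11 := by rw [hUV]; ring
      _ ≤ x := hQx
  have hB : (#S:ℝ) * (C1 * (U * Q) * (2 + J) ^ 2 + C0 * ((U * V) * Q) * (2 + J) ^ 1) ≤ (C0 + C1) * x * (2 + J) ^ 4 := by
    calc _ = C1 * (#S * (U * Q)) * (2 + J) ^ 2 + C0 * (#S * ((U * V) * Q)) * (2 + J) ^ 1 := by ring
      _ ≤ C1 * x * (2 + J) ^ 4 + C0 * x * (2 + J) ^ 4 := by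
        have e1 := hsm U (by linarith) (by nlinarith)
        have e2 := hsm (U * V) (by nlinarith) le_rfl
        have e3 := pow_le_pow_right₀ hJ1 (show 2 ≤ 4 by norm_num)
        have e4 := pow_le_pow_right₀ hJ1 (show 1 ≤ 4 by norm_num)
        gcongr
      _ = _ := by ring
  calc _ ≤ (C0 + C1) * x * (2 + J) ^ 4 + C2 * x * (2 + J) ^ 4 := add_le_add hB hA
    _ = _ := by ring



/-! ### Primes in progressions on average -/

/-- The primitive Dirichlet characters modulo `f` (the empty set for `f = 0`). -/
noncomputable def prims (f : ℕ) : Finset (𝒟 f) :=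
  if h : f = 0 then ∅ else
    have : NeZero f := ⟨h⟩
    (Set.toFinite {χ : 𝒟 f | χ.IsPrimitive}).toFinset

lemma mem_prims {f : ℕ} (hf : f ≠ 0) (χ : 𝒟 f) : χ ∈ prims f ↔ χ.IsPrimitive := by
  rw [prims, dif_neg hf]; simp

lemma card_prims_le (f : ℕ) : (prims f).card ≤ f := by
  rcases eq_zero_or_pos f with rfl | h
  · simp [prims]
  have : NeZero f := ⟨h.ne'⟩
  calc (prims f).card ≤ Fintype.card (𝒟 f) := card_le_univ _
    _ = f.totient := by
      rw [← card_eq_fintype_card]; exact DirichletCharacter.card_eq_totient_of_hasEnoughRootsOfUnity ℂ f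
    _ ≤ f := Nat.totient_le f

/-- The primitive characters of squarefree conductor in `[2, Q]` not divisible by `q`. -/
noncomputable def fam (Q q : ℕ) : Finset 𝒳 :=
  ((Icc 2 Q).filter fun f => Squarefree f ∧ ¬ q ∣ f).sigma prims

lemma mem_fam {Q q : ℕ} {s : 𝒳} : s ∈ fam Q q ↔
    ((2 ≤ s.1 ∧ s.1 ≤ Q) ∧ Squarefree s.1 ∧ ¬ q ∣ s.1) ∧ s.2.IsPrimitive := by
  rw [fam, mem_sigma, mem_filter, mem_Icc]
  constructor
  · rintro ⟨h1, h2⟩; exact ⟨h1, (mem_prims (by omega) _).mp h2⟩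
  · rintro ⟨h1, h2⟩; exact ⟨h1, (mem_prims (by omega) _).mpr h2⟩

lemma fam_Fam (Q q : ℕ) : Fam (fam Q q) Q where
  pos := fun s hs => by have := (mem_fam.mp hs).1.1; omega
  le := fun s hs => (mem_fam.mp hs).1.1.2
  prim := fun s hs => (mem_fam.mp hs).2

lemma fam_card (Q q : ℕ) : (fam Q q).card ≤ Q ^ 2 := by
  rw [fam, card_sigma]
  calc _ ≤ ∑ f ∈ (Icc 2 Q).filter (fun f => Squarefree f ∧ ¬ q ∣ f), Q :=
        sum_le_sum fun f hf => (card_prims_le f).trans (mem_Icc.mp (mem_filter.mp hf).1).2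
    _ ≤ ∑ f ∈ Icc 2 Q, Q := sum_le_sum_of_subset (filter_subset _ _)
    _ = (Q - 1) * Q := by rw [sum_const, Nat.card_Icc, smul_eq_mul]; congr 1
    _ ≤ Q * Q := Nat.mul_le_mul_right _ (Nat.sub_le _ _)
    _ = _ := by ring

lemma fam_ne_one {Q q : ℕ} {s : 𝒳} (hs : s ∈ fam Q q) : s.2 ≠ 1 := by
  have h := mem_fam.mp hs
  have : NeZero s.1 := ⟨by omega⟩
  exact prim_ne_one (by omega) h.2

/-- The smoothed sum of `Λ(n) χ(n)` over `x < n < 2 x`. -/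
noncomputable def th (x:ℝ) (s : 𝒳) : ℂ := ∑' n : ℕ, lam s.2 n * (W x n:ℂ)

lemma tsum_W_eq {x : ℝ} (hx : 0 < x) {J : ℕ} (hJ : 2 * x ≤ 2 ^ J) (F : ℕ → ℂ) :
    ∑' n : ℕ, F n * (W x n:ℂ) = ∑ n ∈ Ico (1:ℕ) (2 ^ J), F n * (W x n:ℂ) := by
  refine tsum_eq_sum fun n hn => ?_
  rw [W_eq_zero hx]
  · simp
  · rw [mem_Ico] at hn
    by_cases h : 1 ≤ n
    · right
      have : 2 ^ J ≤ n := by by_contra h2; exact hn ⟨h, by omega⟩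
      have : (2:ℝ) ^ J ≤ n := mod_cast this
      linarith
    · left
      have : n = 0 := by omega
      subst this; simpa using hx.le

lemma exists_J {x : ℝ} (hx : 2 ≤ log x) (hx0 : 0 < x) : ∃ J : ℕ, 2 * x ≤ 2 ^ J ∧ (2 + J:ℝ) ≤ 4 * log x := by
  refine ⟨⌈log (2 * x) / log 2⌉₊, ?_, ?_⟩
  · have h := le_ceil (log (2 * x) / log 2)
    have hl := log_pos (show (1:ℝ) < 2 by norm_num)
    rw [div_le_iff₀ hl, ← log_pow] at h
    exact (Real.log_le_log_iff (by positivity) (by positivity)).mp h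
  · have hl := log_two_gt_d9
    have h1 : log (2 * x) = log 2 + log x := log_mul (by norm_num) hx0.ne'
    have h := Nat.ceil_lt_add_one (a := log (2 * x) / log 2) (by rw [h1]; positivity)
    have h2 : log (2 * x) / log 2 = 1 + log x / log 2 := by
      rw [h1, add_div, div_self (by linarith)]
    have h3 : log x / log 2 ≤ 2 * log x := by
      rw [div_le_iff₀ (by linarith)]; nlinarith
    rw [h2] at h
    rw [h2]; linarith

open Classical in
/-- A weak Bombieri-Vinogradov theorem for smooth weights, omitting the multiples of one prime `q1`. -/
theorem bv_core (B N : ℕ) : ∃ A : ℕ, ∃ x0 : ℝ, ∀ x : ℝ, x0 ≤ x → ∃ q1 : ℕ, q1.Prime ∧ N < q1 ∧ (q1:ℝ) ≤ (log x) ^ A ∧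
    ∀ Q : ℕ, 15 * (Q:ℝ) ^ 11 ≤ x →
    ∑ s ∈ fam Q q1, (s.1:ℝ) ^ (-(1 / 2:ℝ)) * ‖th x s‖ ≤ x / (log x) ^ B := by
  obtain ⟨C, hC, hmean⟩ := mean_value
  set A := 2 * B + 10 with hA
  obtain ⟨x0, hsmall⟩ := small_cond A (B + 2 * A + 1) N (by omega)
  refine ⟨A, max x0 (exp (max 2 (256 * C + 1))), ?_⟩
  intro x hx
  have hx1 : x0 ≤ x := (le_max_left _ _).trans hx
  have hx2 : exp (max 2 (256 * C + 1)) ≤ x := (le_max_right _ _).trans hx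
  have hx0 : 0 < x := (exp_pos _).trans_le hx2
  have hL : max 2 (256 * C + 1) ≤ log x := (le_log_iff_exp_le hx0).mpr hx2
  have hL2 : 2 ≤ log x := (le_max_left _ _).trans hL
  have hLC : 256 * C + 1 ≤ log x := (le_max_right _ _).trans hL
  set L := log x with hLdef
  have hL0 : 0 < L := by linarith
  obtain ⟨q1, hq1, hNq, hqA, hs⟩ := hsmall x hx1
  refine ⟨q1, hq1, hNq, hqA, ?_⟩
  intro Q hQ
  obtain ⟨J, hJ, hJ2⟩ := exists_J hL2 hx0
  rcases eq_zero_or_pos Q with rfl | hQ0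
  · have : fam 0 q1 = ∅ := by
      rw [eq_empty_iff_forall_notMem]; intro s hs
      have := (mem_fam.mp hs).1.1; omega
    rw [this]; simp; positivity
  have hmean' := hmean (fam Q q1) Q J x (fam_Fam _ _) (fun s hs => fam_ne_one hs) (fam_card _ _) hQ0 (by linarith) hx0 hJ hQ
  have hth : ∀ s, th x s = ∑ n ∈ Ico (1:ℕ) (2 ^ J), (vonMangoldt n:ℂ) * cv s n * (W x n:ℂ) := by
    intro s; rw [th, tsum_W_eq hx0 hJ]; rfl
  have hmean2 : ∑ s ∈ fam Q q1, ‖th x s‖ ≤ C * x * (2 + J) ^ 4 := by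
    simpa only [hth] using hmean'
  set T := ⌊L ^ A⌋₊ with hT
  have hTL : (T:ℝ) ≤ L ^ A := floor_le (by positivity)
  have hterm : ∀ s ∈ fam Q q1, (s.1:ℝ) ^ (-(1 / 2:ℝ)) * ‖th x s‖ ≤
      (if s ∈ fam T q1 then x / L ^ (B + 2 * A + 1) else 0) + 1 / L ^ (B + 5) * ‖th x s‖ := by
    intro s hsm
    have h := mem_fam.mp hsm
    have h0 : 0 ≤ 1 / L ^ (B + 5) * ‖th x s‖ := by positivity
    have hs1 : (2:ℝ) ≤ s.1 := mod_cast h.1.1.1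
    split_ifs with hc
    · have h3 : (s.1:ℝ) ^ (-(1 / 2:ℝ)) ≤ 1 := Real.rpow_le_one_of_one_le_of_nonpos (by linarith) (by norm_num)
      have h4 : ‖th x s‖ ≤ x / L ^ (B + 2 * A + 1) := by
        have : NeZero s.1 := ⟨by omega⟩
        refine hs s.1 s.2 h.1.2.1 (by omega) h.1.2.2 ?_ h.2
        have := (mem_fam.mp hc).1.1.2
        exact le_trans (mod_cast this) hTL
      have : (s.1:ℝ) ^ (-(1 / 2:ℝ)) * ‖th x s‖ ≤ 1 * (x / L ^ (B + 2 * A + 1)) := by gcongr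
      linarith
    · have h5 : L ^ A ≤ s.1 := by
        by_contra h6; push Not at h6
        apply hc
        exact mem_fam.mpr ⟨⟨⟨h.1.1.1, le_floor h6.le⟩, h.1.2⟩, h.2⟩
      rw [zero_add]
      gcongr
      calc (s.1:ℝ) ^ (-(1 / 2:ℝ)) ≤ (L ^ A) ^ (-(1 / 2:ℝ)) :=
            Real.rpow_le_rpow_of_nonpos (by positivity) h5 (by norm_num)
        _ = 1 / L ^ (B + 5) := by
            rw [← rpow_natCast, ← rpow_mul hL0.le, ← rpow_natCast, one_div (L ^ _), ← rpow_neg hL0.le]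
            congr 1
            rw [hA]; push_cast; ring
  refine (sum_le_sum hterm).trans ?_
  rw [sum_add_distrib, ← mul_sum, ← sum_filter, sum_const, nsmul_eq_mul]
  have hc : ((filter (fun s => s ∈ fam T q1) (fam Q q1)).card:ℝ) ≤ (L ^ A) ^ 2 := by
    calc _ ≤ ((fam T q1).card:ℝ) := by
          exact_mod_cast card_le_card fun s hs => (mem_filter.mp hs).2
      _ ≤ (T:ℝ) ^ 2 := mod_cast fam_card T q1
      _ ≤ _ := by gcongr
  calc _ ≤ (L ^ A) ^ 2 * (x / L ^ (B + 2 * A + 1)) + 1 / L ^ (B + 5) * (C * x * (4 * L) ^ 4) := by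
        gcongr
        refine hmean2.trans ?_
        gcongr
    _ = (1 + 256 * C) / L * (x / L ^ B) := by
        rw [show B + 2 * A + 1 = B + A * 2 + 1 by ring]
        simp only [pow_add, pow_mul]
        field_simp
        ring
    _ ≤ 1 * (x / L ^ B) := by
        gcongr
        rw [div_le_one hL0]; linarith
    _ = _ := one_mul _



/-! ### Remainder terms of the sieve over primes -/

/-- Number of unit roots of `H` modulo `d`. -/
noncomputable def rho (H : ℤ[X]) (d : ℕ) : ℕ :=
  Nat.card {a : ZMod d | IsUnit a ∧ Polynomial.aeval a H = 0}

lemma dvd_eval_iff (H : ℤ[X]) (d : ℕ) (n:ℤ) :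
    (d:ℤ) ∣ H.eval n ↔ Polynomial.aeval (n : ZMod d) H = 0 := by
  have h := Polynomial.aeval_algebraMap_apply (ZMod d) n H
  simp only [algebraMap_int_eq, eq_intCast, Polynomial.coe_aeval_eq_eval] at h
  rw [h, ZMod.intCast_zmod_eq_zero_iff_dvd]

/-- Number of integers below the end of the support of `W x`. -/
noncomputable def Nx (x:ℝ) : ℕ := ⌈2 * x⌉₊

/-- The weight `Λ(n) W(n)`. -/
noncomputable def wt (x:ℝ) (n : ℕ) : ℝ := vonMangoldt n * W x n

lemma wt_nonneg {x : ℝ} (hx : 0 < x) (n : ℕ) : 0 ≤ wt x n :=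
  mul_nonneg vonMangoldt_nonneg (W_nonneg hx n)

/-- The total weight. -/
noncomputable def Xt (x:ℝ) : ℝ := ∑ n ∈ range (Nx x), wt x n

/-- `n` is prime to `d` and `d ∣ H(n)`. -/
def Ev (H : ℤ[X]) (d n : ℕ) : Prop := n.Coprime d ∧ (d:ℤ) ∣ H.eval (n:ℤ)

lemma th_eq {x : ℝ} (hx : 0 < x) (s : 𝒳) :
    th x s = ∑ n ∈ range (Nx x), (wt x n:ℂ) * s.2 n := by
  rw [th]
  rw [tsum_eq_sum (s := range (Nx x))]
  · refine sum_congr rfl fun n _ => ?_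
    rw [lam, wt]; push_cast; ring
  · intro n hn
    rw [W_eq_zero hx]
    · simp
    · right
      have : Nx x ≤ n := by simpa using hn
      exact (le_ceil _).trans (mod_cast this)

open Classical in
lemma err_bound {x : ℝ} (hx : 1 ≤ x) {J d : ℕ} (hJ : 2 * x ≤ 2 ^ J) (hd : d ≠ 0) :
    ∑ n ∈ range (Nx x), (if n.Coprime d then 0 else wt x n) ≤ d * (J:ℝ) ^ 2 := by
  have hx0 : 0 < x := by linarith
  have hN : Nx x ≤ 2 ^ J := ceil_le.mpr (mod_cast hJ)
  have h1 : ∀ n ∈ range (Nx x), (if n.Coprime d then 0 else wt x n) ≤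
      if n ∈ ((Icc 1 d) ×ˢ (Icc 1 J)).image (fun p => p.1 ^ p.2) then (J:ℝ) else 0 := by
    intro n hn
    have hn' : n < 2 ^ J := (mem_range.mp hn).trans_le hN
    have hnn : (0:ℝ) ≤ if n ∈ ((Icc 1 d) ×ˢ (Icc 1 J)).image (fun p => p.1 ^ p.2) then (J:ℝ) else 0 := by
      split_ifs
      · positivity
      · exact le_rfl
    by_cases hc : n.Coprime d
    · rw [if_pos hc]; exact hnn
    rw [if_neg hc]
    by_cases hL : vonMangoldt n = 0
    · rw [wt, hL, zero_mul]; exact hnn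
    obtain ⟨p, k, hp, hk, rfl⟩ := (isPrimePow_nat_iff _).mp (ArithmeticFunction.vonMangoldt_ne_zero_iff.mp hL)
    have hpd : p ∣ d := by
      by_contra h
      exact hc (Nat.Coprime.pow_left k ((Nat.Prime.coprime_iff_not_dvd hp).mpr h))
    have hkJ : k ≤ J := by
      have h2 : 2 ^ k ≤ p ^ k := Nat.pow_le_pow_left hp.two_le k
      exact (Nat.pow_lt_pow_iff_right (by norm_num : 1 < 2)).mp (h2.trans_lt hn') |>.le
    rw [if_pos]
    · have h1 := vonMangoldt_le_log (n := p ^ k)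
      have h2 := W_le_one hx (p ^ k)
      have h3 : (0:ℝ) ≤ vonMangoldt (p ^ k) := vonMangoldt_nonneg
      have h4 : log ((p ^ k : ℕ):ℝ) ≤ J := by
        have hpos : 0 < p ^ k := Nat.pow_pos hp.pos
        have : log ((p ^ k : ℕ):ℝ) ≤ log (2 ^ J) :=
          log_le_log (mod_cast hpos) (mod_cast hn'.le)
        rw [log_pow] at this
        have h2 := log_two_lt_d9
        nlinarith [cast_nonneg (α := ℝ) J]
      rw [wt]
      calc _ ≤ vonMangoldt (p ^ k) * 1 := by gcongr
        _ ≤ _ := by linarith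
    · refine mem_image.mpr ⟨(p, k), ?_, rfl⟩
      rw [mem_product, mem_Icc, mem_Icc]
      exact ⟨⟨hp.one_le, le_of_dvd (pos_of_ne_zero hd) hpd⟩, hk, hkJ⟩
  refine (sum_le_sum h1).trans ?_
  rw [← sum_filter, sum_const, nsmul_eq_mul, sq, ← mul_assoc]
  gcongr
  norm_cast
  refine (card_le_card fun n hn => (mem_filter.mp hn).2).trans (card_image_le.trans ?_)
  rw [card_product]; simp

open Classical in
/-- The error in counting `n` with `d ∣ H(n)` is bounded by character sums of conductor dividing `d`. -/
lemma rem_bound (H : ℤ[X]) {x : ℝ} (hx : 1 ≤ x) {J d q1 : ℕ} (hJ : 2 * x ≤ 2 ^ J) (hd : Squarefree d) (hq : ¬ q1 ∣ d) :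
    |∑ n ∈ range (Nx x), (if Ev H d n then wt x n else 0) - rho H d / d.totient * Xt x| ≤
      rho H d / d.totient * ∑ s ∈ (fam d q1).filter (fun s => s.1 ∣ d), ‖th x s‖ + rho H d * (d * (J:ℝ) ^ 2) := by
  have hx0 : 0 < x := by linarith
  have hd0 : d ≠ 0 := hd.ne_zero
  have : NeZero d := ⟨hd0⟩
  set T : Finset (ZMod d) := univ.filter fun a => IsUnit a ∧ Polynomial.aeval a H = 0 with hT
  have hTc : rho H d = #T := by
    rw [rho, card_eq_fintype_card, hT, ← Fintype.card_subtype]; rfl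
  have hφ : (0:ℝ) < d.totient := mod_cast Nat.totient_pos.mpr (pos_of_ne_zero hd0)
  have hφc : ((d.totient:ℝ):ℂ) ≠ 0 := mod_cast hφ.ne'
  have hind : ∀ n : ℕ, (if Ev H d n then (1:ℂ) else 0) = ∑ a ∈ T, if a = (n : ZMod d) then 1 else 0 := by
    intro n
    rw [sum_ite_eq']
    have : Ev H d n ↔ ((n : ZMod d) ∈ T) := by
      rw [hT, mem_filter, Ev, dvd_eval_iff, ZMod.isUnit_iff_coprime]; simp
    simp only [this]
  set c : 𝒟 d → ℂ := fun χ => ∑ a ∈ T, χ a⁻¹ with hc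
  have hcn : ∀ χ, ‖c χ‖ ≤ #T := by
    intro χ
    refine (norm_sum_le _ _).trans ?_
    calc _ ≤ ∑ a ∈ T, (1:ℝ) := sum_le_sum fun a _ => χ.norm_le_one _
      _ = _ := by simp
  -- orthogonality
  have hA : (((∑ n ∈ range (Nx x), (if Ev H d n then wt x n else 0):ℝ)):ℂ) * (d.totient:ℝ) =
      ∑ χ : 𝒟 d, c χ * ∑ n ∈ range (Nx x), (wt x n:ℂ) * χ n := by
    have : ∀ n : ℕ, (if Ev H d n then (1:ℂ) else 0) * (d.totient:ℝ) = ∑ χ : 𝒟 d, c χ * χ n := by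
      intro n
      simp only [hc]
      rw [hind, sum_mul]
      simp_rw [sum_mul]
      rw [sum_comm]
      refine sum_congr rfl fun a ha => ?_
      rw [DirichletCharacter.sum_char_inv_mul_char_eq ℂ ((mem_filter.mp ha).2.1)]
      split_ifs <;> simp
    simp_rw [mul_sum]
    rw [sum_comm]
    push_cast
    rw [sum_mul]
    refine sum_congr rfl fun n _ => ?_
    have h3 := this n
    calc _ = (wt x n:ℂ) * ((if Ev H d n then (1:ℂ) else 0) * (d.totient:ℝ)) := by
          split_ifs <;> simp
      _ = _ := by
          rw [h3, mul_sum]; refine sum_congr rfl fun χ _ => ?_; ring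
  -- comparison with the primitive character
  set pr : 𝒟 d → 𝒳 := fun χ => ⟨χ.conductor, χ.primitiveCharacter⟩ with hpr
  have hcl : ∀ χ : 𝒟 d, ‖∑ n ∈ range (Nx x), (wt x n:ℂ) * χ n - th x (pr χ)‖ ≤ d * (J:ℝ) ^ 2 := by
    intro χ
    rw [th_eq hx0, ← sum_sub_distrib]
    refine (norm_sum_le _ _).trans (le_trans (sum_le_sum fun n _ => ?_) (err_bound hx hJ hd0))
    rw [← mul_sub, norm_mul, norm_real, norm_of_nonneg (wt_nonneg hx0 n)]
    have hcd := χ.conductor_dvd_level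
    have h4 := changeLevel_primitiveCharacter χ
    split_ifs with h
    · have h5 : χ (n : ZMod d) = χ.primitiveCharacter (n : ZMod χ.conductor) := by
        have := DirichletCharacter.primitiveCharacter_apply_of_isCoprime χ (a := (n:ℤ)) (Nat.isCoprime_iff_coprime.mpr h)
        simpa using this.symm
      rw [h5, sub_self, norm_zero, mul_zero]
    · have h5 : χ (n : ZMod d) = 0 := χ.map_nonunit (by rwa [ZMod.isUnit_iff_coprime])
      rw [h5, zero_sub, norm_neg]
      exact mul_le_of_le_one_right (wt_nonneg hx0 n) (norm_le_one _ _)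
  have hinj : Function.Injective pr := by
    refine Function.LeftInverse.injective (g := fun s => if h : s.1 ∣ d then changeLevel h s.2 else 1) fun χ => ?_
    have hcd := χ.conductor_dvd_level
    simp only [hpr, dif_pos hcd]
    exact changeLevel_primitiveCharacter χ
  have hX : th x (pr 1) = Xt x := by
    rw [th_eq hx0, Xt]
    push_cast
    refine sum_congr rfl fun n _ => ?_
    have h1 : (1 : 𝒟 d).conductor = 1 := conductor_one
    have : Subsingleton (ZMod (1 : 𝒟 d).conductor) := by rw [h1]; infer_instance
    change (wt x n:ℂ) * (1 : 𝒟 d).primitiveCharacter n = _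
    rw [DirichletCharacter.primitiveCharacter_one, MulChar.one_apply (isUnit_of_subsingleton _), mul_one]
  have hc1 : c 1 = #T := by
    simp only [hc]
    rw [sum_congr rfl fun a ha => MulChar.one_apply (by
      obtain ⟨u, hu⟩ := (mem_filter.mp ha).2.1
      rw [← hu, ZMod.inv_coe_unit]
      exact (u⁻¹).isUnit)]
    simp
  have hfam : ∑ χ ∈ univ.erase (1 : 𝒟 d), ‖th x (pr χ)‖ ≤ ∑ s ∈ (fam d q1).filter (fun s => s.1 ∣ d), ‖th x s‖ := by
    rw [← sum_image (f := fun s => ‖th x s‖) (g := pr) (fun a _ b _ h => hinj h)]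
    refine sum_le_sum_of_subset_of_nonneg ?_ fun _ _ _ => norm_nonneg _
    intro s hs
    obtain ⟨χ, hχ, rfl⟩ := mem_image.mp hs
    have hχ1 : χ ≠ 1 := (mem_erase.mp hχ).1
    have hcd := χ.conductor_dvd_level
    have h2 : χ.conductor ≠ 0 := fun h => hd0 (DirichletCharacter.conductor_eq_zero_iff_level_eq_zero.mp h)
    have h3 : χ.conductor ≠ 1 := fun h => hχ1 (DirichletCharacter.eq_one_iff_conductor_eq_one.mpr h)
    rw [mem_filter, mem_fam]
    refine ⟨⟨⟨⟨?_, le_of_dvd (pos_of_ne_zero hd0) hcd⟩, hd.squarefree_of_dvd hcd, fun h => hq (h.trans hcd)⟩,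
      DirichletCharacter.primitiveCharacter_isPrimitive χ⟩, hcd⟩
    simp only [hpr]; omega
  have hφs : (Fintype.card (𝒟 d):ℝ) = d.totient := by
    rw [← card_eq_fintype_card, DirichletCharacter.card_eq_totient_of_hasEnoughRootsOfUnity ℂ d]
  have hmain : ‖(((∑ n ∈ range (Nx x), (if Ev H d n then wt x n else 0):ℝ)):ℂ) * (d.totient:ℝ) - #T * Xt x‖ ≤
      #T * (d.totient * (d * (J:ℝ) ^ 2)) + #T * ∑ s ∈ (fam d q1).filter (fun s => s.1 ∣ d), ‖th x s‖ := by
    have e1 : (((∑ n ∈ range (Nx x), (if Ev H d n then wt x n else 0):ℝ)):ℂ) * (d.totient:ℝ) - #T * Xt x =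
        ∑ χ : 𝒟 d, c χ * (∑ n ∈ range (Nx x), (wt x n:ℂ) * χ n - th x (pr χ)) +
        ∑ χ ∈ univ.erase (1 : 𝒟 d), c χ * th x (pr χ) := by
      have e2 := add_sum_erase univ (fun χ => c χ * th x (pr χ)) (mem_univ (1 : 𝒟 d))
      rw [hc1, hX] at e2
      simp_rw [mul_sub]
      rw [hA, sum_sub_distrib, ← e2]; ring
    rw [e1]
    refine (norm_add_le _ _).trans (add_le_add ?_ ?_)
    · refine (norm_sum_le _ _).trans ?_
      calc _ ≤ ∑ χ : 𝒟 d, #T * (d * (J:ℝ) ^ 2) := by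
            refine sum_le_sum fun χ _ => ?_
            rw [norm_mul]
            exact mul_le_mul (hcn χ) (hcl χ) (norm_nonneg _) (by positivity)
        _ = _ := by rw [sum_const, card_univ, nsmul_eq_mul, hφs]; ring
    · refine (norm_sum_le _ _).trans ?_
      calc _ ≤ ∑ χ ∈ univ.erase (1 : 𝒟 d), #T * ‖th x (pr χ)‖ := by
            refine sum_le_sum fun χ _ => ?_
            rw [norm_mul]
            exact mul_le_mul_of_nonneg_right (hcn χ) (norm_nonneg _)
        _ ≤ _ := by rw [← mul_sum]; gcongr
  rw [hTc]
  have e3 : (((∑ n ∈ range (Nx x), (if Ev H d n then wt x n else 0):ℝ)):ℂ) * (d.totient:ℝ) - #T * Xt x =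
      ((((∑ n ∈ range (Nx x), (if Ev H d n then wt x n else 0)) - #T / d.totient * Xt x) * d.totient:ℝ):ℂ) := by
    have hφ2 : (d.totient:ℂ) ≠ 0 := mod_cast hφ.ne'
    rw [ofReal_mul, ofReal_sub, sub_mul]
    congr 1
    push_cast
    field_simp
  rw [e3, norm_real, norm_eq_abs, abs_mul, abs_of_pos hφ, ← le_div_iff₀ hφ] at hmain
  refine hmain.trans (le_of_eq ?_)
  field_simp
  ring



/-- The unit roots of `H` modulo `d`. -/
def RootP (H : ℤ[X]) (d : ℕ) (a : ZMod d) : Prop := IsUnit a ∧ Polynomial.aeval a H = 0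

lemma rho_eq (H : ℤ[X]) (d : ℕ) : rho H d = Nat.card {a : ZMod d // RootP H d a} := rfl

lemma rho_mul (H : ℤ[X]) {m n : ℕ} (h : m.Coprime n) :
    rho H (m * n) = rho H m * rho H n := by
  have key : ∀ a : ZMod (m * n), RootP H (m * n) a ↔
      RootP H m (ZMod.chineseRemainder h a).1 ∧ RootP H n (ZMod.chineseRemainder h a).2 := by
    intro a
    set e := ZMod.chineseRemainder h
    have h1 : IsUnit a ↔ IsUnit (e a) := (MulEquiv.isUnit_map e).symm
    have h2 : Polynomial.aeval a H = 0 ↔ Polynomial.aeval (e a) H = 0 := by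
      have : Polynomial.aeval (e a) H = e (Polynomial.aeval a H) :=
        Polynomial.aeval_algHom_apply (e : ZMod (m * n) →+* ZMod m × ZMod n).toIntAlgHom a H
      rw [this]; exact (map_eq_zero_iff e e.injective).symm
    rw [RootP, RootP, RootP, h1, h2, Prod.isUnit_iff, Polynomial.aeval_prod_apply, Prod.mk_eq_zero]
    tauto
  rw [rho_eq, rho_eq, rho_eq, ← Nat.card_prod]
  refine Nat.card_congr ?_
  refine (Equiv.subtypeEquiv (q := fun c : ZMod m × ZMod n => RootP H m c.1 ∧ RootP H n c.2)
    (ZMod.chineseRemainder h).toEquiv key).trans ?_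
  exact Equiv.subtypeProdEquivProd

lemma rho_one (H : ℤ[X]) : rho H 1 = 1 := by
  rw [rho_eq]
  have : ∀ a : ZMod 1, RootP H 1 a := fun a => ⟨isUnit_of_subsingleton _, Subsingleton.elim _ _⟩
  rw [Nat.card_eq_one_iff_unique]
  exact ⟨⟨fun a b => Subtype.ext (Subsingleton.elim _ _)⟩, ⟨⟨0, this 0⟩⟩⟩

lemma coprime_prod_of_notMem {p : ℕ} {S : Finset ℕ} (hp : p.Prime) (hS : ∀ q ∈ S, q.Prime) (h : p ∉ S) :
    p.Coprime (∏ q ∈ S, q) :=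
  Nat.Coprime.prod_right fun q hq => (Nat.coprime_primes hp (hS q hq)).mpr fun e => h (e ▸ hq)

lemma squarefree_prod {S : Finset ℕ} (hS : ∀ q ∈ S, q.Prime) : Squarefree (∏ q ∈ S, q) := by
  induction S using Finset.induction_on with
  | empty => simp
  | insert p S hp ih =>
    rw [prod_insert hp]
    have hS' : ∀ q ∈ S, q.Prime := fun q hq => hS q (mem_insert_of_mem hq)
    have hpp := hS p (mem_insert_self _ _)
    exact (Nat.squarefree_mul (coprime_prod_of_notMem hpp hS' hp)).mpr ⟨hpp.prime.squarefree, ih hS'⟩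

lemma rho_prod (H : ℤ[X]) {S : Finset ℕ} (hS : ∀ q ∈ S, q.Prime) :
    (rho H (∏ q ∈ S, q):ℝ) / (∏ q ∈ S, q : ℕ).totient = ∏ q ∈ S, ((rho H q:ℝ) / q.totient) := by
  induction S using Finset.induction_on with
  | empty => simp [rho_one]
  | insert p S hp ih =>
    have hS' : ∀ q ∈ S, q.Prime := fun q hq => hS q (mem_insert_of_mem hq)
    have hpp := hS p (mem_insert_self _ _)
    have hc := coprime_prod_of_notMem hpp hS' hp
    rw [prod_insert hp, prod_insert hp, rho_mul H hc, Nat.totient_mul hc, ← ih hS']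
    push_cast
    rw [mul_div_mul_comm]

/-- The sieve density `ρ(p)/(p-1)`. -/
noncomputable def gd (H : ℤ[X]) (p : ℕ) : ℝ := (rho H p:ℝ) / p.totient

lemma gd_nonneg (H : ℤ[X]) (p : ℕ) : 0 ≤ gd H p := by unfold gd; positivity

lemma rho_le (H : ℤ[X]) {d : ℕ} (hd : d ≠ 0) : rho H d ≤ d := by
  have : NeZero d := ⟨hd⟩
  rw [rho_eq]
  calc _ ≤ Nat.card (ZMod d) := Nat.card_le_card_of_injective _ Subtype.val_injective
    _ = d := by simp

open Classical in
/-- The sum of the remainders over squarefree moduli, in terms of the primitive character sums. -/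
lemma rem_sum (H : ℤ[X]) {x : ℝ} (hx : 1 ≤ x) {J q1 Q : ℕ} (hJ : 2 * x ≤ 2 ^ J) (hq : q1.Prime)
    (P : Finset ℕ) (hP : ∀ p ∈ P, p.Prime) (hqP : q1 ∉ P) (D : Finset (Finset ℕ))
    (hD : ∀ S ∈ D, S ⊆ P ∧ ∏ p ∈ S, p ≤ Q) {CH : ℝ}
    (hCH : ∀ S ⊆ P, ∏ p ∈ S, gd H p ≤ CH * ((∏ p ∈ S, p : ℕ):ℝ) ^ (-(1 / 2:ℝ))) :
    ∑ S ∈ D, |∑ n ∈ range (Nx x), (if Ev H (∏ p ∈ S, p) n then wt x n else 0) - (∏ p ∈ S, gd H p) * Xt x| ≤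
      CH * (∏ p ∈ P, (1 + gd H p)) * ∑ s ∈ fam Q q1, (s.1:ℝ) ^ (-(1 / 2:ℝ)) * ‖th x s‖ +
        #D * ((Q:ℝ) ^ 2 * (J:ℝ) ^ 2) := by
  have h1 : ∀ S ∈ D, |∑ n ∈ range (Nx x), (if Ev H (∏ p ∈ S, p) n then wt x n else 0) - (∏ p ∈ S, gd H p) * Xt x| ≤
      (∑ s ∈ fam Q q1, if s.1.primeFactors ⊆ S ∧ s.1 = ∏ p ∈ s.1.primeFactors, p then (∏ p ∈ S, gd H p) * ‖th x s‖ else 0) + (Q:ℝ) ^ 2 * (J:ℝ) ^ 2 := by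
    intro S hS
    obtain ⟨hSP, hSQ⟩ := hD S hS
    have hpr : ∀ p ∈ S, p.Prime := fun p hp => hP p (hSP hp)
    have hsf := squarefree_prod hpr
    have hnd : ¬ q1 ∣ ∏ p ∈ S, p := by
      have := coprime_prod_of_notMem hq hpr fun h => hqP (hSP h)
      rwa [Nat.Prime.coprime_iff_not_dvd hq] at this
    have hr := rem_bound H hx hJ hsf hnd
    have e1 := rho_prod H hpr
    rw [show (∏ p ∈ S, gd H p) = ∏ q ∈ S, ((rho H q:ℝ) / q.totient) from rfl, ← e1]
    refine hr.trans (add_le_add ?_ ?_)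
    · rw [mul_sum, ← sum_filter]
      refine sum_le_sum_of_subset_of_nonneg ?_ fun _ _ _ => by positivity
      intro s hs
      rw [mem_filter, mem_fam] at hs ⊢
      obtain ⟨⟨⟨⟨a, b⟩, c, e⟩, f⟩, g⟩ := hs
      refine ⟨⟨⟨⟨a, b.trans hSQ⟩, c, e⟩, f⟩, ?_, (Nat.prod_primeFactors_of_squarefree c).symm⟩
      intro p hp
      have hp' := Nat.prime_of_mem_primeFactors hp
      obtain ⟨r, hr, hpr'⟩ := (Prime.dvd_finset_prod_iff hp'.prime _).mp ((Nat.dvd_of_mem_primeFactors hp).trans g)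
      rwa [(Nat.prime_dvd_prime_iff_eq hp' (hpr r hr)).mp hpr']
    · have h2 : ((rho H (∏ p ∈ S, p) : ℕ):ℝ) ≤ Q := by
        exact_mod_cast (rho_le H hsf.ne_zero).trans hSQ
      have h3 : ((∏ p ∈ S, p : ℕ):ℝ) ≤ Q := mod_cast hSQ
      rw [sq (Q:ℝ), mul_assoc]
      gcongr
  refine (sum_le_sum h1).trans ?_
  rw [sum_add_distrib, sum_const, nsmul_eq_mul]
  gcongr
  rw [sum_comm, mul_sum]
  refine sum_le_sum fun s hs => ?_
  set F := s.1.primeFactors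
  by_cases hF : s.1 = ∏ p ∈ F, p ∧ F ⊆ P
  · have h4 : ∑ S ∈ D, (if F ⊆ S ∧ s.1 = ∏ p ∈ F, p then (∏ p ∈ S, gd H p) * ‖th x s‖ else 0) ≤
        ((∏ p ∈ F, gd H p) * ∏ p ∈ P, (1 + gd H p)) * ‖th x s‖ := by
      rw [← sum_filter, ← sum_mul]
      gcongr
      rw [prod_one_add, mul_sum]
      calc _ = ∑ S ∈ D.filter (fun S => F ⊆ S ∧ s.1 = ∏ p ∈ F, p), (∏ p ∈ F, gd H p) * ∏ p ∈ S \ F, gd H p := by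
            refine sum_congr rfl fun S hS => ?_
            rw [mul_comm, prod_sdiff (mem_filter.mp hS).2.1]
        _ = ∑ T ∈ (D.filter (fun S => F ⊆ S ∧ s.1 = ∏ p ∈ F, p)).image (fun S => S \ F), (∏ p ∈ F, gd H p) * ∏ p ∈ T, gd H p := by
            rw [sum_image]
            intro a ha b hb hab
            have ha' := (mem_filter.mp ha).2.1
            have hb' := (mem_filter.mp hb).2.1
            simp only at hab
            rw [← sdiff_union_of_subset ha', hab, sdiff_union_of_subset hb']
        _ ≤ _ := by
            refine sum_le_sum_of_subset_of_nonneg ?_ fun _ _ _ =>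
              mul_nonneg (prod_nonneg fun _ _ => gd_nonneg _ _) (prod_nonneg fun _ _ => gd_nonneg _ _)
            intro T hT
            obtain ⟨S, hS, rfl⟩ := mem_image.mp hT
            exact mem_powerset.mpr (sdiff_subset.trans (hD S (mem_filter.mp hS).1).1)
    refine h4.trans ?_
    have h5 := hCH F hF.2
    rw [← hF.1] at h5
    have h6 : 0 ≤ ∏ p ∈ P, (1 + gd H p) := prod_nonneg fun p _ => by have := gd_nonneg H p; linarith
    calc _ ≤ ((CH * (s.1:ℝ) ^ (-(1 / 2:ℝ))) * ∏ p ∈ P, (1 + gd H p)) * ‖th x s‖ := by gcongr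
      _ = _ := by ring
  · rw [sum_eq_zero]
    · have h6 : 0 ≤ ∏ p ∈ P, (1 + gd H p) := prod_nonneg fun p _ => by have := gd_nonneg H p; linarith
      have h7 : 0 ≤ CH := by simpa using hCH ∅ (empty_subset _) |>.trans' (by simp)
      positivity
    · intro S hS
      rw [if_neg]
      rintro ⟨a, b⟩
      exact hF ⟨b, a.trans (hD S hS).1⟩

/-- `ρ(f)/φ(f) ≪ f^{-1/2}` for squarefree `f`. -/
lemma gd_prod_le (H : ℤ[X]) {K : ℕ} (hK : 1 ≤ K) (P : Finset ℕ) (hP : ∀ p ∈ P, p.Prime)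
    (h1 : ∀ p ∈ P, rho H p < p - 1) (h2 : ∀ p ∈ P, rho H p ≤ K) :
    ∀ S ⊆ P, ∏ p ∈ S, gd H p ≤ ((2 * K:ℝ) ^ (4 * K ^ 2)) * ((∏ p ∈ S, p : ℕ):ℝ) ^ (-(1 / 2:ℝ)) := by
  intro S hS
  have hpos : ∀ p ∈ S, (0:ℝ) < p := fun p hp => mod_cast (hP p (hS hp)).pos
  push_cast
  rw [← Real.finsetProd_rpow _ _ fun p hp => (hpos p hp).le]
  have hK1 : (1:ℝ) ≤ 2 * K := by
    have : (1:ℝ) ≤ K := mod_cast hK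
    linarith
  have h3 : ∀ p ∈ S, gd H p ≤ (if p < 4 * K ^ 2 then (2 * K:ℝ) else 1) * (p:ℝ) ^ (-(1 / 2:ℝ)) := by
    intro p hp
    have hpp := hP p (hS hp)
    have hp2 : (2:ℝ) ≤ p := mod_cast hpp.two_le
    have ht : ((p.totient : ℕ):ℝ) = p - 1 := by
      rw [Nat.totient_prime hpp, Nat.cast_sub hpp.one_le]; simp
    have hs : 0 < sqrt p := sqrt_pos.mpr (by linarith)
    have hss : sqrt p * sqrt p = p := Real.mul_self_sqrt (by linarith)
    rw [gd, ht, rpow_neg (by linarith), ← sqrt_eq_rpow, ← div_eq_mul_inv, div_le_div_iff₀ (by linarith) hs]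
    have e1 : (rho H p:ℝ) ≤ p - 1 := by
      have := h1 p (hS hp)
      have h' : rho H p + 1 ≤ p := by omega
      have : ((rho H p + 1 : ℕ):ℝ) ≤ p := mod_cast h'
      push_cast at this; linarith
    have e2 : (rho H p:ℝ) ≤ K := mod_cast h2 p (hS hp)
    split_ifs with hlt
    · have : sqrt p ≤ 2 * K := by
        rw [Real.sqrt_le_left (by linarith)]
        have : (p:ℝ) < 4 * K ^ 2 := mod_cast hlt
        nlinarith
      rw [mul_comm]
      exact mul_le_mul this e1 (by positivity) (by linarith)
    · have : 2 * K ≤ sqrt p := by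
        apply Real.le_sqrt_of_sq_le
        have : (4 * K ^ 2:ℝ) ≤ p := mod_cast not_lt.mp hlt
        nlinarith
      have : (rho H p:ℝ) * sqrt p ≤ K * sqrt p := by gcongr
      nlinarith
  refine (prod_le_prod (fun p _ => gd_nonneg H p) h3).trans ?_
  rw [prod_mul_distrib]
  refine mul_le_mul_of_nonneg_right ?_ (prod_nonneg fun p hp => by positivity)
  rw [prod_ite, prod_const, prod_const_one, mul_one]
  refine pow_le_pow_right₀ hK1 ?_
  calc _ ≤ (range (4 * K ^ 2)).card := card_le_card fun p hp => mem_range.mpr (mem_filter.mp hp).2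
    _ = _ := card_range _



/-! ### The Brun-Hooley sieve -/

/-- Truncated inclusion-exclusion sum over subsets of `B` with at most `r` elements. -/
noncomputable def Tr (B : Finset ℕ) (r : ℕ) (v : ℕ → ℝ) : ℝ :=
  ∑ S ∈ B.powerset.filter (fun S => #S ≤ r), (-1) ^ #S * ∏ p ∈ S, v p

/-- Elementary symmetric sum of degree `r`. -/
noncomputable def El (B : Finset ℕ) (r : ℕ) (v : ℕ → ℝ) : ℝ :=
  ∑ S ∈ B.powersetCard r, ∏ p ∈ S, v p

lemma Tr_zero (B : Finset ℕ) (v : ℕ → ℝ) : Tr B 0 v = 1 := by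
  have : B.powerset.filter (fun S => #S ≤ 0) = {∅} := by
    ext S; simp only [mem_filter, mem_powerset, Nat.le_zero, card_eq_zero, mem_singleton]
    constructor
    · exact fun h => h.2
    · rintro rfl; simp
  rw [Tr, this]; simp

lemma Tr_insert {B : Finset ℕ} {p : ℕ} (hp : p ∉ B) (r : ℕ) (v : ℕ → ℝ) :
    Tr (insert p B) (r + 1) v = Tr B (r + 1) v - v p * Tr B r v := by
  rw [Tr, powerset_insert, filter_union, sum_union]
  · rw [Tr, Tr, sub_eq_add_neg]
    congr 1
    rw [filter_image, sum_image, mul_sum, ← sum_neg_distrib]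
    · have hh : ∀ S ∈ B.powerset, p ∉ S := fun S hS h => hp (mem_powerset.mp hS h)
      rw [filter_congr (q := fun S => #S ≤ r)]
      · refine sum_congr rfl fun S hS => ?_
        have := hh S (mem_filter.mp hS).1
        rw [card_insert_of_notMem this, prod_insert this]; ring
      · intro S hS
        rw [card_insert_of_notMem (hh S hS)]; omega
    · intro S hS S' hS' h
      have h1 : p ∉ S := fun h => hp (mem_powerset.mp (mem_filter.mp hS).1 h)
      have h2 : p ∉ S' := fun h => hp (mem_powerset.mp (mem_filter.mp hS').1 h)
      rw [← erase_insert h1, h, erase_insert h2]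
  · rw [disjoint_left]
    intro S hS hS'
    obtain ⟨S'', h1, rfl⟩ := mem_image.mp (mem_filter.mp hS').1
    exact hp (mem_powerset.mp (mem_filter.mp hS).1 (mem_insert_self _ _))

lemma Tr_empty (r : ℕ) (v : ℕ → ℝ) : Tr ∅ r v = 1 := by
  rw [Tr]; simp [filter_singleton]

/-- The Bonferroni inequalities for a function with values in `[0,1]`. -/
lemma bonferroni {v : ℕ → ℝ} (h0 : ∀ p, 0 ≤ v p) (h1 : ∀ p, v p ≤ 1) (B : Finset ℕ) (r : ℕ) :
    0 ≤ (-1) ^ r * (Tr B r v - ∏ p ∈ B, (1 - v p)) := by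
  induction B using Finset.induction_on generalizing r with
  | empty => simp [Tr_empty]
  | insert p B hp ih =>
    rcases r with _ | r
    · rw [Tr_zero, pow_zero, one_mul, sub_nonneg]
      exact prod_le_one (fun q _ => by linarith [h1 q]) fun q _ => by linarith [h0 q]
    · rw [Tr_insert hp, prod_insert hp]
      have e1 := ih (r + 1)
      have e2 := mul_nonneg (h0 p) (ih r)
      calc 0 ≤ _ := add_nonneg e1 e2
        _ = _ := by ring

lemma Tr_succ (B : Finset ℕ) (r : ℕ) (v : ℕ → ℝ) :
    Tr B (r + 1) v = Tr B r v + (-1) ^ (r + 1) * El B (r + 1) v := by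
  rw [Tr, Tr, El, mul_sum]
  have : B.powerset.filter (fun S => #S ≤ r + 1) =
      B.powerset.filter (fun S => #S ≤ r) ∪ B.powersetCard (r + 1) := by
    ext S; simp only [mem_filter, mem_union, mem_powerset, mem_powersetCard]
    constructor
    · rintro ⟨a, b⟩
      rcases Nat.lt_or_ge r #S with h | h
      · exact Or.inr ⟨a, by omega⟩
      · exact Or.inl ⟨a, h⟩
    · rintro (⟨a, b⟩ | ⟨a, b⟩)
      · exact ⟨a, by omega⟩
      · exact ⟨a, by omega⟩
  rw [this, sum_union]
  · congr 1
    refine sum_congr rfl fun S hS => ?_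
    rw [(mem_powersetCard.mp hS).2]
  · rw [disjoint_left]
    intro S hS hS'
    have := (mem_filter.mp hS).2
    have := (mem_powersetCard.mp hS').2
    omega

lemma Tr_bounds {v : ℕ → ℝ} (h0 : ∀ p, 0 ≤ v p) (h1 : ∀ p, v p ≤ 1) (B : Finset ℕ) (b : ℕ) :
    ∏ p ∈ B, (1 - v p) ≤ Tr B (2 * b) v ∧ Tr B (2 * b) v ≤ ∏ p ∈ B, (1 - v p) + El B (2 * b + 1) v := by
  have e1 := bonferroni h0 h1 B (2 * b)
  have e2 := bonferroni h0 h1 B (2 * b + 1)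
  rw [Tr_succ] at e2
  simp only [pow_succ, pow_mul] at e1 e2
  norm_num at e1 e2
  constructor <;> linarith

lemma El_nonneg {v : ℕ → ℝ} (h0 : ∀ p, 0 ≤ v p) (B : Finset ℕ) (r : ℕ) : 0 ≤ El B r v :=
  sum_nonneg fun _ _ => prod_nonneg fun _ _ => h0 _

/-- Indicator of an event. -/
noncomputable def ind (E : Prop) : ℝ := open Classical in if E then 1 else 0

lemma ind_nonneg (E : Prop) : 0 ≤ ind E := by unfold ind; split_ifs <;> norm_num
lemma ind_le_one (E : Prop) : ind E ≤ 1 := by unfold ind; split_ifs <;> norm_num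

lemma prod_ind {α : Type*} {S : Finset α} (E : α → Prop) : ∏ p ∈ S, ind (E p) = ind (∀ p ∈ S, E p) := by
  classical
  by_cases h : ∀ p ∈ S, E p
  · have : ∀ p ∈ S, ind (E p) = 1 := fun p hp => by simp [ind, h p hp]
    rw [prod_congr rfl this]; simp [ind, if_pos h]
  · have h' := h
    push Not at h
    obtain ⟨p, hp, hpe⟩ := h
    rw [prod_eq_zero hp (by simp [ind, hpe])]
    unfold ind; rw [if_neg h']

lemma prod_one_sub_ind {S : Finset ℕ} (E : ℕ → Prop) : ∏ p ∈ S, (1 - ind (E p)) = ind (∀ p ∈ S, ¬ E p) := by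
  rw [← prod_ind]
  refine prod_congr rfl fun p _ => ?_
  unfold ind; by_cases h : E p <;> simp [h]

section Sieve
variable {ι κ : Type*} [Fintype κ] [DecidableEq κ] (N : Finset ι) (a : ι → ℝ) (E : ℕ → ι → Prop)
  (u : ℕ → ℝ) (X:ℝ) (B : κ → Finset ℕ)

/-- The remainder attached to a set of primes. -/
noncomputable def Rm (S : Finset ℕ) : ℝ :=
  |∑ n ∈ N, a n * ind (∀ p ∈ S, E p n) - X * ∏ p ∈ S, u p|

lemma sieve_lin (hB : Pairwise fun i j => Disjoint (B i) (B j)) (A : κ → Finset (Finset ℕ))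
    (hA : ∀ j, ∀ S ∈ A j, S ⊆ B j) (s : κ → Finset ℕ → ℝ) (hs : ∀ j S, |s j S| ≤ 1)
    (D : Finset (Finset ℕ)) (hD : ∀ φ : κ → Finset ℕ, (∀ j, φ j ∈ A j) → univ.biUnion φ ∈ D) :
    |∑ n ∈ N, a n * ∏ j, ∑ S ∈ A j, s j S * ∏ p ∈ S, ind (E p n) -
      X * ∏ j, ∑ S ∈ A j, s j S * ∏ p ∈ S, u p| ≤ ∑ S ∈ D, Rm N a E u X S := by
  have hdisj : ∀ φ ∈ piFinset A, Set.PairwiseDisjoint (↑(univ : Finset κ)) φ := by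
    intro φ hφ i _ j _ hij
    have hφ' := mem_piFinset.mp hφ
    exact Disjoint.mono (hA i _ (hφ' i)) (hA j _ (hφ' j)) (hB hij)
  have key : ∀ v : ℕ → ℝ, ∏ j, ∑ S ∈ A j, s j S * ∏ p ∈ S, v p =
      ∑ φ ∈ piFinset A, (∏ j, s j (φ j)) * ∏ p ∈ univ.biUnion φ, v p := by
    intro v
    rw [prod_univ_sum]
    refine sum_congr rfl fun φ hφ => ?_
    rw [prod_mul_distrib, prod_biUnion (hdisj φ hφ)]
  simp_rw [key]
  have e1 : ∑ n ∈ N, a n * ∑ φ ∈ piFinset A, (∏ j, s j (φ j)) * ∏ p ∈ univ.biUnion φ, ind (E p n) -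
      X * ∑ φ ∈ piFinset A, (∏ j, s j (φ j)) * ∏ p ∈ univ.biUnion φ, u p =
      ∑ φ ∈ piFinset A, (∏ j, s j (φ j)) *
        (∑ n ∈ N, a n * ind (∀ p ∈ univ.biUnion φ, E p n) - X * ∏ p ∈ univ.biUnion φ, u p) := by
    simp_rw [mul_sum]
    rw [sum_comm, ← sum_sub_distrib]
    refine sum_congr rfl fun φ _ => ?_
    rw [mul_sub, mul_sum]
    congr 1
    · refine sum_congr rfl fun n _ => ?_
      rw [prod_ind]; ring
    · ring
  rw [e1]
  refine (abs_sum_le_sum_abs _ _).trans ?_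
  have hinj : Set.InjOn (fun φ : κ → Finset ℕ => univ.biUnion φ) (piFinset A : Set (κ → Finset ℕ)) := by
    have hr : ∀ φ ∈ piFinset A, ∀ j, φ j = (univ.biUnion φ) ∩ B j := by
      intro φ hφ j
      have hφ' := mem_piFinset.mp hφ
      ext p
      rw [mem_inter, mem_biUnion]
      constructor
      · intro hp; exact ⟨⟨j, mem_univ _, hp⟩, hA j _ (hφ' j) hp⟩
      · rintro ⟨⟨i, _, hi⟩, hj⟩
        by_cases hij : i = j
        · rwa [← hij]
        · exact absurd hj (disjoint_left.mp (hB hij) (hA i _ (hφ' i) hi))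
    intro φ hφ ψ hψ h
    funext j
    rw [hr φ hφ j, hr ψ hψ j]
    simp only at h
    rw [h]
  calc _ ≤ ∑ φ ∈ piFinset A, Rm N a E u X (univ.biUnion φ) := by
        refine sum_le_sum fun φ _ => ?_
        rw [abs_mul, Rm, abs_prod]
        exact mul_le_of_le_one_left (abs_nonneg _) (prod_le_one (fun _ _ => abs_nonneg _) fun j _ => hs j _)
    _ = ∑ S ∈ (piFinset A).image (fun φ => univ.biUnion φ), Rm N a E u X S := by
        rw [sum_image hinj]
    _ ≤ _ := by
        refine sum_le_sum_of_subset_of_nonneg ?_ fun _ _ _ => abs_nonneg _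
        intro S hS
        obtain ⟨φ, hφ, rfl⟩ := mem_image.mp hS
        exact hD φ (mem_piFinset.mp hφ)

variable {N a E u X B}
variable (hB : Pairwise fun i j => Disjoint (B i) (B j)) (b : κ → ℕ) (ha : ∀ n ∈ N, 0 ≤ a n) (hX : 0 ≤ X)
  (hu0 : ∀ p, 0 ≤ u p) (hu1 : ∀ p, u p ≤ 1) (τ : κ → ℝ)
  (hτ : ∀ j, El (B j) (2 * b j + 1) u ≤ τ j * ∏ p ∈ B j, (1 - u p)) (hτ0 : ∀ j, 0 ≤ τ j) (hτ1 : ∑ j, τ j ≤ 1 / 4)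
  (D : Finset (Finset ℕ))
  (hD : ∀ φ : κ → Finset ℕ, (∀ j, φ j ⊆ B j ∧ (φ j).card ≤ 2 * b j + 1) → univ.biUnion φ ∈ D)

omit [DecidableEq κ] in
include hτ0 hτ1 in
lemma prod_tau_le : ∏ j, (1 + τ j) ≤ 2 := by
  calc _ ≤ ∏ j, exp (τ j) := prod_le_prod (fun j _ => by linarith [hτ0 j]) fun j _ => by
        have := add_one_le_exp (τ j); linarith
    _ = exp (∑ j, τ j) := (exp_sum _ _).symm
    _ ≤ exp (1 / 4) := exp_le_exp.mpr hτ1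
    _ ≤ 2 := by
        have h1 := add_one_le_exp (-(1 / 4:ℝ))
        have h2 : exp (1 / 4) * exp (-(1 / 4)) = 1 := by rw [← exp_add]; simp
        have h3 := exp_pos (1 / 4)
        nlinarith

include hB ha hX hu0 hu1 hτ hτ0 hτ1 hD in
/-- Brun-Hooley upper bound sieve. -/
theorem sieve_upper :
    ∑ n ∈ N, a n * ind (∀ j, ∀ p ∈ B j, ¬ E p n) ≤
      2 * X * ∏ j, ∏ p ∈ B j, (1 - u p) + ∑ S ∈ D, Rm N a E u X S := by
  have h1 := sieve_lin N a E u X B hB (fun j => (B j).powerset.filter (fun S => #S ≤ 2 * b j))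
    (fun j S hS => mem_powerset.mp (mem_filter.mp hS).1) (fun _ S => (-1) ^ #S)
    (fun _ S => by simp) D (fun φ hφ => hD φ fun j =>
      ⟨mem_powerset.mp (mem_filter.mp (hφ j)).1, (mem_filter.mp (hφ j)).2.trans (Nat.le_succ _)⟩)
  have h2 : ∑ n ∈ N, a n * ind (∀ j, ∀ p ∈ B j, ¬ E p n) ≤
      ∑ n ∈ N, a n * ∏ j, Tr (B j) (2 * b j) (fun p => ind (E p n)) := by
    refine sum_le_sum fun n hn => mul_le_mul_of_nonneg_left ?_ (ha n hn)
    have : ind (∀ j, ∀ p ∈ B j, ¬ E p n) = ∏ j, ∏ p ∈ B j, (1 - ind (E p n)) := by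
      simp_rw [prod_one_sub_ind, prod_ind]; simp
    rw [this]
    exact prod_le_prod (fun j _ => prod_nonneg fun p _ => by linarith [ind_le_one (E p n)])
      fun j _ => (Tr_bounds (fun p => ind_nonneg _) (fun p => ind_le_one _) _ _).1
  have h3 : ∏ j, Tr (B j) (2 * b j) u ≤ 2 * ∏ j, ∏ p ∈ B j, (1 - u p) := by
    have hn : ∀ j, 0 ≤ ∏ p ∈ B j, (1 - u p) := fun j => prod_nonneg fun p _ => by linarith [hu1 p]
    calc _ ≤ ∏ j, ((1 + τ j) * ∏ p ∈ B j, (1 - u p)) := by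
          refine prod_le_prod (fun j _ => (hn j).trans (Tr_bounds hu0 hu1 _ _).1) fun j _ => ?_
          have := (Tr_bounds hu0 hu1 (B j) (b j)).2
          have := hτ j
          linarith
      _ ≤ _ := by
          rw [prod_mul_distrib]
          exact mul_le_mul_of_nonneg_right (prod_tau_le τ hτ0 hτ1) (prod_nonneg fun j _ => hn j)
  have h4 := (abs_le.mp h1).2
  simp only [Tr] at h2 h3
  have h5 := mul_le_mul_of_nonneg_left h3 hX
  linarith

omit [Fintype κ] in
lemma prod_diff_le (s : Finset κ) (t w U : κ → ℝ) (h0 : ∀ j, 0 ≤ w j) (h1 : ∀ j, w j ≤ t j) (h2 : ∀ j, t j ≤ w j + U j) :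
    ∏ j ∈ s, t j - ∑ j ∈ s, ∏ i ∈ s, (if i = j then U i else t i) ≤ ∏ j ∈ s, w j := by
  induction s using Finset.induction_on with
  | empty => simp
  | insert c s hc ih =>
    have e1 : ∏ i ∈ s, (if i = c then U i else t i) = ∏ i ∈ s, t i :=
      prod_congr rfl fun i hi => if_neg fun h : i = c => hc (h ▸ hi)
    have e2 : ∑ j ∈ s, ∏ i ∈ insert c s, (if i = j then U i else t i) =
        t c * ∑ j ∈ s, ∏ i ∈ s, (if i = j then U i else t i) := by
      rw [mul_sum]
      refine sum_congr rfl fun j hj => ?_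
      rw [prod_insert hc, if_neg fun h : c = j => hc (h ▸ hj)]
    rw [prod_insert hc, prod_insert hc, sum_insert hc, prod_insert hc, if_pos rfl, e1, e2]
    have hU : ∀ j, 0 ≤ U j := fun j => by linarith [h1 j, h2 j]
    have ht : ∀ j, 0 ≤ t j := fun j => (h0 j).trans (h1 j)
    have e3 : 0 ≤ ∑ j ∈ s, ∏ i ∈ s, (if i = j then U i else t i) :=
      sum_nonneg fun j _ => prod_nonneg fun i _ => by split_ifs; exacts [hU i, ht i]
    have e4 : 0 ≤ ∏ i ∈ s, t i := prod_nonneg fun i _ => ht i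
    have e5 := mul_le_mul_of_nonneg_left ih (h0 c)
    have e6 := mul_le_mul_of_nonneg_right (h2 c) e4
    have e7 := mul_le_mul_of_nonneg_right (h1 c) e3
    linarith

include hB ha hX hu0 hu1 hτ hτ0 hτ1 hD in
/-- Brun-Hooley lower bound sieve. -/
theorem sieve_lower :
    1 / 2 * X * ∏ j, ∏ p ∈ B j, (1 - u p) - (Fintype.card κ + 1) * ∑ S ∈ D, Rm N a E u X S ≤
    ∑ n ∈ N, a n * ind (∀ j, ∀ p ∈ B j, ¬ E p n) := by
  set A := fun j => (B j).powerset.filter (fun S => #S ≤ 2 * b j) with hA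
  set A' := fun j => (B j).powersetCard (2 * b j + 1) with hA'
  have hn : ∀ j, 0 ≤ ∏ p ∈ B j, (1 - u p) := fun j => prod_nonneg fun p _ => by linarith [hu1 p]
  set R := ∑ S ∈ D, Rm N a E u X S
  have h1 : |∑ n ∈ N, a n * ∏ j, Tr (B j) (2 * b j) (fun p => ind (E p n)) - X * ∏ j, Tr (B j) (2 * b j) u| ≤ R :=
    sieve_lin N a E u X B hB A
    (fun j S hS => mem_powerset.mp (mem_filter.mp hS).1) (fun _ S => (-1) ^ #S)
    (fun _ S => by simp) D (fun φ hφ => hD φ fun j =>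
      ⟨mem_powerset.mp (mem_filter.mp (hφ j)).1, (mem_filter.mp (hφ j)).2.trans (Nat.le_succ _)⟩)
  set G := fun (v : ℕ → ℝ) (j i : κ) => if i = j then El (B i) (2 * b i + 1) v else Tr (B i) (2 * b i) v with hG
  have h1' : ∀ j, |∑ n ∈ N, a n * ∏ i, G (fun p => ind (E p n)) j i - X * ∏ i, G u j i| ≤ R := by
    intro j
    have := sieve_lin N a E u X B hB (fun i => if i = j then A' i else A i)
      (fun i S hS => by
        split_ifs at hS
        · exact (mem_powersetCard.mp hS).1
        · exact mem_powerset.mp (mem_filter.mp hS).1)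
      (fun i S => if i = j then 1 else (-1) ^ #S)
      (fun _ S => by split_ifs <;> simp) D (fun φ hφ => hD φ fun i => by
        have := hφ i
        split_ifs at this
        · exact ⟨(mem_powersetCard.mp this).1, (mem_powersetCard.mp this).2.le⟩
        · exact ⟨mem_powerset.mp (mem_filter.mp this).1, (mem_filter.mp this).2.trans (Nat.le_succ _)⟩)
    convert this using 3
    · refine sum_congr rfl fun n _ => ?_
      congr 1
      refine prod_congr rfl fun i _ => ?_
      simp only [hG]
      split_ifs
      · simp only [El, one_mul, hA']
      · rfl
    · congr 1
      refine prod_congr rfl fun i _ => ?_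
      simp only [hG]
      split_ifs
      · simp only [El, one_mul, hA']
      · rfl
  have h2 : ∑ n ∈ N, a n * ∏ j, Tr (B j) (2 * b j) (fun p => ind (E p n)) -
      ∑ j, ∑ n ∈ N, a n * ∏ i, G (fun p => ind (E p n)) j i ≤ ∑ n ∈ N, a n * ind (∀ j, ∀ p ∈ B j, ¬ E p n) := by
    rw [sum_comm, ← sum_sub_distrib]
    refine sum_le_sum fun n hn => ?_
    rw [← mul_sum, ← mul_sub]
    refine mul_le_mul_of_nonneg_left ?_ (ha n hn)
    have : ind (∀ j, ∀ p ∈ B j, ¬ E p n) = ∏ j, ∏ p ∈ B j, (1 - ind (E p n)) := by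
      simp_rw [prod_one_sub_ind, prod_ind]; simp
    rw [this]
    exact prod_diff_le univ _ _ _ (fun j => prod_nonneg fun p _ => by linarith [ind_le_one (E p n)])
      (fun j => (Tr_bounds (fun p => ind_nonneg _) (fun p => ind_le_one _) _ _).1)
      (fun j => (Tr_bounds (fun p => ind_nonneg _) (fun p => ind_le_one _) _ _).2)
  set V := ∏ j, ∏ p ∈ B j, (1 - u p) with hV
  have hV0 : 0 ≤ V := prod_nonneg fun j _ => hn j
  have h3 : V ≤ ∏ j, Tr (B j) (2 * b j) u :=
    prod_le_prod (fun j _ => hn j) fun j _ => (Tr_bounds hu0 hu1 _ _).1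
  have h4 : ∀ j, ∏ i, G u j i ≤ τ j * (2 * V) := by
    intro j
    calc _ ≤ ∏ i, ((if i = j then τ j else 1) * ((1 + τ i) * ∏ p ∈ B i, (1 - u p))) := by
          refine prod_le_prod (fun i _ => ?_) fun i _ => ?_
          · simp only [hG]; split_ifs
            · exact El_nonneg hu0 _ _
            · exact (hn i).trans (Tr_bounds hu0 hu1 _ _).1
          · simp only [hG]; split_ifs with h
            · subst h
              refine (hτ i).trans ?_
              refine mul_le_mul_of_nonneg_left ?_ (hτ0 i)
              have := mul_nonneg (hτ0 i) (hn i)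
              linarith
            · have := (Tr_bounds hu0 hu1 (B i) (b i)).2
              have := hτ i
              linarith
      _ = τ j * ((∏ i, (1 + τ i)) * V) := by
          rw [prod_mul_distrib, prod_mul_distrib, prod_ite_eq' univ j, if_pos (mem_univ _)]
      _ ≤ _ := by
          have := prod_tau_le τ hτ0 hτ1
          exact mul_le_mul_of_nonneg_left (mul_le_mul_of_nonneg_right this hV0) (hτ0 j)
  have h5 : ∑ j, ∑ n ∈ N, a n * ∏ i, G (fun p => ind (E p n)) j i ≤ ∑ j, (X * (τ j * (2 * V)) + R) := by
    refine sum_le_sum fun j _ => ?_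
    have := (abs_le.mp (h1' j)).2
    have := mul_le_mul_of_nonneg_left (h4 j) hX
    linarith
  have h6 : ∑ j, (X * (τ j * (2 * V)) + R) ≤ X * V / 2 + Fintype.card κ * R := by
    rw [sum_add_distrib, ← mul_sum, ← sum_mul, sum_const, nsmul_eq_mul, card_univ]
    have := mul_le_mul_of_nonneg_right hτ1 (mul_nonneg hX hV0)
    nlinarith
  have h7 := (abs_le.mp h1).1
  have h8 := mul_le_mul_of_nonneg_left h3 hX
  linarith

end Sieve



/-! ### Roots modulo `p` and prime ideals of norm `p` -/

open Polynomial NumberField in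
/-- By Kummer-Dedekind, a root modulo `p ∤ D` gives a linear factor of the minimal polynomial of a multiple of
`α` modulo `p`, hence a prime of norm `p`. -/
theorem nf_primes_aux (h : ℤ[X]) (hirr : Irreducible h) (hdeg : h.natDegree ≠ 0)
    (K : Type) [Field K] [NumberField K] (α : K) (hα0 : aeval α h = 0)
    (htop : Algebra.adjoin ℚ {α} = (⊤ : Subalgebra ℚ K))
    (hmin : ∀ q : ℚ[X], aeval α q = 0 → h.map (Int.castRingHom ℚ) ∣ q) :
    ∃ (D : ℕ), D ≠ 0 ∧ ∀ p : ℕ, p.Prime → ¬ p ∣ D →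
      ∃ φ : {a : ZMod p // aeval a h = 0} → Ideal (𝓞 K), Function.Injective φ ∧
        ∀ a, (φ a).IsPrime ∧ absNorm (φ a) = p := by
  classical
  have hprim := hirr.isPrimitive hdeg
  have halg : IsAlgebraic ℤ α := by
    refine ⟨h, hirr.ne_zero, ?_⟩
    exact hα0
  obtain ⟨l, hl, hInt⟩ := halg.exists_integral_multiple
  set θ : 𝓞 K := ⟨l • α, hInt⟩ with hθ
  have hθK : (θ : K) = l • α := rfl
  have hlQ : (l : ℚ) ≠ 0 := mod_cast hl
  have hadj : Algebra.adjoin ℚ {(l • α : K)} = ⊤ := by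
    rw [eq_top_iff, ← htop]
    refine Algebra.adjoin_le ?_
    rw [Set.singleton_subset_iff]
    generalize hβ : (l • α : K) = β
    have h1 : α = (l : ℚ)⁻¹ • β := by
      rw [← hβ, ← Int.cast_smul_eq_zsmul ℚ, smul_smul, inv_mul_cancel₀ hlQ, one_smul]
    rw [h1]
    have h3 : β ∈ Algebra.adjoin ℚ {β} := Algebra.self_mem_adjoin_singleton ℚ β
    exact (Algebra.adjoin ℚ {β}).smul_mem h3 _
  have hintQ : IsIntegral ℚ (l • α : K) := hInt.tower_top
  let B := PowerBasis.ofAdjoinEqTop hintQ hadj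
  have hBgen : B.gen = (l • α : K) := PowerBasis.ofAdjoinEqTop_gen _ _
  have hBint : IsIntegral ℤ B.gen := by rw [hBgen]; exact hInt
  have hdisc0 := Algebra.discr_not_zero_of_basis ℚ B.basis
  have hdiscint : IsIntegral ℤ (Algebra.discr ℚ B.basis) := by
    refine Algebra.discr_isIntegral ℚ fun i => ?_
    rw [B.basis_eq_pow]; exact hBint.pow _
  obtain ⟨d, hd⟩ := IsIntegrallyClosed.isIntegral_iff.mp hdiscint
  have hd' : (d : ℚ) = Algebra.discr ℚ B.basis := hd
  have hd0 : d ≠ 0 := by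
    rintro rfl
    exact hdisc0 (by rw [← hd']; simp)
  have hcond : ∀ z : 𝓞 K, (d : 𝓞 K) * z ∈ Algebra.adjoin ℤ {θ} := by
    intro z
    have h1 := Algebra.discr_mul_isIntegral_mem_adjoin ℚ hBint z.isIntegral_coe
    rw [hBgen, ← hd', Int.cast_smul_eq_zsmul] at h1
    have h2 : (Algebra.adjoin ℤ {θ}).map (IsScalarTower.toAlgHom ℤ (𝓞 K) K) = Algebra.adjoin ℤ {(l • α : K)} := by
      rw [AlgHom.map_adjoin, Set.image_singleton]; rfl
    rw [← h2] at h1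
    obtain ⟨w, hw, hw2⟩ := Subalgebra.mem_map.mp h1
    have : w = (d : 𝓞 K) * z := by
      apply RingOfIntegers.coe_injective
      rw [map_mul, map_intCast, ← zsmul_eq_mul]
      exact hw2
    rw [← this]
    exact hw
  refine ⟨(d * l).natAbs, by simp [hd0, hl], ?_⟩
  intro p hp hpD
  have : Fact p.Prime := ⟨hp⟩
  have hpd : ¬ (p:ℤ) ∣ d := fun h => hpD (Int.natCast_dvd.mp (Dvd.dvd.mul_right h l))
  have hpl : ¬ (p:ℤ) ∣ l := fun h => hpD (Int.natCast_dvd.mp (Dvd.dvd.mul_left h d))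
  have hexp : ¬ p ∣ RingOfIntegers.exponent θ := by
    rw [RingOfIntegers.not_dvd_exponent_iff, codisjoint_iff, Ideal.eq_top_iff_one]
    have hcop : IsCoprime (p:ℤ) d := (Nat.prime_iff_prime_int.mp hp).coprime_iff_not_dvd.mpr hpd
    obtain ⟨u, v, huv⟩ := hcop
    rw [← huv, add_comm]
    refine Submodule.add_mem_sup ?_ ?_
    · refine Ideal.mul_mem_left _ _ ?_
      rw [Ideal.mem_comap, mem_conductor_iff]
      exact hcond
    · exact Ideal.mul_mem_left _ _ (Ideal.mem_span_singleton_self _)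
  -- the minimal polynomial of `θ`, evaluated at `l X`, is divisible by `h`
  have hdvd : h ∣ (minpoly ℤ θ).comp (C l * X) := by
    rw [IsPrimitive.Int.dvd_iff_map_cast_dvd_map_cast _ _ hprim]
    refine hmin _ ?_
    have h1 : aeval α (((minpoly ℤ θ).comp (C l * X)).map (Int.castRingHom ℚ)) =
        aeval α ((minpoly ℤ θ).comp (C l * X)) := aeval_map_algebraMap ℚ α _
    refine h1.trans ?_
    rw [aeval_comp]
    have h2 : aeval α (C l * X : ℤ[X]) = algebraMap (𝓞 K) K θ := by
      simp [hθK]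
    rw [h2, aeval_algebraMap_apply, minpoly.aeval, map_zero]
  have hroot : ∀ a : ZMod p, aeval a h = 0 → aeval ((l : ZMod p) * a) (minpoly ℤ θ) = 0 := by
    intro a ha
    obtain ⟨q, hq⟩ := hdvd
    have h1 := congrArg (aeval a) hq
    rw [map_mul, ha, zero_mul, aeval_comp] at h1
    simpa using h1
  have hmem : ∀ c : ZMod p, aeval c (minpoly ℤ θ) = 0 →
      (X - C c) ∈ RingOfIntegers.monicFactorsMod θ p := by
    intro c hc
    have hmonic : ((minpoly ℤ θ).map (Int.castRingHom (ZMod p))).Monic :=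
      (minpoly.monic θ.isIntegral).map _
    rw [RingOfIntegers.monicFactorsMod, Multiset.mem_toFinset,
      Polynomial.mem_normalizedFactors_iff hmonic.ne_zero]
    refine ⟨irreducible_X_sub_C c, monic_X_sub_C c, ?_⟩
    rw [dvd_iff_isRoot, IsRoot.def, eval_map]
    exact hc
  let e := NumberField.Ideal.primesOverSpanEquivMonicFactorsMod hexp
  let ψ : {a : ZMod p // aeval a h = 0} → {Q // Q ∈ RingOfIntegers.monicFactorsMod θ p} :=
    fun a => ⟨X - C ((l : ZMod p) * a), hmem _ (hroot _ a.2)⟩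
  refine ⟨fun a => (e.symm (ψ a)).1, ?_, ?_⟩
  · intro a b hab
    have h1 : ψ a = ψ b := e.symm.injective (Subtype.ext hab)
    have h2 : (X - C ((l : ZMod p) * a) : (ZMod p)[X]) = X - C ((l : ZMod p) * b) :=
      congrArg Subtype.val h1
    have h3 := C_injective (sub_right_injective h2)
    have hl0 : (l : ZMod p) ≠ 0 := by
      rwa [Ne, ZMod.intCast_zmod_eq_zero_iff_dvd]
    exact Subtype.ext (mul_left_cancel₀ hl0 h3)
  · intro a
    have hP1 := (e.symm (ψ a)).2.1
    have hP2 := (e.symm (ψ a)).2.2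
    refine ⟨hP1, ?_⟩
    have h1 := NumberField.Ideal.inertiaDeg_primesOverSpanEquivMonicFactorsMod_symm_apply' hexp (hmem _ (hroot _ a.2))
    have hP3 : (e.symm (ψ a)).1.LiesOver (span {(p:ℤ)}) := hP2
    have hne : span {(p:ℤ)} ≠ ⊥ := by
      simp [hp.ne_zero]
    have hmax : (span {(p:ℤ)}).IsMaximal :=
      Int.ideal_span_isMaximal_of_prime p
    have hmax2 : (e.symm (ψ a)).1.IsMaximal := Ideal.IsMaximal.of_liesOver_isMaximal _ (span {(p:ℤ)})
    rw [Ideal.absNorm_eq_pow_inertiaDeg' _ hp, Ideal.inertiaDeg'_algebraMap,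
      ← Ideal.inertiaDeg_eq_of_isMaximal (span {(p:ℤ)})]
    have h2 : (e.symm (ψ a)).1.inertiaDeg ℤ = 1 := h1.trans (natDegree_X_sub_C _)
    rw [h2, pow_one]

open Polynomial NumberField in
/-- Roots of `h` modulo `p` give distinct prime ideals of norm `p` in `ℚ[X]/(h)`. -/
theorem nf_primes (h : ℤ[X]) (hirr : Irreducible h) (hdeg : h.natDegree ≠ 0) :
    ∃ (K : Type) (_ : Field K) (_ : NumberField K) (D : ℕ), D ≠ 0 ∧ ∀ p : ℕ, p.Prime → ¬ p ∣ D →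
      ∃ φ : {a : ZMod p // aeval a h = 0} → Ideal (𝓞 K), Function.Injective φ ∧
        ∀ a, (φ a).IsPrime ∧ absNorm (φ a) = p := by
  have hQ : Irreducible (h.map (Int.castRingHom ℚ)) :=
    (IsPrimitive.Int.irreducible_iff_irreducible_map_cast (hirr.isPrimitive hdeg)).mp hirr
  have : Fact (Irreducible (h.map (Int.castRingHom ℚ))) := ⟨hQ⟩
  refine ⟨AdjoinRoot (h.map (Int.castRingHom ℚ)), inferInstance, inferInstance, ?_⟩
  refine nf_primes_aux h hirr hdeg _ (AdjoinRoot.root _) ?_ AdjoinRoot.adjoinRoot_eq_top ?_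
  · refine (aeval_map_algebraMap ℚ _ h).symm.trans ?_
    exact (AdjoinRoot.aeval_eq _).trans AdjoinRoot.mk_self
  · intro q hq
    refine AdjoinRoot.mk_eq_zero.mp ?_
    rw [← hq, ← AdjoinRoot.aeval_eq]
    congr!



/-! ### Zeta functions of number fields -/

section dedekind
open NumberField Filter Topology

variable (K : Type) [Field K] [NumberField K]

/-- The sum `∑ N(I)^(-s)` over the nonzero ideals (the zero ideal contributes `0 ^ (-s) = 0`). -/
noncomputable def zi (s:ℝ) : ℝ := ∑' I : Ideal (𝓞 K), (absNorm I:ℝ) ^ (-s)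

theorem zi_summable_of (s:ℝ) (hs : 1 < s) (h : dedekindZeta K s ≠ 0) :
    Summable (fun I : Ideal (𝓞 K) => (absNorm I:ℝ) ^ (-s)) ∧
      ((zi K s:ℝ):ℂ) = dedekindZeta K s := by
  set f : ℕ → ℂ := fun n => (Nat.card {I : Ideal (𝓞 K) // absNorm I = n}:ℂ) with hf
  have h1 : LSeriesSummable f s := by
    by_contra hc
    exact h (tsum_eq_zero_of_not_summable hc)
  set t : ℕ → ℝ := fun n => (Nat.card {I : Ideal (𝓞 K) // absNorm I = n}:ℝ) * (n:ℝ) ^ (-s) with ht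
  have hterm : ∀ n, LSeries.term f s n = ((t n:ℝ):ℂ) := by
    intro n
    rcases eq_or_ne n 0 with rfl | hn
    · simp [ht, LSeries.term, zero_rpow (show -s ≠ 0 by linarith)]
    · rw [LSeries.term_of_ne_zero hn, ht]
      push_cast
      rw [ofReal_cpow (cast_nonneg n), div_eq_mul_inv, ← cpow_neg]
      push_cast
      rfl
  have hts : Summable t := by
    have h2 : Summable (fun n => ((t n:ℝ):ℂ)) := h1.congr fun n => by rw [hterm]
    exact_mod_cast h2
  let e := Equiv.sigmaFiberEquiv (fun I : Ideal (𝓞 K) => absNorm I)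
  have hw : ∀ x : (Σ n : ℕ, {I : Ideal (𝓞 K) // absNorm I = n}),
      (absNorm (e x):ℝ) ^ (-s) = (x.1:ℝ) ^ (-s) := by
    rintro ⟨n, I, hI⟩
    simp only [e, Equiv.sigmaFiberEquiv_apply]
    rw [hI]
  have hfin : ∀ n : ℕ, Finite {I : Ideal (𝓞 K) // absNorm I = n} := fun n =>
    (Ideal.finite_setOfPred_absNorm_eq n)
  have hinner : ∀ n : ℕ, ∑' _ : {I : Ideal (𝓞 K) // absNorm I = n}, (n:ℝ) ^ (-s) = t n := by
    intro n
    rw [tsum_const, nsmul_eq_mul]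
  have hsig : Summable (fun x : (Σ n : ℕ, {I : Ideal (𝓞 K) // absNorm I = n}) => (x.1:ℝ) ^ (-s)) := by
    rw [summable_sigma_of_nonneg (fun x => by positivity)]
    refine ⟨fun n => ?_, ?_⟩
    · exact Summable.of_finite
    · simp only [hinner]; exact hts
  have hsum : Summable (fun I : Ideal (𝓞 K) => (absNorm I:ℝ) ^ (-s)) := by
    rw [← e.summable_iff]
    exact hsig.congr fun x => (hw x).symm
  refine ⟨hsum, ?_⟩
  have h3 : zi K s = ∑' n, t n := by
    rw [zi, ← e.tsum_eq, tsum_congr hw, hsig.tsum_sigma]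
    exact tsum_congr hinner
  rw [h3, Complex.ofReal_tsum]
  exact tsum_congr fun n => (hterm n).symm

theorem zi_tendsto : ∃ s1 : ℝ, 1 < s1 ∧ (∀ s, 1 < s → s < s1 →
      Summable (fun I : Ideal (𝓞 K) => (absNorm I:ℝ) ^ (-s))) ∧
    ∃ κ : ℝ, 0 < κ ∧ Tendsto (fun s : ℝ => (s - 1) * zi K s) (𝓝[>] 1) (𝓝 κ) := by
  have h1 := tendsto_sub_one_mul_dedekindZeta_nhdsGT K
  have h2 : ∀ᶠ s : ℝ in 𝓝[>] 1, dedekindZeta K s ≠ 0 := by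
    have h3 : ((dedekindZeta_residue K:ℝ):ℂ) ≠ 0 := by
      exact_mod_cast dedekindZeta_residue_ne_zero K
    filter_upwards [h1.eventually_ne h3] with s hs hz
    exact hs (by rw [hz, mul_zero])
  rw [eventually_nhdsWithin_iff] at h2
  obtain ⟨s1, hs1, hs2⟩ := mem_nhdsGT_iff_exists_Ioo_subset.mp (eventually_nhdsWithin_iff.mpr h2)
  refine ⟨s1, hs1, fun s h3 h4 => (zi_summable_of K s h3 (hs2 ⟨h3, h4⟩)).1,
    dedekindZeta_residue K, dedekindZeta_residue_pos K, ?_⟩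
  have h5 : Tendsto (fun s : ℝ => (((s - 1) * zi K s:ℝ):ℂ)) (𝓝[>] 1) (𝓝 ((dedekindZeta_residue K:ℝ):ℂ)) := by
    refine h1.congr' ?_
    filter_upwards [Ioo_mem_nhdsGT hs1] with s hs
    rw [← (zi_summable_of K s hs.1 (hs2 hs)).2]
    push_cast
    rfl
  exact_mod_cast (Complex.continuous_re.tendsto _).comp h5

open Classical in
/-- The part of `zi` supported on ideals divisible by no member of `S`. -/
noncomputable def zf (S : Finset (Ideal (𝓞 K))) (s:ℝ) : ℝ :=
  ∑' I : Ideal (𝓞 K), if ∀ P ∈ S, ¬ P ∣ I then (absNorm I:ℝ) ^ (-s) else 0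

variable {K}

theorem rpow_norm_anti (I : Ideal (𝓞 K)) {s s' : ℝ} (hs : 0 < s) (h : s ≤ s') :
    (absNorm I:ℝ) ^ (-s') ≤ (absNorm I:ℝ) ^ (-s) := by
  rcases eq_zero_or_pos (absNorm I) with h0 | h0
  · rw [h0, Nat.cast_zero, zero_rpow (by linarith), zero_rpow (by linarith)]
  · exact rpow_le_rpow_of_exponent_le (mod_cast h0) (by linarith)

theorem zf_insert (S : Finset (Ideal (𝓞 K))) (P : Ideal (𝓞 K)) (s:ℝ)
    (hs : Summable (fun I : Ideal (𝓞 K) => (absNorm I:ℝ) ^ (-s)))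
    (hS : ∀ Q ∈ S, Q.IsPrime ∧ Q ≠ ⊥) (hP : P.IsPrime) (hP0 : P ≠ ⊥) (hPS : P ∉ S) :
    zf K (insert P S) s = (1 - (absNorm P:ℝ) ^ (-s)) * zf K S s := by
  classical
  have hsum : ∀ (T : Ideal (𝓞 K) → Prop) [DecidablePred T],
      Summable (fun I : Ideal (𝓞 K) => if T I then (absNorm I:ℝ) ^ (-s) else 0) := by
    intro T _
    refine Summable.of_nonneg_of_le (fun I => ?_) (fun I => ?_) hs
    · split_ifs <;> positivity
    · split_ifs
      · exact le_rfl
      · positivity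
  have hinj : Function.Injective (fun J : Ideal (𝓞 K) => P * J) :=
    fun J J' h => mul_left_cancel₀ hP0 h
  have h1 : zf K S s = zf K (insert P S) s +
      ∑' I : Ideal (𝓞 K), if (∀ Q ∈ S, ¬ Q ∣ I) ∧ P ∣ I then (absNorm I:ℝ) ^ (-s) else 0 := by
    rw [zf, zf, ← (hsum _).tsum_add (hsum _)]
    refine tsum_congr fun I => ?_
    by_cases h2 : ∀ Q ∈ S, ¬ Q ∣ I <;> by_cases h3 : P ∣ I <;> simp [h2, h3]
  have h2 : (∑' I : Ideal (𝓞 K), if (∀ Q ∈ S, ¬ Q ∣ I) ∧ P ∣ I then (absNorm I:ℝ) ^ (-s) else 0)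
      = (absNorm P:ℝ) ^ (-s) * zf K S s := by
    rw [zf, ← tsum_mul_left, ← hinj.tsum_eq (f := fun I : Ideal (𝓞 K) =>
      if (∀ Q ∈ S, ¬ Q ∣ I) ∧ P ∣ I then (absNorm I:ℝ) ^ (-s) else 0)]
    · refine tsum_congr fun J => ?_
      have h3 : (∀ Q ∈ S, ¬ Q ∣ P * J) ↔ ∀ Q ∈ S, ¬ Q ∣ J := by
        refine forall₂_congr fun Q hQ => not_congr ?_
        have hQp := Ideal.prime_of_isPrime (hS Q hQ).2 (hS Q hQ).1
        constructor
        · intro h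
          rcases hQp.dvd_or_dvd h with h4 | h4
          · exfalso
            have hm : P.IsMaximal := hP.isMaximal hP0
            have := hm.eq_of_le (hS Q hQ).1.ne_top (Ideal.dvd_iff_le.mp h4)
            exact hPS (this ▸ hQ)
          · exact h4
        · exact fun h => Dvd.dvd.mul_left h P
      simp only [h3, dvd_mul_right, and_true]
      split_ifs
      · rw [map_mul, Nat.cast_mul, Real.mul_rpow (cast_nonneg _) (cast_nonneg _)]
      · rw [mul_zero]
    · intro I hI
      by_contra hc
      apply hI
      simp only
      rw [if_neg]
      rintro ⟨-, J, rfl⟩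
      exact hc ⟨J, rfl⟩
  rw [h2] at h1
  linarith

theorem zf_eq (S : Finset (Ideal (𝓞 K))) (s:ℝ)
    (hs : Summable (fun I : Ideal (𝓞 K) => (absNorm I:ℝ) ^ (-s)))
    (hS : ∀ Q ∈ S, Q.IsPrime ∧ Q ≠ ⊥) :
    zf K S s = (∏ P ∈ S, (1 - (absNorm P:ℝ) ^ (-s))) * zi K s := by
  classical
  induction S using Finset.induction_on with
  | empty => simp [zf, zi]
  | insert P S hPS ih =>
    rw [zf_insert S P s hs (fun Q hQ => hS Q (mem_insert_of_mem hQ)) (hS P (mem_insert_self P S)).1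
      (hS P (mem_insert_self P S)).2 hPS, ih (fun Q hQ => hS Q (mem_insert_of_mem hQ)),
      prod_insert hPS, mul_assoc]

theorem zf_anti (S : Finset (Ideal (𝓞 K))) {s s' : ℝ} (h0 : 0 < s) (h : s ≤ s')
    (hs : Summable (fun I : Ideal (𝓞 K) => (absNorm I:ℝ) ^ (-s))) :
    zf K S s' ≤ zf K S s := by
  classical
  have hsum : ∀ t, s ≤ t → Summable (fun I : Ideal (𝓞 K) =>
      if ∀ P ∈ S, ¬ P ∣ I then (absNorm I:ℝ) ^ (-t) else 0) := by
    intro t ht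
    refine Summable.of_nonneg_of_le (fun I => ?_) (fun I => ?_) hs
    · split_ifs <;> positivity
    · split_ifs
      · exact rpow_norm_anti I h0 ht
      · positivity
  refine (hsum s' h).tsum_le_tsum (fun I => ?_) (hsum s le_rfl)
  split_ifs
  · exact rpow_norm_anti I h0 h
  · exact le_rfl

theorem one_le_zf (S : Finset (Ideal (𝓞 K))) {s : ℝ}
    (hs : Summable (fun I : Ideal (𝓞 K) => (absNorm I:ℝ) ^ (-s)))
    (hS : ∀ Q ∈ S, Q.IsPrime ∧ Q ≠ ⊥) : 1 ≤ zf K S s := by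
  classical
  have hsum : Summable (fun I : Ideal (𝓞 K) =>
      if ∀ P ∈ S, ¬ P ∣ I then (absNorm I:ℝ) ^ (-s) else 0) := by
    refine Summable.of_nonneg_of_le (fun I => ?_) (fun I => ?_) hs
    · split_ifs <;> positivity
    · split_ifs
      · exact le_rfl
      · positivity
  have h1 := hsum.le_tsum (⊤ : Ideal (𝓞 K)) (fun I _ => by split_ifs <;> positivity)
  rw [if_pos] at h1
  · simp only [Ideal.absNorm_top, Nat.cast_one, Real.one_rpow] at h1
    rw [zf]
    convert h1
  · intro P hP hd
    exact (hS P hP).1.ne_top (top_le_iff.mp (Ideal.dvd_iff_le.mp hd))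

theorem norm_rpow_lt_one (P : Ideal (𝓞 K)) (hP : P.IsPrime) {s : ℝ} (hs : 0 < s) :
    (absNorm P:ℝ) ^ (-s) < 1 := by
  rcases eq_zero_or_pos (absNorm P) with h0 | h0
  · rw [h0, Nat.cast_zero, zero_rpow (by linarith)]; norm_num
  · have h1 : absNorm P ≠ 1 := fun h => hP.ne_top (Ideal.absNorm_eq_one_iff.mp h)
    have h2 : 1 < absNorm P := by omega
    exact Real.rpow_lt_one_of_one_lt_of_neg (mod_cast h2) (by linarith)

theorem zi_bounds (S : Finset (Ideal (𝓞 K))) {s s' : ℝ} (h0 : 0 < s) (h : s ≤ s')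
    (hs : Summable (fun I : Ideal (𝓞 K) => (absNorm I:ℝ) ^ (-s)))
    (hs' : Summable (fun I : Ideal (𝓞 K) => (absNorm I:ℝ) ^ (-s')))
    (hS : ∀ Q ∈ S, Q.IsPrime ∧ Q ≠ ⊥) :
    0 < zi K s ∧ exp (∑ P ∈ S, (absNorm P:ℝ) ^ (-s)) ≤ zi K s ∧
    exp (∑ P ∈ S, ((absNorm P:ℝ) ^ (-s) - (absNorm P:ℝ) ^ (-s'))) * zi K s' ≤ zi K s := by
  have hpos : 0 < zi K s := by
    have h1 := one_le_zf (K := K) ∅ hs (by simp)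
    rw [zf_eq ∅ s hs (by simp)] at h1
    simp at h1
    linarith
  have hpr : ∀ t : ℝ, 0 < t → 0 < ∏ P ∈ S, (1 - (absNorm P:ℝ) ^ (-t)) := fun t ht =>
    prod_pos fun P hP => sub_pos.mpr (norm_rpow_lt_one P (hS P hP).1 ht)
  refine ⟨hpos, ?_, ?_⟩
  · have h1 := one_le_zf S hs hS
    rw [zf_eq S s hs hS] at h1
    have h2 : ∏ P ∈ S, (1 - (absNorm P:ℝ) ^ (-s)) ≤ exp (-∑ P ∈ S, (absNorm P:ℝ) ^ (-s)) := by
      rw [← sum_neg_distrib, exp_sum]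
      refine prod_le_prod (fun P hP => ?_) (fun P hP => ?_)
      · linarith [norm_rpow_lt_one P (hS P hP).1 h0]
      · linarith [add_one_le_exp (-(absNorm P:ℝ) ^ (-s))]
    have h3 : 1 ≤ exp (-∑ P ∈ S, (absNorm P:ℝ) ^ (-s)) * zi K s :=
      h1.trans (mul_le_mul_of_nonneg_right h2 hpos.le)
    rw [exp_neg, inv_mul_eq_div, one_le_div (exp_pos _)] at h3
    exact h3
  · have h1 := zf_anti S h0 h hs
    rw [zf_eq S s hs hS, zf_eq S s' hs' hS] at h1
    have h2 : exp (∑ P ∈ S, ((absNorm P:ℝ) ^ (-s) - (absNorm P:ℝ) ^ (-s'))) *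
        ∏ P ∈ S, (1 - (absNorm P:ℝ) ^ (-s)) ≤ ∏ P ∈ S, (1 - (absNorm P:ℝ) ^ (-s')) := by
      rw [exp_sum, ← prod_mul_distrib]
      refine prod_le_prod (fun P hP => ?_) (fun P hP => ?_)
      · have := norm_rpow_lt_one P (hS P hP).1 h0
        exact mul_nonneg (exp_pos _).le (by linarith)
      · set a := (absNorm P:ℝ) ^ (-s)
        set b := (absNorm P:ℝ) ^ (-s')
        have ha : a < 1 := norm_rpow_lt_one P (hS P hP).1 h0
        have hab : b ≤ a := rpow_norm_anti P h0 h
        have hb0 : 0 ≤ b := by positivity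
        have h5 := add_one_le_exp (-(a - b))
        have h6 : 1 - a ≤ (1 - b) * exp (-(a - b)) := by
          have : (1 - b) * (-(a - b) + 1) ≤ (1 - b) * exp (-(a - b)) :=
            mul_le_mul_of_nonneg_left h5 (by linarith)
          nlinarith
        calc exp (a - b) * (1 - a) ≤ exp (a - b) * ((1 - b) * exp (-(a - b))) :=
              mul_le_mul_of_nonneg_left h6 (exp_pos _).le
          _ = 1 - b := by rw [exp_neg]; field_simp
    have hA := hpr s h0
    have hz' : 0 ≤ zi K s' := tsum_nonneg fun I => by positivity
    have h3 := mul_le_mul_of_nonneg_right h2 hz'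
    refine le_of_mul_le_mul_left ?_ hA
    calc _ = exp (∑ P ∈ S, ((absNorm P:ℝ) ^ (-s) - (absNorm P:ℝ) ^ (-s'))) *
        (∏ P ∈ S, (1 - (absNorm P:ℝ) ^ (-s))) * zi K s' := by ring
      _ ≤ _ := h3
      _ ≤ _ := h1

end dedekind

/-- The number of roots of `h` modulo `p`. -/
noncomputable def nu (h : ℤ[X]) (p : ℕ) : ℕ :=
  Nat.card {a : ZMod p // Polynomial.aeval a h = 0}

open Filter Topology in
/-- The properties of the zeta function of `ℚ[X]/(h)` used below: a simple pole at `1`, and an Euler product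
bounded below by the factors at the prime ideals of norm `p`. -/
theorem zeta_export (h : ℤ[X]) (hirr : Irreducible h) (hdeg : h.natDegree ≠ 0) :
    ∃ (Z : ℝ → ℝ) (κ:ℝ) (D : ℕ) (s1:ℝ), 0 < κ ∧ D ≠ 0 ∧ 1 < s1 ∧
      Tendsto (fun s : ℝ => (s - 1) * Z s) (𝓝[>] 1) (𝓝 κ) ∧
      ∀ T : Finset ℕ, (∀ p ∈ T, p.Prime ∧ ¬ p ∣ D) → ∀ s s' : ℝ, 1 < s → s ≤ s' → s' < s1 →
        0 < Z s ∧ exp (∑ p ∈ T, (nu h p:ℝ) * (p:ℝ) ^ (-s)) ≤ Z s ∧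
        exp (∑ p ∈ T, (nu h p:ℝ) * ((p:ℝ) ^ (-s) - (p:ℝ) ^ (-s'))) * Z s' ≤ Z s := by
  classical
  obtain ⟨K, _, _, D, hD, hφ⟩ := nf_primes h hirr hdeg
  obtain ⟨s1, hs1, hsum, κ, hκ, hlim⟩ := zi_tendsto K
  refine ⟨zi K, κ, D, s1, hκ, hD, hs1, hlim, ?_⟩
  intro T hT s s' h1 h2 h3
  choose φ hφi hφp using hφ
  have hfin : ∀ p ∈ T, Finite {a : ZMod p // Polynomial.aeval a h = 0} := by
    intro p hp
    have : NeZero p := ⟨(hT p hp).1.ne_zero⟩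
    infer_instance
  let F : {p // p ∈ T} → Finset (Ideal (NumberField.RingOfIntegers K)) := fun p =>
    have := hfin p p.2
    have := ofFinite {a : ZMod p // Polynomial.aeval a h = 0}
    univ.image (φ p (hT p p.2).1 (hT p p.2).2)
  have hF : ∀ p, ∀ P ∈ F p, P.IsPrime ∧ absNorm P = p := by
    intro p P hP
    obtain ⟨a, -, rfl⟩ := mem_image.mp hP
    exact hφp p (hT p p.2).1 (hT p p.2).2 a
  have hFcard : ∀ p, (F p).card = nu h p := by
    intro p
    have := hfin p p.2
    have := ofFinite {a : ZMod p // Polynomial.aeval a h = 0}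
    rw [nu, card_eq_fintype_card, ← card_univ]
    refine Eq.trans ?_ (card_image_of_injective univ (hφi p (hT p p.2).1 (hT p p.2).2))
    simp only [F]
    congr!
  have hdisj : ∀ p ∈ T.attach, ∀ q ∈ T.attach, p ≠ q → Disjoint (F p) (F q) := by
    intro p _ q _ hpq
    rw [disjoint_left]
    intro P hP hQ
    exact hpq (Subtype.ext ((hF p P hP).2.symm.trans (hF q P hQ).2))
  have hsumF : ∀ w : ℕ → ℝ, ∑ P ∈ T.attach.biUnion F, w (absNorm P) = ∑ p ∈ T, (nu h p:ℝ) * w p := by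
    intro w
    rw [sum_biUnion hdisj, ← sum_attach T]
    refine sum_congr rfl fun p _ => ?_
    rw [sum_congr rfl (fun P hP => by rw [(hF p P hP).2]), sum_const, hFcard, nsmul_eq_mul]
  have hS : ∀ P ∈ T.attach.biUnion F, P.IsPrime ∧ P ≠ ⊥ := by
    intro P hP
    obtain ⟨p, -, hp⟩ := mem_biUnion.mp hP
    refine ⟨(hF p P hp).1, ?_⟩
    rintro rfl
    have := (hF p _ hp).2
    rw [Ideal.absNorm_bot] at this
    exact (hT p p.2).1.ne_zero this.symm
  have hb := zi_bounds (T.attach.biUnion F) (by linarith) h2 (hsum s h1 (by linarith)) (hsum s' (by linarith) h3) hS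
  rw [hsumF (fun n => (n:ℝ) ^ (-s)), hsumF (fun n => (n:ℝ) ^ (-s) - (n:ℝ) ^ (-s'))] at hb
  exact hb



/-! ### Sums of `ν(p)/p` -/

/-- The primes in the half-open interval `(a, b]`. -/
noncomputable def PR (a b:ℝ) : Finset ℕ := by
  classical
  exact (range (⌊b⌋₊ + 1)).filter fun p => p.Prime ∧ a < (p:ℝ) ∧ (p:ℝ) ≤ b

theorem mem_PR {a b : ℝ} {p : ℕ} : p ∈ PR a b ↔ p.Prime ∧ a < (p:ℝ) ∧ (p:ℝ) ≤ b := by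
  classical
  rw [PR, mem_filter, mem_range, and_iff_right_iff_imp]
  exact fun h => Nat.lt_succ_of_le (le_floor h.2.2)

theorem PR_prime {a b : ℝ} {p : ℕ} (h : p ∈ PR a b) : p.Prime := (mem_PR.mp h).1

theorem PR_pos {a b : ℝ} {p : ℕ} (h : p ∈ PR a b) : (0:ℝ) < p := by
  exact_mod_cast (mem_PR.mp h).1.pos

theorem PR_sum_split {a b c : ℝ} (hab : a ≤ b) (hbc : b ≤ c) (f : ℕ → ℝ) :
    ∑ p ∈ PR a c, f p = ∑ p ∈ PR a b, f p + ∑ p ∈ PR b c, f p := by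
  classical
  rw [← sum_union]
  · congr 1
    ext p
    simp only [mem_union, mem_PR]
    constructor
    · rintro ⟨h1, h2, h3⟩
      rcases le_or_gt (p:ℝ) b with h | h
      · exact Or.inl ⟨h1, h2, h⟩
      · exact Or.inr ⟨h1, h, h3⟩
    · rintro (⟨h1, h2, h3⟩ | ⟨h1, h2, h3⟩)
      · exact ⟨h1, h2, h3.trans hbc⟩
      · exact ⟨h1, hab.trans_lt h2, h3⟩
  · rw [disjoint_left]
    intro p h1 h2
    exact absurd (mem_PR.mp h1).2.2 (not_le.mpr (mem_PR.mp h2).2.1)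

theorem PR_subset {a b c d : ℝ} (hca : c ≤ a) (hbd : b ≤ d) : PR a b ⊆ PR c d := by
  intro p hp
  rw [mem_PR] at hp ⊢
  exact ⟨hp.1, hca.trans_lt hp.2.1, hp.2.2.trans hbd⟩

theorem rpow_split {p : ℝ} (hp : 0 < p) (u:ℝ) :
    p ^ (-(1 + u):ℝ) = p⁻¹ * exp (-(u * log p)) := by
  rw [neg_add, rpow_add hp, rpow_neg_one, rpow_def_of_pos hp]
  congr 2
  ring

open Filter Topology in
/-- Compare the zeta function of `ℚ[X]/(h)` at two points at distance of order `1 / log y` from `1`. -/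
theorem C1 (h : ℤ[X]) (hirr : Irreducible h) (hdeg : h.natDegree ≠ 0) :
    ∃ y0 : ℝ, 2 ≤ y0 ∧ ∀ y, y0 ≤ y → ∑ p ∈ PR (sqrt y) y, (nu h p:ℝ) / p ≤ 5 := by
  obtain ⟨Z, κ, D, s1, hκ, hD, hs1, hlim, hT⟩ := zeta_export h hirr hdeg
  have hd : Tendsto (fun y : ℝ => 1 + 1 / log y) atTop (𝓝[>] 1) := by
    refine tendsto_nhdsWithin_iff.mpr ⟨?_, ?_⟩
    · simpa using (tendsto_log_atTop.inv_tendsto_atTop).const_add 1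
    · filter_upwards [eventually_gt_atTop 1] with y hy
      have := log_pos hy
      simp only [Set.mem_Ioi, lt_add_iff_pos_right]; positivity
  have hd2 : Tendsto (fun y : ℝ => 1 + 2 / log y) atTop (𝓝[>] 1) := by
    refine tendsto_nhdsWithin_iff.mpr ⟨?_, ?_⟩
    · simpa [div_eq_mul_inv] using ((tendsto_log_atTop.inv_tendsto_atTop).const_mul 2).const_add 1
    · filter_upwards [eventually_gt_atTop 1] with y hy
      have := log_pos hy
      simp only [Set.mem_Ioi, lt_add_iff_pos_right]; positivity
  have e1 := (hlim.comp hd).eventually_lt_const (show κ < 1.1 * κ by linarith)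
  have e2 := (hlim.comp hd2).eventually_const_lt (show 0.9 * κ < κ by linarith)
  have e3 : ∀ᶠ y : ℝ in atTop, 1 + 2 / log y < s1 :=
    (tendsto_nhdsWithin_iff.mp hd2).1.eventually_lt_const hs1
  obtain ⟨y0, hy0⟩ := eventually_atTop.mp (e1.and (e2.and e3))
  refine ⟨max (max y0 2) ((D:ℝ) ^ 2), le_max_of_le_left (le_max_right _ _), fun y hy => ?_⟩
  obtain ⟨h1, h2, h3⟩ := hy0 y ((le_max_left _ _).trans ((le_max_left _ _).trans hy))
  have hy2 : 2 ≤ y := (le_max_right _ _).trans ((le_max_left _ _).trans hy)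
  have hyD : (D:ℝ) ≤ sqrt y := Real.le_sqrt_of_sq_le ((le_max_right _ _).trans hy)
  have hL : 0 < log y := log_pos (by linarith)
  simp only [Function.comp_apply, add_sub_cancel_left] at h1 h2
  set L := log y with hLdef
  obtain ⟨hz, -, hb⟩ := hT (PR (sqrt y) y) (fun p hp => ⟨PR_prime hp, fun hdvd => by
    have h4 := le_of_dvd (pos_of_ne_zero hD) hdvd
    have h5 := (mem_PR.mp hp).2.1
    have h6 : (p:ℝ) ≤ D := mod_cast h4
    linarith⟩) (1 + 1 / L) (1 + 2 / L) (by simp only [lt_add_iff_pos_right]; positivity)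
    (by gcongr; norm_num) h3
  have key : ∀ p ∈ PR (sqrt y) y, 0.2 * ((nu h p:ℝ) / p) ≤
      (nu h p:ℝ) * ((p:ℝ) ^ (-(1 + 1 / L)) - (p:ℝ) ^ (-(1 + 2 / L))) := by
    intro p hp
    have hp0 := PR_pos hp
    rw [rpow_split hp0, rpow_split hp0, ← mul_sub, ← mul_assoc, ← div_eq_mul_inv, mul_comm (0.2:ℝ)]
    refine mul_le_mul_of_nonneg_left ?_ (by positivity)
    set t := 1 / L * log p with ht
    have ht2 : 2 / L * log p = t + t := by rw [ht]; ring
    rw [ht2, neg_add, exp_add]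
    have ht1 : t ≤ 1 := by
      rw [ht, one_div, inv_mul_le_iff₀ hL, mul_one]
      exact log_le_log hp0 (mem_PR.mp hp).2.2
    have ht0 : 1 / 2 ≤ t := by
      rw [ht, one_div_mul_eq_div, le_div_iff₀ hL]
      have := log_le_log (sqrt_pos.mpr (by linarith)) (mem_PR.mp hp).2.1.le
      rw [Real.log_sqrt (by linarith)] at this
      linarith
    have hu1 : 0.3 ≤ exp (-t) := by
      have h7 : exp (-1) ≤ exp (-t) := exp_le_exp.mpr (by linarith)
      have h8 := exp_one_lt_d9
      rw [exp_neg] at h7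
      have h9 : (0.3:ℝ) ≤ (exp 1)⁻¹ := by
        rw [le_inv_comm₀ (by norm_num) (exp_pos 1)]
        norm_num at h8 ⊢; linarith
      linarith
    have hu2 : exp (-t) ≤ 0.7 := by
      have h7 : exp (-t) ≤ exp (-(1 / 2)) := exp_le_exp.mpr (by linarith)
      have h8 := add_one_le_exp (1 / 2:ℝ)
      rw [exp_neg (1 / 2)] at h7
      have h9 : (exp (1 / 2))⁻¹ ≤ (0.7:ℝ) := by
        rw [inv_le_comm₀ (exp_pos _) (by norm_num)]
        norm_num at h8 ⊢; linarith
      linarith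
    nlinarith
  have h4 := sum_le_sum key
  rw [← mul_sum] at h4
  set S := ∑ p ∈ PR (sqrt y) y, (nu h p:ℝ) / p
  set E := ∑ p ∈ PR (sqrt y) y, (nu h p:ℝ) * ((p:ℝ) ^ (-(1 + 1 / L)) - (p:ℝ) ^ (-(1 + 2 / L)))
  by_contra hc
  push Not at hc
  have h5 : exp 1 ≤ exp E := exp_le_exp.mpr (by linarith)
  have h6 := Real.exp_one_gt_d9
  have h7 : Z (1 + 1 / L) < 1.1 * κ * L := by
    have := mul_lt_mul_of_pos_right h1 hL
    rwa [one_div_mul_eq_div, div_mul_cancel₀ _ hL.ne'] at this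
  have h8 : 0.45 * κ * L < Z (1 + 2 / L) := by
    have := mul_lt_mul_of_pos_right h2 hL
    rw [show 2 / L * Z (1 + 2 / L) * L = 2 * Z (1 + 2 / L) by field_simp] at this
    linarith
  have hκL : 0 < κ * L := by positivity
  have h9 : 2.7 * (0.45 * κ * L) ≤ exp E * Z (1 + 2 / L) := by
    refine mul_le_mul (by linarith) h8.le (by nlinarith) (exp_pos _).le
  nlinarith

theorem sum_log_bound (h : ℤ[X]) (hirr : Irreducible h) (hdeg : h.natDegree ≠ 0) :
    ∃ C : ℝ, 0 ≤ C ∧ ∀ y, 1 ≤ y → ∑ p ∈ PR 1 y, (nu h p:ℝ) / p * log p ≤ 10 * log y + C := by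
  obtain ⟨y0, hy0, hC1⟩ := C1 h hirr hdeg
  have hnn : ∀ y, ∀ p ∈ PR 1 y, 0 ≤ (nu h p:ℝ) / p * log p := fun y p hp =>
    mul_nonneg (by positivity) (log_nonneg (mem_PR.mp hp).2.1.le)
  refine ⟨∑ p ∈ PR 1 y0, (nu h p:ℝ) / p * log p, sum_nonneg (hnn y0), ?_⟩
  have hn : ∀ n : ℕ, ∀ y, 1 ≤ y → y ≤ y0 ^ 2 ^ n → ∑ p ∈ PR 1 y, (nu h p:ℝ) / p * log p ≤
      10 * log y + ∑ p ∈ PR 1 y0, (nu h p:ℝ) / p * log p := by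
    intro n
    induction n with
    | zero =>
      intro y h1 h2
      have h3 := sum_le_sum_of_subset_of_nonneg (PR_subset (le_refl (1:ℝ)) (by simpa using h2))
        (fun p hp _ => hnn y0 p hp)
      have := log_nonneg h1
      linarith
    | succ n ih =>
      intro y h1 h2
      rcases le_or_gt y y0 with hlt | hgt
      · have h3 := sum_le_sum_of_subset_of_nonneg (PR_subset (le_refl (1:ℝ)) hlt)
          (fun p hp _ => hnn y0 p hp)
        have := log_nonneg h1
        linarith
      · have hs1 : 1 ≤ sqrt y := Real.one_le_sqrt.mpr h1
        have hsy : sqrt y ≤ y := by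
          rw [Real.sqrt_le_left (by linarith)]; nlinarith
        rw [PR_sum_split hs1 hsy]
        have h4 := ih (sqrt y) hs1 (by
          rw [Real.sqrt_le_left (by positivity), ← pow_mul, ← pow_succ]; exact h2)
        rw [Real.log_sqrt (by linarith)] at h4
        have h5 : ∑ p ∈ PR (sqrt y) y, (nu h p:ℝ) / p * log p ≤ 5 * log y := by
          refine le_trans ?_ (mul_le_mul_of_nonneg_right (hC1 y hgt.le) (log_nonneg h1))
          rw [sum_mul]
          refine sum_le_sum fun p hp => ?_
          have := log_le_log (PR_pos hp) (mem_PR.mp hp).2.2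
          exact mul_le_mul_of_nonneg_left this (by positivity)
        linarith
  intro y hy
  have hlim : Tendsto (fun n : ℕ => y0 ^ 2 ^ n) atTop atTop :=
    (tendsto_pow_atTop_atTop_of_one_lt (by linarith)).comp (tendsto_pow_atTop_atTop_of_one_lt (by norm_num : (1 : ℕ) < 2))
  obtain ⟨n, hn2⟩ := (hlim.eventually_ge_atTop y).exists
  exact hn n y hy hn2

open Filter Topology in
/-- Evaluate the zeta function of `ℚ[X]/(h)` at distance of order `1 / log y` from `1`. -/
theorem C2 (h : ℤ[X]) (hirr : Irreducible h) (hdeg : h.natDegree ≠ 0) :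
    ∃ A : ℝ, ∀ y, 2 ≤ y → ∑ p ∈ PR 1 y, (nu h p:ℝ) / p ≤ log (log y) + A := by
  obtain ⟨Z, κ, D, s1, hκ, hD, hs1, hlim, hT⟩ := zeta_export h hirr hdeg
  obtain ⟨C, hC0, hC⟩ := sum_log_bound h hirr hdeg
  have hd : Tendsto (fun y : ℝ => 1 + 1 / log y) atTop (𝓝[>] 1) := by
    refine tendsto_nhdsWithin_iff.mpr ⟨?_, ?_⟩
    · simpa using (tendsto_log_atTop.inv_tendsto_atTop).const_add 1
    · filter_upwards [eventually_gt_atTop 1] with y hy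
      have := log_pos hy
      simp only [Set.mem_Ioi, lt_add_iff_pos_right]; positivity
  have e1 := (hlim.comp hd).eventually_lt_const (show κ < 2 * κ by linarith)
  have e3 : ∀ᶠ y : ℝ in atTop, 1 + 1 / log y < s1 :=
    (tendsto_nhdsWithin_iff.mp hd).1.eventually_lt_const hs1
  obtain ⟨y0, hy0⟩ := eventually_atTop.mp (e1.and e3)
  set y1 := max (max y0 3) D with hy1
  set A1 := ∑ p ∈ PR 1 y1, (nu h p:ℝ) / p with hA1
  have hA10 : 0 ≤ A1 := sum_nonneg fun p _ => by positivity
  have hl2 : 0 < log 2 := log_pos (by norm_num)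
  refine ⟨A1 + |log (log 2)| + |log (2 * κ)| + 10 + C, fun y hy => ?_⟩
  rcases le_or_gt y y1 with hle | hgt
  · have h3 := sum_le_sum_of_subset_of_nonneg (f := fun p => (nu h p:ℝ) / p) (PR_subset (le_refl (1:ℝ)) hle)
      (fun p hp _ => by positivity)
    have h4 : log (log 2) ≤ log (log y) :=
      log_le_log hl2 (log_le_log (by norm_num) hy)
    have h5 := neg_abs_le (log (log 2))
    have h6 := abs_nonneg (log (2 * κ))
    linarith
  · have hy3 : 3 ≤ y := ((le_max_right _ _).trans (le_max_left _ _)).trans hgt.le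
    have hyD : (D:ℝ) ≤ y1 := le_max_right _ _
    have h1y1 : 1 ≤ y1 := le_trans (by norm_num) ((le_max_right y0 3).trans (le_max_left _ _))
    obtain ⟨h1, h3⟩ := hy0 y (((le_max_left _ _).trans (le_max_left _ _)).trans hgt.le)
    have hL : 1 ≤ log y := by
      rw [le_log_iff_exp_le (by linarith)]
      linarith [exp_one_lt_d9]
    have hL0 : 0 < log y := by linarith
    simp only [Function.comp_apply, add_sub_cancel_left] at h1
    set L := log y with hLdef
    obtain ⟨hz, hb, -⟩ := hT (PR y1 y) (fun p hp => ⟨PR_prime hp, fun hdvd => by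
      have h4 := le_of_dvd (pos_of_ne_zero hD) hdvd
      have h5 := (mem_PR.mp hp).2.1
      have h6 : (p:ℝ) ≤ D := mod_cast h4
      linarith⟩) (1 + 1 / L) (1 + 1 / L) (by simp only [lt_add_iff_pos_right]; positivity) le_rfl h3
    have h7 : Z (1 + 1 / L) < 2 * κ * L := by
      have := mul_lt_mul_of_pos_right h1 hL0
      rwa [one_div_mul_eq_div, div_mul_cancel₀ _ hL0.ne'] at this
    have h8 : ∑ p ∈ PR y1 y, (nu h p:ℝ) * (p:ℝ) ^ (-(1 + 1 / L)) ≤ log (2 * κ) + log L := by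
      rw [← log_mul (by positivity) hL0.ne', le_log_iff_exp_le (by positivity)]
      exact hb.trans h7.le
    have h9 : ∑ p ∈ PR y1 y, (nu h p:ℝ) / p ≤ ∑ p ∈ PR y1 y, (nu h p:ℝ) * (p:ℝ) ^ (-(1 + 1 / L)) +
        (1 / L) * ∑ p ∈ PR y1 y, (nu h p:ℝ) / p * log p := by
      rw [mul_sum, ← sum_add_distrib]
      refine sum_le_sum fun p hp => ?_
      have hp0 := PR_pos hp
      rw [rpow_split hp0, ← mul_assoc, ← div_eq_mul_inv]
      have := add_one_le_exp (-(1 / L * log p))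
      have h10 : 0 ≤ (nu h p:ℝ) / p := by positivity
      nlinarith
    have h10 : ∑ p ∈ PR y1 y, (nu h p:ℝ) / p * log p ≤ 10 * L + C := by
      refine le_trans ?_ (hC y (by linarith))
      refine sum_le_sum_of_subset_of_nonneg (PR_subset h1y1 le_rfl) fun p hp _ => ?_
      exact mul_nonneg (by positivity) (log_nonneg (mem_PR.mp hp).2.1.le)
    have h11 : (1 / L) * ∑ p ∈ PR y1 y, (nu h p:ℝ) / p * log p ≤ 10 + C := by
      rw [one_div, inv_mul_le_iff₀ hL0]
      nlinarith
    rw [PR_sum_split h1y1 hgt.le]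
    have h12 := abs_nonneg (log (log 2))
    have h13 := le_abs_self (log (2 * κ))
    linarith



/-! ### The sieve on dyadic blocks of primes -/

theorem El_le_exp {B : Finset ℕ} {u : ℕ → ℝ} (hu0 : ∀ p, 0 ≤ u p) {L : ℝ} (hL : ∑ p ∈ B, u p ≤ L) (r : ℕ) :
    El B r u * 4 ^ r ≤ exp (4 * L) := by
  have h1 : ∏ p ∈ B, (1 + 4 * u p) ≤ exp (4 * L) := by
    calc ∏ p ∈ B, (1 + 4 * u p) ≤ ∏ p ∈ B, exp (4 * u p) :=
          prod_le_prod (fun p _ => by linarith [hu0 p]) fun p _ => by linarith [add_one_le_exp (4 * u p)]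
      _ = exp (4 * ∑ p ∈ B, u p) := by rw [← exp_sum, mul_sum]
      _ ≤ _ := exp_le_exp.mpr (by linarith)
  refine le_trans ?_ h1
  rw [prod_one_add, El, sum_mul]
  have h2 : ∑ S ∈ B.powersetCard r, (∏ p ∈ S, u p) * 4 ^ r = ∑ S ∈ B.powersetCard r, ∏ p ∈ S, (4 * u p) := by
    refine sum_congr rfl fun S hS => ?_
    rw [prod_mul_distrib, prod_const, (mem_powersetCard.mp hS).2, mul_comm]
  rw [h2]
  refine sum_le_sum_of_subset_of_nonneg (fun S hS => mem_powerset.mpr (mem_powersetCard.mp hS).1) fun S _ _ => ?_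
  exact prod_nonneg fun p _ => by linarith [hu0 p]

theorem prod_one_sub_ge {B : Finset ℕ} {u : ℕ → ℝ} (hu0 : ∀ p ∈ B, 0 ≤ u p) (hu1 : ∀ p ∈ B, u p ≤ 1 / 2)
    {L : ℝ} (hL : ∑ p ∈ B, u p ≤ L) : exp (-(2 * L)) ≤ ∏ p ∈ B, (1 - u p) := by
  calc exp (-(2 * L)) ≤ exp (∑ p ∈ B, -(2 * u p)) := by
        apply exp_le_exp.mpr
        rw [sum_neg_distrib, ← mul_sum]; linarith
    _ = ∏ p ∈ B, exp (-(2 * u p)) := exp_sum _ _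
    _ ≤ _ := by
        refine prod_le_prod (fun p _ => (exp_pos _).le) fun p hp => ?_
        have h0 := hu0 p hp
        have h1 := hu1 p hp
        have h2 := add_one_le_exp (2 * u p)
        rw [exp_neg, inv_le_comm₀ (exp_pos _) (by linarith)]
        refine le_trans ?_ h2
        rw [inv_le_comm₀ (by linarith) (by linarith), inv_le_comm₀ (by linarith) (by linarith)]
        rw [inv_le_iff_one_le_mul₀ (by linarith)]
        nlinarith

/-- The left end `w ^ (2 ^ (-j))` of the `j`-th dyadic block. -/
noncomputable def yb (w:ℝ) (j : ℕ) : ℝ := w ^ ((1 / 2:ℝ) ^ j)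

lemma yb_zero (w:ℝ) : yb w 0 = w := by simp [yb]

lemma yb_succ {w : ℝ} (hw : 0 ≤ w) (j : ℕ) : yb w (j + 1) = sqrt (yb w j) := by
  rw [yb, yb, sqrt_eq_rpow, ← rpow_mul hw, pow_succ]

lemma one_le_yb {w : ℝ} (hw : 1 ≤ w) (j : ℕ) : 1 ≤ yb w j := one_le_rpow hw (by positivity)

lemma yb_anti {w : ℝ} (hw : 1 ≤ w) {i j : ℕ} (h : i ≤ j) : yb w j ≤ yb w i :=
  rpow_le_rpow_of_exponent_le hw (pow_le_pow_of_le_one (by norm_num) (by norm_num) h)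

lemma sum_geo (n : ℕ) : ∑ j ∈ range n, (1 / 2:ℝ) ^ j * (2 * j + 3) = 10 - (4 * n + 10) * (1 / 2) ^ n := by
  induction n with
  | zero => simp
  | succ n ih => rw [sum_range_succ, ih, pow_succ]; push_cast; ring

lemma sum_half (n : ℕ) : ∑ j ∈ range n, (1 / 8:ℝ) * (1 / 2) ^ j ≤ 1 / 4 := by
  have : ∑ j ∈ range n, (1 / 8:ℝ) * (1 / 2) ^ j = 1 / 4 - 1 / 4 * (1 / 2) ^ n := by
    induction n with
    | zero => simp
    | succ n ih => rw [sum_range_succ, ih, pow_succ]; ring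
  rw [this]
  have : (0:ℝ) < (1 / 2) ^ n := by positivity
  linarith

open Classical in
/-- The subsets of `P` with product at most `Q`. -/
noncomputable def DQ (P : Finset ℕ) (Q:ℝ) : Finset (Finset ℕ) :=
  P.powerset.filter fun S => ((∏ p ∈ S, p : ℕ):ℝ) ≤ Q

lemma mem_DQ {P : Finset ℕ} {Q : ℝ} {S : Finset ℕ} : S ∈ DQ P Q ↔ S ⊆ P ∧ ((∏ p ∈ S, p : ℕ):ℝ) ≤ Q := by
  rw [DQ, mem_filter, mem_powerset]

lemma Rm_congr {ι : Type*} (N : Finset ι) (a : ι → ℝ) (E : ℕ → ι → Prop) {u u' : ℕ → ℝ} (X:ℝ) {S : Finset ℕ}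
    (h : ∀ p ∈ S, u p = u' p) : Rm N a E u X S = Rm N a E u' X S := by
  rw [Rm, Rm, prod_congr rfl h]

/-- Brun–Hooley sieve with dyadic blocks: `L j` bounds the local densities in the `j`-th block
`(w ^ (2 ^ (-j-1)), w ^ (2 ^ (-j))]`, the first `n` blocks are truncated at `5 L j + 1 + j`, and the primes
below `y0` form a last block, which is sieved without truncation. -/
theorem block_sieve {ι : Type*} (N : Finset ι) (a : ι → ℝ) (E : ℕ → ι → Prop) (u : ℕ → ℝ) (X w y0:ℝ)
    (P : Finset ℕ) (n : ℕ) (L : ℕ → ℕ) (Q:ℝ)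
    (hP : ∀ p ∈ P, p.Prime ∧ (p:ℝ) ≤ w) (ha : ∀ m ∈ N, 0 ≤ a m) (hX : 0 ≤ X) (hw : 1 ≤ w) (hy0 : 1 ≤ y0)
    (hn : yb w n ≤ y0) (hu0 : ∀ p ∈ P, 0 ≤ u p) (hu1 : ∀ p ∈ P, u p ≤ 1)
    (hL1 : ∀ j, 1 ≤ L j)
    (hL : ∀ j < n, ∀ B ⊆ P, (∀ p ∈ B, yb w (j + 1) < (p:ℝ) ∧ (p:ℝ) ≤ yb w j) →
      (∀ p ∈ B, u p ≤ 1 / 2) ∧ ∑ p ∈ B, u p ≤ L j)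
    (hQ : y0 ^ (2 * ⌈y0⌉₊ + 1) * w ^ (10 + 10 * ∑ j ∈ range n, (1 / 2:ℝ) ^ j * L j) ≤ Q) :
    ∑ m ∈ N, a m * ind (∀ p ∈ P, ¬ E p m) ≤ 2 * X * ∏ p ∈ P, (1 - u p) + ∑ S ∈ DQ P Q, Rm N a E u X S ∧
    1 / 2 * X * ∏ p ∈ P, (1 - u p) - (n + 2) * ∑ S ∈ DQ P Q, Rm N a E u X S ≤
      ∑ m ∈ N, a m * ind (∀ p ∈ P, ¬ E p m) := by
  classical
  set u' : ℕ → ℝ := fun p => if p ∈ P then u p else 0 with hu'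
  have hu'0 : ∀ p, 0 ≤ u' p := fun p => by simp only [hu']; split_ifs with h; exacts [hu0 p h, le_rfl]
  have hu'1 : ∀ p, u' p ≤ 1 := fun p => by
    simp only [hu']; split_ifs with h; exacts [hu1 p h, zero_le_one]
  have hu'P : ∀ p ∈ P, u p = u' p := fun p h => by simp [hu', h]
  set B : Fin (n + 1) → Finset ℕ := fun j =>
    P.filter fun p => (p:ℝ) ≤ yb w j ∧ (j.val < n → yb w (j + 1) < (p:ℝ)) with hB
  have hBP : ∀ j, B j ⊆ P := fun j => filter_subset _ _
  have hdisj' : ∀ i j : Fin (n + 1), i < j → Disjoint (B i) (B j) := by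
    intro i j hij
    have hij' : i.val < j.val := hij
    rw [disjoint_left]
    intro p h1 h2
    have h3 := (mem_filter.mp h1).2.2 (by have := j.2; omega)
    have h4 := (mem_filter.mp h2).2.1
    have h5 := yb_anti hw (show i.val + 1 ≤ j.val from hij')
    linarith
  have hdisj : Pairwise fun i j => Disjoint (B i) (B j) := by
    intro i j hij
    rcases lt_or_gt_of_ne hij with h | h
    · exact hdisj' i j h
    · exact (hdisj' j i h).symm
  have hcov : univ.biUnion B = P := by
    ext p
    constructor
    · intro h
      obtain ⟨j, -, hj⟩ := mem_biUnion.mp h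
      exact hBP j hj
    · intro h
      have h0 : (p:ℝ) ≤ yb w 0 := by rw [yb_zero]; exact (hP p h).2
      set k := Nat.findGreatest (fun j => (p:ℝ) ≤ yb w j) n with hk
      have hk1 : (p:ℝ) ≤ yb w k := Nat.findGreatest_spec (P := fun j => (p:ℝ) ≤ yb w j) (Nat.zero_le n) h0
      have hk2 : k ≤ n := Nat.findGreatest_le n
      refine mem_biUnion.mpr ⟨⟨k, by omega⟩, mem_univ _, mem_filter.mpr ⟨h, hk1, fun hlt => ?_⟩⟩
      have := Nat.findGreatest_is_greatest (P := fun j => (p:ℝ) ≤ yb w j) (n := n) (k := k + 1) (by omega)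
        (by simp only at hlt; omega)
      exact not_le.mp this
  set b : Fin (n + 1) → ℕ := fun j => if j.val < n then 5 * L j + 1 + j else ⌈y0⌉₊ with hb
  set τ : Fin (n + 1) → ℝ := fun j => (1 / 8) * (1 / 2) ^ j.val with hτdef
  have hτ0 : ∀ j, 0 ≤ τ j := fun j => by simp only [hτdef]; positivity
  have hτ1 : ∑ j, τ j ≤ 1 / 4 := by
    simp only [hτdef]
    rw [Fin.sum_univ_eq_sum_range (fun j => (1 / 8:ℝ) * (1 / 2) ^ j)]
    exact sum_half _
  have hpos : ∀ j, 0 ≤ ∏ p ∈ B j, (1 - u' p) := fun j => prod_nonneg fun p _ => by linarith [hu'1 p]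
  have hτ : ∀ j, El (B j) (2 * b j + 1) u' ≤ τ j * ∏ p ∈ B j, (1 - u' p) := by
    intro j
    by_cases hj : j.val < n
    · obtain ⟨h1, h2⟩ := hL j hj (B j) (hBP j) fun p hp => ⟨(mem_filter.mp hp).2.2 hj, (mem_filter.mp hp).2.1⟩
      have h1' : ∀ p ∈ B j, u' p ≤ 1 / 2 := fun p hp => by rw [← hu'P p (hBP j hp)]; exact h1 p hp
      have h2' : ∑ p ∈ B j, u' p ≤ L j := by
        rw [← sum_congr rfl fun p hp => hu'P p (hBP j hp)]; exact h2
      have h3 := El_le_exp hu'0 h2' (2 * b j + 1)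
      have h4 := prod_one_sub_ge (fun p _ => hu'0 p) h1' h2'
      have hbj : b j = 5 * L j + 1 + j := by simp only [hb, if_pos hj]
      have h5 : exp (4 * L j) ≤ τ j * exp (-(2 * L j)) * 4 ^ (2 * b j + 1) := by
        have h6 : exp (4 * L j) = exp (-(2 * L j)) * exp 1 ^ (6 * L j) := by
          rw [← exp_nat_mul, ← exp_add]; congr 1; push_cast; ring
        rw [h6]
        have h7 : exp 1 ^ (6 * L j) ≤ 4 ^ (10 * L j) := by
          calc exp 1 ^ (6 * L j) ≤ 4 ^ (6 * L j) :=
                pow_le_pow_left₀ (exp_pos 1).le (by linarith [exp_one_lt_d9]) _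
            _ ≤ 4 ^ (10 * L j) := pow_le_pow_right₀ (by norm_num) (by omega)
        have h8 : (4:ℝ) ^ (10 * L j) ≤ τ j * 4 ^ (2 * b j + 1) := by
          rw [hbj, show 2 * (5 * L j + 1 + j.val) + 1 = 10 * L j + 3 + 2 * j.val by ring, pow_add, pow_add, pow_mul 4 2]
          have h9 : (1:ℝ) ≤ (1 / 2) ^ j.val * (4 ^ 2) ^ j.val := by
            rw [← mul_pow]; exact one_le_pow₀ (by norm_num)
          have h10 : (0:ℝ) < 4 ^ (10 * L j) := by positivity
          calc (4:ℝ) ^ (10 * L j) ≤ 4 ^ (10 * L j) * (8 * ((1 / 2) ^ j.val * (4 ^ 2) ^ j.val)) := by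
                nlinarith
            _ = _ := by simp only [hτdef]; ring
        calc _ ≤ exp (-(2 * L j)) * (τ j * 4 ^ (2 * b j + 1)) :=
              mul_le_mul_of_nonneg_left (h7.trans h8) (exp_pos _).le
          _ = _ := by ring
      have h11 : El (B j) (2 * b j + 1) u' * 4 ^ (2 * b j + 1) ≤
          τ j * (∏ p ∈ B j, (1 - u' p)) * 4 ^ (2 * b j + 1) := by
        refine (h3.trans h5).trans ?_
        gcongr
      exact le_of_mul_le_mul_right h11 (by positivity)
    · have hjn : j.val = n := by have := j.2; omega
      have hcard : (B j).card ≤ ⌈y0⌉₊ := by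
        have hsub : B j ⊆ Icc 1 ⌈y0⌉₊ := by
          intro p hp
          have h1 := (mem_filter.mp hp).2.1
          rw [hjn] at h1
          rw [mem_Icc]
          refine ⟨(hP p (hBP j hp)).1.one_le, ?_⟩
          have : (p:ℝ) ≤ ⌈y0⌉₊ := (h1.trans hn).trans (le_ceil _)
          exact_mod_cast this
        simpa using card_le_card hsub
      have hE : El (B j) (2 * b j + 1) u' = 0 := by
        rw [El, powersetCard_eq_empty.mpr, sum_empty]
        simp only [hb, if_neg hj]; omega
      rw [hE]
      exact mul_nonneg (hτ0 j) (hpos j)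
  have hD : ∀ φ : Fin (n + 1) → Finset ℕ, (∀ j, φ j ⊆ B j ∧ (φ j).card ≤ 2 * b j + 1) →
      univ.biUnion φ ∈ DQ P Q := by
    intro φ hφ
    rw [mem_DQ]
    refine ⟨?_, ?_⟩
    · rw [← hcov]
      exact biUnion_mono fun j _ => (hφ j).1
    · rw [prod_biUnion fun i _ j _ hij => (hdisj hij).mono (hφ i).1 (hφ j).1]
      push_cast
      refine le_trans ?_ hQ
      have h1 : ∀ j, ∏ p ∈ φ j, (p:ℝ) ≤ if j.val < n then w ^ ((1 / 2:ℝ) ^ j.val * (10 * L j + 2 * j.val + 3))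
          else y0 ^ (2 * ⌈y0⌉₊ + 1) := by
        intro j
        have h2 : ∏ p ∈ φ j, (p:ℝ) ≤ yb w j ^ (2 * b j + 1) := by
          calc ∏ p ∈ φ j, (p:ℝ) ≤ ∏ p ∈ φ j, yb w j :=
                prod_le_prod (fun p _ => cast_nonneg p) fun p hp => (mem_filter.mp ((hφ j).1 hp)).2.1
            _ = yb w j ^ (φ j).card := prod_const _
            _ ≤ _ := pow_le_pow_right₀ (one_le_yb hw _) (hφ j).2
        refine h2.trans ?_
        by_cases hj : j.val < n
        · rw [if_pos hj, yb, ← rpow_natCast, ← rpow_mul (by linarith)]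
          apply le_of_eq
          congr 2
          simp only [hb, if_pos hj]
          push_cast; ring
        · have hjn : j.val = n := by have := j.2; omega
          rw [if_neg hj]
          simp only [hb, if_neg hj]
          refine pow_le_pow_left₀ (by linarith [one_le_yb hw j.val]) ?_ _
          rw [hjn]; exact hn
      refine (prod_le_prod (fun j _ => prod_nonneg fun p _ => cast_nonneg p) fun j _ => h1 j).trans ?_
      rw [Fin.prod_univ_eq_prod_range (fun j => if j < n then w ^ ((1 / 2:ℝ) ^ j * (10 * L j + 2 * j + 3))
          else y0 ^ (2 * ⌈y0⌉₊ + 1)), prod_range_succ, if_neg (lt_irrefl n), mul_comm]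
      refine mul_le_mul_of_nonneg_left ?_ (by positivity)
      rw [prod_congr rfl fun j hj => if_pos (mem_range.mp hj), ← Real.rpow_sum_of_pos (by linarith)]
      refine rpow_le_rpow_of_exponent_le hw ?_
      have h3 : ∑ j ∈ range n, (1 / 2:ℝ) ^ j * (10 * L j + 2 * j + 3) =
          ∑ j ∈ range n, (1 / 2:ℝ) ^ j * (2 * j + 3) + 10 * ∑ j ∈ range n, (1 / 2:ℝ) ^ j * L j := by
        rw [mul_sum, ← sum_add_distrib]
        exact sum_congr rfl fun j _ => by ring
      rw [h3, sum_geo]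
      have : (0:ℝ) ≤ (4 * n + 10) * (1 / 2) ^ n := by positivity
      linarith
  have hup := sieve_upper (N := N) (a := a) (E := E) (X := X) hdisj b ha hX hu'0 hu'1 τ hτ hτ0 hτ1 (DQ P Q) hD
  have hlo := sieve_lower (N := N) (a := a) (E := E) (X := X) hdisj b ha hX hu'0 hu'1 τ hτ hτ0 hτ1 (DQ P Q) hD
  have hprod : ∏ j, ∏ p ∈ B j, (1 - u' p) = ∏ p ∈ P, (1 - u p) := by
    rw [← prod_biUnion fun i _ j _ hij => hdisj hij, hcov]
    exact prod_congr rfl fun p hp => by rw [hu'P p hp]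
  have hR : ∑ S ∈ DQ P Q, Rm N a E u' X S = ∑ S ∈ DQ P Q, Rm N a E u X S :=
    sum_congr rfl fun S hS => (Rm_congr N a E X fun p hp => hu'P p ((mem_DQ.mp hS).1 hp)).symm
  have hind : ∀ m, ind (∀ j, ∀ p ∈ B j, ¬ E p m) = ind (∀ p ∈ P, ¬ E p m) := by
    intro m
    congr 1
    rw [← hcov]
    simp only [mem_biUnion, mem_univ, true_and, forall_exists_index, eq_iff_iff]
    exact ⟨fun h p j hp => h j p hp, fun h j p hp => h p j hp⟩
  simp only [hprod, hR, hind, Fintype.card_fin] at hup hlo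
  refine ⟨hup, ?_⟩
  push_cast at hlo
  convert hlo using 3
  ring



/-! ### Chebyshev bounds with smooth weights -/

/-- Chebyshev's bound: the primes in `(2n/3, n]` do not divide the central binomial coefficient. -/
theorem centralBinom_log_le {n : ℕ} (hn : 2 < n) :
    (n:ℝ) * log 4 ≤ (Nat.sqrt (2 * n) + 2) * log (2 * n : ℕ) + Chebyshev.theta (2 * n / 3 : ℕ)
      + ∑ p ∈ (Ioc n (2 * n)).filter Nat.Prime, log p := by
  have h4 : (4:ℝ) ^ n ≤ (2 * n : ℕ) * n.centralBinom := by
    exact_mod_cast Nat.four_pow_le_two_mul_self_mul_centralBinom n (by omega)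
  have hc0 : n.centralBinom ≠ 0 := Nat.centralBinom_ne_zero n
  have h1 : (n:ℝ) * log 4 ≤ log (2 * n : ℕ) + log n.centralBinom := by
    rw [← log_pow, ← log_mul (by positivity) (by positivity)]
    exact log_le_log (by positivity) h4
  have h2 : log n.centralBinom = ∑ p ∈ range (2 * n + 1), (n.centralBinom.factorization p:ℝ) * log p := by
    conv_lhs => rw [← Nat.prod_pow_factorization_centralBinom n]
    rw [Nat.cast_prod, Real.log_prod]
    · refine sum_congr rfl fun p _ => ?_
      rw [Nat.cast_pow, log_pow]
    · intro p _
      by_cases hp : p = 0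
      · subst hp; simp
      · positivity
  have hL : 0 ≤ log (2 * n : ℕ) := log_natCast_nonneg _
  have h3 : ∀ p ∈ range (2 * n + 1), (n.centralBinom.factorization p:ℝ) * log p ≤
      (if p ≤ Nat.sqrt (2 * n) then log (2 * n : ℕ) else 0) +
      (if p.Prime ∧ p ≤ 2 * n / 3 then log p else 0) + (if n < p ∧ p.Prime then log p else 0) := by
    intro p hp
    have hlp : 0 ≤ log (p:ℝ) := log_natCast_nonneg _
    have e1 : 0 ≤ (if p ≤ Nat.sqrt (2 * n) then log (2 * n : ℕ) else 0) := by split_ifs <;> first | exact hL | exact le_rfl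
    have e2 : 0 ≤ (if p.Prime ∧ p ≤ 2 * n / 3 then log (p:ℝ) else 0) := by split_ifs <;> simp [hlp]
    have e3 : 0 ≤ (if n < p ∧ p.Prime then log (p:ℝ) else 0) := by split_ifs <;> simp [hlp]
    by_cases hpp : p.Prime
    swap
    · rw [Nat.factorization_eq_zero_of_not_prime _ hpp]; simp only [Nat.cast_zero, zero_mul]; linarith
    by_cases hs : p ≤ Nat.sqrt (2 * n)
    · have : (n.centralBinom.factorization p:ℝ) * log p ≤ log (2 * n : ℕ) := by
        rw [← log_pow]
        refine log_le_log (by have := hpp.pos; positivity) ?_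
        have := Nat.pow_factorization_choose_le (p := p) (n := 2 * n) (k := n) (by omega)
        exact_mod_cast this
      rw [if_pos hs] at e1 ⊢
      linarith
    · have hs' : 2 * n < p ^ 2 := by rw [pow_two]; exact Nat.sqrt_lt.mp (by omega)
      have hf1 : n.centralBinom.factorization p ≤ 1 := Nat.factorization_choose_le_one hs'
      have hf1' : (n.centralBinom.factorization p:ℝ) * log p ≤ log p := by
        have : (n.centralBinom.factorization p:ℝ) ≤ 1 := mod_cast hf1
        nlinarith
      by_cases ha : p ≤ 2 * n / 3
      · rw [if_pos (⟨hpp, ha⟩ : p.Prime ∧ p ≤ 2 * n / 3)] at e2 ⊢; linarith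
      · by_cases hb : p ≤ n
        · rw [Nat.factorization_centralBinom_of_two_mul_self_lt_three_mul hn hb (by omega)]
          simp only [Nat.cast_zero, zero_mul]; linarith
        · rw [if_pos (⟨by omega, hpp⟩ : n < p ∧ p.Prime)] at e3 ⊢; linarith
  have h5 := sum_le_sum h3
  rw [sum_add_distrib, sum_add_distrib, ← h2] at h5
  have h6 : ∑ p ∈ range (2 * n + 1), (if p ≤ Nat.sqrt (2 * n) then log (2 * n : ℕ) else 0) ≤
      (Nat.sqrt (2 * n) + 1) * log (2 * n : ℕ) := by
    rw [← sum_filter, sum_const, nsmul_eq_mul]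
    refine mul_le_mul_of_nonneg_right ?_ hL
    have : #((range (2 * n + 1)).filter fun p => p ≤ Nat.sqrt (2 * n)) ≤ #(range (Nat.sqrt (2 * n) + 1)) := by
      refine card_le_card fun p hp => ?_
      simp only [mem_filter, mem_range] at hp ⊢; omega
    rw [card_range] at this
    exact_mod_cast this
  have h7 : ∑ p ∈ range (2 * n + 1), (if p.Prime ∧ p ≤ 2 * n / 3 then log (p:ℝ) else 0) ≤
      Chebyshev.theta (2 * n / 3 : ℕ) := by
    rw [Chebyshev.theta_eq_sum_Icc, Nat.floor_natCast, ← sum_filter]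
    refine sum_le_sum_of_subset_of_nonneg (fun p hp => ?_) fun p _ _ => log_natCast_nonneg _
    simp only [mem_filter, mem_range, mem_Icc] at hp ⊢
    exact ⟨⟨by omega, hp.2.2⟩, hp.2.1⟩
  have h8 : ∑ p ∈ range (2 * n + 1), (if n < p ∧ p.Prime then log (p:ℝ) else 0) ≤
      ∑ p ∈ (Ioc n (2 * n)).filter Nat.Prime, log p := by
    rw [← sum_filter]
    refine sum_le_sum_of_subset_of_nonneg (fun p hp => ?_) fun p _ _ => log_natCast_nonneg _
    simp only [mem_filter, mem_range, mem_Ioc] at hp ⊢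
    exact ⟨⟨hp.2.1, by omega⟩, hp.2.2⟩
  nlinarith

/-- Primes in `(M, M + m]` divide `(M + m).choose m`, which is at most `(51 e)^m`. -/
theorem short_interval_log_le {M m : ℕ} (hm : 0 < m) (hmM : m ≤ M) (hM : M ≤ 50 * m) :
    ∑ p ∈ (Ioc M (M + m)).filter Nat.Prime, log p ≤ 5 * m := by
  have hd : ∏ p ∈ (Ioc M (M + m)).filter Nat.Prime, p ∣ (M + m).choose m := by
    refine prod_primes_dvd _ (fun p hp => (mem_filter.mp hp).2.prime) fun p hp => ?_
    simp only [mem_filter, mem_Ioc] at hp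
    have h1 := Nat.choose_mul_factorial_mul_factorial (n := M + m) (k := m) (by omega)
    rw [Nat.add_sub_cancel] at h1
    have h2 : p ∣ (M + m).choose m * m.factorial * M.factorial := by
      rw [h1]; exact (hp.2.dvd_factorial).mpr hp.1.2
    rcases hp.2.dvd_mul.mp h2 with h3 | h3
    · rcases hp.2.dvd_mul.mp h3 with h4 | h4
      · exact h4
      · have := (hp.2.dvd_factorial).mp h4; omega
    · have := (hp.2.dvd_factorial).mp h3; omega
  have hle := le_of_dvd (Nat.choose_pos (by omega)) hd
  have hle' : ((∏ p ∈ (Ioc M (M + m)).filter Nat.Prime, p : ℕ):ℝ) ≤ ((M + m).choose m : ℕ) := mod_cast hle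
  have hm' : (0:ℝ) < m := mod_cast hm
  have hch : (((M + m).choose m : ℕ):ℝ) ≤ (51 * exp 1) ^ m := by
    calc (((M + m).choose m : ℕ):ℝ) ≤ ((M + m : ℕ):ℝ) ^ m / (m.factorial:ℝ) := Nat.choose_le_pow_div _ _
      _ ≤ (51 * m) ^ m / (m.factorial:ℝ) := by
          have : ((M + m : ℕ):ℝ) ≤ 51 * m := by
            have : M + m ≤ 51 * m := by omega
            exact_mod_cast this
          gcongr
      _ = 51 ^ m * ((m:ℝ) ^ m / m.factorial) := by rw [mul_pow]; ring
      _ ≤ 51 ^ m * exp m := by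
          gcongr; exact Real.pow_div_factorial_le_exp _ hm'.le _
      _ = _ := by rw [mul_pow, ← exp_nat_mul, mul_one]
  have h51 : (51:ℝ) ≤ exp 4 := by
    have := Real.exp_one_gt_d9
    have h : exp 4 = exp 1 ^ 4 := by rw [← exp_nat_mul]; norm_num
    rw [h]
    calc (51:ℝ) ≤ 2.7 ^ 4 := by norm_num
      _ ≤ _ := by gcongr; linarith
  rw [← Real.log_prod (s := (Ioc M (M + m)).filter Nat.Prime) (f := fun p : ℕ => (p:ℝ))
    (fun p hp => by
      have := (mem_filter.mp hp : p ∈ Ioc M (M + m) ∧ p.Prime).2.pos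
      positivity)]
  have hpos : (0:ℝ) < ((∏ p ∈ (Ioc M (M + m)).filter Nat.Prime, p : ℕ):ℝ) := by
    have : 0 < ∏ p ∈ (Ioc M (M + m)).filter Nat.Prime, p := prod_pos fun p hp => (mem_filter.mp hp).2.pos
    exact_mod_cast this
  rw [← Nat.cast_prod]
  calc _ ≤ log ((51 * exp 1) ^ m) := log_le_log hpos (hle'.trans hch)
    _ = m * log (51 * exp 1) := by rw [log_pow]
    _ ≤ m * 5 := by
        gcongr
        rw [Real.log_le_iff_le_exp (by positivity)]
        calc 51 * exp 1 ≤ exp 4 * exp 1 := by gcongr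
          _ = _ := by rw [← exp_add]; norm_num
    _ = _ := by ring

theorem W_ge {x : ℝ} (hx : 3 ≤ x) {n : ℕ} (h1 : 1.0102 * x ≤ n) (h2 : (n:ℝ) ≤ 1.98 * x) : 1 / 4 ≤ W x n := by
  have hx0 : 0 < x := by linarith
  have hn0 : (0:ℝ) < n := by nlinarith
  have hlx : 1 ≤ log x := by
    rw [le_log_iff_exp_le hx0]
    linarith [exp_one_lt_d9]
  have hT : Tb (log (n / x)) = 1 := by
    apply Tb_eq_one
    · rw [le_log_iff_exp_le (by positivity), le_div_iff₀ hx0]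
      have : exp (1 / 100) ≤ 1.0102 := by
        have := Real.exp_bound_div_one_sub_of_interval (x := 1 / 100) (by norm_num) (by norm_num)
        refine this.trans (by norm_num)
      nlinarith
    · rw [le_sub_iff_add_le, le_log_iff_exp_le (by norm_num), exp_add, Real.exp_log (by positivity)]
      have : exp (1 / 100) ≤ 100 / 99 := by
        have := Real.exp_bound_div_one_sub_of_interval (x := 1 / 100) (by norm_num) (by norm_num)
        refine this.trans (by norm_num)
      have h3 : (n:ℝ) / x ≤ 1.98 := by rw [div_le_iff₀ hx0]; linarith
      calc (n:ℝ) / x * exp (1 / 100) ≤ 1.98 * (100 / 99) := by gcongr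
        _ ≤ 2 := by norm_num
  unfold W
  rw [hT, mul_one]
  have hb : 1 / 2 ≤ x / n := by rw [le_div_iff₀ hn0]; linarith
  have hb1 : x / n ≤ 1 := by rw [div_le_one hn0]; linarith
  calc (1 / 4:ℝ) = (1 / 2) ^ (2:ℝ) := by norm_num
    _ ≤ (x / n) ^ (2:ℝ) := by gcongr
    _ ≤ _ := by
        refine Real.rpow_le_rpow_of_exponent_ge (by positivity) hb1 ?_
        have : 1 / log x ≤ 1 := by rw [div_le_one (by linarith)]; exact hlx
        linarith

/-- The total weight of the prime powers in `(x, 2x)` has order `x`. -/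
theorem Xt_ge : ∃ x0, ∀ x ≥ x0, x / 20 ≤ Xt x := by
  have hlim : ∀ᶠ x : ℝ in atTop, (sqrt (2 * x) + 2) * log (2 * x) ≤ x / 1000 := by
    have h1 : (fun x : ℝ => log x) =o[atTop] fun x => x ^ (1 / 3:ℝ) := isLittleO_log_rpow_atTop (by norm_num)
    have h2 := h1.bound (show (0:ℝ) < 1 by norm_num)
    have h3 : Tendsto (fun x : ℝ => 2 * x) atTop atTop :=
      Filter.tendsto_id.const_mul_atTop (by norm_num)
    have h4 : Tendsto (fun x : ℝ => x ^ (1 / 6:ℝ)) atTop atTop := tendsto_rpow_atTop (by norm_num)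
    filter_upwards [h3.eventually h2, h3.eventually (h4.eventually_ge_atTop 6000), eventually_ge_atTop 2]
      with x hx hx6 hx2
    have hx0 : 0 < 2 * x := by linarith
    have hl : 0 ≤ log (2 * x) := log_nonneg (by linarith)
    rw [norm_of_nonneg hl, norm_of_nonneg (by positivity), one_mul] at hx
    have hs : 2 ≤ sqrt (2 * x) := Real.le_sqrt_of_sq_le (by linarith)
    calc (sqrt (2 * x) + 2) * log (2 * x) ≤ (2 * sqrt (2 * x)) * (2 * x) ^ (1 / 3:ℝ) := by
          gcongr; linarith
      _ = 2 * (2 * x) ^ (5 / 6:ℝ) := by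
          rw [sqrt_eq_rpow, mul_assoc, ← rpow_add hx0]; norm_num
      _ ≤ (2 * x) ^ (5 / 6:ℝ) * ((2 * x) ^ (1 / 6:ℝ) / 3000) := by
          rw [mul_comm]; gcongr; linarith
      _ = x / 1500 := by
          rw [← mul_div_assoc, ← rpow_add hx0]; norm_num; ring
      _ ≤ _ := by linarith
  obtain ⟨x1, hx1⟩ := eventually_atTop.mp hlim
  refine ⟨max x1 100000, fun x hx => ?_⟩
  have hxx1 : x1 ≤ x := le_trans (le_max_left _ _) hx
  have hx5 : 100000 ≤ x := le_trans (le_max_right _ _) hx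
  have hx0 : 0 < x := by linarith
  set n := ⌊0.99 * x⌋₊ with hn
  set m := ⌈0.0203 * x⌉₊ with hm
  have hn1 : (n:ℝ) ≤ 0.99 * x := floor_le (by positivity)
  have hn2 : 0.99 * x - 1 < n := Nat.sub_one_lt_floor _
  have hm1 : 0.0203 * x ≤ m := le_ceil _
  have hm2 : (m:ℝ) < 0.0203 * x + 1 := Nat.ceil_lt_add_one (by positivity)
  have hn3 : 2 < n := by
    have : (2:ℝ) < n := by linarith
    exact_mod_cast this
  have hmn : m ≤ n := by
    have : (m:ℝ) ≤ n := by linarith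
    exact_mod_cast this
  have hnm : n ≤ 50 * m := by
    have : (n:ℝ) ≤ 50 * m := by linarith
    exact_mod_cast this
  have hm0 : 0 < m := by
    have : (0:ℝ) < m := by linarith
    exact_mod_cast this
  have A1 := centralBinom_log_le hn3
  have A2 := short_interval_log_le hm0 hmn hnm
  have A3 : (Nat.sqrt (2 * n) + 2:ℝ) * log (2 * n : ℕ) ≤ x / 1000 := by
    refine le_trans ?_ (hx1 x hxx1)
    have hn4 : ((2 * n : ℕ):ℝ) ≤ 2 * x := by push_cast; linarith
    have hp : (0:ℝ) < ((2 * n : ℕ):ℝ) := mod_cast (by omega : 0 < 2 * n)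
    have hs : (Nat.sqrt (2 * n):ℝ) ≤ sqrt (2 * x) :=
      Real.nat_sqrt_le_real_sqrt.trans (Real.sqrt_le_sqrt hn4)
    have := log_natCast_nonneg (2 * n)
    gcongr
  have A4 : Chebyshev.theta (2 * n / 3 : ℕ) ≤ log 4 * (2 * n / 3) := by
    refine (Chebyshev.theta_le_log4_mul_x (by positivity)).trans ?_
    have : (0:ℝ) < log 4 := log_pos (by norm_num)
    gcongr
    refine Nat.cast_div_le.trans ?_
    push_cast; exact le_rfl
  have hl4 : 1.38 ≤ log 4 := by
    rw [show (4:ℝ) = 2 ^ 2 by norm_num, log_pow]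
    have := log_two_gt_d9
    push_cast; linarith
  have hsub : ∑ p ∈ (Ioc n (2 * n)).filter Nat.Prime, log p ≤
      ∑ p ∈ (Ioc n (n + m)).filter Nat.Prime, log p +
      ∑ p ∈ (Ioc (n + m) (2 * n)).filter Nat.Prime, log p := by
    rw [← sum_union]
    · refine sum_le_sum_of_subset_of_nonneg (fun p hp => ?_) fun p _ _ => log_natCast_nonneg _
      simp only [mem_union, mem_filter, mem_Ioc] at hp ⊢
      have := hp.2
      rcases le_or_gt p (n + m) with h | h
      · left; exact ⟨⟨hp.1.1, h⟩, this⟩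
      · right; exact ⟨⟨h, hp.1.2⟩, this⟩
    · rw [disjoint_left]
      intro p hp hp'
      simp only [mem_filter, mem_Ioc] at hp hp'
      omega
  have hmain : 0.2 * x ≤ ∑ p ∈ (Ioc (n + m) (2 * n)).filter Nat.Prime, log p := by
    have : (n:ℝ) * log 4 - log 4 * (2 * n / 3) ≥ 0.4 * x := by
      have e : (n:ℝ) * log 4 - log 4 * (2 * n / 3) = n * log 4 / 3 := by ring
      rw [e]
      have : (n:ℝ) * 1.38 ≤ n * log 4 := by gcongr
      linarith
    linarith
  have hXt : ∑ p ∈ (Ioc (n + m) (2 * n)).filter Nat.Prime, log p * (1 / 4) ≤ Xt x := by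
    unfold Xt
    calc _ ≤ ∑ p ∈ (Ioc (n + m) (2 * n)).filter Nat.Prime, wt x p := by
          refine sum_le_sum fun p hp => ?_
          simp only [mem_filter, mem_Ioc] at hp
          unfold wt
          rw [ArithmeticFunction.vonMangoldt_apply_prime hp.2]
          have c1 : ((n + m : ℕ):ℝ) ≤ p := mod_cast hp.1.1.le
          have c2 : (p:ℝ) ≤ ((2 * n : ℕ):ℝ) := mod_cast hp.1.2
          push_cast at c1 c2
          refine mul_le_mul_of_nonneg_left (W_ge (by linarith) (by linarith) (by linarith)) (log_natCast_nonneg _)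
      _ ≤ _ := by
          refine sum_le_sum_of_subset_of_nonneg (fun p hp => ?_) fun p _ _ => wt_nonneg hx0 p
          simp only [mem_filter, mem_Ioc, mem_range] at hp ⊢
          unfold Nx
          rw [lt_ceil]
          have c2 : (p:ℝ) ≤ ((2 * n : ℕ):ℝ) := mod_cast hp.1.2
          push_cast at c2
          linarith
  rw [← sum_mul] at hXt
  linarith

/-- Prime powers that are not primes contribute negligibly. -/
theorem nonprime_wt {x : ℝ} (hx : 1 ≤ x) :
    ∑ n ∈ (range (Nx x)).filter (fun n => ¬ n.Prime), wt x n ≤ 2 * sqrt (2 * x) * log (2 * x) := by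
  refine le_trans ?_ (Chebyshev.psi_sub_theta_le (by linarith))
  rw [Chebyshev.psi_sub_theta_eq_sum_not_prime]
  calc _ ≤ ∑ n ∈ (range (Nx x)).filter (fun n => ¬ n.Prime), vonMangoldt n := by
        refine sum_le_sum fun n _ => ?_
        unfold wt
        exact mul_le_of_le_one_right vonMangoldt_nonneg (W_le_one hx n)
    _ ≤ _ := by
        rw [← sum_filter_ne_zero]
        refine sum_le_sum_of_subset_of_nonneg (fun n hn => ?_) fun p _ _ => vonMangoldt_nonneg
        simp only [mem_filter, mem_range, mem_Ioc] at hn ⊢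
        have h0 : n ≠ 0 := by rintro rfl; simp at hn
        refine ⟨⟨by omega, ?_⟩, hn.1.2⟩
        unfold Nx at hn
        have := lt_ceil.mp hn.1.1
        exact le_floor this.le



/-! ### Integers in prescribed residue classes -/

/-- Counting integers in an interval with a prescribed class modulo `M` and prescribed sets of residues
modulo finitely many further primes. -/
theorem crt_count (A B : ℕ) (hAB : A ≤ B) (R : ℕ → Finset ℕ) (S : Finset ℕ) :
    ∀ M : ℕ, 0 < M → (∀ p ∈ S, p.Prime ∧ M.Coprime p ∧ R p ⊆ range p) → ∀ c : ℕ,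
    |(#{n ∈ Ioc A B | n ≡ c [MOD M] ∧ ∀ p ∈ S, n % p ∈ R p}:ℝ) - ((B:ℝ) - A) / M * ∏ p ∈ S, (#(R p):ℝ) / p|
      ≤ ∏ p ∈ S, (#(R p):ℝ) := by
  classical
  induction S using Finset.induction_on with
  | empty =>
    intro M hM _ c
    simp only [notMem_empty, false_imp_iff, implies_true, and_true, prod_empty, mul_one]
    have h := Nat.Ioc_filter_modEq_card A B hM c
    have h0 : ⌊((A : ℚ) - c) / M⌋ ≤ ⌊((B : ℚ) - c) / M⌋ := by
      apply Int.floor_le_floor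
      have : (A : ℚ) ≤ B := mod_cast hAB
      gcongr
    rw [max_eq_left (by omega)] at h
    have h' : ((#{n ∈ Ioc A B | n ≡ c [MOD M]} : ℕ) : ℚ) = (⌊((B : ℚ) - c) / M⌋ : ℚ) - ⌊((A : ℚ) - c) / M⌋ := by
      exact_mod_cast h
    have key : |((#{n ∈ Ioc A B | n ≡ c [MOD M]} : ℕ) : ℚ) - ((B : ℚ) - A) / M| ≤ 1 := by
      rw [h']
      have e : ((B : ℚ) - A) / M = (B - c) / M - (A - c) / M := by ring
      rw [e, abs_le]
      have a1 := Int.floor_le (((B : ℚ) - c) / M)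
      have a2 := Int.lt_floor_add_one (((B : ℚ) - c) / M)
      have a3 := Int.floor_le (((A : ℚ) - c) / M)
      have a4 := Int.lt_floor_add_one (((A : ℚ) - c) / M)
      constructor <;> linarith
    have key' := (Rat.cast_le (K := ℝ)).mpr key
    push_cast at key'
    exact key'
  | insert p S hp ih =>
    intro M hM hS c
    obtain ⟨hpp, hMp, hRp⟩ := hS p (mem_insert_self p S)
    have hsplit : (#{n ∈ Ioc A B | n ≡ c [MOD M] ∧ ∀ q ∈ insert p S, n % q ∈ R q}:ℝ) =
        ∑ r ∈ R p, (#{n ∈ Ioc A B | n ≡ (Nat.chineseRemainder hMp c r : ℕ) [MOD M * p] ∧ ∀ q ∈ S, n % q ∈ R q}:ℝ) := by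
      rw [← Nat.cast_sum, ← card_biUnion]
      · congr 2
        ext n
        simp only [mem_filter, mem_biUnion, forall_mem_insert]
        constructor
        · rintro ⟨h1, h2, h3, h4⟩
          refine ⟨n % p, h3, h1, ?_, h4⟩
          rw [← Nat.modEq_and_modEq_iff_modEq_mul hMp]
          exact ⟨h2.trans (Nat.chineseRemainder hMp c (n % p)).2.1.symm,
            (Nat.mod_modEq n p).symm.trans (Nat.chineseRemainder hMp c (n % p)).2.2.symm⟩
        · rintro ⟨r, hr, h1, h2, h3⟩
          rw [← Nat.modEq_and_modEq_iff_modEq_mul hMp] at h2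
          refine ⟨h1, h2.1.trans (Nat.chineseRemainder hMp c r).2.1, ?_, h3⟩
          have := h2.2.trans (Nat.chineseRemainder hMp c r).2.2
          unfold Nat.ModEq at this
          rw [this, mod_eq_of_lt (mem_range.mp (hRp hr))]
          exact hr
      · intro r hr r' hr' hne
        rw [Function.onFun, disjoint_left]
        intro n hn hn'
        simp only [mem_filter] at hn hn'
        have e1 := ((Nat.modEq_and_modEq_iff_modEq_mul hMp).mpr hn.2.1).2.trans (Nat.chineseRemainder hMp c r).2.2
        have e2 := ((Nat.modEq_and_modEq_iff_modEq_mul hMp).mpr hn'.2.1).2.trans (Nat.chineseRemainder hMp c r').2.2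
        have e3 := e1.symm.trans e2
        unfold Nat.ModEq at e3
        rw [mod_eq_of_lt (mem_range.mp (hRp hr)), mod_eq_of_lt (mem_range.mp (hRp hr'))] at e3
        exact hne e3
    rw [hsplit, prod_insert hp, prod_insert hp]
    have hb : ∀ r ∈ R p, |(#{n ∈ Ioc A B | n ≡ (Nat.chineseRemainder hMp c r : ℕ) [MOD M * p] ∧ ∀ q ∈ S, n % q ∈ R q}:ℝ)
        - ((B:ℝ) - A) / (M * p : ℕ) * ∏ q ∈ S, (#(R q):ℝ) / q| ≤ ∏ q ∈ S, (#(R q):ℝ) := by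
      intro r _
      refine ih (M * p) (Nat.mul_pos hM hpp.pos) (fun q hq => ?_) _
      obtain ⟨hqq, hMq, hRq⟩ := hS q (mem_insert_of_mem hq)
      refine ⟨hqq, Nat.Coprime.mul_left hMq ?_, hRq⟩
      exact (Nat.coprime_primes hpp hqq).mpr (fun h => hp (h ▸ hq))
    have hp0 : (p:ℝ) ≠ 0 := mod_cast hpp.ne_zero
    have hM0 : (M:ℝ) ≠ 0 := mod_cast hM.ne'
    calc _ = |∑ r ∈ R p, ((#{n ∈ Ioc A B | n ≡ (Nat.chineseRemainder hMp c r : ℕ) [MOD M * p] ∧ ∀ q ∈ S, n % q ∈ R q}:ℝ)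
        - ((B:ℝ) - A) / (M * p : ℕ) * ∏ q ∈ S, (#(R q):ℝ) / q)| := by
          rw [sum_sub_distrib, sum_const, nsmul_eq_mul]
          congr 2
          push_cast
          field_simp
      _ ≤ ∑ r ∈ R p, ∏ q ∈ S, (#(R q):ℝ) := (abs_sum_le_sum_abs _ _).trans (sum_le_sum hb)
      _ = _ := by rw [sum_const, nsmul_eq_mul]

/-- The elementary direction of Mertens' theorem. -/
theorem mertens_upper {w : ℝ} (hw : 2 ≤ w) : ∏ p ∈ PR 1 w, (1 - 1 / (p:ℝ)) ≤ 1 / log w := by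
  set N := ⌊w⌋₊ + 1 with hN
  have hPR : PR 1 w = Nat.primesBelow N := by
    ext p
    rw [mem_PR, Nat.mem_primesBelow, hN, Nat.lt_add_one_iff, le_floor_iff (by linarith)]
    constructor
    · rintro ⟨a, b, c⟩; exact ⟨c, a⟩
    · rintro ⟨a, b⟩; exact ⟨b, mod_cast b.one_lt, a⟩
  have hlog : 0 < log w := log_pos (by linarith)
  have hpos : ∀ p ∈ PR 1 w, 0 < 1 - 1 / (p:ℝ) := by
    intro p hp
    have : (1:ℝ) < p := (mem_PR.mp hp).2.1
    have : 1 / (p:ℝ) < 1 := by rw [div_lt_one (by linarith)]; exact this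
    linarith
  have hgoal : log w ≤ ∏ p ∈ PR 1 w, (1 - 1 / (p:ℝ))⁻¹ := by
    let f : ℕ →* ℝ := { toFun := fun n => (n:ℝ)⁻¹, map_one' := by simp, map_mul' := fun a b => by push_cast; rw [mul_inv] }
    have h1 := EulerProduct.summable_and_hasSum_smoothNumbers_prod_primesBelow_geometric (f := f)
      (fun {p} hp => by
        change ‖((p:ℝ))⁻¹‖ < 1
        rw [norm_of_nonneg (by positivity)]
        exact inv_lt_one_of_one_lt₀ (mod_cast hp.one_lt)) N
    have h2 : ∏ p ∈ PR 1 w, (1 - 1 / (p:ℝ))⁻¹ = ∏ p ∈ N.primesBelow, (1 - f p)⁻¹ := by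
      rw [hPR]; refine prod_congr rfl fun p _ => ?_
      change _ = (1 - ((p:ℝ))⁻¹)⁻¹
      rw [one_div]
    rw [h2]
    have h3 : (harmonic ⌊w⌋₊:ℝ) ≤ ∏ p ∈ N.primesBelow, (1 - f p)⁻¹ := by
      rw [harmonic_eq_sum_Icc]
      push_cast
      have hmem : ∀ i ∈ Icc 1 ⌊w⌋₊, i ∈ N.smoothNumbers := by
        intro i hi
        rw [mem_Icc] at hi
        exact Nat.mem_smoothNumbers_of_lt (by omega) (by omega)
      have h4 := h1.2
      let e : {i // i ∈ Icc 1 ⌊w⌋₊} ↪ N.smoothNumbers := ⟨fun i => ⟨i.1, hmem i.1 i.2⟩,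
        fun a b h => Subtype.ext (congrArg (fun t : N.smoothNumbers => (t : ℕ)) h)⟩
      refine le_trans (le_of_eq ?_) (sum_le_hasSum ((Icc 1 ⌊w⌋₊).attach.map e) (fun i _ => ?_) h4)
      · rw [sum_map, ← sum_attach]
        rfl
      · change 0 ≤ ((i.1 : ℕ):ℝ)⁻¹
        positivity
    exact le_trans (log_le_harmonic_floor w (by linarith)) h3
  rw [prod_inv_distrib] at hgoal
  rw [le_div_iff₀ hlog]
  have hPpos := prod_pos hpos
  calc _ ≤ (∏ p ∈ PR 1 w, (1 - 1 / (p:ℝ))) * (∏ p ∈ PR 1 w, (1 - 1 / (p:ℝ)))⁻¹ := by gcongr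
    _ = 1 := mul_inv_cancel₀ hPpos.ne'



/-! ### Residue classes for the sieve over integers -/

theorem nu_X (p : ℕ) : nu Polynomial.X p = 1 := by
  unfold nu
  rw [Nat.card_eq_one_iff_unique]
  refine ⟨⟨fun a b => Subtype.ext ?_⟩, ⟨⟨0, by simp⟩⟩⟩
  have ha := a.2; have hb := b.2
  rw [Polynomial.aeval_X] at ha hb
  rw [ha, hb]

theorem rho_le_sum_nu {g : ℕ} (h : Fin g → ℤ[X]) {p : ℕ} (hp : p.Prime) :
    rho (∏ i, h i) p ≤ ∑ i, nu (h i) p := by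
  classical
  have : Fact p.Prime := ⟨hp⟩
  have : NeZero p := ⟨hp.ne_zero⟩
  unfold rho nu
  simp only [card_eq_fintype_card, Fintype.card_subtype]
  refine le_trans (card_le_card ?_) card_biUnion_le
  intro a ha
  simp only [mem_filter, mem_univ, true_and, mem_biUnion] at ha ⊢
  have h2 := ha.2
  rw [map_prod, prod_eq_zero_iff] at h2
  obtain ⟨i, _, hi⟩ := h2
  exact ⟨i, hi⟩

theorem nu_le {h : ℤ[X]} (hirr : Irreducible h) (hdeg : h.natDegree ≠ 0) {p : ℕ} (hp : p.Prime) :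
    nu h p ≤ h.natDegree := by
  classical
  have : Fact p.Prime := ⟨hp⟩
  have : NeZero p := ⟨hp.ne_zero⟩
  set f := h.map (Int.castRingHom (ZMod p)) with hf
  have hf0 : f ≠ 0 := by
    intro h0
    have hd : Polynomial.C (p:ℤ) ∣ h := by
      rw [Polynomial.C_dvd_iff_dvd_coeff]
      intro i
      have := congrArg (fun t => Polynomial.coeff t i) h0
      simp only [hf, Polynomial.coeff_map, Polynomial.coeff_zero, eq_intCast] at this
      exact (ZMod.intCast_zmod_eq_zero_iff_dvd _ _).mp this
    have := (hirr.isPrimitive hdeg) _ hd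
    rw [Int.isUnit_iff] at this
    have := hp.two_le
    omega
  have key : nu h p ≤ #f.roots.toFinset := by
    unfold nu
    simp only [card_eq_fintype_card, Fintype.card_subtype]
    refine card_le_card fun a ha => ?_
    simp only [mem_filter, mem_univ, true_and] at ha
    rw [Multiset.mem_toFinset, Polynomial.mem_roots hf0, Polynomial.IsRoot, hf, Polynomial.eval_map]
    rw [Polynomial.aeval_def] at ha
    simpa using ha
  calc nu h p ≤ #f.roots.toFinset := key
    _ ≤ f.roots.card := Multiset.toFinset_card_le _
    _ ≤ f.natDegree := Polynomial.card_roots' _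
    _ ≤ _ := Polynomial.natDegree_map_le

/-- The residues modulo `p` removed in the sieve over integers: the roots of `X H` for `p ≤ z`, and `0`
for larger `p`. -/
noncomputable def Rs (H : ℤ[X]) (z:ℝ) (p : ℕ) : Finset ℕ := by
  classical
  exact if (p:ℝ) ≤ z then (range p).filter fun r => p ∣ r ∨ (p:ℤ) ∣ H.eval (r:ℤ) else {0}

theorem Rs_sub (H : ℤ[X]) (z:ℝ) {p : ℕ} (hp : 0 < p) : Rs H z p ⊆ range p := by
  unfold Rs
  split_ifs
  · exact filter_subset _ _
  · intro r hr; rw [mem_singleton] at hr; subst hr; exact mem_range.mpr hp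

theorem Rs_card_gt (H : ℤ[X]) {z : ℝ} {p : ℕ} (h : z < p) : #(Rs H z p) = 1 := by
  unfold Rs; rw [if_neg (not_le.mpr h), card_singleton]

theorem dvd_eval_mod (H : ℤ[X]) (p n : ℕ) : (p:ℤ) ∣ H.eval ((n % p : ℕ):ℤ) ↔ (p:ℤ) ∣ H.eval (n:ℤ) := by
  rw [dvd_eval_iff, dvd_eval_iff]
  simp

theorem mem_Rs {H : ℤ[X]} {z : ℝ} {p n : ℕ} (hp : 0 < p) : n % p ∈ Rs H z p ↔
    p ∣ n ∨ ((p:ℝ) ≤ z ∧ (p:ℤ) ∣ H.eval (n:ℤ)) := by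
  unfold Rs
  split_ifs with h
  · rw [mem_filter, mem_range, dvd_eval_mod, Nat.dvd_mod_iff dvd_rfl]
    have := Nat.mod_lt n hp
    tauto
  · rw [mem_singleton, ← Nat.dvd_iff_mod_eq_zero]
    tauto

theorem Rs_card_le (H : ℤ[X]) {z : ℝ} {p : ℕ} (hp : p.Prime) (h : (p:ℝ) ≤ z) : #(Rs H z p) = 1 + rho H p := by
  classical
  have : Fact p.Prime := ⟨hp⟩
  have : NeZero p := ⟨hp.ne_zero⟩
  have h1 : Rs H z p = insert 0 ((range p).filter fun r => ¬ p ∣ r ∧ (p:ℤ) ∣ H.eval (r:ℤ)) := by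
    ext r
    unfold Rs
    rw [if_pos h]
    simp only [mem_filter, mem_range, mem_insert]
    constructor
    · rintro ⟨a, b⟩
      by_cases hr : p ∣ r
      · left; exact Nat.eq_zero_of_dvd_of_lt hr a
      · right; exact ⟨a, hr, by tauto⟩
    · rintro (rfl | ⟨a, b, c⟩)
      · exact ⟨hp.pos, Or.inl (dvd_zero _)⟩
      · exact ⟨a, Or.inr c⟩
  rw [h1, card_insert_of_notMem (by simp), add_comm]
  congr 1
  unfold rho
  simp only [card_eq_fintype_card, Fintype.card_subtype]
  refine card_bij (fun r _ => (r : ZMod p)) (fun r hr => ?_) (fun r hr r' hr' he => ?_) (fun a ha => ?_)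
  · simp only [mem_filter, mem_range, mem_univ, true_and] at hr ⊢
    have hc := (dvd_eval_iff H p (r:ℤ)).mp hr.2.2
    rw [Int.cast_natCast] at hc
    refine ⟨?_, hc⟩
    rw [isUnit_iff_ne_zero, Ne, ZMod.natCast_eq_zero_iff]
    exact hr.2.1
  · simp only [mem_filter, mem_range] at hr hr'
    rw [ZMod.natCast_eq_natCast_iff'] at he
    rwa [mod_eq_of_lt hr.1, mod_eq_of_lt hr'.1] at he
  · simp only [mem_filter, mem_univ, true_and] at ha
    refine ⟨a.val, ?_, by simp⟩
    simp only [mem_filter, mem_range]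
    refine ⟨ZMod.val_lt a, ?_, ?_⟩
    · rw [← ZMod.natCast_eq_zero_iff]
      simpa using isUnit_iff_ne_zero.mp ha.1
    · rw [dvd_eval_iff]
      simpa using ha.2

/-- The first index at which the scale `yb w n` is bounded. -/
theorem exists_n {w y0 : ℝ} (hw : 1 ≤ w) (hy : exp 1 ≤ y0) :
    ∃ n : ℕ, yb w n ≤ y0 ∧ (∀ j < n, y0 < yb w j) ∧ (n:ℝ) ≤ log w + 1 := by
  have hw0 : 0 < w := by linarith
  have hy1 : 1 < y0 := lt_of_lt_of_le (by have := Real.exp_one_gt_d9; linarith) hy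
  have hex : ∃ n, yb w n ≤ y0 := by
    have h1 : Tendsto (fun n : ℕ => yb w n) atTop (nhds 1) := by
      have h2 := tendsto_pow_atTop_nhds_zero_of_lt_one (r := (1 / 2:ℝ)) (by norm_num) (by norm_num)
      have h3 := (Real.continuous_const_rpow hw0.ne').tendsto 0
      rw [Real.rpow_zero] at h3
      exact h3.comp h2
    obtain ⟨n, hn⟩ := (h1.eventually (gt_mem_nhds hy1)).exists
    exact ⟨n, hn.le⟩
  classical
  refine ⟨Nat.find hex, Nat.find_spec hex, fun j hj => not_le.mp (Nat.find_min hex hj), ?_⟩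
  rcases eq_zero_or_pos (Nat.find hex) with h0 | h0
  · rw [h0]; have := log_nonneg hw; push_cast; linarith
  · have h1 := not_le.mp (Nat.find_min hex (Nat.sub_lt h0 one_pos))
    set m := Nat.find hex - 1 with hm
    have h2 : exp 1 < yb w m := lt_of_le_of_lt hy h1
    have h3 := Real.log_lt_log (exp_pos _) h2
    rw [Real.log_exp, yb, log_rpow hw0] at h3
    have h4 : (m:ℝ) < 2 ^ m := mod_cast Nat.lt_two_pow_self
    have h5 : (2:ℝ) ^ m * ((1 / 2) ^ m * log w) = log w := by
      rw [← mul_assoc, ← mul_pow]; norm_num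
    have h6 : (2:ℝ) ^ m ≤ log w := by
      rw [← h5]; exact le_mul_of_one_le_right (by positivity) h3.le
    have h7 : ((Nat.find hex : ℕ):ℝ) = m + 1 := by
      rw [hm, Nat.cast_sub h0]; push_cast; ring
    rw [h7]; linarith

theorem DQ_card {P : Finset ℕ} (hP : ∀ p ∈ P, p.Prime) {Q : ℝ} (hQ : 0 ≤ Q) : (#(DQ P Q):ℝ) ≤ Q + 1 := by
  have h : #(DQ P Q) ≤ #(range (⌊Q⌋₊ + 1)) := by
    refine card_le_card_of_injOn (fun S => ∏ p ∈ S, p) (fun S hS => ?_) fun S hS T hT he => ?_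
    · have := (mem_DQ.mp hS).2
      simp only [coe_range, Set.mem_Iio]
      exact Nat.lt_add_one_iff.mpr (le_floor this)
    · have h1 := Nat.primeFactors_prod fun p hp => hP p ((mem_DQ.mp hS).1 hp)
      have h2 := Nat.primeFactors_prod fun p hp => hP p ((mem_DQ.mp hT).1 hp)
      simp only at he
      rw [← h1, he, h2]
  rw [card_range] at h
  calc (#(DQ P Q):ℝ) ≤ (⌊Q⌋₊ + 1 : ℕ) := mod_cast h
    _ ≤ _ := by push_cast; linarith [floor_le hQ]

theorem sum_tail_geo (n J : ℕ) : ∑ j ∈ range n, (if J ≤ j then (1 / 2:ℝ) ^ j else 0) ≤ 2 * (1 / 2) ^ J := by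
  rw [← sum_filter]
  have : (range n).filter (fun j => J ≤ j) = Ico J n := by
    ext j; simp only [mem_filter, mem_range, mem_Ico]; tauto
  rw [this, sum_Ico_eq_sum_range]
  simp only [pow_add]
  rw [← mul_sum, mul_comm]
  have := sum_geometric_two_le (n - J)
  gcongr



/-! ### The upper-bound sieve over integers -/

theorem sum_ind {ι : Type*} (N : Finset ι) (E : ι → Prop) [DecidablePred E] :
    ∑ m ∈ N, (1:ℝ) * ind (E m) = #(N.filter E) := by
  classical
  rw [card_filter]
  push_cast
  refine sum_congr rfl fun m _ => ?_
  unfold ind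
  by_cases hE : E m <;> simp [hE]

/-- The singular product: the proportion surviving the sieve by the primes `p ≤ z` other than `q1`. -/
noncomputable def Vp (H : ℤ[X]) (z:ℝ) (q1 : ℕ) : ℝ := ∏ p ∈ (PR 1 z).filter (fun p => p ≠ q1), (1 - gd H p)

theorem rho_le_gk {g k : ℕ} (hk : k ≠ 0) (h : Fin g → ℤ[X]) (hirr : ∀ i, Irreducible (h i))
    (hdeg : ∀ i, (h i).natDegree = k) {p : ℕ} (hp : p.Prime) : rho (∏ i, h i) p ≤ g * k := by
  refine (rho_le_sum_nu h hp).trans ?_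
  calc ∑ i, nu (h i) p ≤ ∑ _i : Fin g, k := sum_le_sum fun i _ => by
        have := nu_le (hirr i) (by rw [hdeg i]; exact hk) hp
        rwa [hdeg i] at this
    _ = _ := by simp

/-- A common threshold for the short-range Mertens bounds. -/
theorem C1_unif {g : ℕ} (h : Fin g → ℤ[X]) (hirr : ∀ i, Irreducible (h i)) (hdeg : ∀ i, (h i).natDegree ≠ 0) :
    ∃ y0 : ℝ, 2 ≤ y0 ∧ ∀ y, y0 ≤ y → (∑ p ∈ PR (sqrt y) y, (nu Polynomial.X p:ℝ) / p ≤ 5) ∧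
      ∀ i, ∑ p ∈ PR (sqrt y) y, (nu (h i) p:ℝ) / p ≤ 5 := by
  obtain ⟨yX, hX2, hX⟩ := C1 Polynomial.X Polynomial.irreducible_X (by simp)
  choose y hy2 hy using fun i => C1 (h i) (hirr i) (hdeg i)
  refine ⟨yX + ∑ i, y i, by linarith [sum_nonneg fun i (_ : i ∈ univ) => (by linarith [hy2 i] : 0 ≤ y i)], fun t ht => ⟨?_, fun i => ?_⟩⟩
  · exact hX t (by linarith [sum_nonneg fun i (_ : i ∈ univ) => (by linarith [hy2 i] : 0 ≤ y i)])
  · refine hy i t ?_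
    have := single_le_sum (f := y) (fun i _ => (by linarith [hy2 i] : 0 ≤ y i)) (mem_univ i)
    linarith

open Classical in
/-- Upper-bound sieve for integers in a residue class modulo `q` that avoid `0` modulo primes up to `w` and
roots of `H` modulo primes up to `z = yb w J`. -/
theorem int_sieve {g k : ℕ} (hk : k ≠ 0) (h : Fin g → ℤ[X]) (hirr : ∀ i, Irreducible (h i))
    (hdeg : ∀ i, (h i).natDegree = k)
    (hroot : ∀ p : ℕ, p.Prime → rho (∏ i, h i) p < p - 1) :
    ∃ Y : ℝ, 1 ≤ Y ∧ ∀ w : ℝ, 2 ≤ w → ∀ J A B : ℕ, A ≤ B → ∀ q q1 : ℕ, q.Prime → q1.Prime →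
      (yb w J < q ∨ q = q1) → ∀ c : ℕ,
      (#{n ∈ Ioc A B | n ≡ c [MOD q] ∧ (∀ p ∈ PR 1 w, p ≠ q → p ≠ q1 → ¬ p ∣ n) ∧
        ∀ p ∈ PR 1 (yb w J), p ≠ q → p ≠ q1 → ¬ (p:ℤ) ∣ (∏ i, h i).eval (n:ℤ)}:ℝ) ≤
      8 * (((B:ℝ) - A) / q) * Vp (∏ i, h i) (yb w J) q1 / log w +
        2 * (Y * w ^ (110 + 100 * ((g:ℝ) + 1) * (1 / 2) ^ J)) ^ 2 := by
  obtain ⟨y1, hy12, hy1⟩ := C1_unif h hirr (fun i => by rw [hdeg i]; exact hk)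
  set H := ∏ i, h i with hH
  set y0 : ℝ := max (max y1 (exp 1)) ((2 * (1 + g * k)) ^ 2) with hy0
  have hy0e : exp 1 ≤ y0 := (le_max_right _ _).trans (le_max_left _ _)
  have hy01 : y1 ≤ y0 := (le_max_left _ _).trans (le_max_left _ _)
  have hy0g : (2 * (1 + g * k):ℝ) ^ 2 ≤ y0 := le_max_right _ _
  have hy0one : 1 ≤ y0 := by linarith
  refine ⟨y0 ^ (2 * ⌈y0⌉₊ + 1), one_le_pow₀ hy0one, ?_⟩
  intro w hw J A B hAB q q1 hq hq1 hqq c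
  have hw1 : 1 ≤ w := by linarith
  set z := yb w J with hz
  obtain ⟨n, hn1, hn2, -⟩ := exists_n hw1 hy0e
  set P := (PR 1 w).filter (fun p => p ≠ q ∧ p ≠ q1) with hP
  have hPp : ∀ p ∈ P, p.Prime := fun p hp => PR_prime (mem_filter.mp hp).1
  have hPw : ∀ p ∈ P, (p:ℝ) ≤ w := fun p hp => (mem_PR.mp (mem_filter.mp hp).1).2.2
  set u : ℕ → ℝ := fun p => (#(Rs H z p):ℝ) / p with hu
  set L : ℕ → ℕ := fun j => if j < J then 5 else 5 * (g + 1) with hL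
  set Q : ℝ := y0 ^ (2 * ⌈y0⌉₊ + 1) * w ^ (110 + 100 * ((g:ℝ) + 1) * (1 / 2) ^ J) with hQ
  have hrho : ∀ p ∈ P, rho H p ≤ g * k := fun p hp => rho_le_gk hk h hirr hdeg (hPp p hp)
  have hcard : ∀ p ∈ P, (#(Rs H z p):ℝ) ≤ 1 + g * k := by
    intro p hp
    by_cases hpz : (p:ℝ) ≤ z
    · rw [Rs_card_le H (hPp p hp) hpz]
      have := hrho p hp
      have : (rho H p:ℝ) ≤ g * k := mod_cast this
      push_cast; linarith
    · rw [Rs_card_gt H (not_le.mp hpz)]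
      have : (0:ℝ) ≤ g * k := by positivity
      push_cast; linarith
  have hQ1 : 1 ≤ Q := by
    have : 1 ≤ w ^ (110 + 100 * ((g:ℝ) + 1) * (1 / 2) ^ J) := one_le_rpow hw1 (by positivity)
    exact one_le_mul_of_one_le_of_one_le (one_le_pow₀ hy0one) this
  have hub := (block_sieve ((Ioc A B).filter fun m => m ≡ c [MOD q]) (fun _ => 1) (fun p m => m % p ∈ Rs H z p) u
    (((B:ℝ) - A) / q) w y0 P n L Q (fun p hp => ⟨hPp p hp, hPw p hp⟩) (fun _ _ => zero_le_one)
    (by have : (A:ℝ) ≤ B := mod_cast hAB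
        have : 0 ≤ (B:ℝ) - A := by linarith
        positivity) hw1 hy0one hn1 (fun p _ => by positivity)
    (fun p hp => by
      have : #(Rs H z p) ≤ p := by
        have := card_le_card (Rs_sub H z (hPp p hp).pos); rwa [card_range] at this
      have hp0 : (0:ℝ) < p := mod_cast (hPp p hp).pos
      rw [hu]; simp only
      rw [div_le_one hp0]; exact_mod_cast this)
    (fun j => by rw [hL]; simp only; split_ifs <;> omega)
    (fun j hj D hD hDj => by
      have hyj := hn2 j hj
      have hsq : (2 * (1 + g * k):ℝ) < yb w (j + 1) := by
        rw [yb_succ (by linarith)]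
        exact Real.lt_sqrt_of_sq_lt (lt_of_le_of_lt hy0g hyj)
      have hDPR : D ⊆ PR (sqrt (yb w j)) (yb w j) := by
        intro p hp
        rw [mem_PR, ← yb_succ (by linarith)]
        exact ⟨hPp p (hD hp), hDj p hp⟩
      constructor
      · intro p hp
        have h1 := hcard p (hD hp)
        have h2 := (hDj p hp).1
        have hp0 : (0:ℝ) < p := mod_cast (hPp p (hD hp)).pos
        rw [hu]; simp only
        rw [div_le_iff₀ hp0]; linarith
      · have hc := hy1 (yb w j) (hy01.trans hyj.le)
        have mono : ∀ f : ℤ[X], ∑ p ∈ D, (nu f p:ℝ) / p ≤ ∑ p ∈ PR (sqrt (yb w j)) (yb w j), (nu f p:ℝ) / p :=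
          fun f => sum_le_sum_of_subset_of_nonneg hDPR fun p _ _ => by positivity
        rw [hL, hu]; simp only
        split_ifs with hjJ
        · refine le_trans (le_of_eq ?_) ((mono Polynomial.X).trans (hc.1.trans (by norm_num)))
          refine sum_congr rfl fun p hp => ?_
          rw [nu_X, Rs_card_gt]
          exact lt_of_le_of_lt (yb_anti hw1 (by omega)) (hDj p hp).1
        · have : ∀ p ∈ D, (#(Rs H z p):ℝ) / p ≤ (nu Polynomial.X p:ℝ) / p + ∑ i, (nu (h i) p:ℝ) / p := by
            intro p hp
            have hpz : (p:ℝ) ≤ z := (hDj p hp).2.trans (yb_anti hw1 (by omega))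
            rw [Rs_card_le H (hPp p (hD hp)) hpz, ← sum_div, ← add_div, nu_X]
            have := rho_le_sum_nu h (hPp p (hD hp))
            have : (rho H p:ℝ) ≤ ∑ i, (nu (h i) p:ℝ) := mod_cast this
            push_cast
            gcongr
          refine (sum_le_sum this).trans ?_
          rw [sum_add_distrib, sum_comm]
          have h5 : ∑ i, ∑ p ∈ D, (nu (h i) p:ℝ) / p ≤ ∑ _i : Fin g, (5:ℝ) :=
            sum_le_sum fun i _ => (mono (h i)).trans (hc.2 i)
          rw [sum_const, card_univ, Fintype.card_fin, nsmul_eq_mul] at h5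
          have h6 := (mono Polynomial.X).trans hc.1
          push_cast; linarith)
    (by
      rw [hQ]
      refine mul_le_mul_of_nonneg_left (rpow_le_rpow_of_exponent_le hw1 ?_) (by positivity)
      have h1 : ∑ j ∈ range n, (1 / 2:ℝ) ^ j * L j ≤ ∑ j ∈ range n, (5 * (1 / 2:ℝ) ^ j +
          (5 * ((g:ℝ) + 1)) * (if J ≤ j then (1 / 2:ℝ) ^ j else 0)) := by
        refine sum_le_sum fun j _ => ?_
        rw [hL]; simp only
        have := pow_pos (show (0:ℝ) < 1 / 2 by norm_num) j
        split_ifs with a b b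
        · omega
        · push_cast; linarith
        · push_cast; linarith
        · omega
      rw [sum_add_distrib, ← mul_sum, ← mul_sum] at h1
      have h2 := sum_geometric_two_le n
      have h3 := sum_tail_geo n J
      have h4 : (5 * ((g:ℝ) + 1)) * ∑ j ∈ range n, (if J ≤ j then (1 / 2:ℝ) ^ j else 0) ≤
          (5 * ((g:ℝ) + 1)) * (2 * (1 / 2) ^ J) := by gcongr
      linarith)).1
  have hlhs : (#{n ∈ Ioc A B | n ≡ c [MOD q] ∧ (∀ p ∈ PR 1 w, p ≠ q → p ≠ q1 → ¬ p ∣ n) ∧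
        ∀ p ∈ PR 1 z, p ≠ q → p ≠ q1 → ¬ (p:ℤ) ∣ H.eval (n:ℤ)}:ℝ) ≤
      ∑ m ∈ (Ioc A B).filter (fun m => m ≡ c [MOD q]), 1 * ind (∀ p ∈ P, ¬ m % p ∈ Rs H z p) := by
    rw [sum_ind]
    refine Nat.cast_le.mpr (card_le_card fun m hm => ?_)
    simp only [mem_filter] at hm ⊢
    refine ⟨⟨hm.1, hm.2.1⟩, fun p hp => ?_⟩
    have hp' := mem_filter.mp hp
    rw [mem_Rs (hPp p hp).pos]
    rintro (h1 | ⟨h1, h2⟩)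
    · exact hm.2.2.1 p hp'.1 hp'.2.1 hp'.2.2 h1
    · exact hm.2.2.2 p (mem_PR.mpr ⟨hPp p hp, (mem_PR.mp hp'.1).2.1, h1⟩) hp'.2.1 hp'.2.2 h2
  refine hlhs.trans (hub.trans (add_le_add ?_ ?_))
  · have hprod : ∏ p ∈ P, (1 - u p) = (∏ p ∈ P, (1 - 1 / (p:ℝ))) * Vp H z q1 := by
      have hV : Vp H z q1 = ∏ p ∈ P, (if (p:ℝ) ≤ z then 1 - gd H p else 1) := by
        unfold Vp
        rw [← prod_filter]
        refine prod_congr ?_ fun _ _ => rfl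
        ext p
        simp only [hP, mem_filter, mem_PR]
        constructor
        · rintro ⟨⟨a, b, c⟩, d⟩
          refine ⟨⟨⟨a, b, c.trans ?_⟩, ?_, d⟩, c⟩
          · have := yb_anti hw1 (Nat.zero_le J); rwa [yb_zero] at this
          · rintro rfl
            rcases hqq with h' | h'
            · linarith
            · exact d h'
        · rintro ⟨⟨⟨a, b, c⟩, d, e⟩, f⟩
          exact ⟨⟨a, b, f⟩, e⟩
      rw [hV, ← prod_mul_distrib]
      refine prod_congr rfl fun p hp => ?_
      have hpp := hPp p hp
      have hp1 : (1:ℝ) < p := mod_cast hpp.one_lt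
      rw [hu]; simp only
      split_ifs with hpz
      · rw [Rs_card_le H hpp hpz, gd, Nat.totient_prime hpp, Nat.cast_sub hpp.one_lt.le]
        have : (p:ℝ) - 1 ≠ 0 := by linarith
        have : (p:ℝ) ≠ 0 := by linarith
        push_cast
        field_simp
        ring
      · rw [Rs_card_gt H (not_le.mp hpz)]; push_cast; ring
    have hV0 : 0 ≤ Vp H z q1 := by
      refine prod_nonneg fun p hp => ?_
      have hpp := PR_prime (mem_filter.mp hp).1
      have h1 := hroot p hpp
      have hp1 : (1:ℝ) < p := mod_cast hpp.one_lt
      rw [gd, Nat.totient_prime hpp, Nat.cast_sub hpp.one_lt.le, sub_nonneg, div_le_one (by push_cast; linarith)]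
      have : ((rho H p : ℕ):ℝ) ≤ ((p - 1 : ℕ):ℝ) := mod_cast h1.le
      rw [Nat.cast_sub hpp.one_lt.le] at this
      exact this
    have hPm : ∏ p ∈ P, (1 - 1 / (p:ℝ)) ≤ 4 / log w := by
      have hM := mertens_upper hw
      have half : ∀ p : ℕ, p.Prime → 1 / 2 ≤ 1 - 1 / (p:ℝ) := by
        intro p hpp
        have hp1 : (2:ℝ) ≤ p := mod_cast hpp.two_le
        have : 1 / (p:ℝ) ≤ 1 / 2 := by gcongr
        linarith
      have hsplit : ∏ p ∈ PR 1 w, (1 - 1 / (p:ℝ)) = (∏ p ∈ P, (1 - 1 / (p:ℝ))) *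
          ∏ p ∈ (PR 1 w).filter (fun p => ¬ (p ≠ q ∧ p ≠ q1)), (1 - 1 / (p:ℝ)) := by
        rw [hP, prod_filter_mul_prod_filter_not]
      have hrest : (1 / 4:ℝ) ≤ ∏ p ∈ (PR 1 w).filter (fun p => ¬ (p ≠ q ∧ p ≠ q1)), (1 - 1 / (p:ℝ)) := by
        have hc2 : #((PR 1 w).filter (fun p => ¬ (p ≠ q ∧ p ≠ q1))) ≤ 2 := by
          refine (card_le_card (t := {q, q1}) fun p hp => ?_).trans card_le_two
          have := (mem_filter.mp hp).2
          simp only [mem_insert, mem_singleton]; tauto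
        calc (1 / 4:ℝ) = (1 / 2) ^ 2 := by norm_num
          _ ≤ (1 / 2) ^ #((PR 1 w).filter (fun p => ¬ (p ≠ q ∧ p ≠ q1))) :=
              pow_le_pow_of_le_one (by norm_num) (by norm_num) hc2
          _ = ∏ p ∈ (PR 1 w).filter (fun p => ¬ (p ≠ q ∧ p ≠ q1)), (1 / 2:ℝ) := by rw [prod_const]
          _ ≤ _ := prod_le_prod (fun _ _ => by norm_num) fun p hp => half p (PR_prime (mem_filter.mp hp).1)
      have hP0 : 0 ≤ ∏ p ∈ P, (1 - 1 / (p:ℝ)) := prod_nonneg fun p hp => by linarith [half p (hPp p hp)]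
      rw [hsplit] at hM
      have : (∏ p ∈ P, (1 - 1 / (p:ℝ))) * (1 / 4) ≤ 1 / log w :=
        (mul_le_mul_of_nonneg_left hrest hP0).trans hM
      calc _ ≤ 4 * (1 / log w) := by linarith
        _ = _ := by ring
    rw [hprod]
    have hX : 0 ≤ ((B:ℝ) - A) / q := by
      have : (A:ℝ) ≤ B := mod_cast hAB
      have : 0 ≤ (B:ℝ) - A := by linarith
      positivity
    calc 2 * (((B:ℝ) - A) / q) * ((∏ p ∈ P, (1 - 1 / (p:ℝ))) * Vp H z q1)
        ≤ 2 * (((B:ℝ) - A) / q) * (4 / log w * Vp H z q1) := by gcongr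
      _ = _ := by ring
  · have hR : ∀ S ∈ DQ P Q, Rm ((Ioc A B).filter fun m => m ≡ c [MOD q]) (fun _ => 1) (fun p m => m % p ∈ Rs H z p) u
        (((B:ℝ) - A) / q) S ≤ Q := by
      intro S hS
      have hSP := (mem_DQ.mp hS).1
      have := crt_count A B hAB (Rs H z) S q hq.pos (fun p hp => ⟨hPp p (hSP hp),
        (Nat.coprime_primes hq (hPp p (hSP hp))).mpr (mem_filter.mp (hSP hp)).2.1.symm, Rs_sub H z (hPp p (hSP hp)).pos⟩) c
      unfold Rm
      have e : ∑ m ∈ (Ioc A B).filter (fun m => m ≡ c [MOD q]), (1:ℝ) * ind (∀ p ∈ S, m % p ∈ Rs H z p) =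
          (#{n ∈ Ioc A B | n ≡ c [MOD q] ∧ ∀ p ∈ S, n % p ∈ Rs H z p}:ℝ) := by
        rw [sum_ind, filter_filter]
      rw [e]
      refine this.trans (le_trans ?_ (mem_DQ.mp hS).2)
      rw [Nat.cast_prod]
      refine prod_le_prod (fun _ _ => by positivity) fun p hp => ?_
      have := card_le_card (Rs_sub H z (hPp p (hSP hp)).pos)
      rw [card_range] at this
      exact_mod_cast this
    calc _ ≤ ∑ S ∈ DQ P Q, Q := sum_le_sum hR
      _ = #(DQ P Q) * Q := by rw [sum_const, nsmul_eq_mul]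
      _ ≤ (Q + 1) * Q := by
          have := DQ_card hPp (Q := Q) (by linarith)
          gcongr
      _ ≤ 2 * Q ^ 2 := by nlinarith



/-! ### Values divisible by the square of a prime -/

theorem bezout_deriv (h : ℤ[X]) (hirr : Irreducible h) (hdeg : h.natDegree ≠ 0) :
    ∃ D : ℤ, D ≠ 0 ∧ ∃ a b : ℤ[X], a * h + b * Polynomial.derivative h = Polynomial.C D := by
  have hQ : Irreducible (h.map (Int.castRingHom ℚ)) :=
    (Polynomial.IsPrimitive.Int.irreducible_iff_irreducible_map_cast (hirr.isPrimitive hdeg)).mp hirr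
  obtain ⟨a, b, hab⟩ := hQ.separable
  obtain ⟨d1, hd1, h1⟩ := IsLocalization.integerNormalization_spec (nonZeroDivisors ℤ) a
  obtain ⟨d2, hd2, h2⟩ := IsLocalization.integerNormalization_spec (nonZeroDivisors ℤ) b
  set a1 := IsLocalization.integerNormalization (nonZeroDivisors ℤ) a
  set b1 := IsLocalization.integerNormalization (nonZeroDivisors ℤ) b
  refine ⟨d1 * d2, mul_ne_zero (nonZeroDivisors.ne_zero hd1) (nonZeroDivisors.ne_zero hd2),
    Polynomial.C (d2:ℤ) * a1, Polynomial.C (d1:ℤ) * b1, ?_⟩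
  apply Polynomial.map_injective (Int.castRingHom ℚ) Int.cast_injective
  have e : (algebraMap ℤ ℚ) = Int.castRingHom ℚ := rfl
  rw [e] at h1 h2
  simp only [Polynomial.map_add, Polynomial.map_mul, h1, h2, Polynomial.map_C, Polynomial.derivative_map] at hab ⊢
  have s1 : ((d1:ℤ) • a) = Polynomial.C ((d1:ℤ) : ℚ) * a := by
    rw [← Polynomial.smul_eq_C_mul]; exact (Int.cast_smul_eq_zsmul ℚ _ _).symm
  have s2 : ((d2:ℤ) • b) = Polynomial.C ((d2:ℤ) : ℚ) * b := by
    rw [← Polynomial.smul_eq_C_mul]; exact (Int.cast_smul_eq_zsmul ℚ _ _).symm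
  rw [s1, s2]
  simp only [eq_intCast, map_intCast, Int.cast_mul, map_mul] at *
  linear_combination (((d1:ℤ) : Polynomial ℚ) * ((d2:ℤ) : Polynomial ℚ)) * hab

/-- Roots modulo a prime not dividing the discriminant lift uniquely modulo its square. -/
theorem sq_count (h : ℤ[X]) (hirr : Irreducible h) (hdeg : h.natDegree ≠ 0) :
    ∃ D : ℕ, ∀ q : ℕ, q.Prime → D < q → ∀ A B : ℕ, A ≤ B →
      (#((Ioc A B).filter fun n : ℕ => ((q:ℤ) ^ 2 ∣ h.eval (n:ℤ))):ℝ) ≤ h.natDegree * (((B:ℝ) - A) / (q:ℝ) ^ 2 + 1) := by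
  classical
  obtain ⟨D, hD, a, b, hab⟩ := bezout_deriv h hirr hdeg
  refine ⟨D.natAbs, fun q hq hDq A B hAB => ?_⟩
  have : NeZero q := ⟨hq.ne_zero⟩
  have hqZ : Prime (q:ℤ) := Nat.prime_iff_prime_int.mp hq
  have hnd : ∀ n : ℤ, (q:ℤ) ∣ h.eval n → ¬ (q:ℤ) ∣ (Polynomial.derivative h).eval n := by
    intro n h1 h2
    have e := congrArg (Polynomial.eval n) hab
    simp only [Polynomial.eval_add, Polynomial.eval_mul, Polynomial.eval_C] at e
    have h3 : (q:ℤ) ∣ D := by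
      rw [← e]; exact dvd_add (h1.mul_left _) (h2.mul_left _)
    have := le_of_dvd (Int.natAbs_pos.mpr hD) (Int.natCast_dvd.mp h3)
    omega
  set s := (Ioc A B).filter fun n : ℕ => ((q:ℤ) ^ 2 ∣ h.eval (n:ℤ)) with hs
  have hfib : ∀ r ∈ s.image (fun n : ℕ => (n : ZMod q)), (#{n ∈ s | ((n : ℕ) : ZMod q) = r}:ℝ) ≤
      ((B:ℝ) - A) / (q:ℝ) ^ 2 + 1 := by
    intro r hr
    obtain ⟨n0, hn0, rfl⟩ := mem_image.mp hr
    have hsub : {n ∈ s | ((n : ℕ) : ZMod q) = n0} ⊆ {n ∈ Ioc A B | n ≡ n0 [MOD q ^ 2]} := by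
      intro n hn
      simp only [hs, mem_filter] at hn hn0 ⊢
      refine ⟨hn.1.1, ?_⟩
      have h1 : (q:ℤ) ∣ (n:ℤ) - n0 := by
        have := (ZMod.natCast_eq_natCast_iff _ _ _).mp hn.2
        exact (Nat.modEq_iff_dvd.mp this.symm)
      obtain ⟨c, hc⟩ := Polynomial.binomExpansion h (n0:ℤ) ((n:ℤ) - n0)
      rw [add_sub_cancel] at hc
      have h2 : (q:ℤ) ^ 2 ∣ (Polynomial.derivative h).eval (n0:ℤ) * ((n:ℤ) - n0) := by
        have e : (Polynomial.derivative h).eval (n0:ℤ) * ((n:ℤ) - n0) =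
            h.eval (n:ℤ) - h.eval (n0:ℤ) - c * ((n:ℤ) - n0) ^ 2 := by rw [hc]; ring
        rw [e]
        exact dvd_sub (dvd_sub hn.1.2 hn0.2) ((pow_dvd_pow_of_dvd h1 2).mul_left _)
      have h3 : ¬ (q:ℤ) ∣ (Polynomial.derivative h).eval (n0:ℤ) :=
        hnd _ (dvd_trans (dvd_pow_self _ two_ne_zero) hn0.2)
      have h4 : (q:ℤ) ^ 2 ∣ (n:ℤ) - n0 := by
        refine IsCoprime.dvd_of_dvd_mul_left ?_ h2
        exact IsCoprime.pow_left ((Prime.coprime_iff_not_dvd hqZ).mpr h3)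
      refine (Nat.modEq_iff_dvd.mpr ?_).symm
      push_cast
      exact h4
    have hc := crt_count A B hAB (fun _ => ∅) ∅ (q ^ 2) (pow_pos hq.pos 2) (by simp) n0
    simp only [notMem_empty, false_imp_iff, implies_true, and_true, prod_empty, mul_one] at hc
    have h5 := (abs_le.mp hc).2
    push_cast at h5
    have h6 : (#{n ∈ s | ((n : ℕ) : ZMod q) = n0}:ℝ) ≤ #{n ∈ Ioc A B | n ≡ n0 [MOD q ^ 2]} := by
      exact_mod_cast card_le_card hsub
    linarith
  have himg : #(s.image (fun n : ℕ => (n : ZMod q))) ≤ h.natDegree := by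
    refine le_trans ?_ (nu_le hirr hdeg hq)
    unfold nu
    simp only [card_eq_fintype_card, Fintype.card_subtype]
    refine card_le_card fun r hr => ?_
    obtain ⟨n, hn, rfl⟩ := mem_image.mp hr
    simp only [hs, mem_filter, mem_univ, true_and] at hn ⊢
    have := (dvd_eval_iff h q (n:ℤ)).mp (dvd_trans (dvd_pow_self _ two_ne_zero) hn.2)
    simpa using this
  rw [card_eq_sum_card_image (fun n : ℕ => (n : ZMod q)) s]
  push_cast
  refine (sum_le_sum hfib).trans ?_
  rw [sum_const, nsmul_eq_mul]
  have : (0:ℝ) ≤ ((B:ℝ) - A) / (q:ℝ) ^ 2 + 1 := by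
    have : (A:ℝ) ≤ B := mod_cast hAB
    have : 0 ≤ (B:ℝ) - A := by linarith
    positivity
  have h7 : (#(s.image (fun n : ℕ => (n : ZMod q))):ℝ) ≤ h.natDegree := mod_cast himg
  gcongr

theorem sum_inv_sq_PR {z y : ℝ} (hz : 1 ≤ z) : ∑ q ∈ PR z y, 1 / (q:ℝ) ^ 2 ≤ 2 / z := by
  have key : ∀ m N : ℕ, 0 < m → ∑ q ∈ Ioc m N, (1:ℝ) / ((q:ℕ):ℝ) ^ 2 ≤ 1 / (m:ℝ) := by
    intro m N hm
    rcases le_or_gt m N with hmN | hmN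
    · have : ∑ q ∈ Ioc m N, (1:ℝ) / ((q:ℕ):ℝ) ^ 2 ≤ 1 / (m:ℝ) - 1 / (N:ℝ) := by
        induction N, hmN using Nat.le_induction with
        | base => simp
        | succ N hN ih =>
          rw [sum_Ioc_succ_top (by omega)]
          have hN0 : (0:ℝ) < N := mod_cast (by omega : 0 < N)
          have : 1 / ((N + 1 : ℕ):ℝ) ^ 2 ≤ 1 / (N:ℝ) - 1 / ((N + 1 : ℕ):ℝ) := by
            push_cast
            rw [div_sub_div _ _ hN0.ne' (by positivity), div_le_div_iff₀ (by positivity) (by positivity)]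
            nlinarith
          linarith
      have : (0:ℝ) ≤ 1 / (N:ℝ) := by positivity
      linarith
    · rw [Ioc_eq_empty (by omega)]; simp
  have hm : 0 < ⌊z⌋₊ := Nat.floor_pos.mpr (by linarith)
  calc _ ≤ ∑ q ∈ Ioc ⌊z⌋₊ ⌊y⌋₊, (1:ℝ) / ((q:ℕ):ℝ) ^ 2 := by
        refine sum_le_sum_of_subset_of_nonneg (fun q hq => ?_) fun _ _ _ => by positivity
        rw [mem_PR] at hq
        rw [mem_Ioc]
        exact ⟨(floor_lt (by linarith)).mpr hq.2.1, le_floor hq.2.2⟩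
    _ ≤ 1 / (⌊z⌋₊:ℝ) := key _ _ hm
    _ ≤ _ := by
        rw [div_le_div_iff₀ (mod_cast hm) (by linarith)]
        have := Nat.lt_floor_add_one z
        have : (1:ℝ) ≤ ⌊z⌋₊ := mod_cast hm
        linarith



/-! ### The singular product -/

lemma one_sub_ge_exp {u : ℝ} (h0 : 0 ≤ u) (h1 : u ≤ 1 / 2) : exp (-(u + u ^ 2)) ≤ 1 - u := by
  rw [exp_neg, inv_le_comm₀ (exp_pos _) (by linarith)]
  refine le_trans ?_ (Real.quadratic_le_exp_of_nonneg (by positivity))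
  rw [inv_le_iff_one_le_mul₀ (by linarith)]
  have h2 : 0 ≤ u ^ 2 * ((1 - u) * (1 + u) ^ 2 - 2 * u) := by
    refine mul_nonneg (sq_nonneg _) ?_
    nlinarith [mul_nonneg h0 h0, mul_nonneg (mul_nonneg h0 h0) (by linarith : 0 ≤ 1 / 2 - u)]
  nlinarith

lemma rho_pred {H : ℤ[X]} (hroot : ∀ p : ℕ, p.Prime → rho H p < p - 1) {p : ℕ} (hp : p.Prime) :
    (rho H p:ℝ) + 2 ≤ p ∧ (2:ℝ) ≤ p := by
  have h := hroot p hp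
  have h2 := hp.two_le
  have h3 : rho H p + 2 ≤ p := by omega
  exact ⟨mod_cast h3, mod_cast h2⟩

lemma gd_eq (H : ℤ[X]) {p : ℕ} (hp : p.Prime) : gd H p = (rho H p:ℝ) / ((p:ℝ) - 1) := by
  rw [gd, Nat.totient_prime hp, Nat.cast_sub hp.one_lt.le]; simp

lemma gd_lt_one {H : ℤ[X]} (hroot : ∀ p : ℕ, p.Prime → rho H p < p - 1) {p : ℕ} (hp : p.Prime) :
    gd H p < 1 := by
  obtain ⟨h1, h2⟩ := rho_pred hroot hp
  rw [gd_eq H hp, div_lt_one (by linarith)]; linarith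

lemma gd_le_two_nu {g : ℕ} (h : Fin g → ℤ[X]) {p : ℕ} (hp : p.Prime) :
    gd (∏ i, h i) p ≤ 2 * ∑ i, (nu (h i) p:ℝ) / p := by
  have h2 : (2:ℝ) ≤ p := mod_cast hp.two_le
  have h1 : (rho (∏ i, h i) p:ℝ) ≤ ∑ i, (nu (h i) p:ℝ) := mod_cast rho_le_sum_nu h hp
  rw [gd_eq _ hp, ← sum_div, ← mul_div_assoc, div_le_div_iff₀ (by linarith) (by linarith)]
  have : (0:ℝ) ≤ ∑ i, (nu (h i) p:ℝ) := by positivity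
  nlinarith [mul_le_mul_of_nonneg_right h1 (by linarith : (0:ℝ) ≤ p)]

/-- The singular product is at least a constant times `(log z)^(-g)`. -/
theorem Vp_lower {g k : ℕ} (hk : k ≠ 0) (h : Fin g → ℤ[X]) (hirr : ∀ i, Irreducible (h i))
    (hdeg : ∀ i, (h i).natDegree = k) (hroot : ∀ p : ℕ, p.Prime → rho (∏ i, h i) p < p - 1) :
    ∃ c : ℝ, 0 < c ∧ ∀ z : ℝ, 2 ≤ z → ∀ q1 : ℕ, c / (log z) ^ g ≤ Vp (∏ i, h i) z q1 := by
  set H := ∏ i, h i with hH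
  choose A hA using fun i => C2 (h i) (hirr i) (by rw [hdeg i]; exact hk)
  set K : ℝ := g * k with hK
  have hK0 : 0 ≤ K := by positivity
  set p0 : ℕ := 2 * (g * k) + 2 with hp0
  have hp0r : (p0:ℝ) = 2 * K + 2 := by rw [hp0, hK]; push_cast; ring
  set E : ℝ := 2 * K + 4 * K ^ 2 with hE
  have hE0 : 0 ≤ E := by positivity
  set s : ℕ → ℝ := fun p => if p ≤ p0 then 1 / (p0:ℝ) else 1 with hs
  have hp0pos : (0:ℝ) < p0 := by rw [hp0r]; linarith
  have hs0 : ∀ p, 0 ≤ s p := fun p => by rw [hs]; simp only; split_ifs <;> positivity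
  refine ⟨(1 / (p0:ℝ)) ^ p0 * exp (-(∑ i, A i + 2 * E)), by positivity, fun z hz q1 => ?_⟩
  have hfac : ∀ p ∈ PR 1 z, s p * exp (-((rho H p:ℝ) / p + E * (1 / (p:ℝ) ^ 2))) ≤ 1 - gd H p := by
    intro p hp
    have hpp := PR_prime hp
    obtain ⟨h1, h2⟩ := rho_pred hroot hpp
    have hr0 : (0:ℝ) ≤ rho H p := by positivity
    by_cases hpl : p ≤ p0
    · have e : s p = 1 / (p0:ℝ) := by rw [hs]; simp [hpl]
      have hple : (p:ℝ) ≤ p0 := mod_cast hpl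
      have h3 : exp (-((rho H p:ℝ) / p + E * (1 / (p:ℝ) ^ 2))) ≤ 1 := by
        rw [Real.exp_le_one_iff, neg_nonpos]; positivity
      have h4 : 1 / (p0:ℝ) ≤ 1 - gd H p := by
        rw [gd_eq H hpp, one_sub_div (by linarith), div_le_div_iff₀ hp0pos (by linarith)]
        nlinarith
      rw [e]
      calc _ ≤ 1 / (p0:ℝ) * 1 := by gcongr
        _ ≤ _ := by linarith
    · have e : s p = 1 := by rw [hs]; simp [hpl]
      have hplt : (p0:ℝ) < p := mod_cast not_le.mp hpl
      rw [hp0r] at hplt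
      have hrK : (rho H p:ℝ) ≤ K := by rw [hK]; exact_mod_cast rho_le_gk hk h hirr hdeg hpp
      have hu1 : gd H p ≤ 1 / 2 := by
        rw [gd_eq H hpp, div_le_iff₀ (by linarith)]; linarith
      rw [e, one_mul]
      refine le_trans (exp_le_exp.mpr (neg_le_neg ?_)) (one_sub_ge_exp (gd_nonneg H p) hu1)
      rw [gd_eq H hpp]
      have hp1 : (p:ℝ) / 2 ≤ (p:ℝ) - 1 := by linarith
      have hA1 : (rho H p:ℝ) / ((p:ℝ) - 1) ≤ (rho H p:ℝ) / p + 2 * K * (1 / (p:ℝ) ^ 2) := by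
        have : (rho H p:ℝ) / ((p:ℝ) - 1) = (rho H p:ℝ) / p + (rho H p:ℝ) * (1 / (p * (p - 1))) := by
          have : (p:ℝ) - 1 ≠ 0 := by linarith
          have : (p:ℝ) ≠ 0 := by linarith
          field_simp; ring
        rw [this]
        have h5 : 1 / ((p:ℝ) * (p - 1)) ≤ 2 * (1 / (p:ℝ) ^ 2) := by
          rw [← mul_div_assoc, div_le_div_iff₀ (by nlinarith) (by positivity)]; nlinarith
        have : (rho H p:ℝ) * (1 / (p * (p - 1))) ≤ K * (2 * (1 / (p:ℝ) ^ 2)) :=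
          mul_le_mul hrK h5 (by have : 0 < (p:ℝ) - 1 := by linarith
                                positivity) hK0
        linarith
      have hA2 : ((rho H p:ℝ) / ((p:ℝ) - 1)) ^ 2 ≤ 4 * K ^ 2 * (1 / (p:ℝ) ^ 2) := by
        have : (rho H p:ℝ) / ((p:ℝ) - 1) ≤ 2 * K * (1 / p) := by
          rw [mul_one_div, div_le_div_iff₀ (by linarith) (by linarith)]
          nlinarith
        calc _ ≤ (2 * K * (1 / (p:ℝ))) ^ 2 := by
              refine pow_le_pow_left₀ (div_nonneg hr0 (by linarith)) this 2
          _ = _ := by ring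
      rw [hE]; linarith
  have hV : ∏ p ∈ PR 1 z, (1 - gd H p) ≤ Vp H z q1 := by
    unfold Vp
    rw [prod_filter]
    refine prod_le_prod (fun p hp => by linarith [gd_lt_one hroot (PR_prime hp)]) fun p hp => ?_
    split_ifs
    · exact le_rfl
    · linarith [gd_nonneg H p]
  refine le_trans ?_ hV
  refine le_trans ?_ (prod_le_prod (fun p _ => mul_nonneg (hs0 p) (exp_pos _).le) hfac)
  rw [prod_mul_distrib, ← exp_sum, mul_div_assoc]
  refine mul_le_mul ?_ ?_ (by have := log_pos (by linarith : (1:ℝ) < z); positivity) (prod_nonneg fun p _ => hs0 p)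
  · rw [hs, ← prod_filter, prod_const]
    refine pow_le_pow_of_le_one (by positivity) ?_ ?_
    · rw [div_le_one hp0pos, hp0r]; linarith
    · calc _ ≤ #(Ioc 0 p0) := card_le_card fun p hp => by
            have := mem_filter.mp hp
            exact mem_Ioc.mpr ⟨(PR_prime this.1).pos, this.2⟩
        _ = _ := by simp
  · have hlz := log_pos (by linarith : (1:ℝ) < z)
    have e : (log z) ^ g = exp (g * log (log z)) := by
      rw [← rpow_natCast, rpow_def_of_pos hlz, mul_comm]
    rw [e, ← Real.exp_sub, sum_neg_distrib]
    apply exp_le_exp.mpr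
    rw [sum_add_distrib, ← mul_sum]
    have h1 := mul_le_mul_of_nonneg_left (sum_inv_sq_PR (z := 1) (y := z) le_rfl) hE0
    have h2 : ∑ p ∈ PR 1 z, (rho H p:ℝ) / p ≤ ∑ i, (log (log z) + A i) := by
      calc _ ≤ ∑ p ∈ PR 1 z, ∑ i, (nu (h i) p:ℝ) / p := sum_le_sum fun p hp => by
            rw [← sum_div]
            have : (rho H p:ℝ) ≤ ∑ i, (nu (h i) p:ℝ) := mod_cast rho_le_sum_nu h (PR_prime hp)
            gcongr
        _ = ∑ i, ∑ p ∈ PR 1 z, (nu (h i) p:ℝ) / p := sum_comm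
        _ ≤ _ := sum_le_sum fun i _ => hA i z hz
    rw [sum_add_distrib, sum_const, card_univ, Fintype.card_fin, nsmul_eq_mul] at h2
    linarith



/-! ### The sieve over primes -/

lemma Ev_prod (H : ℤ[X]) {S : Finset ℕ} (hS : ∀ p ∈ S, p.Prime) (n : ℕ) :
    Ev H (∏ p ∈ S, p) n ↔ ∀ p ∈ S, Ev H p n := by
  constructor
  · intro h p hp
    have hd := dvd_prod_of_mem (fun p => p) hp
    exact ⟨Nat.Coprime.coprime_dvd_right hd h.1, dvd_trans (mod_cast hd) h.2⟩
  · intro h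
    refine ⟨Nat.Coprime.prod_right fun p hp => (h p hp).1, ?_⟩
    rw [← Int.natAbs_dvd_natAbs, Int.natAbs_natCast]
    refine prod_primes_dvd _ (fun p hp => (hS p hp).prime) fun p hp => ?_
    have := (h p hp).2
    rwa [← Int.natAbs_dvd_natAbs, Int.natAbs_natCast] at this

set_option maxHeartbeats 1000000 in
open Classical in
/-- The sieve remainders for the weights `Λ(n) W(n)` are negligible on average. -/
theorem rem_total {g k : ℕ} (hg : g ≠ 0) (hk : k ≠ 0) (h : Fin g → ℤ[X]) (hirr : ∀ i, Irreducible (h i))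
    (hdeg : ∀ i, (h i).natDegree = k) (hroot : ∀ p : ℕ, p.Prime → rho (∏ i, h i) p < p - 1) (N B : ℕ)
    (Y:ℝ) (hY : 1 ≤ Y) :
    ∃ A : ℕ, ∃ x0 : ℝ, ∀ x, x0 ≤ x → ∃ q1 : ℕ, q1.Prime ∧ N < q1 ∧ (q1:ℝ) ≤ (log x) ^ A ∧
      ∀ z, 2 ≤ z → z ≤ x →
        ∑ S ∈ DQ ((PR 1 z).filter (fun p => p ≠ q1)) (Y * x ^ (1 / 20:ℝ)),
          Rm (range (Nx x)) (wt x) (Ev (∏ i, h i)) (gd (∏ i, h i)) (Xt x) S ≤ x / (log x) ^ B := by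
  set H := ∏ i, h i with hH
  choose Ai hAi using fun i => C2 (h i) (hirr i) (by rw [hdeg i]; exact hk)
  obtain ⟨A, x1, hbv⟩ := bv_core (B + 2 * g + 1) N
  obtain ⟨CH, hCH0, hCHP⟩ : ∃ CH : ℝ, 0 ≤ CH ∧ ∀ P : Finset ℕ, (∀ p ∈ P, p.Prime) →
      ∀ S ⊆ P, ∏ p ∈ S, gd H p ≤ CH * ((∏ p ∈ S, p : ℕ):ℝ) ^ (-(1 / 2:ℝ)) := by
    refine ⟨_, ?_, fun P hP => gd_prod_le H (Nat.mul_pos (pos_of_ne_zero hg) (pos_of_ne_zero hk)) P hP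
      (fun p hp => hroot p (hP p hp)) (fun p hp => rho_le_gk hk h hirr hdeg (hP p hp))⟩
    positivity
  set C1' : ℝ := exp (2 * ∑ i, Ai i) with hC1'
  have hlog : Tendsto log atTop atTop := tendsto_log_atTop
  have hpow : ∀ a : ℝ, 0 < a → Tendsto (fun x : ℝ => x ^ a) atTop atTop :=
    fun a ha => tendsto_rpow_atTop ha
  have hev : ∀ᶠ x : ℝ in atTop, x1 ≤ x ∧ 2 ≤ x ∧ 2 ≤ log x ∧ 15 * Y ^ 11 ≤ x ^ (9 / 20:ℝ) ∧
      2 * CH * C1' ≤ log x ∧ 64 * Y ^ 3 ≤ x ^ (1 / 4:ℝ) ∧ log x ^ ((B + 2 : ℕ):ℝ) ≤ 1 * x ^ (1 / 2:ℝ) := by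
    have hl := (isLittleO_log_rpow_rpow_atTop ((B + 2 : ℕ):ℝ) (show (0:ℝ) < 1 / 2 by norm_num)).bound
      (show (0:ℝ) < 1 by norm_num)
    filter_upwards [eventually_ge_atTop x1, eventually_ge_atTop 2, hlog.eventually_ge_atTop 2,
      (hpow (9 / 20) (by norm_num)).eventually_ge_atTop (15 * Y ^ 11), hlog.eventually_ge_atTop (2 * CH * C1'),
      (hpow (1 / 4) (by norm_num)).eventually_ge_atTop (64 * Y ^ 3), hl] with x a b c d e f i
    refine ⟨a, b, c, d, e, f, ?_⟩
    have hx0 : 0 < x := by linarith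
    rwa [norm_of_nonneg (by positivity), norm_of_nonneg (by positivity)] at i
  obtain ⟨x0, hx0⟩ := eventually_atTop.mp hev
  refine ⟨A, x0, fun x hx => ?_⟩
  obtain ⟨hxx1, hx2, hxl, hx15, hxC, hxY, hxlog⟩ := hx0 x hx
  obtain ⟨q1, hq1, hNq, hqA, hq⟩ := hbv x hxx1
  refine ⟨q1, hq1, hNq, hqA, fun z hz2 hzx => ?_⟩
  have hxpos : 0 < x := by linarith
  set Qr : ℝ := Y * x ^ (1 / 20:ℝ) with hQr
  have hQr1 : 1 ≤ Qr := one_le_mul_of_one_le_of_one_le hY (one_le_rpow (by linarith) (by norm_num))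
  set Q : ℕ := ⌊Qr⌋₊ with hQ
  have hQle : (Q:ℝ) ≤ Qr := floor_le (by linarith)
  set P := (PR 1 z).filter (fun p => p ≠ q1) with hP
  have hPp : ∀ p ∈ P, p.Prime := fun p hp => PR_prime (mem_filter.mp hp).1
  obtain ⟨J, hJ, hJ2⟩ := exists_J hxl hxpos
  have hrem := rem_sum H (by linarith : 1 ≤ x) hJ hq1 P hPp (by simp [hP]) (DQ P Qr) (Q := Q)
    (fun S hS => ⟨(mem_DQ.mp hS).1, le_floor (mem_DQ.mp hS).2⟩) (hCHP P hPp)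
  have hconv : ∑ S ∈ DQ P Qr, Rm (range (Nx x)) (wt x) (Ev H) (gd H) (Xt x) S =
      ∑ S ∈ DQ P Qr, |∑ n ∈ range (Nx x), (if Ev H (∏ p ∈ S, p) n then wt x n else 0) - (∏ p ∈ S, gd H p) * Xt x| := by
    refine sum_congr rfl fun S hS => ?_
    unfold Rm
    rw [mul_comm (Xt x)]
    congr 2
    refine sum_congr rfl fun n _ => ?_
    have := Ev_prod H (fun p hp => hPp p ((mem_DQ.mp hS).1 hp)) n
    unfold ind
    by_cases hE : Ev H (∏ p ∈ S, p) n
    · rw [if_pos hE, if_pos (this.mp hE), mul_one]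
    · rw [if_neg hE, if_neg fun h' => hE (this.mpr h'), mul_zero]
  rw [hconv]
  refine hrem.trans ?_
  have hQ15 : 15 * (Q:ℝ) ^ 11 ≤ x := by
    calc 15 * (Q:ℝ) ^ 11 ≤ 15 * Qr ^ 11 := by gcongr
      _ = 15 * Y ^ 11 * x ^ (11 / 20:ℝ) := by
          rw [hQr, mul_pow, ← rpow_natCast (x ^ (1 / 20:ℝ)), ← rpow_mul hxpos.le]; norm_num; ring
      _ ≤ x ^ (9 / 20:ℝ) * x ^ (11 / 20:ℝ) := by gcongr
      _ = x := by rw [← rpow_add hxpos]; norm_num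
  have hbvx := hq Q hQ15
  have hl0 : 0 < log x := by linarith
  have hprod : ∏ p ∈ P, (1 + gd H p) ≤ C1' * (log x) ^ (2 * g) := by
    have hllz : log (log z) ≤ log (log x) :=
      log_le_log (log_pos (by linarith)) (log_le_log (by linarith) hzx)
    calc ∏ p ∈ P, (1 + gd H p) ≤ ∏ p ∈ P, exp (gd H p) :=
          prod_le_prod (fun p _ => by linarith [gd_nonneg H p]) fun p _ => by linarith [add_one_le_exp (gd H p)]
      _ = exp (∑ p ∈ P, gd H p) := (exp_sum _ _).symm
      _ ≤ exp (2 * ∑ i, (log (log x) + Ai i)) := by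
          apply exp_le_exp.mpr
          calc _ ≤ ∑ p ∈ PR 1 z, gd H p := sum_le_sum_of_subset_of_nonneg (filter_subset _ _) fun p _ _ => gd_nonneg H p
            _ ≤ ∑ p ∈ PR 1 z, 2 * ∑ i, (nu (h i) p:ℝ) / p := sum_le_sum fun p hp => gd_le_two_nu h (PR_prime hp)
            _ = 2 * ∑ i, ∑ p ∈ PR 1 z, (nu (h i) p:ℝ) / p := by rw [← mul_sum, sum_comm]
            _ ≤ _ := by
                gcongr with i
                exact (hAi i z hz2).trans (by linarith)
      _ = _ := by
          rw [sum_add_distrib, sum_const, card_univ, Fintype.card_fin, nsmul_eq_mul, mul_add, exp_add, mul_comm, hC1']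
          congr 1
          rw [← rpow_natCast, rpow_def_of_pos hl0]; push_cast; ring_nf
  have hprod0 : 0 ≤ ∏ p ∈ P, (1 + gd H p) := prod_nonneg fun p _ => by linarith [gd_nonneg H p]
  have hlB : 0 < (log x) ^ B := by positivity
  have hT1 : CH * (∏ p ∈ P, (1 + gd H p)) * ∑ s ∈ fam Q q1, (s.1:ℝ) ^ (-(1 / 2:ℝ)) * ‖th x s‖ ≤
      x / (log x) ^ B / 2 := by
    calc _ ≤ CH * (C1' * (log x) ^ (2 * g)) * (x / (log x) ^ (B + 2 * g + 1)) := by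
          refine mul_le_mul (by gcongr) hbvx (sum_nonneg fun s _ => by positivity) (by positivity)
      _ = (CH * C1') / log x * (x / (log x) ^ B) := by
          rw [pow_add, pow_add]; field_simp
      _ ≤ 1 / 2 * (x / (log x) ^ B) := by
          refine mul_le_mul_of_nonneg_right ?_ (by positivity)
          rw [div_le_div_iff₀ hl0 (by norm_num)]; linarith
      _ = _ := by ring
  have hT2 : (#(DQ P Qr):ℝ) * ((Q:ℝ) ^ 2 * (J:ℝ) ^ 2) ≤ x / (log x) ^ B / 2 := by
    have hc := DQ_card hPp (Q := Qr) (by linarith)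
    have hJ4 : (J:ℝ) ≤ 4 * log x := by linarith
    rw [rpow_natCast, one_mul, pow_add] at hxlog
    have hlow : x ^ (1 / 2:ℝ) * (log x ^ 2) ≤ x / (log x) ^ B := by
      rw [le_div_iff₀ hlB]
      calc _ = x ^ (1 / 2:ℝ) * (log x ^ B * log x ^ 2) := by ring
        _ ≤ x ^ (1 / 2:ℝ) * x ^ (1 / 2:ℝ) := by gcongr
        _ = x := by rw [← rpow_add hxpos]; norm_num
    calc _ ≤ (2 * Qr) * (Qr ^ 2 * (4 * log x) ^ 2) := by
          have hJ0 : (J:ℝ) ^ 2 ≤ (4 * log x) ^ 2 := pow_le_pow_left₀ (by positivity) hJ4 2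
          have hQ2 : (Q:ℝ) ^ 2 ≤ Qr ^ 2 := pow_le_pow_left₀ (by positivity) hQle 2
          exact mul_le_mul (by linarith) (mul_le_mul hQ2 hJ0 (by positivity) (by positivity)) (by positivity) (by linarith)
      _ = (64 * Y ^ 3) / 2 * x ^ (3 / 20:ℝ) * log x ^ 2 := by
          have : Qr ^ 3 = Y ^ 3 * x ^ (3 / 20:ℝ) := by
            rw [hQr, mul_pow, ← rpow_natCast (x ^ (1 / 20:ℝ)), ← rpow_mul hxpos.le]; norm_num
          calc _ = 32 * Qr ^ 3 * log x ^ 2 := by ring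
            _ = _ := by rw [this]; ring
      _ ≤ x ^ (1 / 4:ℝ) / 2 * x ^ (1 / 4:ℝ) * log x ^ 2 := by
          have e1 : x ^ (3 / 20:ℝ) ≤ x ^ (1 / 4:ℝ) :=
            rpow_le_rpow_of_exponent_le (by linarith) (by norm_num)
          have e2 : (64 * Y ^ 3) / 2 ≤ x ^ (1 / 4:ℝ) / 2 := by linarith
          exact mul_le_mul_of_nonneg_right (mul_le_mul e2 e1 (by positivity) (by positivity)) (by positivity)
      _ = (x ^ (1 / 2:ℝ) * (log x ^ 2)) / 2 := by
          have : x ^ (1 / 2:ℝ) = x ^ (1 / 4:ℝ) * x ^ (1 / 4:ℝ) := by rw [← rpow_add hxpos]; norm_num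
          rw [this]; ring
      _ ≤ _ := by linarith
  linarith



/-- Lower bound for the weighted number of primes `n` such that `H(n)` has no small prime factors. -/
theorem prime_sieve {g k : ℕ} (hg : g ≠ 0) (hk : k ≠ 0) (h : Fin g → ℤ[X]) (hirr : ∀ i, Irreducible (h i))
    (hdeg : ∀ i, (h i).natDegree = k) (hroot : ∀ p : ℕ, p.Prime → rho (∏ i, h i) p < p - 1) (N B : ℕ)
    {κ : ℝ} (hκ0 : 0 < κ) (hκ : κ * (10 + 200 * g) ≤ 1 / 20) :
    ∃ A : ℕ, ∃ x0 : ℝ, ∀ x, x0 ≤ x → ∃ q1 : ℕ, q1.Prime ∧ N < q1 ∧ (q1:ℝ) ≤ (log x) ^ A ∧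
      1 / 2 * Xt x * Vp (∏ i, h i) (x ^ κ) q1 - x / (log x) ^ B ≤
        ∑ n ∈ range (Nx x), wt x n * ind (∀ p ∈ (PR 1 (x ^ κ)).filter (fun p => p ≠ q1), ¬ Ev (∏ i, h i) p n) := by
  obtain ⟨y1, hy12, hy1⟩ := C1_unif h hirr (fun i => by rw [hdeg i]; exact hk)
  set H := ∏ i, h i with hH
  set y0 : ℝ := max (max y1 (exp 1)) ((2 * (1 + g * k)) ^ 2) with hy0
  have hy0e : exp 1 ≤ y0 := (le_max_right _ _).trans (le_max_left _ _)
  have hy01 : y1 ≤ y0 := (le_max_left _ _).trans (le_max_left _ _)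
  have hy0g : (2 * (1 + g * k):ℝ) ^ 2 ≤ y0 := le_max_right _ _
  have hy0one : 1 ≤ y0 := by linarith
  obtain ⟨Y, hY, hYe⟩ : ∃ Y : ℝ, 1 ≤ Y ∧ y0 ^ (2 * ⌈y0⌉₊ + 1) = Y := ⟨_, one_le_pow₀ hy0one, rfl⟩
  obtain ⟨A, x1, hx1⟩ := rem_total hg hk h hirr hdeg hroot N (B + 1) Y hY
  have hκ1 : κ ≤ 1 / 200 := by
    have : (0:ℝ) ≤ g := by positivity
    nlinarith [mul_nonneg hκ0.le this]
  have hev : ∀ᶠ x : ℝ in atTop, x1 ≤ x ∧ 2 ≤ x ∧ 4 ≤ log x ∧ 2 ≤ x ^ κ := by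
    filter_upwards [eventually_ge_atTop x1, eventually_ge_atTop 2,
      tendsto_log_atTop.eventually_ge_atTop 4, (tendsto_rpow_atTop hκ0).eventually_ge_atTop 2] with x a b c d
    exact ⟨a, b, c, d⟩
  obtain ⟨x0, hx0⟩ := eventually_atTop.mp hev
  refine ⟨A, x0, fun x hx => ?_⟩
  obtain ⟨hxx1, hx2, hxl, hz2⟩ := hx0 x hx
  obtain ⟨q1, hq1, hNq, hqA, hrem⟩ := hx1 x hxx1
  refine ⟨q1, hq1, hNq, hqA, ?_⟩
  have hxpos : 0 < x := by linarith
  set z := x ^ κ with hz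
  have hz1 : 1 ≤ z := by linarith
  have hzx : z ≤ x := by
    calc z ≤ x ^ (1:ℝ) := rpow_le_rpow_of_exponent_le (by linarith) (by linarith)
      _ = x := rpow_one x
  have hR := hrem z hz2 hzx
  obtain ⟨n, hn1, hn2, hn3⟩ := exists_n hz1 hy0e
  set P := (PR 1 z).filter (fun p => p ≠ q1) with hP
  have hPp : ∀ p ∈ P, p.Prime := fun p hp => PR_prime (mem_filter.mp hp).1
  have hPz : ∀ p ∈ P, (p:ℝ) ≤ z := fun p hp => (mem_PR.mp (mem_filter.mp hp).1).2.2
  have hX0 : 0 ≤ Xt x := sum_nonneg fun n _ => wt_nonneg hxpos n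
  have hlow := (block_sieve (range (Nx x)) (wt x) (Ev H) (gd H) (Xt x) z y0 P n (fun _ => 10 * g) (Y * x ^ (1 / 20:ℝ))
    (fun p hp => ⟨hPp p hp, hPz p hp⟩) (fun m _ => wt_nonneg hxpos m) hX0 hz1 hy0one hn1 (fun p _ => gd_nonneg H p)
    (fun p hp => (gd_lt_one hroot (hPp p hp)).le) (fun _ => by omega)
    (fun j hj D hD hDj => by
      have hyj := hn2 j hj
      have hsq : (2 * (1 + g * k):ℝ) < yb z (j + 1) := by
        rw [yb_succ (by linarith)]
        exact Real.lt_sqrt_of_sq_lt (lt_of_le_of_lt hy0g hyj)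
      have hDPR : D ⊆ PR (sqrt (yb z j)) (yb z j) := by
        intro p hp
        rw [mem_PR, ← yb_succ (by linarith)]
        exact ⟨hPp p (hD hp), hDj p hp⟩
      constructor
      · intro p hp
        have h2 := (hDj p hp).1
        have hp2 : (2:ℝ) ≤ p := mod_cast (hPp p (hD hp)).two_le
        have h1 : (rho H p:ℝ) ≤ g * k := mod_cast rho_le_gk hk h hirr hdeg (hPp p (hD hp))
        rw [gd_eq H (hPp p (hD hp)), div_le_iff₀ (by linarith)]; linarith
      · have hc := hy1 (yb z j) (hy01.trans hyj.le)
        calc _ ≤ ∑ p ∈ PR (sqrt (yb z j)) (yb z j), gd H p :=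
              sum_le_sum_of_subset_of_nonneg hDPR fun p _ _ => gd_nonneg H p
          _ ≤ ∑ p ∈ PR (sqrt (yb z j)) (yb z j), 2 * ∑ i, (nu (h i) p:ℝ) / p :=
              sum_le_sum fun p hp => gd_le_two_nu h (PR_prime hp)
          _ = 2 * ∑ i, ∑ p ∈ PR (sqrt (yb z j)) (yb z j), (nu (h i) p:ℝ) / p := by rw [← mul_sum, sum_comm]
          _ ≤ 2 * ∑ _i : Fin g, (5:ℝ) := by
              gcongr with i
              exact hc.2 i
          _ = _ := by rw [sum_const, card_univ, Fintype.card_fin, nsmul_eq_mul]; push_cast; ring)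
    (by
      rw [hYe]
      refine mul_le_mul_of_nonneg_left ?_ (by linarith)
      rw [hz, ← rpow_mul hxpos.le]
      refine rpow_le_rpow_of_exponent_le (by linarith) (le_trans ?_ hκ)
      refine mul_le_mul_of_nonneg_left ?_ hκ0.le
      rw [← sum_mul]
      have h2 := sum_geometric_two_le n
      have : (∑ j ∈ range n, (1 / 2:ℝ) ^ j) * ((10 * g : ℕ):ℝ) ≤ 2 * ((10 * g : ℕ):ℝ) := by gcongr
      push_cast at this ⊢
      linarith)).2
  refine le_trans (sub_le_sub_left ?_ _) hlow
  have hlz : log z ≤ log x / 200 := by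
    rw [hz, log_rpow hxpos]
    nlinarith
  have hn4 : (n:ℝ) + 2 ≤ log x := by linarith
  have hR0 : 0 ≤ ∑ S ∈ DQ P (Y * x ^ (1 / 20:ℝ)), Rm (range (Nx x)) (wt x) (Ev H) (gd H) (Xt x) S :=
    sum_nonneg fun S _ => abs_nonneg _
  have hl0 : 0 < log x := by linarith
  calc _ ≤ log x * (x / (log x) ^ (B + 1)) := mul_le_mul hn4 hR hR0 hl0.le
    _ = _ := by rw [pow_succ]; field_simp



/-! ### Survivors divisible by a given prime -/

/-- Survivors of the sieve which are divisible by a larger prime `q`, or by the exceptional prime. -/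
theorem T_count {g k : ℕ} (hk : k ≠ 0) (h : Fin g → ℤ[X]) (hirr : ∀ i, Irreducible (h i))
    (hdeg : ∀ i, (h i).natDegree = k)
    (hroot : ∀ p : ℕ, p.Prime → rho (∏ i, h i) p < p - 1) :
    ∃ Y : ℝ, 1 ≤ Y ∧ ∀ w : ℝ, 2 ≤ w → ∀ J A B : ℕ, A ≤ B → ∀ q1 : ℕ, q1.Prime → ∀ G ⊆ Ioc A B,
      (∀ n ∈ G, ∀ p ∈ PR 1 w, ¬ p ∣ n) →
      (∀ n ∈ G, ∀ p ∈ PR 1 (yb w J), p ≠ q1 → ¬ (p:ℤ) ∣ (∏ i, h i).eval (n:ℤ)) →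
      ∀ q : ℕ, q.Prime → (yb w J < q ∨ q = q1) → ∀ i,
      (#(G.filter fun n : ℕ => (q:ℤ) ∣ (h i).eval (n:ℤ)):ℝ) ≤
      nu (h i) q * (8 * (((B:ℝ) - A) / q) * Vp (∏ i, h i) (yb w J) q1 / log w +
        2 * (Y * w ^ (110 + 100 * ((g:ℝ) + 1) * (1 / 2) ^ J)) ^ 2) := by
  classical
  obtain ⟨Y, hY1, hY⟩ := int_sieve hk h hirr hdeg hroot
  refine ⟨Y, hY1, fun w hw J A B hAB q1 hq1 G hG hG1 hG2 q hq hqq i => ?_⟩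
  have : NeZero q := ⟨hq.ne_zero⟩
  set s := G.filter fun n : ℕ => (q:ℤ) ∣ (h i).eval (n:ℤ) with hs
  set β := 8 * (((B:ℝ) - A) / q) * Vp (∏ i, h i) (yb w J) q1 / log w +
        2 * (Y * w ^ (110 + 100 * ((g:ℝ) + 1) * (1 / 2) ^ J)) ^ 2 with hβ
  have hfib : ∀ r ∈ s.image (fun n : ℕ => (n : ZMod q)), (#(s.filter fun n : ℕ => (n : ZMod q) = r):ℝ) ≤ β := by
    intro r hr
    obtain ⟨n0, hn0, rfl⟩ := mem_image.mp hr
    refine le_trans ?_ (hY w hw J A B hAB q q1 hq hq1 hqq n0)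
    refine Nat.cast_le.mpr (card_le_card fun n hn => ?_)
    simp only [hs, mem_filter] at hn ⊢
    exact ⟨hG hn.1.1, (ZMod.natCast_eq_natCast_iff _ _ _).mp hn.2, fun p hp _ _ => hG1 n hn.1.1 p hp,
      fun p hp _ hp1 => hG2 n hn.1.1 p hp hp1⟩
  have himg : #(s.image (fun n : ℕ => (n : ZMod q))) ≤ nu (h i) q := by
    unfold nu
    simp only [card_eq_fintype_card, Fintype.card_subtype]
    refine card_le_card fun r hr => ?_
    obtain ⟨n, hn, rfl⟩ := mem_image.mp hr
    simp only [hs, mem_filter, mem_univ, true_and] at hn ⊢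
    have := (dvd_eval_iff (h i) q (n:ℤ)).mp hn.2
    simpa using this
  rw [card_eq_sum_card_image (fun n : ℕ => (n : ZMod q)) s]
  push_cast
  refine (sum_le_sum hfib).trans ?_
  rw [sum_const, nsmul_eq_mul]
  have hβ0 : 0 ≤ β := le_trans (by positivity) (hY w hw J A B hAB q q1 hq hq1 hqq 0)
  have h7 : (#(s.image (fun n : ℕ => (n : ZMod q))):ℝ) ≤ nu (h i) q := mod_cast himg
  gcongr

lemma PR_card {a b : ℝ} (hb : 0 ≤ b) : (#(PR a b):ℝ) ≤ b := by
  have : #(PR a b) ≤ #(Ioc 0 ⌊b⌋₊) := card_le_card fun p hp =>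
    mem_Ioc.mpr ⟨(PR_prime hp).pos, le_floor (mem_PR.mp hp).2.2⟩
  rw [Nat.card_Ioc, Nat.sub_zero] at this
  exact le_trans (mod_cast this) (floor_le hb)

/-- Prime factors up to `y` are counted once each, larger ones by size. -/
theorem omega_le {m : ℕ} (hm : m ≠ 0) {z y : ℝ} (hy : 1 < y)
    (h1 : ∀ p : ℕ, p.Prime → (p:ℝ) ≤ z → ¬ p ∣ m) (h2 : ∀ q ∈ PR z y, ¬ q ^ 2 ∣ m) :
    (cardFactors m:ℝ) ≤ #((PR z y).filter fun q => q ∣ m) + log m / log y := by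
  classical
  have hly := log_pos hy
  rw [ArithmeticFunction.cardFactors_eq_sum_factorization, Finsupp.sum, Nat.support_factorization,
    Real.log_nat_eq_sum_factorization, Finsupp.sum, Nat.support_factorization, sum_div]
  push_cast
  rw [card_filter]
  push_cast
  rw [← sum_filter]
  have hsub : (PR z y).filter (fun q => q ∣ m) = m.primeFactors.filter (fun p : ℕ => (p:ℝ) ≤ y) := by
    ext p
    simp only [mem_filter, mem_PR, Nat.mem_primeFactors]
    constructor
    · rintro ⟨⟨a, b, c⟩, d⟩; exact ⟨⟨a, d, hm⟩, c⟩
    · rintro ⟨⟨a, b, c⟩, d⟩; exact ⟨⟨a, not_le.mp fun hh => h1 p a hh b, d⟩, b⟩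
  rw [hsub, sum_filter, ← sum_add_distrib]
  refine sum_le_sum fun p hp => ?_
  have hpp := Nat.prime_of_mem_primeFactors hp
  have hpd := Nat.dvd_of_mem_primeFactors hp
  have hlp : 0 ≤ log p := log_natCast_nonneg p
  split_ifs with hpy
  · have : m.factorization p ≤ 1 := by
      by_contra hc
      have h3 : p ^ 2 ∣ m := (Nat.Prime.pow_dvd_iff_le_factorization hpp hm).mpr (by omega)
      exact h2 p (mem_PR.mpr ⟨hpp, not_le.mp fun hh => h1 p hpp hh hpd, hpy⟩) h3
    have h4 : (m.factorization p:ℝ) ≤ 1 := mod_cast this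
    have : 0 ≤ (m.factorization p:ℝ) * log p / log y := by positivity
    linarith
  · rw [zero_add, le_div_iff₀ hly]
    have : log y ≤ log p := log_le_log (by linarith) (not_le.mp hpy).le
    gcongr

lemma eval_bound (h : ℤ[X]) : ∃ C : ℝ, 1 ≤ C ∧ ∀ n : ℕ, 1 ≤ n →
    ((h.eval (n:ℤ)).natAbs:ℝ) ≤ C * (n:ℝ) ^ h.natDegree := by
  refine ⟨1 + ∑ i ∈ range (h.natDegree + 1), |(h.coeff i:ℝ)|, by
    have : 0 ≤ ∑ i ∈ range (h.natDegree + 1), |(h.coeff i:ℝ)| := by positivity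
    linarith, fun n hn => ?_⟩
  have hn' : (1:ℝ) ≤ n := mod_cast hn
  rw [Nat.cast_natAbs, Int.cast_abs, Polynomial.eval_eq_sum_range]
  push_cast
  calc _ ≤ ∑ i ∈ range (h.natDegree + 1), |(h.coeff i:ℝ) * (n:ℝ) ^ i| := abs_sum_le_sum_abs _ _
    _ ≤ ∑ i ∈ range (h.natDegree + 1), |(h.coeff i:ℝ)| * (n:ℝ) ^ h.natDegree := by
        refine sum_le_sum fun i hi => ?_
        rw [abs_mul, abs_of_nonneg (by positivity : (0:ℝ) ≤ (n:ℝ) ^ i)]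
        have := pow_le_pow_right₀ hn' (Nat.lt_add_one_iff.mp (mem_range.mp hi))
        gcongr
    _ ≤ _ := by
        rw [← sum_mul]
        have : (0:ℝ) ≤ (n:ℝ) ^ h.natDegree := by positivity
        gcongr
        linarith

lemma cardFactors_finset_prod {ι : Type*} (s : Finset ι) (f : ι → ℕ) (hf : ∀ i ∈ s, f i ≠ 0) :
    cardFactors (∏ i ∈ s, f i) = ∑ i ∈ s, cardFactors (f i) := by
  classical
  induction s using Finset.induction_on with
  | empty => simp
  | insert a s ha ih =>
    rw [prod_insert ha, sum_insert ha, cardFactors_mul (hf a (mem_insert_self _ _))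
      (prod_ne_zero_iff.mpr fun i hi => hf i (mem_insert_of_mem hi)), ih fun i hi => hf i (mem_insert_of_mem hi)]



/-! ### Prime factors of survivors -/

lemma card_filter_real {ι : Type*} (s : Finset ι) (p : ι → Prop) [DecidablePred p] :
    (#(s.filter p):ℝ) = ∑ n ∈ s, if p n then (1:ℝ) else 0 := by
  rw [card_filter]; push_cast; rfl

/-- Every survivor of the sieve is good, or divisible by the exceptional prime or by a large square, or
divisible by more than `1 / lam` medium primes. -/
theorem G_bound {g k : ℕ} (h : Fin g → ℤ[X]) {C0 : ℝ} (hC0 : 1 ≤ C0)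
    (hCb : ∀ i, ∀ n : ℕ, 1 ≤ n → (((h i).eval (n:ℤ)).natAbs:ℝ) ≤ C0 * (n:ℝ) ^ k)
    {x y z lam : ℝ} {r : ℕ} (hy : 1 < y) (hlam : 0 < lam)
    (hr : g * ((k * log (2 * x) + log C0) / log y) + 1 / lam ≤ r) (G : Finset ℕ)
    (hG : ∀ n ∈ G, 1 ≤ n ∧ (n:ℝ) ≤ 2 * x) (q1 : ℕ)
    (hG2 : ∀ n ∈ G, ∀ p ∈ PR 1 z, p ≠ q1 → ¬ (p:ℤ) ∣ (∏ i, h i).eval (n:ℤ)) :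
    (#G:ℝ) ≤ #(G.filter fun n : ℕ => cardFactors ((∏ i, h i).eval (n:ℤ)).natAbs ≤ r) +
      ∑ i, (#(G.filter fun n : ℕ => (q1:ℤ) ∣ (h i).eval (n:ℤ)):ℝ) +
      ∑ i, ∑ q ∈ PR z y, (#(G.filter fun n : ℕ => (q:ℤ) ^ 2 ∣ (h i).eval (n:ℤ)):ℝ) +
      lam * ∑ i, ∑ q ∈ PR z y, (#(G.filter fun n : ℕ => (q:ℤ) ∣ (h i).eval (n:ℤ)):ℝ) := by
  have e0 : (#G:ℝ) = ∑ n ∈ G, (1:ℝ) := by simp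
  have e1 : ∑ i, (#(G.filter fun n : ℕ => (q1:ℤ) ∣ (h i).eval (n:ℤ)):ℝ) =
      ∑ n ∈ G, ∑ i, if (q1:ℤ) ∣ (h i).eval (n:ℤ) then (1:ℝ) else 0 := by
    rw [sum_comm]; exact sum_congr rfl fun i _ => card_filter_real _ _
  have e2 : ∀ e : ℕ, ∑ i, ∑ q ∈ PR z y, (#(G.filter fun n : ℕ => (q:ℤ) ^ e ∣ (h i).eval (n:ℤ)):ℝ) =
      ∑ n ∈ G, ∑ i, ∑ q ∈ PR z y, if (q:ℤ) ^ e ∣ (h i).eval (n:ℤ) then (1:ℝ) else 0 := by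
    intro e
    symm
    rw [sum_comm]
    refine sum_congr rfl fun i _ => ?_
    rw [sum_comm]
    exact sum_congr rfl fun q _ => (card_filter_real _ _).symm
  have e3 := e2 1
  simp only [pow_one] at e3
  rw [e0, e1, e2 2, e3, card_filter_real, mul_sum, ← sum_add_distrib, ← sum_add_distrib, ← sum_add_distrib]
  refine sum_le_sum fun n hn => ?_
  obtain ⟨hn1, hn2⟩ := hG n hn
  have b0 : (0:ℝ) ≤ if cardFactors ((∏ i, h i).eval (n:ℤ)).natAbs ≤ r then 1 else 0 := by
    split_ifs <;> norm_num
  have b1 : ∀ i, (0:ℝ) ≤ if (q1:ℤ) ∣ (h i).eval (n:ℤ) then 1 else 0 := fun i => by split_ifs <;> norm_num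
  have b2 : ∀ i, ∀ q : ℕ, (0:ℝ) ≤ if (q:ℤ) ^ 2 ∣ (h i).eval (n:ℤ) then 1 else 0 :=
    fun i q => by split_ifs <;> norm_num
  have b3 : ∀ i, ∀ q : ℕ, (0:ℝ) ≤ if (q:ℤ) ∣ (h i).eval (n:ℤ) then 1 else 0 :=
    fun i q => by split_ifs <;> norm_num
  have s1 := sum_nonneg fun i (_ : i ∈ univ) => b1 i
  have s2 := sum_nonneg fun i (_ : i ∈ univ) => sum_nonneg fun q (_ : q ∈ PR z y) => b2 i q
  have s3 := mul_nonneg hlam.le (sum_nonneg fun i (_ : i ∈ univ) => sum_nonneg fun q (_ : q ∈ PR z y) => b3 i q)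
  by_cases c0 : cardFactors ((∏ i, h i).eval (n:ℤ)).natAbs ≤ r
  · rw [if_pos c0]; linarith
  by_cases c1 : ∃ i, (q1:ℤ) ∣ (h i).eval (n:ℤ)
  · obtain ⟨i, hi⟩ := c1
    have := single_le_sum (fun i _ => b1 i) (mem_univ i)
    rw [if_pos hi] at this
    linarith
  by_cases c2 : ∃ i, ∃ q ∈ PR z y, (q:ℤ) ^ 2 ∣ (h i).eval (n:ℤ)
  · obtain ⟨i, q, hq, hqd⟩ := c2
    have t1 := single_le_sum (fun q _ => b2 i q) hq
    have t2 := single_le_sum (fun i _ => sum_nonneg fun q (_ : q ∈ PR z y) => b2 i q) (mem_univ i)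
    rw [if_pos hqd] at t1
    linarith
  push Not at c1 c2
  have hH0 : (∏ i, h i).eval (n:ℤ) ≠ 0 := by
    intro h0; rw [h0] at c0; simp at c0
  rw [Polynomial.eval_prod] at hH0 c0
  have hi0 : ∀ i, ((h i).eval (n:ℤ)).natAbs ≠ 0 := fun i =>
    Int.natAbs_ne_zero.mpr (prod_ne_zero_iff.mp hH0 i (mem_univ i))
  have hly := log_pos hy
  have hom : ∀ i, (cardFactors ((h i).eval (n:ℤ)).natAbs:ℝ) ≤
      (∑ q ∈ PR z y, if (q:ℤ) ∣ (h i).eval (n:ℤ) then (1:ℝ) else 0) +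
        (k * log (2 * x) + log C0) / log y := by
    intro i
    refine (omega_le (hi0 i) (z := z) hy (fun p hp hpz hpd => ?_) fun q hq hqd => ?_).trans (add_le_add ?_ ?_)
    · have hd : (p:ℤ) ∣ (h i).eval (n:ℤ) := Int.natCast_dvd.mpr hpd
      by_cases hpq : p = q1
      · exact c1 i (hpq ▸ hd)
      · refine hG2 n hn p (mem_PR.mpr ⟨hp, mod_cast hp.one_lt, hpz⟩) hpq ?_
        rw [Polynomial.eval_prod]
        exact dvd_trans hd (dvd_prod_of_mem _ (mem_univ i))
    · refine c2 i q hq ?_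
      have := Int.natCast_dvd.mpr hqd
      rwa [Nat.cast_pow] at this
    · rw [card_filter_real]
      refine le_of_eq (sum_congr rfl fun q _ => ?_)
      simp only [Int.natCast_dvd]
    · have hn0 : (0:ℝ) < n := mod_cast hn1
      have h0 : (0:ℝ) < ((h i).eval (n:ℤ)).natAbs := mod_cast pos_of_ne_zero (hi0 i)
      have := log_le_log h0 (hCb i n hn1)
      rw [log_mul (by positivity) (by positivity), log_pow] at this
      have h3 := mul_le_mul_of_nonneg_left (log_le_log hn0 hn2) (cast_nonneg (α := ℝ) k)
      gcongr
      linarith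
  have hsum : (cardFactors ((∏ i, (h i).eval (n:ℤ)).natAbs):ℝ) =
      ∑ i, (cardFactors ((h i).eval (n:ℤ)).natAbs:ℝ) := by
    rw [← Int.natAbsHom_apply, map_prod, cardFactors_finset_prod _ _ fun i _ => by simpa using hi0 i]
    push_cast
    rfl
  have hc0 : (r:ℝ) < cardFactors ((∏ i, (h i).eval (n:ℤ)).natAbs) := by
    exact_mod_cast not_le.mp c0
  have hle := sum_le_sum fun i (_ : i ∈ univ) => hom i
  rw [← hsum, sum_add_distrib, sum_const, card_univ, Fintype.card_fin, nsmul_eq_mul] at hle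
  have hbig : 1 / lam ≤ ∑ i, ∑ q ∈ PR z y, (if (q:ℤ) ∣ (h i).eval (n:ℤ) then (1:ℝ) else 0) := by linarith
  rw [div_le_iff₀ hlam] at hbig
  linarith



/-! ### Counting survivors -/

lemma nu_iter {g : ℕ} (h : Fin g → ℤ[X]) (hirr : ∀ i, Irreducible (h i)) (hdeg : ∀ i, (h i).natDegree ≠ 0) :
    ∃ y0 : ℝ, 2 ≤ y0 ∧ ∀ x, 1 ≤ x → ∀ m : ℕ, y0 ≤ yb x m → ∀ i,
      ∑ q ∈ PR (yb x m) x, (nu (h i) q:ℝ) / q ≤ 5 * m := by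
  obtain ⟨y0, hy2, hy⟩ := C1_unif h hirr hdeg
  refine ⟨y0, hy2, fun x hx m => ?_⟩
  induction m with
  | zero =>
    intro _ i
    rw [yb_zero]
    have : PR x x = ∅ := by
      ext p; rw [mem_PR]; simp only [notMem_empty, iff_false]; rintro ⟨-, a, b⟩; linarith
    simp [this]
  | succ m ih =>
    intro hm i
    have h1 : yb x (m + 1) ≤ yb x m := yb_anti hx (Nat.le_succ m)
    have h2 : yb x m ≤ x := by have := yb_anti hx (Nat.zero_le m); rwa [yb_zero] at this
    rw [PR_sum_split h1 h2]
    have h3 := ih (hm.trans h1) i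
    have h4 := (hy (yb x m) (hm.trans h1)).2 i
    rw [← yb_succ (by linarith)] at h4
    push_cast
    linarith

lemma range_sum {g k : ℕ} (h : Fin g → ℤ[X]) {a b c0 E S : ℝ} (hb : 0 ≤ b) (hc0 : 0 ≤ c0) (hE : 0 ≤ E)
    (T : Fin g → ℕ → ℝ) (hnu : ∀ i, ∀ q ∈ PR a b, nu (h i) q ≤ k)
    (hT : ∀ i, ∀ q ∈ PR a b, T i q ≤ nu (h i) q * (c0 / q + E))
    (hS : ∀ i, ∑ q ∈ PR a b, (nu (h i) q:ℝ) / q ≤ S) :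
    ∑ i, ∑ q ∈ PR a b, T i q ≤ c0 * (g * S) + E * (g * k * b) := by
  have h1 : ∀ i, ∑ q ∈ PR a b, T i q ≤ c0 * S + E * (k * b) := by
    intro i
    calc _ ≤ ∑ q ∈ PR a b, (c0 * ((nu (h i) q:ℝ) / q) + E * k) := by
          refine sum_le_sum fun q hq => (hT i q hq).trans ?_
          have : (nu (h i) q:ℝ) ≤ k := mod_cast hnu i q hq
          have := mul_le_mul_of_nonneg_left this hE
          calc _ = c0 * ((nu (h i) q:ℝ) / q) + E * nu (h i) q := by ring
            _ ≤ _ := by linarith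
      _ = c0 * ∑ q ∈ PR a b, (nu (h i) q:ℝ) / q + E * (k * #(PR a b)) := by
          rw [sum_add_distrib, ← mul_sum, sum_const, nsmul_eq_mul]; ring
      _ ≤ _ := by
          have := hS i
          have := PR_card (a := a) hb
          gcongr
  calc _ ≤ ∑ _i : Fin g, (c0 * S + E * (k * b)) := sum_le_sum fun i _ => h1 i
    _ = _ := by rw [sum_const, card_univ, Fintype.card_fin, nsmul_eq_mul]; ring

open Classical in
/-- The primes `n ∈ (x, 2x]` such that `H(n)` has no prime factor up to `z`, except possibly `q1`. -/
noncomputable def Gs (H : ℤ[X]) (x z:ℝ) (q1 : ℕ) : Finset ℕ :=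
  (Ioc ⌊x⌋₊ ⌊2 * x⌋₊).filter fun n => n.Prime ∧ ∀ p ∈ PR 1 z, p ≠ q1 → ¬ (p:ℤ) ∣ H.eval (n:ℤ)

lemma mem_Gs {H : ℤ[X]} {x z : ℝ} (hx : 0 ≤ x) {q1 n : ℕ} : n ∈ Gs H x z q1 ↔
    (x < n ∧ (n:ℝ) ≤ 2 * x) ∧ n.Prime ∧ ∀ p ∈ PR 1 z, p ≠ q1 → ¬ (p:ℤ) ∣ H.eval (n:ℤ) := by
  unfold Gs
  rw [mem_filter, mem_Ioc, floor_lt hx, le_floor_iff (by linarith)]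

/-- Passing from weights to cardinalities. -/
lemma Gs_lower (H : ℤ[X]) {x z : ℝ} (hx : 1 ≤ x) (hz : z ≤ x) (q1 : ℕ) :
    ∑ n ∈ range (Nx x), wt x n * ind (∀ p ∈ (PR 1 z).filter (fun p => p ≠ q1), ¬ Ev H p n) ≤
      2 * sqrt (2 * x) * log (2 * x) + log (2 * x) * #(Gs H x z q1) := by
  classical
  have hx0 : 0 < x := by linarith
  have hl : 0 ≤ log (2 * x) := log_nonneg (by linarith)
  rw [← sum_filter_not_add_sum_filter (range (Nx x)) (fun n : ℕ => n.Prime)]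
  refine add_le_add ((sum_le_sum fun n _ => ?_).trans (nonprime_wt hx)) ?_
  · exact mul_le_of_le_one_right (wt_nonneg hx0 n) (ind_le_one _)
  · calc _ ≤ ∑ n ∈ (range (Nx x)).filter (fun n : ℕ => n.Prime), (if n ∈ Gs H x z q1 then log (2 * x) else 0) := by
          refine sum_le_sum fun n hn => ?_
          have hnp := (mem_filter.mp hn).2
          have hW0 := wt_nonneg hx0 n
          by_cases hr : (n:ℝ) ≤ x ∨ 2 * x ≤ n
          · rw [wt, W_eq_zero hx0 hr, mul_zero, zero_mul]
            split_ifs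
            · exact hl
            · exact le_rfl
          push Not at hr
          by_cases hc : ∀ p ∈ (PR 1 z).filter (fun p => p ≠ q1), ¬ Ev H p n
          · have hmem : n ∈ Gs H x z q1 := by
              refine (mem_Gs hx0.le).mpr ⟨⟨hr.1, hr.2.le⟩, hnp, fun p hp hpq hd => ?_⟩
              refine hc p (mem_filter.mpr ⟨hp, hpq⟩) ⟨?_, hd⟩
              refine (Nat.coprime_primes hnp (PR_prime hp)).mpr ?_
              rintro rfl
              have := (mem_PR.mp hp).2.2
              linarith
            rw [if_pos hmem]
            have h1 : vonMangoldt n ≤ log (2 * x) :=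
              vonMangoldt_le_log.trans (log_le_log (by linarith) hr.2.le)
            calc wt x n * _ ≤ wt x n := mul_le_of_le_one_right hW0 (ind_le_one _)
              _ ≤ vonMangoldt n :=
                  mul_le_of_le_one_right vonMangoldt_nonneg (W_le_one hx n)
              _ ≤ _ := h1
          · have : ind (∀ p ∈ (PR 1 z).filter (fun p => p ≠ q1), ¬ Ev H p n) = 0 := by
              unfold ind; rw [if_neg hc]
            rw [this, mul_zero]
            split_ifs
            · exact hl
            · exact le_rfl
      _ = ∑ n ∈ ((range (Nx x)).filter (fun n : ℕ => n.Prime)).filter (fun n => n ∈ Gs H x z q1), log (2 * x) := by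
          rw [sum_filter (fun n => n ∈ Gs H x z q1)]
      _ ≤ ∑ n ∈ Gs H x z q1, log (2 * x) :=
          sum_le_sum_of_subset_of_nonneg (fun n hn => (mem_filter.mp hn).2) fun _ _ _ => hl
      _ = _ := by rw [sum_const, nsmul_eq_mul, mul_comm]



/-- The upper-bound sieve estimate of `T_count`, with an explicit constant `Y`. -/
def TCnt {g : ℕ} (h : Fin g → ℤ[X]) (Y:ℝ) : Prop :=
  ∀ w : ℝ, 2 ≤ w → ∀ J A B : ℕ, A ≤ B → ∀ q1 : ℕ, q1.Prime → ∀ G ⊆ Ioc A B,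
      (∀ n ∈ G, ∀ p ∈ PR 1 w, ¬ p ∣ n) →
      (∀ n ∈ G, ∀ p ∈ PR 1 (yb w J), p ≠ q1 → ¬ (p:ℤ) ∣ (∏ i, h i).eval (n:ℤ)) →
      ∀ q : ℕ, q.Prime → (yb w J < q ∨ q = q1) → ∀ i,
      (#(G.filter fun n : ℕ => (q:ℤ) ∣ (h i).eval (n:ℤ)):ℝ) ≤
      nu (h i) q * (8 * (((B:ℝ) - A) / q) * Vp (∏ i, h i) (yb w J) q1 / log w +
        2 * (Y * w ^ (110 + 100 * ((g:ℝ) + 1) * (1 / 2) ^ J)) ^ 2)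

lemma Gs_sub (H : ℤ[X]) {x z : ℝ} (hx : 0 ≤ x) (q1 : ℕ) : Gs H x z q1 ⊆ Ioc ⌊x⌋₊ ⌊2 * x⌋₊ := by
  intro n hn
  obtain ⟨⟨h1, h2⟩, -, -⟩ := (mem_Gs hx).1 hn
  rw [mem_Ioc]
  exact ⟨(floor_lt hx).2 h1, le_floor h2⟩

lemma T_Gs {g : ℕ} (h : Fin g → ℤ[X]) {Y : ℝ} (hT : TCnt h Y) {x w z : ℝ} {J : ℕ} (hx : 1 ≤ x) (hw : 2 ≤ w)
    (hwx : w ≤ x) (hz : yb w J = z) {q1 : ℕ} (hq1 : q1.Prime) (hV : 0 ≤ Vp (∏ i, h i) z q1)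
    {q : ℕ} (hq : q.Prime) (hqz : z < q ∨ q = q1) (i : Fin g) :
    (#((Gs (∏ i, h i) x z q1).filter fun n : ℕ => (q:ℤ) ∣ (h i).eval (n:ℤ)):ℝ) ≤
      nu (h i) q * (16 * x * Vp (∏ i, h i) z q1 / log w / q +
        2 * (Y * w ^ (110 + 100 * ((g:ℝ) + 1) * (1 / 2) ^ J)) ^ 2) := by
  have hx0 : 0 ≤ x := by linarith
  subst hz
  have hAB : ⌊x⌋₊ ≤ ⌊2 * x⌋₊ := Nat.floor_mono (by linarith)
  refine (hT w hw J _ _ hAB q1 hq1 (Gs (∏ i, h i) x (yb w J) q1) (Gs_sub _ hx0 _) ?_ ?_ q hq hqz i).trans ?_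
  · intro n hn p hp hpn
    obtain ⟨⟨h1, -⟩, hnp, -⟩ := (mem_Gs hx0).1 hn
    obtain ⟨hpp, -, hpw⟩ := mem_PR.1 hp
    have := (Nat.prime_dvd_prime_iff_eq hpp hnp).1 hpn
    subst this
    linarith
  · intro n hn
    exact ((mem_Gs hx0).1 hn).2.2
  · refine mul_le_mul_of_nonneg_left ?_ (by positivity)
    refine add_le_add_left ?_ _
    have hlw : 0 < log w := log_pos (by linarith)
    have hB : ((⌊2 * x⌋₊ : ℕ):ℝ) ≤ 2 * x := floor_le (by linarith)
    have hA : (0:ℝ) ≤ ((⌊x⌋₊ : ℕ):ℝ) := by positivity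
    have hq0 : (0:ℝ) < q := mod_cast hq.pos
    have e : 16 * x * Vp (∏ i, h i) (yb w J) q1 / log w / q =
      8 * ((2 * x) / q) * Vp (∏ i, h i) (yb w J) q1 / log w := by field_simp; ring
    rw [e]
    refine div_le_div_of_nonneg_right ?_ hlw.le
    refine mul_le_mul_of_nonneg_right ?_ hV
    refine mul_le_mul_of_nonneg_left ?_ (by norm_num)
    exact div_le_div_of_nonneg_right (by linarith) hq0.le

lemma SQ_bound {g k : ℕ} (h : Fin g → ℤ[X]) {D : ℕ}
    (hD : ∀ i, ∀ q : ℕ, q.Prime → D < q → ∀ A B : ℕ, A ≤ B →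
      (#((Ioc A B).filter fun n : ℕ => ((q:ℤ) ^ 2 ∣ (h i).eval (n:ℤ))):ℝ) ≤ k * (((B:ℝ) - A) / (q:ℝ) ^ 2 + 1))
    {x y z : ℝ} (hx : 1 ≤ x) (hy : 0 ≤ y) (hz1 : 1 ≤ z) (hz : (D:ℝ) ≤ z) (H : ℤ[X]) (q1 : ℕ) :
    ∑ i, ∑ q ∈ PR z y, (#((Gs H x z q1).filter fun n : ℕ => (q:ℤ) ^ 2 ∣ (h i).eval (n:ℤ)):ℝ) ≤
      g * k * (4 * x / z + y) := by
  have hx0 : 0 ≤ x := by linarith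
  have hi : ∀ i, ∑ q ∈ PR z y, (#((Gs H x z q1).filter fun n : ℕ => (q:ℤ) ^ 2 ∣ (h i).eval (n:ℤ)):ℝ) ≤
      k * (4 * x / z + y) := by
    intro i
    have h1 : ∀ q ∈ PR z y, (#((Gs H x z q1).filter fun n : ℕ => (q:ℤ) ^ 2 ∣ (h i).eval (n:ℤ)):ℝ) ≤
        k * (2 * x * (1 / (q:ℝ) ^ 2) + 1) := by
      intro q hq
      obtain ⟨hqp, hzq, -⟩ := mem_PR.1 hq
      have hDq : D < q := by exact_mod_cast lt_of_le_of_lt hz hzq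
      have h2 : (#((Gs H x z q1).filter fun n : ℕ => (q:ℤ) ^ 2 ∣ (h i).eval (n:ℤ)):ℝ) ≤
          #((Ioc ⌊x⌋₊ ⌊2 * x⌋₊).filter fun n : ℕ => ((q:ℤ) ^ 2 ∣ (h i).eval (n:ℤ))) := by
        exact_mod_cast card_le_card (filter_subset_filter _ (Gs_sub H hx0 q1))
      refine h2.trans ((hD i q hqp hDq _ _ (Nat.floor_mono (by linarith))).trans ?_)
      refine mul_le_mul_of_nonneg_left ?_ (by positivity)
      have hB : ((⌊2 * x⌋₊ : ℕ):ℝ) ≤ 2 * x := floor_le (by linarith)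
      have hA : (0:ℝ) ≤ ((⌊x⌋₊ : ℕ):ℝ) := by positivity
      rw [mul_one_div]
      refine add_le_add_left ?_ _
      exact div_le_div_of_nonneg_right (by linarith) (by positivity)
    refine (sum_le_sum h1).trans ?_
    rw [← mul_sum, sum_add_distrib, ← mul_sum]
    refine mul_le_mul_of_nonneg_left ?_ (by positivity)
    have h3 := sum_inv_sq_PR (z := z) (y := y) hz1
    have h4 := PR_card (a := z) hy
    have h5 : 2 * x * ∑ q ∈ PR z y, 1 / (q:ℝ) ^ 2 ≤ 2 * x * (2 / z) := mul_le_mul_of_nonneg_left h3 (by linarith)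
    have h6 : 2 * x * (2 / z) = 4 * x / z := by ring
    simp only [sum_const, nsmul_eq_mul, mul_one]
    linarith
  refine (sum_le_sum fun i _ => hi i).trans ?_
  simp only [sum_const, card_univ, Fintype.card_fin, nsmul_eq_mul]
  rw [mul_assoc]

/-- Any fixed power saving beats every power of the logarithm. -/
lemma pow_small {a C c : ℝ} (n : ℕ) (ha : a < 1) (hc : 0 < c) :
    ∀ᶠ x : ℝ in atTop, C * x ^ a ≤ c * (x / (log x) ^ n) := by
  have h1 := (isLittleO_log_rpow_rpow_atTop (n:ℝ) (show 0 < 1 - a by linarith)).bound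
    (show 0 < c / (|C| + 1) by positivity)
  filter_upwards [h1, Filter.eventually_gt_atTop (1:ℝ)] with x hx hx1
  have hl : 0 < log x := log_pos hx1
  rw [rpow_natCast, norm_of_nonneg (by positivity), norm_of_nonneg (by positivity)] at hx
  have hxp : 0 < x ^ a := by positivity
  have e : x ^ (1 - a) * x ^ a = x := by
    rw [← rpow_add (by linarith)]; simp
  rw [← mul_div_assoc, le_div_iff₀ (by positivity)]
  have hx' : (|C| + 1) * (log x) ^ n ≤ c * x ^ (1 - a) := by
    have := mul_le_mul_of_nonneg_left hx (show 0 ≤ |C| + 1 by positivity)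
    refine this.trans (le_of_eq ?_)
    field_simp
  calc C * x ^ a * log x ^ n ≤ (|C| + 1) * x ^ a * log x ^ n := by
        have : C ≤ |C| + 1 := by linarith [le_abs_self C]
        gcongr
    _ = x ^ a * ((|C| + 1) * (log x) ^ n) := by ring
    _ ≤ x ^ a * (c * x ^ (1 - a)) := mul_le_mul_of_nonneg_left hx' hxp.le
    _ = c * (x ^ (1 - a) * x ^ a) := by ring
    _ = c * x := by rw [e]



/-! ### Counting almost-prime values -/

set_option maxHeartbeats 1000000 in
/-- The survivors are the good ones and three exceptional sets: multiples of the prime `q1`, values divisible by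
a large square, and values with more than `1 / lam` medium prime factors. -/
theorem count_x {g k : ℕ} (hg : 2 ≤ g) (hk : k ≠ 0) (h : Fin g → ℤ[X]) (hirr : ∀ i, Irreducible (h i))
    (hdeg : ∀ i, (h i).natDegree = k) {Y : ℝ} (hT : TCnt h Y) {y0 : ℝ}
    (hnu : ∀ x, 1 ≤ x → ∀ m : ℕ, y0 ≤ yb x m → ∀ i, ∑ q ∈ PR (yb x m) x, (nu (h i) q:ℝ) / q ≤ 5 * m)
    {D : ℕ} (hD : ∀ i, ∀ q : ℕ, q.Prime → D < q → ∀ A B : ℕ, A ≤ B →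
      (#((Ioc A B).filter fun n : ℕ => ((q:ℤ) ^ 2 ∣ (h i).eval (n:ℤ))):ℝ) ≤ k * (((B:ℝ) - A) / (q:ℝ) ^ 2 + 1))
    {C0 : ℝ} (hC0 : 1 ≤ C0)
    (hCb : ∀ i, ∀ n : ℕ, 1 ≤ n → (((h i).eval (n:ℤ)).natAbs:ℝ) ≤ C0 * (n:ℝ) ^ k)
    {x z w y lam V U L M E1 E2 : ℝ} {J r q1 : ℕ} (hx : 1 ≤ x) (hL : 0 < L) (hw2 : 2 ≤ w) (hwx : w ≤ x) (hz2 : 2 ≤ z)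
    (hzeq : yb w J = z) (hzs : z ≤ sqrt x) (hsy : sqrt x ≤ y) (hyx : y ≤ x) (hy1 : 1 < y)
    (hlw : log w = L / 1000) (hlz : log z = L / (1000 * M)) (hM : M = 2 ^ J)
    (hyb : yb x (J + 10) ≤ z) (hy0 : y0 ≤ yb x (J + 10)) (hDz : (D:ℝ) ≤ z) (hq1 : q1.Prime)
    (hN : 10 ^ 8 * ((g:ℝ) * k) ≤ q1)
    (hE1 : 2 * (Y * w ^ (110 + 100 * ((g:ℝ) + 1) * (1 / 2) ^ J)) ^ 2 ≤ E1)
    (hE2 : 2 * (Y * z ^ (110 + 100 * ((g:ℝ) + 1) * (1 / 2) ^ 0)) ^ 2 ≤ E2)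
    (hV : V = Vp (∏ i, h i) z q1) (hV0 : 0 ≤ V) (hU : U = x * V / L) (hlam : lam = 1 / (10 ^ 9 * g * M))
    (hr : g * ((k * log (2 * x) + log C0) / log y) + 1 / lam ≤ r) :
    (#(Gs (∏ i, h i) x z q1):ℝ) ≤
      #((Gs (∏ i, h i) x z q1).filter fun n : ℕ => cardFactors ((∏ i, h i).eval (n:ℤ)).natAbs ≤ r) +
      (0.00016 * U + g * k * E1) + g * k * (4 * x / z + y) +
      (0.00096 * U + lam * (E1 * (g * k * sqrt x) + E2 * (g * k * y))) := by
  have hx0 : 0 ≤ x := by linarith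
  have hg0 : (0:ℝ) < g := mod_cast (by omega : 0 < g)
  have hk0 : (0:ℝ) < k := mod_cast pos_of_ne_zero hk
  have hM1 : 1 ≤ M := by rw [hM]; exact one_le_pow₀ (by norm_num)
  have hM0 : 0 < M := by linarith
  have hJM : (J:ℝ) ≤ M := by rw [hM]; exact_mod_cast Nat.lt_two_pow_self.le
  have hlam0 : 0 < lam := by rw [hlam]; positivity
  have hU0 : 0 ≤ U := by rw [hU]; positivity
  have hE10 : 0 ≤ E1 := le_trans (by positivity) hE1
  have hE20 : 0 ≤ E2 := le_trans (by positivity) hE2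
  have hnuk : ∀ i, ∀ q : ℕ, q.Prime → (nu (h i) q:ℝ) ≤ k := by
    intro i q hq
    have := nu_le (hirr i) (by rw [hdeg i]; exact hk) hq
    rw [hdeg i] at this
    exact_mod_cast this
  have hVn : 0 ≤ Vp (∏ i, h i) z q1 := hV ▸ hV0
  have hc1 : 16 * x * Vp (∏ i, h i) z q1 / log w = 16000 * U := by
    rw [hlw, hU, ← hV]; field_simp; ring
  have hc2 : 16 * x * Vp (∏ i, h i) z q1 / log z = 16000 * M * U := by
    rw [hlz, hU, ← hV]; field_simp; ring
  -- counts for `q > z`, sieving out the prime `n` up to `w`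
  have hA1 : ∀ q : ℕ, q.Prime → (z < q ∨ q = q1) → ∀ i,
      (#((Gs (∏ i, h i) x z q1).filter fun n : ℕ => (q:ℤ) ∣ (h i).eval (n:ℤ)):ℝ) ≤
      nu (h i) q * (16000 * U / q + E1) := by
    intro q hq hqz i
    refine (T_Gs h hT hx hw2 hwx hzeq hq1 hVn hq hqz i).trans ?_
    rw [hc1]
    exact mul_le_mul_of_nonneg_left (by linarith) (by positivity)
  have hA2 : ∀ q : ℕ, q.Prime → (z < q ∨ q = q1) → ∀ i,
      (#((Gs (∏ i, h i) x z q1).filter fun n : ℕ => (q:ℤ) ∣ (h i).eval (n:ℤ)):ℝ) ≤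
      nu (h i) q * (16000 * M * U / q + E2) := by
    intro q hq hqz i
    have hzx : z ≤ x := by linarith
    refine (T_Gs h hT (J := 0) hx hz2 hzx (yb_zero z) hq1 hVn hq hqz i).trans ?_
    rw [hc2]
    exact mul_le_mul_of_nonneg_left (by linarith) (by positivity)
  -- the exceptional prime `q1`
  have hQ : ∑ i, (#((Gs (∏ i, h i) x z q1).filter fun n : ℕ => (q1:ℤ) ∣ (h i).eval (n:ℤ)):ℝ) ≤
      0.00016 * U + g * k * E1 := by
    have hq0 : (0:ℝ) < q1 := mod_cast hq1.pos
    have : ∀ i, (#((Gs (∏ i, h i) x z q1).filter fun n : ℕ => (q1:ℤ) ∣ (h i).eval (n:ℤ)):ℝ) ≤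
        k * (16000 * U / q1 + E1) := fun i =>
      (hA1 q1 hq1 (Or.inr rfl) i).trans (mul_le_mul_of_nonneg_right (hnuk i q1 hq1) (by positivity))
    refine (sum_le_sum fun i _ => this i).trans ?_
    simp only [sum_const, card_univ, Fintype.card_fin, nsmul_eq_mul]
    have e : (g:ℝ) * k * (16000 * U / q1) ≤ 0.00016 * U := by
      rw [mul_div_assoc', div_le_iff₀ hq0]
      have := mul_le_mul_of_nonneg_right hN hU0
      linarith
    linarith [e]
  -- the two ranges of prime divisors
  have hs1 : yb x 1 = sqrt x := by rw [yb_succ hx0, yb_zero]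
  have hyb1 : yb x (J + 10) ≤ yb x 1 := yb_anti hx (by omega)
  have hR1 : ∑ i, ∑ q ∈ PR z (sqrt x),
      (#((Gs (∏ i, h i) x z q1).filter fun n : ℕ => (q:ℤ) ∣ (h i).eval (n:ℤ)):ℝ) ≤
      16000 * U * (g * (5 * (J + 10))) + E1 * (g * k * sqrt x) := by
    refine range_sum h (Real.sqrt_nonneg _) (by positivity) hE10 _ (fun i q hq => ?_) (fun i q hq => ?_) (fun i => ?_)
    · exact_mod_cast hnuk i q (mem_PR.1 hq).1
    · exact hA1 q (mem_PR.1 hq).1 (Or.inl (mem_PR.1 hq).2.1) i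
    · have := hnu x hx (J + 10) hy0 i
      push_cast at this
      refine le_trans (sum_le_sum_of_subset_of_nonneg (PR_subset hyb (by linarith)) fun q _ _ => by positivity) this
  have hR2 : ∑ i, ∑ q ∈ PR (sqrt x) y,
      (#((Gs (∏ i, h i) x z q1).filter fun n : ℕ => (q:ℤ) ∣ (h i).eval (n:ℤ)):ℝ) ≤
      16000 * M * U * (g * 5) + E2 * (g * k * y) := by
    refine range_sum h (by linarith) (by positivity) hE20 _ (fun i q hq => ?_) (fun i q hq => ?_) (fun i => ?_)
    · exact_mod_cast hnuk i q (mem_PR.1 hq).1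
    · exact hA2 q (mem_PR.1 hq).1 (Or.inl (lt_of_le_of_lt hzs (mem_PR.1 hq).2.1)) i
    · have := hnu x hx 1 (hy0.trans hyb1) i
      push_cast at this
      rw [hs1] at this
      refine le_trans (sum_le_sum_of_subset_of_nonneg (PR_subset le_rfl hyx) fun q _ _ => by positivity) ?_
      linarith
  have hsplit : ∑ i, ∑ q ∈ PR z y,
      (#((Gs (∏ i, h i) x z q1).filter fun n : ℕ => (q:ℤ) ∣ (h i).eval (n:ℤ)):ℝ) =
      ∑ i, ∑ q ∈ PR z (sqrt x),
      (#((Gs (∏ i, h i) x z q1).filter fun n : ℕ => (q:ℤ) ∣ (h i).eval (n:ℤ)):ℝ) +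
      ∑ i, ∑ q ∈ PR (sqrt x) y,
      (#((Gs (∏ i, h i) x z q1).filter fun n : ℕ => (q:ℤ) ∣ (h i).eval (n:ℤ)):ℝ) := by
    rw [← sum_add_distrib]
    exact sum_congr rfl fun i _ => PR_sum_split hzs hsy _
  have hSQ := SQ_bound h hD hx (by linarith : 0 ≤ y) (by linarith : 1 ≤ z) hDz (∏ i, h i) q1
  have hmain := G_bound h hC0 hCb (z := z) hy1 hlam0 hr (Gs (∏ i, h i) x z q1)
    (fun n hn => ⟨((mem_Gs hx0).1 hn).2.1.one_lt.le, ((mem_Gs hx0).1 hn).1.2⟩) q1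
    (fun n hn => ((mem_Gs hx0).1 hn).2.2)
  have hlamU : lam * (16000 * U * (g * (5 * (J + 10))) + 16000 * M * U * (g * 5)) ≤ 0.00096 * U := by
    have h1 : 16000 * U * (g * (5 * ((J:ℝ) + 10))) + 16000 * M * U * (g * 5) = 80000 * g * U * (J + 10 + M) := by ring
    have h2 : 80000 * g * U * ((J:ℝ) + 10 + M) ≤ 80000 * g * U * (12 * M) :=
      mul_le_mul_of_nonneg_left (by linarith) (by positivity)
    rw [h1]
    refine (mul_le_mul_of_nonneg_left h2 hlam0.le).trans (le_of_eq ?_)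
    rw [hlam]; field_simp; ring
  have hfin : lam * ∑ i, ∑ q ∈ PR z y,
      (#((Gs (∏ i, h i) x z q1).filter fun n : ℕ => (q:ℤ) ∣ (h i).eval (n:ℤ)):ℝ) ≤
      0.00096 * U + lam * (E1 * (g * k * sqrt x) + E2 * (g * k * y)) := by
    rw [hsplit]
    refine (mul_le_mul_of_nonneg_left (add_le_add hR1 hR2) hlam0.le).trans ?_
    linarith [hlamU]
  linarith [hmain, hSQ, hQ, hfin]



lemma sq_rpow_le {x Y a e b : ℝ} (hx : 1 ≤ x) (h : 2 * (a * e) ≤ b) : 2 * (Y * (x ^ a) ^ e) ^ 2 ≤ 2 * Y ^ 2 * x ^ b := by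
  have hx0 : 0 ≤ x := by linarith
  have e1 : ((x ^ a) ^ e) ^ 2 = x ^ (2 * (a * e)) := by
    rw [← rpow_mul hx0, ← rpow_natCast, ← rpow_mul hx0]; congr 1; push_cast; ring
  rw [mul_pow, e1, ← mul_assoc]
  exact mul_le_mul_of_nonneg_left (rpow_le_rpow_of_exponent_le hx h) (by positivity)

lemma yb_rpow {x : ℝ} (hx : 0 ≤ x) (a:ℝ) (J : ℕ) : yb (x ^ a) J = x ^ (a / 2 ^ J) := by
  unfold yb
  rw [← rpow_mul hx, one_div, inv_pow, div_eq_mul_inv]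

open Filter in
lemma ev_rpow (A:ℝ) {a : ℝ} (ha : 0 < a) : ∀ᶠ x : ℝ in atTop, A ≤ x ^ a :=
  (tendsto_rpow_atTop ha).eventually_ge_atTop A

/-- The exponent bound that makes `r` admissible. -/
lemma r_bound {g k : ℕ} {C0 ε x L R m : ℝ} {r : ℕ} (hx : 0 < x) (hLx : log x = L) (hL : 0 < L)
    (hε0 : 0 < ε) (hε : ε ≤ 1 / 2) (hLg : 2 * (g * (k * log 2 + log C0)) ≤ L) (hR : R = m)
    (hr : (g:ℝ) * k * (1 + 2 * ε) + 1 + m ≤ r) :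
    g * ((k * log (2 * x) + log C0) / log (x ^ (1 - ε))) + R ≤ r := by
  rw [log_rpow hx, hLx, log_mul (by norm_num) hx.ne', hLx, hR]
  have h1 : g * ((k * (log 2 + L) + log C0) / ((1 - ε) * L)) ≤ (g:ℝ) * k * (1 + 2 * ε) + 1 := by
    rw [mul_div_assoc', div_le_iff₀ (by nlinarith)]
    have h2 : 0 ≤ (g:ℝ) * k * L * (ε * (1 - 2 * ε)) := by
      have : 0 ≤ 1 - 2 * ε := by linarith
      positivity
    have h3 : L / 2 ≤ (1 - ε) * L := by nlinarith
    linarith [h2, h3]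
  linarith

set_option maxHeartbeats 2000000 in
open Filter in
/-- The lower bound for the number of good primes, for fixed parameters `ε` and `J`. -/
theorem good_lower {g k : ℕ} (hg : 2 ≤ g) (hk : k ≠ 0) (h : Fin g → ℤ[X]) (hirr : ∀ i, Irreducible (h i))
    (hdeg : ∀ i, (h i).natDegree = k) (hroot : ∀ p : ℕ, p.Prime → rho (∏ i, h i) p < p - 1)
    {ε : ℝ} (hε0 : 0 < ε) (hε : ε ≤ 1 / 2) {J : ℕ} (hJ : 10 * (g:ℝ) ≤ 2 ^ J * ε) {r : ℕ}
    (hr : (g:ℝ) * k * (1 + 2 * ε) + 1 + 10 ^ 9 * g * 2 ^ J ≤ r) :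
    ∃ c : ℝ, 0 < c ∧ ∃ x0 : ℝ, ∀ x, x0 ≤ x → ∃ G : Finset ℕ,
      (∀ n ∈ G, n.Prime ∧ x < n ∧ (n:ℝ) ≤ 2 * x ∧
        cardFactors ((∏ i, h i).eval (n:ℤ)).natAbs ≤ r) ∧
      c * x / (log x) ^ (g + 1) ≤ #G := by
  have hg0 : (2:ℝ) ≤ g := mod_cast hg
  have hdeg0 : ∀ i, (h i).natDegree ≠ 0 := fun i => by rw [hdeg i]; exact hk
  obtain ⟨M, hM⟩ : ∃ M : ℝ, M = 2 ^ J := ⟨_, rfl⟩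
  rw [← hM] at hJ hr
  have hM1 : 1 ≤ M := by rw [hM]; exact one_le_pow₀ (by norm_num)
  have hMg : 20 * (g:ℝ) ≤ M := by
    have : M * ε ≤ M * (1 / 2) := mul_le_mul_of_nonneg_left hε (by linarith)
    linarith
  have hM0 : 0 < M := by linarith
  obtain ⟨κ, hκd⟩ : ∃ κ : ℝ, κ = 1 / 1000 / M := ⟨_, rfl⟩
  have hκ0 : 0 < κ := by rw [hκd]; positivity
  have hκM : κ * M = 1 / 1000 := by rw [hκd]; field_simp
  have hκg : κ * (10 + 200 * g) ≤ 1 / 20 := by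
    have : κ * (10 + 200 * g) ≤ κ * (50 * M) := mul_le_mul_of_nonneg_left (by linarith) hκ0.le
    linarith
  have hκ1 : κ ≤ 1 / 1000 := by
    have : κ * 1 ≤ κ * M := mul_le_mul_of_nonneg_left hM1 hκ0.le
    linarith
  have hκε : 2 * (κ * (110 + 100 * ((g:ℝ) + 1) * (1 / 2) ^ 0)) ≤ ε / 20 := by
    have h1 : κ * (10 * g) ≤ κ * (M * ε) := mul_le_mul_of_nonneg_left hJ hκ0.le
    have h2 : κ * (M * ε) = ε / 1000 := by rw [← mul_assoc, hκM]; ring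
    have h3 : κ * 2 ≤ κ * g := mul_le_mul_of_nonneg_left hg0 hκ0.le
    rw [pow_zero]
    linarith [h1, h2, h3]
  have hw24 : 2 * (1 / 1000 * (110 + 100 * ((g:ℝ) + 1) * (1 / 2) ^ J)) ≤ 6 / 25 := by
    have h1 : ((g:ℝ) + 1) * (1 / 2) ^ J ≤ 1 / 10 := by
      rw [one_div, inv_pow, ← hM, ← div_eq_mul_inv, div_le_iff₀ hM0]; linarith
    linarith
  obtain ⟨c, hc, hVl⟩ := Vp_lower hk h hirr hdeg hroot
  obtain ⟨Y, hY1, hT⟩ := T_count hk h hirr hdeg hroot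
  obtain ⟨y0, -, hnu⟩ := nu_iter h hirr hdeg0
  obtain ⟨D, hD⟩ : ∃ D : ℕ, ∀ i, ∀ q : ℕ, q.Prime → D < q → ∀ A B : ℕ, A ≤ B →
      (#((Ioc A B).filter fun n : ℕ => ((q:ℤ) ^ 2 ∣ (h i).eval (n:ℤ))):ℝ) ≤
        k * (((B:ℝ) - A) / (q:ℝ) ^ 2 + 1) := by
    choose D hD using fun i => sq_count (h i) (hirr i) (hdeg0 i)
    refine ⟨univ.sup D, fun i q hq hDq A B hAB => ?_⟩
    have := hD i q hq (lt_of_le_of_lt (le_sup (mem_univ i)) hDq) A B hAB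
    rwa [hdeg i] at this
  obtain ⟨C0, hC0, hCb⟩ : ∃ C0 : ℝ, 1 ≤ C0 ∧ ∀ i, ∀ n : ℕ, 1 ≤ n →
      (((h i).eval (n:ℤ)).natAbs:ℝ) ≤ C0 * (n:ℝ) ^ k := by
    choose C hC1 hC using fun i => eval_bound (h i)
    have hC0 : ∀ i, 0 ≤ C i := fun i => zero_le_one.trans (hC1 i)
    refine ⟨1 + ∑ i, C i, le_add_of_nonneg_right (sum_nonneg fun i _ => hC0 i), fun i n hn => ?_⟩
    have h1 := hC i n hn
    rw [hdeg i] at h1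
    refine h1.trans (mul_le_mul_of_nonneg_right ?_ (by positivity))
    have := single_le_sum (fun i _ => hC0 i) (mem_univ i)
    linarith
  obtain ⟨A, x1, hsieve⟩ := prime_sieve (by omega) hk h hirr hdeg hroot (10 ^ 8 * (g * k)) (g + 2) hκ0 hκg
  obtain ⟨x2, hXt⟩ := Xt_ge
  obtain ⟨lam, hlam⟩ : ∃ lam : ℝ, lam = 1 / (10 ^ 9 * g * M) := ⟨_, rfl⟩
  refine ⟨0.004 * c, by positivity, ?_⟩
  rw [← eventually_atTop (p := fun x : ℝ => ∃ G : Finset ℕ,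
      (∀ n ∈ G, n.Prime ∧ x < n ∧ (n:ℝ) ≤ 2 * x ∧
        cardFactors ((∏ i, h i).eval (n:ℤ)).natAbs ≤ r) ∧
      0.004 * c * x / (log x) ^ (g + 1) ≤ #G)]
  have hc' : 0 < 0.001 * c := by positivity
  filter_upwards [eventually_ge_atTop x1, eventually_ge_atTop x2, eventually_ge_atTop (2:ℝ),
    tendsto_log_atTop.eventually_ge_atTop 1,
    tendsto_log_atTop.eventually_ge_atTop (2 * (g * (k * log 2 + log C0))),
    (tendsto_log_atTop.eventually_ge_atTop (500 / c)),
    ev_rpow 2 (show (0:ℝ) < 1 / 1000 by norm_num), ev_rpow 2 hκ0, ev_rpow D hκ0,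
    ev_rpow y0 (show (0:ℝ) < (1 / 2) ^ (J + 10) by positivity),
    pow_small (a := 6 / 25) (C := g * k * (2 * Y ^ 2)) (g + 1) (by norm_num) hc',
    pow_small (a := 6 / 25 + 1 / 2) (C := lam * (2 * Y ^ 2 * (g * k))) (g + 1) (by norm_num) hc',
    pow_small (a := ε / 20 + (1 - ε)) (C := lam * (2 * Y ^ 2 * (g * k))) (g + 1) (by linarith) hc',
    pow_small (a := 1 - κ) (C := g * k * 4) (g + 1) (by linarith) hc',
    pow_small (a := 1 - ε) (C := g * k) (g + 1) (by linarith) hc',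
    pow_small (a := 1 / 2) (C := 2 * sqrt 2) (g + 1) (by norm_num) hc'] with
    x hx1 hx2 hx hL1 hLg hLc hw2 hz2 hDz hy0 t1 t2 t3 t4 t5 t6
  have hx0 : 0 < x := by linarith
  have hx1' : 1 ≤ x := by linarith
  obtain ⟨q1, hq1, hNq, -, hs⟩ := hsieve x hx1
  obtain ⟨L, hL⟩ : ∃ L : ℝ, L = log x := ⟨_, rfl⟩
  rw [← hL] at hL1 hLg hLc hs t1 t2 t3 t4 t5 t6 ⊢
  have hL0 : 0 < L := by linarith
  obtain ⟨V, hV⟩ : ∃ V : ℝ, V = Vp (∏ i, h i) (x ^ κ) q1 := ⟨_, rfl⟩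
  have hVl' := hVl (x ^ κ) hz2 q1
  rw [← hV] at hVl' hs
  have hlz : log (x ^ κ) = L / (1000 * M) := by
    rw [log_rpow hx0, ← hL, hκd]; field_simp
  have hlz0 : 0 < log (x ^ κ) := log_pos (by linarith)
  have hV1 : c / L ^ g ≤ V := by
    refine le_trans (div_le_div_of_nonneg_left hc.le (by positivity) (pow_le_pow_left₀ hlz0.le ?_ g)) hVl'
    rw [hlz, div_le_iff₀ (by positivity)]
    exact le_mul_of_one_le_right hL0.le (by linarith)
  have hV0 : 0 ≤ V := le_trans (by positivity) hV1
  obtain ⟨U, hU⟩ : ∃ U : ℝ, U = x * V / L := ⟨_, rfl⟩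
  obtain ⟨W, hW⟩ : ∃ W : ℝ, W = x / L ^ (g + 1) := ⟨_, rfl⟩
  rw [← hW] at t1 t2 t3 t4 t5 t6
  have hUW : c * W ≤ U := by
    have : c * W = x * (c / L ^ g) / L := by rw [hW, pow_succ]; field_simp
    rw [this, hU]
    exact div_le_div_of_nonneg_right (mul_le_mul_of_nonneg_left hV1 hx0.le) hL0.le
  have hsq : sqrt x = x ^ (1 / 2:ℝ) := sqrt_eq_rpow x
  -- the lower bound for the sifted set
  have hlow : U / 80 ≤ 0.001 * c * W + 2 * sqrt (2 * x) + #(Gs (∏ i, h i) x (x ^ κ) q1) := by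
    have h1 := Gs_lower (∏ i, h i) hx1' (z := x ^ κ)
      ((rpow_le_rpow_of_exponent_le hx1' (by linarith : κ ≤ 1)).trans (by rw [rpow_one])) q1
    have h2 := hs.trans h1
    have h3 : x / 20 ≤ Xt x := hXt x hx2
    have h4 : 1 / 2 * (x / 20) * V ≤ 1 / 2 * Xt x * V := by
      refine mul_le_mul_of_nonneg_right ?_ hV0
      linarith
    have h5 : log (2 * x) ≤ 2 * L := by
      rw [log_mul (by norm_num) hx0.ne', ← hL]
      have : log 2 ≤ log x := log_le_log (by norm_num) hx
      linarith
    have h6 : 0 ≤ 2 * sqrt (2 * x) + (#(Gs (∏ i, h i) x (x ^ κ) q1):ℝ) := by positivity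
    have h7 := mul_le_mul_of_nonneg_right h5 h6
    have h8 : x / L ^ (g + 2) ≤ 0.002 * c * W * L := by
      have e : x / L ^ (g + 2) = W / L := by rw [hW, pow_succ L (g + 1)]; field_simp
      have hWn : 0 ≤ W := by rw [hW]; positivity
      have h9 : 500 ≤ L * c := by rwa [div_le_iff₀ hc] at hLc
      rw [e, div_le_iff₀ hL0]
      have h10 : 1 ≤ 0.002 * (L * c) * L := by
        have := mul_le_mul h9 hL1 zero_le_one (by linarith)
        linarith
      calc W = W * 1 := by ring
        _ ≤ W * (0.002 * (L * c) * L) := mul_le_mul_of_nonneg_left h10 hWn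
        _ = _ := by ring
    have h11 : U * L = x * V := by rw [hU]; field_simp
    refine le_of_mul_le_mul_right ?_ (show 0 < 2 * L by positivity)
    linarith [h2, h4, h7, h8, h11]
  have hys : sqrt x ≤ x ^ (1 - ε) := by
    rw [hsq]; exact rpow_le_rpow_of_exponent_le hx1' (by linarith)
  have hcount := count_x hg hk h hirr hdeg (Y := Y) hT hnu hD hC0 hCb (x := x) (z := x ^ κ) (w := x ^ (1 / 1000:ℝ))
    (y := x ^ (1 - ε)) (lam := lam) (V := V) (U := U) (L := L) (M := M)
    (E1 := 2 * Y ^ 2 * x ^ (6 / 25:ℝ)) (E2 := 2 * Y ^ 2 * x ^ (ε / 20)) (J := J) (r := r) (q1 := q1)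
    hx1' hL0 hw2
    ((rpow_le_rpow_of_exponent_le hx1' (by norm_num : (1 / 1000:ℝ) ≤ 1)).trans (by rw [rpow_one]))
    hz2 (by rw [yb_rpow hx0.le, ← hM, hκd])
    (by rw [hsq]; exact rpow_le_rpow_of_exponent_le hx1' (by linarith)) hys
    ((rpow_le_rpow_of_exponent_le hx1' (by linarith : 1 - ε ≤ 1)).trans (by rw [rpow_one]))
    (Real.one_lt_rpow (by linarith) (by linarith))
    (by rw [log_rpow hx0, ← hL]; ring) hlz hM
    (by
      unfold yb
      refine rpow_le_rpow_of_exponent_le hx1' ?_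
      rw [one_div, inv_pow, pow_add, ← hM, hκd, ← one_div, div_div]
      refine one_div_le_one_div_of_le (by positivity) ?_
      norm_num
      linarith)
    (by unfold yb; exact hy0) hDz hq1
    (mod_cast hNq.le)
    (sq_rpow_le hx1' hw24) (sq_rpow_le hx1' hκε) hV hV0 hU hlam
    (r_bound hx0 hL.symm hL0 hε0 hε hLg (m := 10 ^ 9 * g * M) (by rw [hlam, one_div_one_div]) hr)
  refine ⟨(Gs (∏ i, h i) x (x ^ κ) q1).filter fun n : ℕ =>
      cardFactors ((∏ i, h i).eval (n:ℤ)).natAbs ≤ r, fun n hn => ?_, ?_⟩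
  · obtain ⟨hn1, hn2⟩ := mem_filter.1 hn
    obtain ⟨⟨a, b⟩, hp, -⟩ := (mem_Gs hx0.le).1 hn1
    exact ⟨hp, a, b, hn2⟩
  · have e2 : x ^ (6 / 25:ℝ) * sqrt x = x ^ (6 / 25 + 1 / 2:ℝ) := by rw [hsq, ← rpow_add hx0]
    have e3 : x ^ (ε / 20) * x ^ (1 - ε) = x ^ (ε / 20 + (1 - ε)) := by rw [← rpow_add hx0]
    have e4 : x / x ^ κ = x ^ (1 - κ) := by rw [Real.rpow_sub hx0, rpow_one]
    have e6 : 2 * sqrt (2 * x) = 2 * sqrt 2 * x ^ (1 / 2:ℝ) := by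
      rw [Real.sqrt_mul (by norm_num), hsq]; ring
    have e7 : 0.004 * c * x / L ^ (g + 1) = 0.004 * c * W := by rw [hW]; ring
    have s4 : g * k * (4 * x / x ^ κ) = g * k * 4 * x ^ (1 - κ) := by rw [← e4]; ring
    have s2 : lam * (2 * Y ^ 2 * x ^ (6 / 25:ℝ) * (g * k * sqrt x)) =
        lam * (2 * Y ^ 2 * (g * k)) * x ^ (6 / 25 + 1 / 2:ℝ) := by rw [← e2]; ring
    have s3 : lam * (2 * Y ^ 2 * x ^ (ε / 20) * (g * k * x ^ (1 - ε))) =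
        lam * (2 * Y ^ 2 * (g * k)) * x ^ (ε / 20 + (1 - ε)) := by rw [← e3]; ring
    rw [e6] at hlow
    rw [e7]
    rw [mul_add (g * k:ℝ), s4, mul_add lam, s2, s3] at hcount
    have s1 : (g:ℝ) * k * (2 * Y ^ 2 * x ^ (6 / 25:ℝ)) = g * k * (2 * Y ^ 2) * x ^ (6 / 25:ℝ) := by ring
    rw [s1] at hcount
    linarith



/-! ### The choice of parameters -/

/-- The parameters `ε = √(g/k)` and `2^J ≍ g/ε` balance the two sources of loss in `r`. -/
lemma params {g k : ℕ} (hg : 2 ≤ g) (hk : 4 * (g:ℝ) ≤ k) {r : ℕ}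
    (hr : (g:ℝ) * k + 30000000000 * ((g:ℝ) ^ ((3:ℝ) / 2) * (k:ℝ) ^ ((1:ℝ) / 2)) ≤ r) :
    ∃ ε : ℝ, 0 < ε ∧ ε ≤ 1 / 2 ∧ ∃ J : ℕ, 10 * (g:ℝ) ≤ 2 ^ J * ε ∧
      (g:ℝ) * k * (1 + 2 * ε) + 1 + 10 ^ 9 * g * 2 ^ J ≤ r := by
  have hg0 : (2:ℝ) ≤ g := mod_cast hg
  have hk0 : (0:ℝ) < k := by linarith
  obtain ⟨ε, hε⟩ : ∃ ε : ℝ, ε = sqrt (g / k) := ⟨_, rfl⟩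
  have hε0 : 0 < ε := by rw [hε]; exact sqrt_pos.2 (by positivity)
  have hεsq : ε ^ 2 * k = g := by rw [hε, Real.sq_sqrt (by positivity)]; field_simp
  have hε2 : ε ≤ 1 / 2 := by
    rw [hε]
    refine Real.sqrt_le_iff.2 ⟨by norm_num, ?_⟩
    rw [div_le_iff₀ hk0]; linarith
  have hs : (g:ℝ) ^ ((3:ℝ) / 2) * (k:ℝ) ^ ((1:ℝ) / 2) = g * k * ε := by
    rw [hε, Real.sqrt_div (by positivity), show (3:ℝ) / 2 = 1 + 1 / 2 by norm_num,
      rpow_add (by linarith), rpow_one, ← sqrt_eq_rpow, ← sqrt_eq_rpow]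
    have h1 : sqrt k ≠ 0 := (sqrt_pos.2 hk0).ne'
    field_simp
    rw [Real.sq_sqrt hk0.le]
  rw [hs] at hr
  obtain ⟨s, hsd⟩ : ∃ s : ℝ, s = g * k * ε := ⟨_, rfl⟩
  have hsε : s * ε = g ^ 2 := by
    rw [hsd]; calc (g:ℝ) * k * ε * ε = g * (ε ^ 2 * k) := by ring
      _ = _ := by rw [hεsq]; ring
  have hs1 : 1 ≤ s := by
    have : 4 ≤ s * ε := by rw [hsε]; nlinarith
    have : 0 < s := by rw [hsd]; positivity
    nlinarith
  have hX1 : 1 ≤ 10 * g / ε := by rw [le_div_iff₀ hε0]; linarith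
  obtain ⟨n, hn1, hn2⟩ := exists_nat_pow_near hX1 (show (1:ℝ) < 2 by norm_num)
  refine ⟨ε, hε0, hε2, n + 1, ?_, ?_⟩
  · rw [div_lt_iff₀ hε0] at hn2; exact hn2.le
  · have h1 : (g:ℝ) * 2 ^ n ≤ 10 * s := by
      refine (mul_le_mul_of_nonneg_left hn1 (by positivity)).trans (le_of_eq ?_)
      rw [mul_div_assoc', div_eq_iff hε0.ne']
      linear_combination -10 * hsε
    rw [← hsd] at hr
    rw [pow_succ (2:ℝ) n]
    have h2 : (g:ℝ) * k * (1 + 2 * ε) = g * k + 2 * s := by rw [hsd]; ring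
    rw [h2]
    linarith

end APV

/-- There are absolute constants `C, C' > 0` such that for every
integer `g ≥ 2`, every integer `k ≥ C'·g`, and every `H = h₁ ⋯ h_g` (a product of
`g` distinct irreducible integer polynomials of common degree `k`) satisfying the
root condition, the value `r = ⌈g·k + C·(g^(3/2)·k^(1/2) + g² + g·log(g·k))⌉` is
admissible: there exist `c > 0` and `x₀` such that for all `x ≥ x₀` the number of
primes `x < p ≤ 2x` with `Ω(|H(p)|) ≤ r` is at least `c·x/(log x)^(g+1)`. -/
theorem almost_prime_values_asymptotic_r
    : ∃ C C' : ℝ, 0 < C ∧ 0 < C' ∧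
      ∀ (g k : ℕ), 2 ≤ g → C' * g ≤ (k : ℝ) →
      ∀ (h : Fin g → Polynomial ℤ),
        (∀ i, Irreducible (h i)) →
        (∀ i, (h i).natDegree = k) →
        (∀ i j, i ≠ j → h i ≠ h j) →
      ∀ (H : Polynomial ℤ), H = ∏ i, h i →
        (∀ p : ℕ, p.Prime →
          Nat.card {a : ZMod p | IsUnit a ∧ Polynomial.aeval a H = 0} < p - 1) →
      ∀ r : ℕ, (r : ℝ) = ⌈(g : ℝ) * k +
          C * ((g : ℝ) ^ ((3 : ℝ)/2) * (k : ℝ) ^ ((1 : ℝ)/2) + (g : ℝ) ^ 2 +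
            (g : ℝ) * Real.log ((g : ℝ) * k))⌉ →
      ∃ c : ℝ, 0 < c ∧ ∃ x₀ : ℝ, ∀ x : ℝ, x₀ ≤ x →
        c * x / (Real.log x) ^ (g + 1) ≤
          (Nat.card {p : ℕ | p.Prime ∧ x < (p : ℝ) ∧ (p : ℝ) ≤ 2 * x ∧
            bigOmega (H.eval (p : ℤ)).natAbs ≤ r} : ℝ) := by
  refine ⟨30000000000, 4, by norm_num, by norm_num, ?_⟩
  intro g k hg hk h hirr hdeg _ H hH hroot r hr
  subst hH
  have hg0 : (2 : ℝ) ≤ g := by exact_mod_cast hg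
  have hkr : (0 : ℝ) < k := by linarith
  have hk0 : k ≠ 0 := by rintro rfl; simp at hkr
  have hr' : (g : ℝ) * k + 30000000000 * ((g : ℝ) ^ ((3 : ℝ) / 2) * (k : ℝ) ^ ((1 : ℝ) / 2)) ≤ r := by
    rw [hr]
    refine le_trans ?_ (Int.le_ceil _)
    have hlog : 0 ≤ Real.log ((g : ℝ) * k) := Real.log_nonneg (by nlinarith)
    have : 0 ≤ (g : ℝ) ^ 2 + (g : ℝ) * Real.log ((g : ℝ) * k) := by positivity
    linarith
  obtain ⟨ε, hε0, hε, J, hJ, hrJ⟩ := APV.params hg hk hr'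
  obtain ⟨c, hc, x0, hx0⟩ := APV.good_lower hg hk0 h hirr hdeg hroot hε0 hε hJ hrJ
  refine ⟨c, hc, x0, fun x hx => ?_⟩
  obtain ⟨G, hG, hcard⟩ := hx0 x hx
  refine hcard.trans ?_
  have hsub : (G : Set ℕ) ⊆ {p : ℕ | p.Prime ∧ x < (p : ℝ) ∧ (p : ℝ) ≤ 2 * x ∧
      bigOmega ((∏ i, h i).eval (p : ℤ)).natAbs ≤ r} := fun n hn => hG n hn
  have hfin : {p : ℕ | p.Prime ∧ x < (p : ℝ) ∧ (p : ℝ) ≤ 2 * x ∧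
      bigOmega ((∏ i, h i).eval (p : ℤ)).natAbs ≤ r}.Finite :=
    (Set.finite_Iic ⌊2 * x⌋₊).subset fun n hn => Nat.le_floor hn.2.2.1
  have h1 := Set.ncard_le_ncard hsub hfin
  rw [Set.ncard_coe_finset] at h1
  exact_mod_cast h1
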